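/- For every 0 < δ < 1 there exists n_0 ∈ ℕ such that for every prime number p ≥ n_0, dimH {A ∈ ℝ : A > 1 and ⌊A^{3^k}⌋ is prime for every k ≥ 1} ≥ (1 − δ/2)/(1 + δ + 3/(p log p)). -/

import Mathlib

/-!
The set contains, for every `s < 1`, a Cantor set of dimension at least `s`; since the bound in the
statement is less than `1`, this suffices.

*The tree.* If primes satisfy `p_k ^ 3 ≤ p_{k+1} < (p_k + 1) ^ 3 - 1`, then Mills' argument gives a
real `A` with `⌊A ^ 3 ^ k⌋ = p_k` for all `k` (`exists_real_of_nested`). Suppose that every vertex `p`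
of a tree of primes has at least `(p + 1) ^ (2 - 2ε)` children among the primes of
`[p ^ 3, (p + 1) ^ 3)` (`PrimeTree`). Its branches are coded by points of `[0, 1)` through
mixed-radix digits (`code`), and the inverse `A ↦ y` of the coding is `s`-Hölder with
`ε = (1 - s) / 6`: if two branches separate at `p ≠ p'`, both children of `q`, the distance of the
codes is at most `|p - p'|` over the number of branches, while `|A - A'|` is bounded below by
`|p - p'|`, because distinct odd primes differ by at least `2` (`tree_dimH`).

*Existence of the tree.* An interval `[n ^ 3, (n + 1) ^ 3)` is not known to contain primes for an
explicit range of `n`, but all `n` outside a very thin set have at least `n ^ 2 / (100 log (n + 1))`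
of them (`sparse_count`). The exceptional set is so thin that declaring also those `n` bad that have
too many bad children, and iterating, still leaves most integers good, and half of the children
of a good integer are good (`bad_bound`, `good_kids`, `exists_good`).

*Primes in almost all short intervals.* For `n` near `e ^ ℓ` the average of `Λ` at the fine
logarithmic scale `e ^ (-ℓ) / 4` is compared with the average at a coarse scale, where the prime number
theorem with error term applies (`psiAvg_ge`). Vaughan's identity writes the difference as
negligible type I sums and a bilinear sum (`vaughan_point`), whose mean square is bounded by
Plancherel's identity (`typeII_bound`, `bilin_meanSq`). This needs a bound for
`∑ Λ(n) n ^ (-1 - it)` with `|t|` as large as a power of the length of the sum (`hinge_bound`),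
hence a zero-free region for the zeta function of width `(log t) ^ (-θ)` with `θ < 1`
(`zeta_zero_free`, `zeta₁_bound`); the exceptional set then has relative size
`exp (-c (log n) ^ (1/8))`, small enough for the iteration.

*The zeta function.* The zero-free region follows by Landau's method from the growth bound
`zeta_growth`, which rests on Vinogradov's mean value theorem (`vino_bound`), proved with Linnik's
lemma (`linnik_count`), through the estimate `vinogradov_sum` for `∑ n ^ (-it)`.
-/

namespace Mills
open Finset

/-! ### Linnik's lemma -/

/-- Newton's identities: equal power sums give equal elementary symmetric functions when
`1, …, k` are invertible. -/
lemma esymm_eq_of_psum_eq {R : Type*} [CommRing R] {k : ℕ} (y z : Fin k → R)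
    (hu : ∀ m : ℕ, 1 ≤ m → m ≤ k → IsUnit (m : R))
    (h : ∀ m : ℕ, 1 ≤ m → m ≤ k → ∑ i, y i ^ m = ∑ i, z i ^ m) :
    ∀ m ≤ k, MvPolynomial.aeval y (MvPolynomial.esymm (Fin k) ℤ m) =
      MvPolynomial.aeval z (MvPolynomial.esymm (Fin k) ℤ m) := by
  intro m
  induction m using Nat.strong_induction_on with
  | _ m ih =>
    intro hm
    rcases Nat.eq_zero_or_pos m with rfl | hpos
    · simp
    · apply (hu m hpos hm).mul_left_cancel
      have key : ∀ w : Fin k → R, (m : R) * MvPolynomial.aeval w (MvPolynomial.esymm (Fin k) ℤ m)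
          = (-1) ^ (m + 1) * ∑ a ∈ antidiagonal m with a.1 < m,
            (-1) ^ a.1 * MvPolynomial.aeval w (MvPolynomial.esymm (Fin k) ℤ a.1) *
              ∑ i, w i ^ a.2 := by
        intro w
        have := congrArg (MvPolynomial.aeval w) (MvPolynomial.mul_esymm_eq_sum (Fin k) ℤ m)
        simpa [MvPolynomial.psum] using this
      rw [key, key]
      congr 1
      apply Finset.sum_congr rfl
      intro a ha
      simp only [mem_filter, HasAntidiagonal.mem_antidiagonal] at ha
      rw [ih a.1 ha.2 (by omega), h a.2 (by omega) (by omega)]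

lemma prod_sub_eq_zero {R : Type*} [CommRing R] {k : ℕ} (y z : Fin k → R)
    (hu : ∀ m : ℕ, 1 ≤ m → m ≤ k → IsUnit (m : R))
    (h : ∀ m : ℕ, 1 ≤ m → m ≤ k → ∑ i, y i ^ m = ∑ i, z i ^ m) (i : Fin k) :
    ∏ i', (y i - z i') = 0 := by
  have h1 := esymm_eq_of_psum_eq y z hu h
  have key : ∀ w : Fin k → R, ∏ i', (y i - w i') =
      ∑ j ∈ range (k + 1), (-1) ^ j *
        (MvPolynomial.aeval w (MvPolynomial.esymm (Fin k) ℤ j) * y i ^ (k - j)) := by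
    intro w
    have := congrArg (Polynomial.eval (y i))
      (Multiset.prod_X_sub_X_eq_sum_esymm (Finset.univ.val.map w))
    rw [Polynomial.eval_multiset_prod, Multiset.map_map, Multiset.map_map] at this
    simp only [MvPolynomial.aeval_esymm_eq_multiset_esymm]
    simp only [Function.comp_def, Polynomial.eval_sub, Polynomial.eval_X, Polynomial.eval_C,
      Polynomial.eval_finsetSum, Polynomial.eval_mul, Polynomial.eval_pow, Polynomial.eval_neg,
      Polynomial.eval_one, Multiset.card_map, Finset.card_val, Finset.card_univ,
      Fintype.card_fin] at this
    exact this
  have : ∏ i', (y i - z i') = ∏ i', (y i - y i') := by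
    rw [key z, key y]
    refine Finset.sum_congr rfl (fun j hj => ?_)
    rw [h1 j (by simpa [Nat.lt_succ_iff] using hj)]
  rw [this]
  exact Finset.prod_eq_zero (mem_univ i) (by simp)

lemma exists_dvd_of_prime_pow_dvd_prod {p k : ℕ} (hp : p.Prime) (hk : 1 ≤ k) {ι : Type*}
    [Fintype ι] [DecidableEq ι] (f : ι → ℤ)
    (hf : ∀ i j, (p : ℤ) ∣ f i → (p : ℤ) ∣ f j → i = j)
    (h : ((p : ℤ) ^ k) ∣ ∏ i, f i) : ∃ i, ((p : ℤ) ^ k) ∣ f i := by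
  have hp' : Prime (p : ℤ) := Nat.prime_iff_prime_int.mp hp
  obtain ⟨i, -, hi⟩ := (hp'.dvd_finsetProd_iff f).1 ((dvd_pow_self _ (by omega)).trans h)
  refine ⟨i, ?_⟩
  rw [← Finset.mul_prod_erase univ f (mem_univ i)] at h
  refine IsCoprime.dvd_of_dvd_mul_right (IsCoprime.pow_left ?_) h
  rw [Prime.coprime_iff_not_dvd hp', hp'.dvd_finsetProd_iff]
  rintro ⟨j, hj, hj'⟩
  exact (Finset.mem_erase.1 hj).1 (hf j i hj' hi)

/-- **Linnik's lemma**: the system `∑ zᵢʲ ≡ cⱼ (mod pʲ)`, `1 ≤ j ≤ k`, has few solutions with entries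
pairwise incongruent mod `p` in an interval of length at most `p^k`. After fixing the residues of all
the sums mod `p^k`, the entries are determined mod `p^k` up to permutation. -/
lemma linnik_count {p k : ℕ} (hp : p.Prime) (hk : 1 ≤ k) (hkp : k < p) (A : ℤ) (X : ℕ)
    (hX : X ≤ p ^ k) (c : Fin k → ℤ) (Z : Finset (Fin k → ℤ))
    (hZ : ∀ z ∈ Z, (∀ i, z i ∈ Ioc A (A + X)) ∧ (∀ i j, (p : ℤ) ∣ z i - z j → i = j) ∧
      ∀ j : Fin k, ((p : ℤ) ^ ((j : ℕ) + 1)) ∣ ∑ i, z i ^ ((j : ℕ) + 1) - c j) :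
    #Z ≤ k ^ k * p ^ (k * (k - 1) / 2) := by
  classical
  have hp0 : 0 < p := hp.pos
  let φ : (Fin k → ℤ) → (Fin k → ℤ) := fun z j =>
    ((∑ i, z i ^ ((j : ℕ) + 1) - c j) / (p : ℤ) ^ ((j : ℕ) + 1)) % (p : ℤ) ^ (k - 1 - j)
  have hcard : #(Fintype.piFinset fun j : Fin k => Ico (0 : ℤ) ((p : ℤ) ^ (k - 1 - j)))
      = p ^ (k * (k - 1) / 2) := by
    rw [Fintype.card_piFinset]
    have : ∀ j : Fin k, #(Ico (0 : ℤ) ((p : ℤ) ^ (k - 1 - (j : ℕ)))) = p ^ (k - 1 - (j : ℕ)) := by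
      intro j
      rw [Int.card_Ico, sub_zero, ← Nat.cast_pow, Int.toNat_natCast]
    rw [Finset.prod_congr rfl (fun j _ => this j), Finset.prod_pow_eq_pow_sum]
    congr 1
    rw [Fin.sum_univ_eq_sum_range (fun j => k - 1 - j) k, Finset.sum_range_reflect (fun j => j) k,
      Finset.sum_range_id]
  rw [← hcard]
  apply Finset.card_le_mul_card_image_of_maps_to (f := φ)
  · intro z _
    rw [Fintype.mem_piFinset]
    intro j
    have : (0 : ℤ) < (p : ℤ) ^ (k - 1 - (j : ℕ)) := by positivity
    exact mem_Ico.2 ⟨Int.emod_nonneg _ this.ne', Int.emod_lt_of_pos _ this⟩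
  · intro b _
    rcases Finset.eq_empty_or_nonempty ({z ∈ Z | φ z = b}) with h0 | ⟨y, hy⟩
    · rw [h0]; simp
    rw [mem_filter] at hy
    have hsub : {z ∈ Z | φ z = b} ⊆ Fintype.piFinset (fun _ : Fin k => univ.image y) := by
      intro z hz
      rw [mem_filter] at hz
      rw [Fintype.mem_piFinset]
      intro i
      have hzZ := hZ z hz.1
      have hyZ := hZ y hy.1
      have hcong : ∀ j : Fin k, ((p : ℤ) ^ k) ∣
          ∑ i, z i ^ ((j : ℕ) + 1) - ∑ i, y i ^ ((j : ℕ) + 1) := by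
        intro j
        have h1 : φ z j = φ y j := by rw [hz.2, hy.2]
        obtain ⟨u, hu⟩ := hzZ.2.2 j
        obtain ⟨v, hv⟩ := hyZ.2.2 j
        have hpj : (p : ℤ) ^ ((j : ℕ) + 1) ≠ 0 := by positivity
        simp only [φ, hu, hv, Int.mul_ediv_cancel_left _ hpj] at h1
        have h2 : (p : ℤ) ^ (k - 1 - (j : ℕ)) ∣ u - v := Int.ModEq.dvd (Int.ModEq.symm h1)
        have h3 : ∑ i, z i ^ ((j : ℕ) + 1) - ∑ i, y i ^ ((j : ℕ) + 1)
            = (p : ℤ) ^ ((j : ℕ) + 1) * (u - v) := by linear_combination hu - hv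
        have h4 : (p : ℤ) ^ k = (p : ℤ) ^ ((j : ℕ) + 1) * (p : ℤ) ^ (k - 1 - (j : ℕ)) := by
          rw [← pow_add]; congr 1; have := j.2; omega
        rw [h3, h4]
        exact mul_dvd_mul_left _ h2
      have hprod : ((p : ℤ) ^ k) ∣ ∏ i', (z i - y i') := by
        have h5 := prod_sub_eq_zero (R := ZMod (p ^ k)) (k := k) (fun i => ((z i : ℤ) : ZMod (p ^ k)))
          (fun i => ((y i : ℤ) : ZMod (p ^ k))) ?_ ?_ i
        · have h6 : ((∏ i', (z i - y i') : ℤ) : ZMod (p ^ k)) = 0 := by push_cast; exact h5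
          rw [ZMod.intCast_zmod_eq_zero_iff_dvd] at h6
          exact_mod_cast h6
        · intro m hm1 hmk
          rw [ZMod.isUnit_iff_coprime]
          exact Nat.Coprime.pow_right _ (Nat.coprime_of_lt_prime (by omega) (by omega) hp).symm
        · intro m hm1 hmk
          have := hcong ⟨m - 1, by omega⟩
          simp only [Nat.sub_add_cancel hm1] at this
          have h7 : ((∑ i, z i ^ m - ∑ i, y i ^ m : ℤ) : ZMod (p ^ k)) = 0 := by
            rw [ZMod.intCast_zmod_eq_zero_iff_dvd]; exact_mod_cast this
          push_cast at h7
          exact sub_eq_zero.1 h7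
      obtain ⟨i', hi'⟩ := exists_dvd_of_prime_pow_dvd_prod hp hk (fun i' => z i - y i') (by
        intro a b ha hb
        refine hyZ.2.1 a b ?_
        have := dvd_sub hb ha
        simpa using this) hprod
      have h8 : z i = y i' := by
        have hz1 := mem_Ioc.1 (hzZ.1 i)
        have hy1 := mem_Ioc.1 (hyZ.1 i')
        have hXp : (X : ℤ) ≤ (p : ℤ) ^ k := by exact_mod_cast hX
        have := Int.eq_zero_of_abs_lt_dvd hi' (by rw [abs_lt]; constructor <;> linarith)
        linarith
      rw [h8]
      exact mem_image_of_mem _ (mem_univ _)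
    refine (card_le_card hsub).trans ?_
    rw [Fintype.card_piFinset_const]
    exact Nat.pow_le_pow_left (card_image_le.trans (by simp)) k

end Mills

namespace Mills
open Finset MeasureTheory
open scoped ComplexConjugate

/-! ### Exponential sums on the torus and counting coincidences -/

/-- Haar probability measure on the `k`-dimensional torus. -/
noncomputable abbrev haarT (k : ℕ) : Measure (UnitAddTorus (Fin k)) :=
  Measure.pi fun _ => (AddCircle.haarAddCircle : Measure (AddCircle (1 : ℝ)))

lemma integral_mFourier {k : ℕ} (n : Fin k → ℤ) :
    ∫ x, UnitAddTorus.mFourier n x ∂(haarT k) = if n = 0 then 1 else 0 := by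
  have h1 : ∀ m : ℤ, ∫ x : AddCircle (1 : ℝ), fourier m x ∂AddCircle.haarAddCircle
      = if m = 0 then 1 else 0 := by
    intro m
    have h := orthonormal_iff_ite.1 (orthonormal_fourier (T := 1)) 0 m
    rw [ContinuousMap.inner_toLp] at h
    simpa [eq_comm] using h
  simp only [UnitAddTorus.mFourier, ContinuousMap.coe_mk]
  rw [integral_fintype_prod_eq_prod (fun (i : Fin k) (x : AddCircle (1 : ℝ)) => fourier (n i) x)]
  simp_rw [h1]
  rw [Finset.prod_ite_zero]
  simp [funext_iff]

/-- The exponential sum `∑_{a ∈ A} e(f(a) · x)` on the torus. -/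
noncomputable def expSum {k : ℕ} {α : Type*} (A : Finset α) (f : α → Fin k → ℤ)
    (x : UnitAddTorus (Fin k)) : ℂ := ∑ a ∈ A, UnitAddTorus.mFourier (f a) x

/-- The number of coincidences `f a = f b` with `a, b ∈ A`, diagonal included. -/
def coinc {k : ℕ} {α : Type*} (A : Finset α) (f : α → Fin k → ℤ) : ℕ :=
  #{q ∈ A ×ˢ A | f q.1 = f q.2}

lemma continuous_expSum {k : ℕ} {α : Type*} (A : Finset α) (f : α → Fin k → ℤ) :
    Continuous (expSum A f) := by
  unfold expSum; fun_prop

lemma integrable_torus {k : ℕ} {E : Type*} [NormedAddCommGroup E]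
    {g : UnitAddTorus (Fin k) → E} (hg : Continuous g) :
    Integrable g (haarT k) :=
  hg.integrable_of_hasCompactSupport (HasCompactSupport.of_compactSpace g)

lemma integral_expSum_shift {k : ℕ} {α : Type*} (A : Finset α) (f : α → Fin k → ℤ)
    (v : Fin k → ℤ) :
    ∫ x, expSum A f x * conj (expSum A f x) * UnitAddTorus.mFourier (-v) x ∂(haarT k) =
      (#{q ∈ A ×ˢ A | f q.1 - f q.2 = v} : ℂ) := by
  have h1 : ∀ x, expSum A f x * conj (expSum A f x) * UnitAddTorus.mFourier (-v) x =
      ∑ q ∈ A ×ˢ A, UnitAddTorus.mFourier (f q.1 - f q.2 - v) x := by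
    intro x
    unfold expSum
    rw [map_sum, Finset.sum_mul_sum, ← Finset.sum_product', Finset.sum_mul]
    refine Finset.sum_congr rfl fun q _ => ?_
    rw [← UnitAddTorus.mFourier_neg, ← UnitAddTorus.mFourier_add, ← UnitAddTorus.mFourier_add,
      sub_eq_add_neg, sub_eq_add_neg]
  simp_rw [h1]
  rw [integral_finsetSum _ (fun q _ => integrable_torus (by fun_prop))]
  simp_rw [integral_mFourier, sub_eq_zero (b := v)]
  rw [Finset.card_filter]
  push_cast
  rfl

lemma integral_norm_sq_expSum {k : ℕ} {α : Type*} (A : Finset α) (f : α → Fin k → ℤ) :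
    ∫ x, ‖expSum A f x‖ ^ 2 ∂(haarT k) = (coinc A f : ℝ) := by
  have h := integral_expSum_shift A f 0
  simp only [neg_zero, UnitAddTorus.mFourier_zero, ContinuousMap.one_apply, mul_one,
    Complex.mul_conj, sub_eq_zero, Complex.normSq_eq_norm_sq] at h
  rw [integral_complex_ofReal] at h
  exact_mod_cast h

lemma card_shift_le {k : ℕ} {α : Type*} (A : Finset α) (f : α → Fin k → ℤ) (v : Fin k → ℤ) :
    #{q ∈ A ×ˢ A | f q.1 - f q.2 = v} ≤ coinc A f := by
  have h := integral_expSum_shift A f v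
  have h2 : ‖∫ x, expSum A f x * conj (expSum A f x) * UnitAddTorus.mFourier (-v) x ∂(haarT k)‖ ≤
      ∫ x, ‖expSum A f x‖ ^ 2 ∂(haarT k) := by
    refine (norm_integral_le_integral_norm _).trans (integral_mono ?_ ?_ ?_)
    · have := continuous_expSum A f
      exact integrable_torus (by fun_prop)
    · have := continuous_expSum A f
      exact integrable_torus (by fun_prop)
    · intro x
      have h3 : ‖UnitAddTorus.mFourier (-v) x‖ ≤ 1 :=
        (ContinuousMap.norm_coe_le_norm _ x).trans_eq UnitAddTorus.mFourier_norm
      simp only [norm_mul, RCLike.norm_conj]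
      calc _ ≤ ‖expSum A f x‖ * ‖expSum A f x‖ * 1 := by gcongr
        _ = _ := by ring
  rw [h, integral_norm_sq_expSum] at h2
  simpa using h2

lemma coinc_mono {k : ℕ} {α : Type*} {A B : Finset α} (h : A ⊆ B) (f : α → Fin k → ℤ) :
    coinc A f ≤ coinc B f :=
  card_le_card (filter_subset_filter _ (product_subset_product h h))

/-- Transport of coincidences along an injective map. -/
lemma coinc_le_of_injOn {k : ℕ} {α β : Type*} {A : Finset α} {B : Finset β}
    (f : α → Fin k → ℤ) (g : β → Fin k → ℤ) (φ : α → β) (hφ : ∀ a ∈ A, φ a ∈ B)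
    (hinj : Set.InjOn φ A) (h : ∀ a ∈ A, ∀ b ∈ A, f a = f b → g (φ a) = g (φ b)) :
    coinc A f ≤ coinc B g := by
  refine card_le_card_of_injOn (fun q => (φ q.1, φ q.2)) ?_ ?_
  · intro q hq
    simp only [coe_filter, mem_product, Set.mem_ofPred_eq] at hq ⊢
    exact ⟨⟨hφ _ hq.1.1, hφ _ hq.1.2⟩, h _ hq.1.1 _ hq.1.2 hq.2⟩
  · intro q hq r hr hqr
    simp only [coe_filter, mem_product, Set.mem_ofPred_eq] at hq hr
    simp only [Prod.mk.injEq] at hqr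
    exact Prod.ext (hinj hq.1.1 hr.1.1 hqr.1) (hinj hq.1.2 hr.1.2 hqr.2)

lemma coinc_le_sum_fiber {k : ℕ} {α γ : Type*} [DecidableEq γ] (A : Finset α)
    (f : α → Fin k → ℤ) (C : Finset γ) (c : α → γ) (hc : ∀ a ∈ A, c a ∈ C) :
    (coinc A f : ℝ) ≤ #C * ∑ j ∈ C, (coinc {a ∈ A | c a = j} f : ℝ) := by
  simp_rw [← integral_norm_sq_expSum]
  rw [← integral_finsetSum _ (fun j _ => integrable_torus (by
    have := continuous_expSum {a ∈ A | c a = j} f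
    fun_prop)), ← integral_const_mul]
  refine integral_mono ?_ ?_ ?_
  · have := continuous_expSum A f
    exact integrable_torus (by fun_prop)
  · have := fun j => continuous_expSum {a ∈ A | c a = j} f
    exact integrable_torus (by fun_prop)
  · intro x
    have h1 : expSum A f x = ∑ j ∈ C, expSum {a ∈ A | c a = j} f x := by
      unfold expSum
      rw [Finset.sum_fiberwise_of_maps_to hc]
    simp only [h1]
    calc _ ≤ (∑ j ∈ C, ‖expSum {a ∈ A | c a = j} f x‖) ^ 2 := by
          gcongr; exact norm_sum_le _ _
      _ ≤ _ := sq_sum_le_card_mul_sum_sq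

lemma expSum_product {k : ℕ} {α β : Type*} (A : Finset α) (B : Finset β) (f : α → Fin k → ℤ)
    (g : β → Fin k → ℤ) (x) :
    expSum (A ×ˢ B) (fun q => f q.1 + g q.2) x = expSum A f x * expSum B g x := by
  unfold expSum
  rw [Finset.sum_mul_sum, ← Finset.sum_product']
  exact Finset.sum_congr rfl fun q _ => UnitAddTorus.mFourier_add

lemma expSum_pow {k : ℕ} {α ι : Type*} [Fintype ι] [DecidableEq ι] (A : Finset α)
    (f : α → Fin k → ℤ) (x) :
    expSum (Fintype.piFinset fun _ : ι => A) (fun u => ∑ i, f (u i)) x =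
      expSum A f x ^ Fintype.card ι := by
  have h : ∀ (s : Finset ι) (g : ι → Fin k → ℤ), UnitAddTorus.mFourier (∑ i ∈ s, g i) x =
      ∏ i ∈ s, UnitAddTorus.mFourier (g i) x := by
    intro s g
    induction s using Finset.induction_on with
    | empty => simp [UnitAddTorus.mFourier_zero]
    | insert a s ha ih =>
      rw [Finset.sum_insert ha, Finset.prod_insert ha, UnitAddTorus.mFourier_add, ih]
  unfold expSum
  simp_rw [h]
  have := Finset.prod_univ_sum (fun _ : ι => A) (fun _ a => UnitAddTorus.mFourier (f a) x)
  rw [← this]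
  simp

end Mills

namespace Mills
open Finset MeasureTheory

/-! ### Vinogradov's mean value theorem -/

/-- The point `(n, n², …, nᵏ)` of the moment curve. -/
def nu (k : ℕ) (n : ℤ) : Fin k → ℤ := fun j => n ^ ((j : ℕ) + 1)

/-- Vinogradov's mean value: the number of solutions of `∑ xᵢʲ = ∑ yᵢʲ` (`1 ≤ j ≤ k`) with
`x, y ∈ S^ι`. -/
def vino (k : ℕ) (ι : Type*) [Fintype ι] [DecidableEq ι] (S : Finset ℤ) : ℕ :=
  coinc (Fintype.piFinset fun _ : ι => S) (fun u => ∑ i, nu k (u i))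

lemma integral_norm_pow_expSum (k : ℕ) {ι : Type*} [Fintype ι] [DecidableEq ι] (S : Finset ℤ) :
    ∫ x, ‖expSum S (nu k) x‖ ^ (2 * Fintype.card ι) ∂(haarT k) = (vino k ι S : ℝ) := by
  rw [vino, ← integral_norm_sq_expSum]
  simp_rw [expSum_pow, norm_pow, ← pow_mul, mul_comm]

lemma sum_nu_eq_iff {k : ℕ} {ι κ : Type*} [Fintype ι] [Fintype κ] (x : ι → ℤ) (y : κ → ℤ) :
    ∑ i, nu k (x i) = ∑ i, nu k (y i) ↔
      ∀ m, 1 ≤ m → m ≤ k → ∑ i, x i ^ m = ∑ i, y i ^ m := by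
  rw [funext_iff]
  constructor
  · intro h m h1 hm
    have := h ⟨m - 1, by omega⟩
    simpa [nu, Finset.sum_apply, Nat.sub_add_cancel h1] using this
  · intro h j
    simpa [nu, Finset.sum_apply] using h (j + 1) (by omega) (by omega)

lemma sum_sub_pow_eq {k : ℕ} {ι : Type*} [Fintype ι] (x y : ι → ℤ)
    (h : ∀ m, 1 ≤ m → m ≤ k → ∑ i, x i ^ m = ∑ i, y i ^ m) (a : ℤ) :
    ∀ m ≤ k, ∑ i, (x i - a) ^ m = ∑ i, (y i - a) ^ m := by
  intro m hm
  simp_rw [sub_eq_add_neg, add_pow]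
  rw [Finset.sum_comm, Finset.sum_comm (s := univ)]
  refine Finset.sum_congr rfl fun j hj => ?_
  simp_rw [← Finset.sum_mul]
  rcases Nat.eq_zero_or_pos j with rfl | hj0
  · simp
  · rw [h j hj0 (by have := mem_range.1 hj; omega)]

lemma vino_card_eq {k : ℕ} {ι κ : Type*} [Fintype ι] [DecidableEq ι] [Fintype κ] [DecidableEq κ]
    (h : Fintype.card ι = Fintype.card κ) (S : Finset ℤ) : vino k ι S = vino k κ S := by
  have h1 := integral_norm_pow_expSum k (ι := ι) S
  have h2 := integral_norm_pow_expSum k (ι := κ) S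
  rw [h, h2] at h1
  exact_mod_cast h1.symm

/-- Invariance of the system under an affine change of variables. -/
lemma vino_le_affine {k : ℕ} {ι : Type*} [Fintype ι] [DecidableEq ι] {S T : Finset ℤ}
    (φ : ℤ → ℤ) (a p : ℤ) (hp : p ≠ 0) (hφ : ∀ n ∈ S, p * φ n = n - a) (hST : ∀ n ∈ S, φ n ∈ T) :
    vino k ι S ≤ vino k ι T := by
  refine coinc_le_of_injOn _ _ (fun u i => φ (u i)) ?_ ?_ ?_
  · intro u hu
    rw [Fintype.mem_piFinset] at hu ⊢
    exact fun i => hST _ (hu i)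
  · intro u hu v hv huv
    rw [Finset.mem_coe, Fintype.mem_piFinset] at hu hv
    funext i
    have h1 := hφ _ (hu i)
    have h2 := hφ _ (hv i)
    have h3 := congrFun huv i
    simp only at h3
    rw [h3] at h1
    linarith
  · intro u hu v hv huv
    rw [Fintype.mem_piFinset] at hu hv
    rw [sum_nu_eq_iff] at huv ⊢
    intro m h1 hm
    have h2 := sum_sub_pow_eq u v huv a m hm
    simp_rw [← hφ _ (hu _), ← hφ _ (hv _), mul_pow, ← Finset.mul_sum] at h2
    exact mul_left_cancel₀ (pow_ne_zero _ hp) h2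

lemma norm_expSum_le {k : ℕ} {α : Type*} (A : Finset α) (f : α → Fin k → ℤ) (x) :
    ‖expSum A f x‖ ≤ #A := by
  unfold expSum
  refine (norm_sum_le _ _).trans ?_
  have : ∀ a ∈ A, ‖UnitAddTorus.mFourier (f a) x‖ ≤ 1 := fun a _ =>
    (ContinuousMap.norm_coe_le_norm _ x).trans_eq UnitAddTorus.mFourier_norm
  simpa using Finset.sum_le_sum this

lemma vino_add_le {k s r : ℕ} (S : Finset ℤ) :
    vino k (Fin (r + s)) S ≤ #S ^ (2 * r) * vino k (Fin s) S := by
  have : (vino k (Fin (r + s)) S : ℝ) ≤ #S ^ (2 * r) * vino k (Fin s) S := by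
    rw [← integral_norm_pow_expSum, ← integral_norm_pow_expSum, ← integral_const_mul]
    have hc := continuous_expSum S (nu k)
    refine integral_mono (integrable_torus (by fun_prop)) (integrable_torus (by fun_prop)) ?_
    intro x
    simp only [Fintype.card_fin]
    rw [mul_add, pow_add]
    gcongr
    exact norm_expSum_le _ _ _
  exact_mod_cast this

/-- The elements of `{1, …, X}` in the residue class `a` modulo `p`. -/
noncomputable def cls (p X : ℕ) (a : ZMod p) : Finset ℤ := {n ∈ Icc (1 : ℤ) X | ((n : ℤ) : ZMod p) = a}

lemma vino_cls_le {k p X : ℕ} (hp : 0 < p) {ι : Type*} [Fintype ι] [DecidableEq ι] (a : ZMod p) :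
    vino k ι (cls p X a) ≤ vino k ι (Icc (1 : ℤ) (X / p + 1 : ℕ)) := by
  have : NeZero p := ⟨hp.ne'⟩
  refine vino_le_affine (fun n => n / p + 1) ((a.val : ℤ) - p) p (by exact_mod_cast hp.ne') ?_ ?_
  · intro n hn
    have h1 : n % p = a.val := by
      have := (mem_filter.1 hn).2
      rw [← this, ZMod.val_intCast]
    have := Int.mul_ediv_add_emod n p
    linarith
  · intro n hn
    have h := mem_Icc.1 (mem_filter.1 hn).1
    rw [mem_Icc]
    have hp' : (0 : ℤ) < p := by exact_mod_cast hp
    have h1 : 0 ≤ n / p := Int.ediv_nonneg (by linarith) hp'.le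
    have h2 : n / p ≤ (X : ℤ) / p := Int.ediv_le_ediv hp' h.2
    push_cast
    constructor <;> linarith

lemma norm_sum_pow_le {α : Type*} (R : Finset α) (f : α → ℂ) (n : ℕ) (hn : 1 ≤ n) :
    ‖∑ a ∈ R, f a‖ ^ n ≤ (#R : ℝ) ^ (n - 1) * ∑ a ∈ R, ‖f a‖ ^ n := by
  rcases R.eq_empty_or_nonempty with rfl | hR
  · simp [show n ≠ 0 by omega]
  obtain ⟨m, rfl⟩ : ∃ m, n = m + 1 := ⟨n - 1, by omega⟩
  have h := pow_sum_div_card_le_sum_pow (s := R) (f := fun a => ‖f a‖) (n := m)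
    (fun a _ => norm_nonneg _)
  have hR' : (0 : ℝ) < #R := by exact_mod_cast hR.card_pos
  rw [div_le_iff₀ (by positivity)] at h
  calc _ ≤ (∑ a ∈ R, ‖f a‖) ^ (m + 1) := by gcongr; exact norm_sum_le _ _
    _ ≤ _ := by rw [add_tsub_cancel_right, mul_comm]; exact h

lemma vino_residues_le {k p X : ℕ} (hp : 0 < p) {ι : Type*} [Fintype ι] [DecidableEq ι]
    [Nonempty ι] (R : Finset (ZMod p)) :
    (vino k ι {n ∈ Icc (1 : ℤ) X | ((n : ℤ) : ZMod p) ∈ R} : ℝ) ≤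
      (#R : ℝ) ^ (2 * Fintype.card ι) * vino k ι (Icc (1 : ℤ) (X / p + 1 : ℕ)) := by
  have hcard : 1 ≤ Fintype.card ι := Fintype.card_pos
  have h1 : ∀ x, expSum {n ∈ Icc (1 : ℤ) X | ((n : ℤ) : ZMod p) ∈ R} (nu k) x =
      ∑ a ∈ R, expSum (cls p X a) (nu k) x := by
    intro x
    unfold expSum cls
    rw [← Finset.sum_fiberwise_of_maps_to
      (g := fun n : ℤ => (n : ZMod p)) (t := R) (fun n hn => (mem_filter.1 hn).2)]
    refine Finset.sum_congr rfl fun a ha => Finset.sum_congr ?_ fun _ _ => rfl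
    ext n
    simp only [mem_filter]
    constructor
    · rintro ⟨⟨h, -⟩, h'⟩; exact ⟨h, h'⟩
    · rintro ⟨h, h'⟩; exact ⟨⟨h, h' ▸ ha⟩, h'⟩
  have hc := fun a => continuous_expSum (cls p X a) (nu k)
  calc _ = ∫ x, ‖∑ a ∈ R, expSum (cls p X a) (nu k) x‖ ^ (2 * Fintype.card ι) ∂(haarT k) := by
        rw [← integral_norm_pow_expSum]; simp_rw [h1]
    _ ≤ ∫ x, (#R : ℝ) ^ (2 * Fintype.card ι - 1) *
          ∑ a ∈ R, ‖expSum (cls p X a) (nu k) x‖ ^ (2 * Fintype.card ι) ∂(haarT k) := by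
        refine integral_mono (integrable_torus (by fun_prop)) (integrable_torus (by fun_prop)) ?_
        intro x
        exact norm_sum_pow_le _ _ _ (by omega)
    _ = (#R : ℝ) ^ (2 * Fintype.card ι - 1) * ∑ a ∈ R, (vino k ι (cls p X a) : ℝ) := by
        rw [integral_const_mul, integral_finsetSum _ (fun a _ => integrable_torus (by fun_prop))]
        simp_rw [integral_norm_pow_expSum]
    _ ≤ (#R : ℝ) ^ (2 * Fintype.card ι - 1) *
          ∑ a ∈ R, (vino k ι (Icc (1 : ℤ) (X / p + 1 : ℕ)) : ℝ) := by
        gcongr with a ha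
        exact_mod_cast vino_cls_le hp a
    _ = _ := by
        rw [Finset.sum_const, nsmul_eq_mul, ← mul_assoc, ← pow_succ]
        congr 2; omega

/-- The `k`-tuples from `{1, …, X}` with pairwise incongruent entries modulo `p`. -/
noncomputable def distinctTuples (k p X : ℕ) : Finset (Fin k → ℤ) :=
  {z ∈ Fintype.piFinset fun _ : Fin k => Icc (1 : ℤ) X | ∀ i j, (p : ℤ) ∣ z i - z j → i = j}

/-- Solutions whose last `s` entries all lie in one class `a` mod `p`: translating by `a` turns the
system into congruences for the first `k` entries, to which Linnik's lemma applies. -/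
lemma good_class_count {k p X s : ℕ} (hp : p.Prime) (hk : 1 ≤ k) (hkp : k < p) (hX : X ≤ p ^ k)
    (a : ZMod p) :
    coinc (distinctTuples k p X ×ˢ Fintype.piFinset fun _ : Fin s => cls p X a)
      (fun q => ∑ i, nu k (q.1 i) + ∑ i, nu k (q.2 i)) ≤
      X ^ k * (k ^ k * p ^ (k * (k - 1) / 2)) * vino k (Fin s) (Icc (1 : ℤ) (X / p + 1 : ℕ)) := by
  classical
  have : NeZero p := ⟨hp.ne_zero⟩
  set H := distinctTuples k p X
  set U := Fintype.piFinset fun _ : Fin s => cls p X a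
  let b : ℤ := a.val
  let P : Finset ((Fin k → ℤ) × (Fin k → ℤ)) := {q ∈ H ×ˢ H | ∀ j : Fin k,
    ((p : ℤ) ^ ((j : ℕ) + 1)) ∣ ∑ i, (q.1 i - b) ^ ((j : ℕ) + 1) -
      ∑ i, (q.2 i - b) ^ ((j : ℕ) + 1)}
  have hU : ∀ u ∈ U, ∀ i, (p : ℤ) ∣ u i - b := by
    intro u hu i
    have h1 := (mem_filter.1 (Fintype.mem_piFinset.1 hu i)).2
    rw [← ZMod.intCast_zmod_eq_zero_iff_dvd]
    simp [b, h1]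
  have hP : #P ≤ X ^ k * (k ^ k * p ^ (k * (k - 1) / 2)) := by
    have hH : #H ≤ X ^ k := by
      refine (card_filter_le _ _).trans ?_
      simp
    refine le_trans ?_ (Nat.mul_le_mul_right _ hH)
    rw [mul_comm]
    refine Finset.card_le_mul_card_image_of_maps_to (f := Prod.snd) ?_ _ ?_
    · intro q hq
      exact (mem_product.1 (mem_filter.1 hq).1).2
    · intro z' hz'
      let c : Fin k → ℤ := fun j => ∑ i, (z' i - b) ^ ((j : ℕ) + 1)
      refine le_trans ?_ (linnik_count hp hk hkp (-b) X hX c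
        (({q ∈ P | q.2 = z'}).image fun q i => q.1 i - b) ?_)
      · rw [card_image_of_injOn]
        intro q hq r hr hqr
        have hq2 := (mem_filter.1 hq).2
        have hr2 := (mem_filter.1 hr).2
        refine Prod.ext ?_ (hq2.trans hr2.symm)
        funext i
        have := congrFun hqr i
        simp only at this
        linarith
      · intro z hz
        obtain ⟨q, hq, rfl⟩ := mem_image.1 hz
        have hq2 := (mem_filter.1 hq).2
        have hqP := mem_filter.1 (mem_filter.1 hq).1
        have hqH := mem_filter.1 (mem_product.1 hqP.1).1
        refine ⟨fun i => ?_, fun i j hij => ?_, fun j => ?_⟩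
        · have := mem_Icc.1 (Fintype.mem_piFinset.1 hqH.1 i)
          rw [mem_Ioc]
          constructor <;> linarith
        · exact hqH.2 i j (by simpa using hij)
        · have := hqP.2 j
          rw [hq2] at this
          exact this
  refine le_trans ?_ (Nat.mul_le_mul hP (vino_cls_le (k := k) (X := X) (ι := Fin s) hp.pos a))
  rw [mul_comm]
  refine Finset.card_le_mul_card_image_of_maps_to (f := fun q => (q.1.1, q.2.1)) ?_ _ ?_
  · intro q hq
    obtain ⟨hq1, hq2⟩ := mem_filter.1 hq
    obtain ⟨h1, h2⟩ := mem_product.1 hq1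
    obtain ⟨h11, h12⟩ := mem_product.1 h1
    obtain ⟨h21, h22⟩ := mem_product.1 h2
    refine mem_filter.2 ⟨mem_product.2 ⟨h11, h21⟩, fun j => ?_⟩
    have h3 : ∑ i, nu k (Sum.elim q.1.1 q.1.2 i) = ∑ i, nu k (Sum.elim q.2.1 q.2.2 i) := by
      simpa [Fintype.sum_sum_type] using hq2
    rw [sum_nu_eq_iff] at h3
    have h4 := sum_sub_pow_eq _ _ h3 b ((j : ℕ) + 1) (by omega)
    simp only [Fintype.sum_sum_type, Sum.elim_inl, Sum.elim_inr] at h4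
    have h5 : ∑ i, (q.1.1 i - b) ^ ((j : ℕ) + 1) - ∑ i, (q.2.1 i - b) ^ ((j : ℕ) + 1) =
        ∑ i, (q.2.2 i - b) ^ ((j : ℕ) + 1) - ∑ i, (q.1.2 i - b) ^ ((j : ℕ) + 1) := by linarith
    simp only
    rw [h5]
    exact dvd_sub (Finset.dvd_sum fun i _ => pow_dvd_pow_of_dvd (hU _ h22 i) _)
      (Finset.dvd_sum fun i _ => pow_dvd_pow_of_dvd (hU _ h12 i) _)
  · intro z _
    refine le_trans ?_ (card_shift_le U (fun u => ∑ i, nu k (u i))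
      (∑ i, nu k (z.2 i) - ∑ i, nu k (z.1 i)))
    refine card_le_card_of_injOn (fun q => (q.1.2, q.2.2)) ?_ ?_
    · intro q hq
      obtain ⟨hq0, hq3⟩ := mem_filter.1 hq
      obtain ⟨hq1, hq2⟩ := mem_filter.1 hq0
      obtain ⟨h1, h2⟩ := mem_product.1 hq1
      refine mem_coe.2 (mem_filter.2 ⟨mem_product.2 ⟨(mem_product.1 h1).2, (mem_product.1 h2).2⟩, ?_⟩)
      simp only [← hq3]
      simp only at hq2
      rw [sub_eq_sub_iff_add_eq_add, add_comm, hq2, add_comm]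
    · intro q hq r hr hqr
      have hq3 := (mem_filter.1 hq).2
      have hr3 := (mem_filter.1 hr).2
      simp only [Prod.ext_iff] at hq3 hr3 hqr ⊢
      exact ⟨⟨hq3.1.trans hr3.1.symm, hqr.1⟩, ⟨hq3.2.trans hr3.2.symm, hqr.2⟩⟩

lemma good_count {k p X s : ℕ} (hp : p.Prime) (hk : 1 ≤ k) (hkp : k < p) (hX : X ≤ p ^ k)
    (hs : 1 ≤ s) :
    (coinc (distinctTuples k p X ×ˢ Fintype.piFinset fun _ : Fin s => Icc (1 : ℤ) X)
      (fun q => ∑ i, nu k (q.1 i) + ∑ i, nu k (q.2 i)) : ℝ) ≤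
      (p : ℝ) ^ (2 * s) * ((X : ℝ) ^ k * (k ^ k * p ^ (k * (k - 1) / 2)) *
        vino k (Fin s) (Icc (1 : ℤ) (X / p + 1 : ℕ))) := by
  have : NeZero p := ⟨hp.ne_zero⟩
  set H := distinctTuples k p X
  set h : (Fin k → ℤ) → Fin k → ℤ := fun z => ∑ i, nu k (z i) with hh
  have key : ∀ S : Finset ℤ, (coinc (H ×ˢ Fintype.piFinset fun _ : Fin s => S)
      (fun q => h q.1 + ∑ i, nu k (q.2 i)) : ℝ) =
      ∫ x, ‖expSum H h x‖ ^ 2 * ‖expSum S (nu k) x‖ ^ (2 * s) ∂(haarT k) := by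
    intro S
    rw [← integral_norm_sq_expSum]
    refine integral_congr_ae (Filter.Eventually.of_forall fun x => ?_)
    simp only
    rw [expSum_product H (Fintype.piFinset fun _ : Fin s => S) h (fun u => ∑ i, nu k (u i)),
      expSum_pow, norm_mul, mul_pow, norm_pow, Fintype.card_fin, ← pow_mul, mul_comm s 2]
  have h1 : ∀ x, expSum (Icc (1 : ℤ) X) (nu k) x = ∑ a : ZMod p, expSum (cls p X a) (nu k) x := by
    intro x
    unfold expSum cls
    rw [← Finset.sum_fiberwise_of_maps_to
      (g := fun n : ℤ => (n : ZMod p)) (t := univ) (fun n _ => mem_univ _)]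
  have hc := fun a => continuous_expSum (cls p X a) (nu k)
  have hc2 := continuous_expSum (Icc (1 : ℤ) X) (nu k)
  have hcH := continuous_expSum H h
  calc _ = ∫ x, ‖expSum H h x‖ ^ 2 * ‖expSum (Icc (1 : ℤ) X) (nu k) x‖ ^ (2 * s) ∂(haarT k) :=
        key _
    _ ≤ ∫ x, (p : ℝ) ^ (2 * s - 1) * ∑ a : ZMod p,
          ‖expSum H h x‖ ^ 2 * ‖expSum (cls p X a) (nu k) x‖ ^ (2 * s) ∂(haarT k) := by
        refine integral_mono (integrable_torus (by fun_prop)) (integrable_torus (by fun_prop)) ?_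
        intro x
        simp only
        rw [h1, ← Finset.mul_sum]
        have := norm_sum_pow_le univ (fun a : ZMod p => expSum (cls p X a) (nu k) x) (2 * s)
          (by omega)
        rw [Finset.card_univ, ZMod.card] at this
        calc _ ≤ _ := mul_le_mul_of_nonneg_left this (by positivity)
          _ = _ := by ring
    _ = (p : ℝ) ^ (2 * s - 1) * ∑ a : ZMod p,
          (coinc (H ×ˢ Fintype.piFinset fun _ : Fin s => cls p X a)
            (fun q => h q.1 + ∑ i, nu k (q.2 i)) : ℝ) := by
        rw [integral_const_mul, integral_finsetSum _ (fun a _ => integrable_torus (by fun_prop))]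
        simp_rw [key]
    _ ≤ (p : ℝ) ^ (2 * s - 1) * ∑ a : ZMod p, ((X : ℝ) ^ k * (k ^ k * p ^ (k * (k - 1) / 2)) *
        vino k (Fin s) (Icc (1 : ℤ) (X / p + 1 : ℕ))) := by
        gcongr with a ha
        exact_mod_cast good_class_count (s := s) hp hk hkp hX a
    _ = _ := by
        rw [Finset.sum_const, nsmul_eq_mul, Finset.card_univ, ZMod.card, ← mul_assoc, ← pow_succ]
        congr 2; omega

/-- A tuple meeting at least `k` residue classes has, after a permutation of its entries, its first
`k` entries pairwise incongruent. -/
lemma exists_perm_of_card {k s p : ℕ} (x : Fin k ⊕ Fin s → ℤ)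
    (h : k ≤ #(univ.image fun i => (x i : ZMod p))) :
    ∃ σ : Equiv.Perm (Fin k ⊕ Fin s), ∀ i j : Fin k,
      (p : ℤ) ∣ x (σ (Sum.inl i)) - x (σ (Sum.inl j)) → i = j := by
  classical
  obtain ⟨R, hR, hRk⟩ := exists_subset_card_eq h
  have h1 : ∀ r ∈ R, ∃ i, (x i : ZMod p) = r := by
    intro r hr
    obtain ⟨i, -, hi⟩ := mem_image.1 (hR hr)
    exact ⟨i, hi⟩
  choose g hg using h1
  let e : Fin k ≃ R := (finCongr hRk.symm).trans R.equivFin.symm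
  let f : Fin k → Fin k ⊕ Fin s := fun i => g (e i) (e i).2
  have hf : ∀ i, (x (f i) : ZMod p) = e i := fun i => hg _ (e i).2
  have hfinj : Function.Injective f := by
    intro i j hij
    apply e.injective
    apply Subtype.ext
    rw [← hf i, ← hf j, hij]
  let E : {y : Fin k ⊕ Fin s // y ∈ Set.range (Sum.inl : Fin k → Fin k ⊕ Fin s)} ≃
      {y : Fin k ⊕ Fin s // y ∈ Set.range f} :=
    (Equiv.ofInjective _ Sum.inl_injective).symm.trans (Equiv.ofInjective f hfinj)
  refine ⟨E.extendSubtype, fun i j hij => ?_⟩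
  have hE : ∀ i, E.extendSubtype (Sum.inl i) = f i := by
    intro i
    rw [Equiv.extendSubtype_apply_of_mem E _ ⟨i, rfl⟩]
    simp only [E, Equiv.trans_apply]
    have : (Equiv.ofInjective (Sum.inl : Fin k → Fin k ⊕ Fin s) Sum.inl_injective).symm
        ⟨Sum.inl i, ⟨i, rfl⟩⟩ = i := by
      rw [Equiv.symm_apply_eq]; rfl
    rw [this]; rfl
  rw [hE, hE] at hij
  have h2 : ((x (f i) - x (f j) : ℤ) : ZMod p) = 0 := by
    rw [ZMod.intCast_zmod_eq_zero_iff_dvd]; exact hij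
  push_cast at h2
  rw [hf, hf, sub_eq_zero] at h2
  exact e.injective (Subtype.ext h2)

/-- The recursion step from `s` to `k + s` variables. Solutions with `k` incongruent entries are
counted by `good_count`; the others live in fewer than `k` residue classes. -/
lemma vino_recursion {k p X s : ℕ} (hp : p.Prime) (hk : 1 ≤ k) (hkp : k < p) (hX : X ≤ p ^ k)
    (hs : 1 ≤ s) :
    (vino k (Fin (k + s)) (Icc (1 : ℤ) X) : ℝ) ≤
      ((k + s).factorial + 1) * ((k + s).factorial * ((p : ℝ) ^ (2 * s) * ((X : ℝ) ^ k *
        (k ^ k * p ^ (k * (k - 1) / 2)))) +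
        (p : ℝ) ^ (2 * (k - 1)) * (k ^ (2 * (k + s)) * ((X / p + 1 : ℕ) : ℝ) ^ (2 * k))) *
        vino k (Fin s) (Icc (1 : ℤ) (X / p + 1 : ℕ)) := by
  classical
  have : NeZero p := ⟨hp.ne_zero⟩
  set ι := Fin k ⊕ Fin s
  have hcι : Fintype.card ι = Fintype.card (Fin (k + s)) := by simp [ι]
  rw [← vino_card_eq hcι]
  set S := Icc (1 : ℤ) X
  set V : ℝ := (vino k (Fin s) (Icc (1 : ℤ) (X / p + 1 : ℕ)) : ℝ)
  have h6 : (vino k (Fin (k + s)) (Icc (1 : ℤ) (X / p + 1 : ℕ)) : ℝ) ≤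
      ((X / p + 1 : ℕ) : ℝ) ^ (2 * k) * V := by
    have h5 := vino_add_le (k := k) (s := s) (r := k) (Icc (1 : ℤ) (X / p + 1 : ℕ))
    rw [Int.card_Icc, add_sub_cancel_right, Int.toNat_natCast] at h5
    have := (Nat.cast_le (α := ℝ)).2 h5
    rwa [Nat.cast_mul, Nat.cast_pow] at this
  have hV : (0 : ℝ) ≤ V := Nat.cast_nonneg _
  have hgc : _ ≤ (p : ℝ) ^ (2 * s) * ((X : ℝ) ^ k * (k ^ k * p ^ (k * (k - 1) / 2)) * V) :=
    good_count (s := s) hp hk hkp hX hs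
  clear_value V
  set T := Fintype.piFinset fun _ : ι => S
  set f : (ι → ℤ) → Fin k → ℤ := fun u => ∑ i, nu k (u i)
  let good : (ι → ℤ) → Prop := fun x => ∃ σ : Equiv.Perm ι, ∀ i j : Fin k,
      (p : ℤ) ∣ x (σ (Sum.inl i)) - x (σ (Sum.inl j)) → i = j
  let c : (ι → ℤ) → Option (Equiv.Perm ι) := fun x =>
    if h : good x then some h.choose else none
  have h1 := coinc_le_sum_fiber T f univ c (fun _ _ => mem_univ _)
  have hfac : Fintype.card (Equiv.Perm ι) = (k + s).factorial := by
    rw [Fintype.card_perm]; simp [ι]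
  rw [Finset.card_univ, Fintype.card_option, hfac, Fintype.sum_option] at h1
  have hgood : ∀ σ : Equiv.Perm ι, (coinc {x ∈ T | c x = some σ} f : ℝ) ≤
      (p : ℝ) ^ (2 * s) * ((X : ℝ) ^ k * (k ^ k * p ^ (k * (k - 1) / 2)) * V) := by
    intro σ
    refine le_trans ?_ hgc
    have : coinc {x ∈ T | c x = some σ} f ≤
      coinc (distinctTuples k p X ×ˢ Fintype.piFinset fun _ : Fin s => Icc (1 : ℤ) X)
      (fun q => ∑ i, nu k (q.1 i) + ∑ i, nu k (q.2 i)) := by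
      have hf : ∀ x : ι → ℤ, ∑ i, nu k (x (σ (Sum.inl i))) + ∑ i, nu k (x (σ (Sum.inr i))) = f x := by
        intro x
        simp only [f]
        rw [← Equiv.sum_comp σ, Fintype.sum_sum_type]
      refine coinc_le_of_injOn _ _
        (fun x => (fun i => x (σ (Sum.inl i)), fun i => x (σ (Sum.inr i)))) ?_ ?_ ?_
      · intro x hx
        obtain ⟨hxT, hxc⟩ := mem_filter.1 hx
        have hxT' := Fintype.mem_piFinset.1 hxT
        refine mem_product.2 ⟨mem_filter.2 ⟨Fintype.mem_piFinset.2 fun i => hxT' _, ?_⟩,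
          Fintype.mem_piFinset.2 fun i => hxT' _⟩
        simp only [c] at hxc
        split_ifs at hxc with hgx
        have := hgx.choose_spec
        rw [Option.some.inj hxc] at this
        exact this
      · intro x _ y _ hxy
        simp only [Prod.mk.injEq, funext_iff] at hxy
        funext i
        obtain ⟨j, rfl⟩ := σ.surjective i
        cases j with
        | inl j => exact hxy.1 j
        | inr j => exact hxy.2 j
      · intro x _ y _ hxy
        simp only [hf, hxy]
    exact_mod_cast this
  have hbad : (coinc {x ∈ T | c x = none} f : ℝ) ≤
      (p : ℝ) ^ (2 * (k - 1)) * (k ^ (2 * (k + s)) * ((X / p + 1 : ℕ) : ℝ) ^ (2 * k)) * V := by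
    have hR : ∀ x ∈ {x ∈ T | c x = none}, ∃ R ∈ powersetCard (k - 1) (univ : Finset (ZMod p)),
        ∀ i, (x i : ZMod p) ∈ R := by
      intro x hx
      have hxc := (mem_filter.1 hx).2
      simp only [c] at hxc
      split_ifs at hxc with hgx
      have h2 : #(univ.image fun i => (x i : ZMod p)) ≤ k - 1 := by
        by_contra hcon
        refine hgx (exists_perm_of_card x ?_)
        have h9 : ∀ n, ¬ n ≤ k - 1 → k ≤ n := by intro n; omega
        convert h9 _ hcon
      obtain ⟨R, hR1, hR2⟩ := exists_superset_card_eq h2 (by rw [ZMod.card]; omega)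
      exact ⟨R, mem_powersetCard.2 ⟨subset_univ _, hR2⟩,
        fun i => hR1 (mem_image_of_mem _ (mem_univ i))⟩
    choose! R hR1 hR2 using hR
    have h3 := coinc_le_sum_fiber {x ∈ T | c x = none} f _ R hR1
    have hcard : (#(powersetCard (k - 1) (univ : Finset (ZMod p))) : ℝ) ≤ (p : ℝ) ^ (k - 1) := by
      rw [card_powersetCard, Finset.card_univ, ZMod.card]
      exact_mod_cast Nat.choose_le_pow p (k - 1)
    have h4 : ∀ r ∈ powersetCard (k - 1) (univ : Finset (ZMod p)),
        (coinc {x ∈ {x ∈ T | c x = none} | R x = r} f : ℝ) ≤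
        (k : ℝ) ^ (2 * (k + s)) * (((X / p + 1 : ℕ) : ℝ) ^ (2 * k) * V) := by
      intro r hr
      have : Nonempty ι := ⟨Sum.inr ⟨0, hs⟩⟩
      calc (coinc {x ∈ {x ∈ T | c x = none} | R x = r} f : ℝ)
          ≤ (vino k ι {n ∈ Icc (1 : ℤ) X | ((n : ℤ) : ZMod p) ∈ r} : ℝ) := by
            have : coinc {x ∈ {x ∈ T | c x = none} | R x = r} f ≤
                vino k ι {n ∈ Icc (1 : ℤ) X | ((n : ℤ) : ZMod p) ∈ r} := by
              refine coinc_mono ?_ _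
              intro x hx
              obtain ⟨hx1, hx2⟩ := mem_filter.1 hx
              have hxT := Fintype.mem_piFinset.1 (mem_filter.1 hx1).1
              refine Fintype.mem_piFinset.2 fun i => mem_filter.2 ⟨hxT i, ?_⟩
              rw [← hx2]
              exact hR2 x hx1 i
            exact_mod_cast this
        _ ≤ (#r : ℝ) ^ (2 * Fintype.card ι) * vino k ι (Icc (1 : ℤ) (X / p + 1 : ℕ)) :=
            vino_residues_le hp.pos r
        _ ≤ (k : ℝ) ^ (2 * (k + s)) * (((X / p + 1 : ℕ) : ℝ) ^ (2 * k) * V) := by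
            rw [hcι, Fintype.card_fin, vino_card_eq hcι, (mem_powersetCard.1 hr).2]
            refine mul_le_mul (pow_le_pow_left₀ (Nat.cast_nonneg _) ?_ _) h6
              (Nat.cast_nonneg _) (by positivity)
            exact_mod_cast Nat.sub_le k 1
    calc _ ≤ _ := h3
      _ ≤ (p : ℝ) ^ (k - 1) * ∑ r ∈ powersetCard (k - 1) (univ : Finset (ZMod p)),
          (k : ℝ) ^ (2 * (k + s)) * (((X / p + 1 : ℕ) : ℝ) ^ (2 * k) * V) := by
          exact mul_le_mul hcard (Finset.sum_le_sum h4)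
            (Finset.sum_nonneg fun _ _ => Nat.cast_nonneg _) (by positivity)
      _ ≤ (p : ℝ) ^ (k - 1) * ((p : ℝ) ^ (k - 1) *
          ((k : ℝ) ^ (2 * (k + s)) * (((X / p + 1 : ℕ) : ℝ) ^ (2 * k) * V))) := by
          rw [Finset.sum_const, nsmul_eq_mul]
          refine mul_le_mul_of_nonneg_left (mul_le_mul_of_nonneg_right hcard ?_) ?_ <;> positivity
      _ = _ := by ring
  calc (vino k ι S : ℝ) ≤ _ := h1
    _ ≤ (((k + s).factorial + 1 : ℕ) : ℝ) * ((p : ℝ) ^ (2 * (k - 1)) * (k ^ (2 * (k + s)) *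
          ((X / p + 1 : ℕ) : ℝ) ^ (2 * k)) * V + ∑ σ : Equiv.Perm ι,
          (p : ℝ) ^ (2 * s) * ((X : ℝ) ^ k * (k ^ k * p ^ (k * (k - 1) / 2)) * V)) := by
        refine mul_le_mul_of_nonneg_left (add_le_add hbad (Finset.sum_le_sum fun σ _ => hgood σ))
          (Nat.cast_nonneg _)
    _ = _ := by
        rw [Finset.sum_const, Finset.card_univ, hfac, nsmul_eq_mul]
        push_cast
        ring

lemma step_const {k s b S : ℕ} (hk : 3 ≤ k) (hs : k ^ 2 ≤ s) (hb : b = k + s) (hS : b ≤ S) :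
    (((b.factorial : ℝ) + 1) * (b.factorial * ((4 * k : ℝ) ^ (2 * s + k * (k - 1) / 2) * k ^ k) +
      (4 * k : ℝ) ^ (2 * (k - 1)) * (k ^ (2 * b) * 2 ^ (2 * k)))) * 2 ^ (2 * s) ≤
      (S : ℝ) ^ (8 * S) := by
  have hb12 : 12 ≤ b := by nlinarith
  have hb12R : (12 : ℝ) ≤ b := by exact_mod_cast hb12
  have hkk : 4 * k ≤ b := by nlinarith
  have e1 : 2 * s + k * (k - 1) / 2 ≤ 3 * b := by
    have h1 : k * (k - 1) ≤ k * k := Nat.mul_le_mul_left _ (Nat.sub_le _ _)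
    have h2 : k * (k - 1) / 2 ≤ s := by
      have : k * k = k ^ 2 := by ring
      omega
    omega
  have hB : (1 : ℝ) ≤ b := by exact_mod_cast (by omega : 1 ≤ b)
  have hfac : (b.factorial : ℝ) ≤ (b : ℝ) ^ b := by exact_mod_cast Nat.factorial_le_pow b
  have h4k : (4 * k : ℝ) ≤ b := by exact_mod_cast hkk
  have hkb : (k : ℝ) ≤ b := by exact_mod_cast (by omega : k ≤ b)
  have hone : (1 : ℝ) ≤ (b : ℝ) ^ b := one_le_pow₀ hB
  have h1k : (1 : ℝ) ≤ 4 * k := by exact_mod_cast (by omega : 1 ≤ 4 * k)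
  have t1 : (4 * k : ℝ) ^ (2 * s + k * (k - 1) / 2) ≤ (b : ℝ) ^ (3 * b) :=
    (pow_le_pow_left₀ (by positivity) h4k _).trans (pow_le_pow_right₀ hB e1)
  have t2 : (k : ℝ) ^ k ≤ (b : ℝ) ^ b :=
    (pow_le_pow_left₀ (by positivity) hkb _).trans (pow_le_pow_right₀ hB (by omega))
  have t3 : (4 * k : ℝ) ^ (2 * (k - 1)) ≤ (b : ℝ) ^ b :=
    (pow_le_pow_left₀ (by positivity) h4k _).trans (pow_le_pow_right₀ hB (by omega))
  have t4 : (k : ℝ) ^ (2 * b) ≤ (b : ℝ) ^ (2 * b) := pow_le_pow_left₀ (by positivity) hkb _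
  have t5 : (2 : ℝ) ^ (2 * k) ≤ (b : ℝ) ^ (2 * b) :=
    (pow_le_pow_left₀ (by positivity) (by linarith) _).trans
      (pow_le_pow_right₀ hB (by omega))
  have t6 : (2 : ℝ) ^ (2 * s) * 4 ≤ (b : ℝ) ^ (2 * b) := by
    calc (2 : ℝ) ^ (2 * s) * 4 = 2 ^ (2 * s + 2) := by rw [pow_add]; norm_num
      _ ≤ 2 ^ (2 * b) := pow_le_pow_right₀ (by norm_num) (by omega)
      _ ≤ _ := pow_le_pow_left₀ (by norm_num)
        (by linarith) _
  set β := (b : ℝ) ^ b with hβ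
  have p2 : (b : ℝ) ^ (2 * b) = β ^ 2 := by rw [mul_comm, pow_mul]
  have p3 : (b : ℝ) ^ (3 * b) = β ^ 3 := by rw [mul_comm, pow_mul]
  have p8 : (b : ℝ) ^ (8 * b) = β ^ 8 := by rw [mul_comm, pow_mul]
  rw [p2] at t4 t5 t6
  rw [p3] at t1
  have final : (b : ℝ) ^ (8 * b) ≤ (S : ℝ) ^ (8 * S) :=
    (pow_le_pow_left₀ (by positivity) (by exact_mod_cast hS) _).trans
      (pow_le_pow_right₀ (hB.trans (by exact_mod_cast hS)) (by omega))
  refine le_trans ?_ final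
  rw [p8]
  calc _ ≤ ((β + β) * (β * (β ^ 3 * β) + β * (β ^ 2 * β ^ 2))) * 2 ^ (2 * s) := by gcongr
    _ = β ^ 6 * (2 ^ (2 * s) * 4) := by ring
    _ ≤ β ^ 6 * β ^ 2 := by gcongr
    _ = β ^ 8 := by ring

lemma exists_prime_step {k X : ℕ} (hk : 3 ≤ k) (hX : 1 ≤ X) :
    ∃ p : ℕ, p.Prime ∧ k < p ∧ X ≤ p ^ k ∧ (p : ℝ) ≤ 4 * k * (X : ℝ) ^ (1 / k : ℝ) ∧
      (X : ℝ) ^ (1 / k : ℝ) ≤ p := by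
  have hX1 : (1 : ℝ) ≤ X := by exact_mod_cast hX
  set Q := (X : ℝ) ^ (1 / k : ℝ) with hQ
  have hQ1 : 1 ≤ Q := Real.one_le_rpow hX1 (by positivity)
  obtain ⟨p, hp, h1, h2⟩ := Nat.exists_prime_lt_and_le_two_mul (k * ⌈Q⌉₊)
    (by have : 0 < ⌈Q⌉₊ := Nat.ceil_pos.2 (by linarith)
        positivity)
  have hc : 1 ≤ ⌈Q⌉₊ := Nat.ceil_pos.2 (by linarith)
  have hQp : Q ≤ p := by
    have h3 : Q ≤ ⌈Q⌉₊ := Nat.le_ceil _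
    have h4 : ⌈Q⌉₊ ≤ p := by nlinarith
    exact h3.trans (by exact_mod_cast h4)
  refine ⟨p, hp, by nlinarith, ?_, ?_, hQp⟩
  · have h5 : Q ^ k ≤ (p : ℝ) ^ k := pow_le_pow_left₀ (by linarith) hQp _
    have h6 : Q ^ k = X := by
      rw [hQ, ← Real.rpow_natCast, ← Real.rpow_mul (by linarith), one_div_mul_cancel
        (by positivity), Real.rpow_one]
    rw [h6] at h5
    exact_mod_cast h5
  · have h7 : (⌈Q⌉₊ : ℝ) ≤ 2 * Q := by
      have := (Nat.ceil_lt_add_one (by linarith : 0 ≤ Q)).le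
      linarith
    calc (p : ℝ) ≤ ((2 * (k * ⌈Q⌉₊) : ℕ) : ℝ) := by exact_mod_cast h2
      _ = 2 * k * ⌈Q⌉₊ := by push_cast; ring
      _ ≤ 2 * k * (2 * Q) := by gcongr
      _ = _ := by ring

/-- The excess `η_r = (k(k+1)/2)(1 - 1/k)^r` of the exponent after `r` steps of the recursion. -/
noncomputable def eta (k r : ℕ) : ℝ := (k * (k + 1) / 2 : ℝ) * (1 - 1 / k) ^ r

lemma eta_nonneg {k : ℕ} (hk : 3 ≤ k) (r : ℕ) : 0 ≤ eta k r := by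
  have : (1 : ℝ) / k ≤ 1 := by
    rw [div_le_one (by positivity)]; exact_mod_cast (by omega : 1 ≤ k)
  have : (0 : ℝ) ≤ 1 - 1 / k := by linarith
  unfold eta; positivity

lemma eta_le {k : ℕ} (hk : 3 ≤ k) (r : ℕ) : eta k r ≤ k * (k + 1) / 2 := by
  have : (1 : ℝ) / k ≤ 1 := by
    rw [div_le_one (by positivity)]; exact_mod_cast (by omega : 1 ≤ k)
  have h2 : (0 : ℝ) ≤ 1 / k := by positivity
  unfold eta
  exact mul_le_of_le_one_right (by positivity) (pow_le_one₀ (by linarith) (by linarith))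

/-- **Vinogradov's mean value theorem** with explicit constants. -/
theorem vino_bound {k : ℕ} (hk : 3 ≤ k) (S : ℕ) : ∀ r : ℕ, k ^ 2 + k * r ≤ S → ∀ X : ℕ, 1 ≤ X →
    (vino k (Fin (k ^ 2 + k * r)) (Icc (1 : ℤ) X) : ℝ) ≤
      ((S : ℝ) ^ (8 * S)) ^ r *
        (X : ℝ) ^ (2 * (k ^ 2 + k * r : ℝ) - k * (k + 1) / 2 + eta k r) := by
  intro r
  induction r with
  | zero =>
    intro _ X hX
    have h := vino_add_le (k := k) (s := 0) (r := k ^ 2) (Icc (1 : ℤ) X)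
    have h0 : vino k (Fin 0) (Icc (1 : ℤ) X) ≤ 1 := by
      unfold vino coinc
      refine (card_filter_le _ _).trans ?_
      rw [card_product, Fintype.card_piFinset_const]
      simp
    have h1 : vino k (Fin (k ^ 2 + k * 0)) (Icc (1 : ℤ) X) ≤ X ^ (2 * k ^ 2) := by
      have h2 : vino k (Fin (k ^ 2 + k * 0)) (Icc (1 : ℤ) X) = vino k (Fin (k ^ 2 + 0)) (Icc (1 : ℤ) X) := rfl
      rw [h2]
      refine h.trans ?_
      rw [Int.card_Icc, add_sub_cancel_right, Int.toNat_natCast]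
      exact mul_le_of_le_one_right (Nat.zero_le _) h0
    have h3 : (2 * ((k : ℝ) ^ 2 + k * (0 : ℕ)) - k * (k + 1) / 2 + eta k 0) = ((2 * k ^ 2 : ℕ) : ℝ) := by
      unfold eta; push_cast; ring
    rw [h3, Real.rpow_natCast, pow_zero, one_mul]
    exact_mod_cast h1
  | succ r ih =>
    intro hS X hX
    have hX1 : (1 : ℝ) ≤ X := by exact_mod_cast hX
    set s := k ^ 2 + k * r with hs
    have hsk : k ^ 2 ≤ s := by omega
    have hb : k ^ 2 + k * (r + 1) = k + s := by rw [hs]; ring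
    rw [hb] at hS ⊢
    obtain ⟨p, hp, hkp, hXp, hpu, hpl⟩ := exists_prime_step hk hX
    set Q := (X : ℝ) ^ (1 / k : ℝ) with hQ
    have hQ1 : 1 ≤ Q := Real.one_le_rpow hX1 (by positivity)
    have hQ0 : 0 < Q := by linarith
    have hQX : (X : ℝ) = Q ^ k := by
      rw [hQ, ← Real.rpow_natCast, ← Real.rpow_mul (by linarith), one_div_mul_cancel
        (by positivity), Real.rpow_one]
    have hrec := vino_recursion (s := s) hp (by omega) hkp hXp (by nlinarith)
    set Y := X / p + 1 with hY
    have hYQ : (Y : ℝ) ≤ 2 * Q ^ (k - 1) := by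
      have h1 : ((X / p : ℕ) : ℝ) ≤ (X : ℝ) / p := Nat.cast_div_le
      have h2 : (X : ℝ) / p ≤ Q ^ (k - 1) := by
        rw [div_le_iff₀ (by exact_mod_cast hp.pos), hQX]
        calc Q ^ k = Q ^ (k - 1) * Q := by rw [← pow_succ]; congr 1; omega
          _ ≤ _ := by gcongr
      have h3 : 1 ≤ Q ^ (k - 1) := one_le_pow₀ hQ1
      rw [hY]; push_cast; linarith
    have hih := ih (by omega) Y (Nat.le_add_left 1 _)
    set e : ℝ := 2 * (k ^ 2 + k * r : ℝ) - k * (k + 1) / 2 + eta k r with he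
    have hkR : (3 : ℝ) ≤ k := by exact_mod_cast hk
    have he0 : 0 ≤ e := by
      have := eta_nonneg hk r
      have : (0 : ℝ) ≤ k * r := by positivity
      nlinarith
    have hes : e ≤ ((2 * s : ℕ) : ℝ) := by
      have := eta_le hk r
      rw [he, hs]; push_cast; linarith
    set D := ((S : ℝ) ^ (8 * S)) ^ r with hD
    have hD0 : 0 ≤ D := by positivity
    have hV : (vino k (Fin s) (Icc (1 : ℤ) Y) : ℝ) ≤ D * (2 ^ (2 * s) * (Q ^ (k - 1)) ^ e) := by
      refine hih.trans ?_
      gcongr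
      calc (Y : ℝ) ^ e ≤ (2 * Q ^ (k - 1)) ^ e := Real.rpow_le_rpow (by positivity) hYQ he0
        _ = 2 ^ e * (Q ^ (k - 1)) ^ e := Real.mul_rpow (by norm_num) (by positivity)
        _ ≤ _ := by
          gcongr
          rw [← Real.rpow_natCast]
          exact Real.rpow_le_rpow_of_exponent_le (by norm_num) hes
    set m := 2 * s + k * (k - 1) / 2 with hm
    have hfac : ((k + s).factorial * ((p : ℝ) ^ (2 * s) * ((X : ℝ) ^ k *
        (k ^ k * p ^ (k * (k - 1) / 2)))) +
        (p : ℝ) ^ (2 * (k - 1)) * (k ^ (2 * (k + s)) * (Y : ℝ) ^ (2 * k))) ≤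
        ((k + s).factorial * ((4 * k : ℝ) ^ m * k ^ k) +
      (4 * k : ℝ) ^ (2 * (k - 1)) * (k ^ (2 * (k + s)) * 2 ^ (2 * k))) * Q ^ (m + k * k) := by
      have g1 : (p : ℝ) ^ (2 * s) * ((X : ℝ) ^ k * (k ^ k * p ^ (k * (k - 1) / 2))) ≤
          ((4 * k : ℝ) ^ m * k ^ k) * Q ^ (m + k * k) := by
        calc _ = (p : ℝ) ^ m * (Q ^ k) ^ k * k ^ k := by rw [hm, pow_add, hQX]; ring
          _ ≤ (4 * k * Q) ^ m * (Q ^ k) ^ k * k ^ k := by gcongr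
          _ = _ := by rw [mul_pow, pow_add, ← pow_mul]; ring
      have g2 : (p : ℝ) ^ (2 * (k - 1)) * (k ^ (2 * (k + s)) * (Y : ℝ) ^ (2 * k)) ≤
          (4 * k : ℝ) ^ (2 * (k - 1)) * (k ^ (2 * (k + s)) * 2 ^ (2 * k)) * Q ^ (m + k * k) := by
        calc _ ≤ (4 * k * Q) ^ (2 * (k - 1)) * (k ^ (2 * (k + s)) * (2 * Q ^ (k - 1)) ^ (2 * k)) := by
              gcongr
          _ = (4 * k : ℝ) ^ (2 * (k - 1)) * (k ^ (2 * (k + s)) * 2 ^ (2 * k)) *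
              Q ^ (2 * (k - 1) + (k - 1) * (2 * k)) := by
              rw [mul_pow (4 * (k : ℝ)) Q, mul_pow 2 (Q ^ (k - 1)), ← pow_mul Q, pow_add]; ring
          _ ≤ _ := by
              refine mul_le_mul_of_nonneg_left (pow_le_pow_right₀ hQ1 ?_) (by positivity)
              have hm2 : 2 * k ^ 2 ≤ m := by omega
              clear_value m s
              obtain ⟨l, rfl⟩ : ∃ l, k = l + 1 := ⟨k - 1, by omega⟩
              simp only [Nat.add_sub_cancel]
              nlinarith
      calc _ ≤ (k + s).factorial * (((4 * k : ℝ) ^ m * k ^ k) * Q ^ (m + k * k)) +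
            (4 * k : ℝ) ^ (2 * (k - 1)) * (k ^ (2 * (k + s)) * 2 ^ (2 * k)) * Q ^ (m + k * k) := by
            gcongr
        _ = _ := by ring
    have hconst := step_const (b := k + s) (S := S) hk hsk rfl hS
    rw [← hm] at hconst
    have hexp : Q ^ (m + k * k) * (Q ^ (k - 1)) ^ e =
        (X : ℝ) ^ (2 * ((k : ℝ) ^ 2 + k * ((r + 1 : ℕ) : ℝ)) - k * (k + 1) / 2 + eta k (r + 1)) := by
      have hmR : (m : ℝ) = 2 * (k ^ 2 + k * r) + k * (k - 1) / 2 := by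
        have h2 : 2 ∣ k * (k - 1) := (Nat.even_mul_pred_self k).two_dvd
        have h3 : ((k * (k - 1) / 2 : ℕ) : ℝ) = k * (k - 1) / 2 := by
          rw [Nat.cast_div h2 (by norm_num)]
          push_cast [Nat.cast_sub (by omega : 1 ≤ k)]; ring
        rw [hm, hs, Nat.cast_add, h3]; push_cast; ring
      rw [hQ, ← Real.rpow_natCast, ← Real.rpow_natCast, ← Real.rpow_mul (by positivity),
        ← Real.rpow_mul (by positivity), ← Real.rpow_mul (by positivity),
        ← Real.rpow_add (by positivity)]
      congr 1
      have hk0 : (k : ℝ) ≠ 0 := by positivity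
      push_cast [Nat.cast_sub (by omega : 1 ≤ k), hmR]
      have het : eta k (r + 1) = eta k r * (1 - 1 / k) := by unfold eta; rw [pow_succ]; ring
      rw [he, het]
      generalize eta k r = w
      field_simp
      ring
    calc _ ≤ _ := hrec
      _ ≤ ((k + s).factorial + 1) * (((k + s).factorial * ((4 * k : ℝ) ^ m * k ^ k) +
      (4 * k : ℝ) ^ (2 * (k - 1)) * (k ^ (2 * (k + s)) * 2 ^ (2 * k))) * Q ^ (m + k * k)) *
        (D * (2 ^ (2 * s) * (Q ^ (k - 1)) ^ e)) := by gcongr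
      _ = ((((k + s).factorial : ℝ) + 1) * ((k + s).factorial * ((4 * k : ℝ) ^ m * k ^ k) +
      (4 * k : ℝ) ^ (2 * (k - 1)) * (k ^ (2 * (k + s)) * 2 ^ (2 * k))) * 2 ^ (2 * s)) * D *
        (Q ^ (m + k * k) * (Q ^ (k - 1)) ^ e) := by ring
      _ ≤ (S : ℝ) ^ (8 * S) * D * (Q ^ (m + k * k) * (Q ^ (k - 1)) ^ e) := by gcongr
      _ = _ := by rw [hexp, hD, pow_succ]; ring

end Mills

namespace Mills
open Finset MeasureTheory
open scoped ComplexConjugate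

/-! ### Vinogradov's bilinear sums -/

/-- The real character `v ↦ exp(i θ·v)` of `ℤ^k`. -/
noncomputable def chi {k : ℕ} (θ : Fin k → ℝ) (v : Fin k → ℤ) : ℂ :=
  Complex.exp (((∑ j, θ j * (v j : ℝ) : ℝ) : ℂ) * Complex.I)

lemma chi_add {k : ℕ} (θ : Fin k → ℝ) (u v : Fin k → ℤ) : chi θ (u + v) = chi θ u * chi θ v := by
  unfold chi
  rw [← Complex.exp_add, ← add_mul, ← Complex.ofReal_add, ← Finset.sum_add_distrib]
  simp [mul_add]

lemma chi_zero {k : ℕ} (θ : Fin k → ℝ) : chi θ 0 = 1 := by simp [chi]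

lemma chi_neg {k : ℕ} (θ : Fin k → ℝ) (v : Fin k → ℤ) : chi θ (-v) = conj (chi θ v) := by
  unfold chi
  rw [← Complex.exp_conj]
  simp

lemma chi_sum {k : ℕ} {ι : Type*} (A : Finset ι) (θ : Fin k → ℝ) (v : ι → Fin k → ℤ) :
    chi θ (∑ i ∈ A, v i) = ∏ i ∈ A, chi θ (v i) := by
  classical
  induction A using Finset.induction_on with
  | empty => simp [chi_zero]
  | insert a A ha ih => rw [Finset.sum_insert ha, Finset.prod_insert ha, chi_add, ih]

lemma chi_prod {k : ℕ} (θ : Fin k → ℝ) (v : Fin k → ℤ) :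
    chi θ v = ∏ j, Complex.exp (((θ j * (v j : ℝ) : ℝ) : ℂ) * Complex.I) := by
  unfold chi
  rw [← Complex.exp_sum, ← Finset.sum_mul]
  push_cast; rfl

/-- Pairs of `s`-tuples from `[1, Y]`. -/
noncomputable def pairs (s Y : ℕ) : Finset ((Fin s → ℤ) × (Fin s → ℤ)) :=
  (Fintype.piFinset fun _ : Fin s => Icc (1 : ℤ) Y) ×ˢ (Fintype.piFinset fun _ : Fin s => Icc (1 : ℤ) Y)

/-- The vector of differences of power sums of a pair of tuples. -/
noncomputable def pdiff (k : ℕ) {s : ℕ} (q : (Fin s → ℤ) × (Fin s → ℤ)) : Fin k → ℤ :=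
  ∑ i, nu k (q.1 i) - ∑ i, nu k (q.2 i)

lemma norm_sum_chi_pow {k : ℕ} (θ : Fin k → ℝ) (s Y : ℕ) :
    ((‖∑ b ∈ Icc (1 : ℤ) Y, chi θ (nu k b)‖ ^ (2 * s) : ℝ) : ℂ) =
      ∑ q ∈ pairs s Y, chi θ (pdiff k q) := by
  have h1 : (∑ b ∈ Icc (1 : ℤ) Y, chi θ (nu k b)) ^ s =
      ∑ u ∈ Fintype.piFinset fun _ : Fin s => Icc (1 : ℤ) Y, chi θ (∑ i, nu k (u i)) := by
    simp_rw [chi_sum]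
    rw [← Finset.prod_univ_sum (fun _ : Fin s => Icc (1 : ℤ) Y) (fun _ b => chi θ (nu k b))]
    simp
  unfold pairs pdiff
  rw [Finset.sum_product]
  simp_rw [sub_eq_add_neg, chi_add, chi_neg]
  rw [← Finset.sum_mul_sum, ← map_sum, ← h1, Complex.mul_conj, Complex.normSq_eq_norm_sq, norm_pow]
  rw [← pow_mul, mul_comm s 2]

lemma card_pairs (s Y : ℕ) : #(pairs s Y) = Y ^ (2 * s) := by
  unfold pairs
  rw [card_product, Fintype.card_piFinset_const, Int.card_Icc]
  simp [two_mul, pow_add]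

/-- The box `∏ [-sY^j, sY^j]` containing all the difference vectors. -/
noncomputable def box (k s Y : ℕ) : Finset (Fin k → ℤ) :=
  Fintype.piFinset fun j => Icc (-((s * Y ^ ((j : ℕ) + 1) : ℕ) : ℤ)) ((s * Y ^ ((j : ℕ) + 1) : ℕ) : ℤ)

lemma pdiff_mem_box {k s Y : ℕ} {q} (hq : q ∈ pairs s Y) : pdiff k q ∈ box k s Y := by
  unfold pairs at hq
  rw [mem_product, Fintype.mem_piFinset, Fintype.mem_piFinset] at hq
  unfold box pdiff
  rw [Fintype.mem_piFinset]
  intro j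
  have key : ∀ u : Fin s → ℤ, (∀ i, u i ∈ Icc (1 : ℤ) Y) →
      0 ≤ (∑ i, nu k (u i)) j ∧ (∑ i, nu k (u i)) j ≤ ((s * Y ^ ((j : ℕ) + 1) : ℕ) : ℤ) := by
    intro u hu
    rw [Finset.sum_apply]
    constructor
    · refine Finset.sum_nonneg fun i _ => ?_
      have := (mem_Icc.1 (hu i)).1
      exact pow_nonneg (by linarith) _
    · calc ∑ i, nu k (u i) j ≤ ∑ i : Fin s, (Y : ℤ) ^ ((j : ℕ) + 1) := by
            refine Finset.sum_le_sum fun i _ => ?_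
            have := mem_Icc.1 (hu i)
            exact pow_le_pow_left₀ (by linarith) this.2 _
        _ = _ := by simp
  have h1 := key _ hq.1
  have h2 := key _ hq.2
  rw [mem_Icc, Pi.sub_apply]
  constructor <;> linarith

lemma sum_pairs_le {k s Y : ℕ} (g : (Fin k → ℤ) → ℝ) (hg : ∀ v, 0 ≤ g v) :
    ∑ q ∈ pairs s Y, g (pdiff k q) ≤
      (vino k (Fin s) (Icc (1 : ℤ) Y) : ℝ) * ∑ v ∈ box k s Y, g v := by
  classical
  rw [← Finset.sum_fiberwise_of_maps_to (g := fun q => pdiff k q) (t := box k s Y)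
    (fun q hq => pdiff_mem_box hq), Finset.mul_sum]
  refine Finset.sum_le_sum fun v _ => ?_
  rw [Finset.sum_congr rfl (g := fun _ => g v) (by
    intro q hq; rw [(mem_filter.1 hq).2]), Finset.sum_const, nsmul_eq_mul]
  gcongr
  · exact hg v
  · have := card_shift_le (Fintype.piFinset fun _ : Fin s => Icc (1 : ℤ) Y)
      (fun u => ∑ i, nu k (u i)) v
    exact_mod_cast this

/-- The double sums `∑_μ |∑_λ exp(iθλμ)|` over `|λ|, |μ| ≤ H`. -/
noncomputable def Dsum (H : ℕ) (θ : ℝ) : ℝ :=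
  ∑ μ ∈ Icc (-(H : ℤ)) H, ‖∑ l ∈ Icc (-(H : ℤ)) H, Complex.exp (((θ * l * μ : ℝ) : ℂ) * Complex.I)‖

lemma Dsum_nonneg (H : ℕ) (θ : ℝ) : 0 ≤ Dsum H θ := Finset.sum_nonneg fun _ _ => norm_nonneg _

/-- The bilinear form of Vinogradov's method. -/
noncomputable def Wsum {k : ℕ} (θ : Fin k → ℝ) (Y : ℕ) : ℂ :=
  ∑ a ∈ Icc (1 : ℤ) Y, ∑ b ∈ Icc (1 : ℤ) Y, chi θ (nu k (a * b))

lemma chi_nu_mul {k : ℕ} (θ : Fin k → ℝ) (a : ℤ) (v : Fin k → ℤ) :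
    chi θ (fun j => nu k a j * v j) = chi (fun j => θ j * nu k a j) v := by
  unfold chi; congr 3; refine Finset.sum_congr rfl fun j _ => ?_; push_cast; ring

lemma nu_mul (k : ℕ) (a b : ℤ) : nu k (a * b) = fun j => nu k a j * nu k b j := by
  funext j; simp [nu, mul_pow]

/-- Two applications of Hölder's inequality bound the bilinear sum by mean values and by double
sums over the boxes of difference vectors. -/
theorem Wsum_pow_le {k s Y : ℕ} (hs : 1 ≤ s) (θ : Fin k → ℝ) :
    ‖Wsum θ Y‖ ^ (4 * s ^ 2) ≤ (Y : ℝ) ^ (8 * s ^ 2 - 4 * s) *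
      (vino k (Fin s) (Icc (1 : ℤ) Y) : ℝ) ^ 2 * ∏ j : Fin k, Dsum (s * Y ^ ((j : ℕ) + 1)) (θ j) := by
  set J := (vino k (Fin s) (Icc (1 : ℤ) Y) : ℝ) with hJ
  have hcard : (#(Icc (1 : ℤ) Y) : ℝ) = Y := by simp
  set G : (Fin k → ℤ) → ℂ := fun v => ∑ a ∈ Icc (1 : ℤ) Y, chi (fun j => θ j * v j) (nu k a) with hG
  -- Hölder in `a`, expansion of the `2s`-th power, interchange of summation
  have h1 : ‖Wsum θ Y‖ ^ (2 * s) ≤ (Y : ℝ) ^ (2 * s - 1) * ∑ q ∈ pairs s Y, ‖G (pdiff k q)‖ := by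
    have e := norm_sum_pow_le (Icc (1 : ℤ) Y)
      (fun a => ∑ b ∈ Icc (1 : ℤ) Y, chi θ (nu k (a * b))) (2 * s) (by omega)
    rw [hcard] at e
    refine e.trans (mul_le_mul_of_nonneg_left ?_ (by positivity))
    have e2 : ((∑ a ∈ Icc (1 : ℤ) Y, ‖∑ b ∈ Icc (1 : ℤ) Y, chi θ (nu k (a * b))‖ ^ (2 * s) : ℝ) : ℂ)
        = ∑ q ∈ pairs s Y, G (pdiff k q) := by
      simp_rw [nu_mul, chi_nu_mul]
      rw [Complex.ofReal_sum]
      simp_rw [norm_sum_chi_pow, hG]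
      rw [Finset.sum_comm]
      refine Finset.sum_congr rfl fun q _ => Finset.sum_congr rfl fun a _ => ?_
      unfold chi; congr 3; refine Finset.sum_congr rfl fun j _ => ?_; ring
    have e3 : ∀ x : ℝ, x ≤ ‖(x : ℂ)‖ := fun x => by
      rw [Complex.norm_real]; exact le_abs_self x
    refine (e3 _).trans ?_
    rw [e2]
    exact norm_sum_le _ _
  have h2 : (∑ q ∈ pairs s Y, ‖G (pdiff k q)‖) ^ (2 * s) ≤
      ((Y : ℝ) ^ (2 * s)) ^ (2 * s - 1) * (J * ∑ v ∈ box k s Y, ‖G v‖ ^ (2 * s)) := by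
    obtain ⟨m, hm⟩ : ∃ m, 2 * s = m + 1 := ⟨2 * s - 1, by omega⟩
    have e := norm_sum_pow_le (pairs s Y) (fun q => ((‖G (pdiff k q)‖ : ℝ) : ℂ)) (2 * s) (by omega)
    rw [← Complex.ofReal_sum, Complex.norm_real, Real.norm_of_nonneg
      (Finset.sum_nonneg fun _ _ => norm_nonneg _), card_pairs] at e
    push_cast at e
    refine e.trans (mul_le_mul_of_nonneg_left ?_ (by positivity))
    have := sum_pairs_le (k := k) (s := s) (Y := Y) (fun v => ‖G v‖ ^ (2 * s)) (fun v => by positivity)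
    simpa using this
  have h3 : ∑ v ∈ box k s Y, ‖G v‖ ^ (2 * s) ≤
      J * ∏ j : Fin k, Dsum (s * Y ^ ((j : ℕ) + 1)) (θ j) := by
    have e2 : ((∑ v ∈ box k s Y, ‖G v‖ ^ (2 * s) : ℝ) : ℂ) =
        ∑ q ∈ pairs s Y, ∏ j : Fin k, ∑ l ∈ Icc (-((s * Y ^ ((j : ℕ) + 1) : ℕ) : ℤ))
          ((s * Y ^ ((j : ℕ) + 1) : ℕ) : ℤ),
          Complex.exp (((θ j * l * pdiff k q j : ℝ) : ℂ) * Complex.I) := by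
      rw [Complex.ofReal_sum]
      simp_rw [hG, norm_sum_chi_pow]
      rw [Finset.sum_comm]
      refine Finset.sum_congr rfl fun q _ => ?_
      rw [Finset.prod_univ_sum]
      refine Finset.sum_congr rfl fun v _ => ?_
      rw [chi_prod]
    have e3 : ∀ x : ℝ, x ≤ ‖(x : ℂ)‖ := fun x => by
      rw [Complex.norm_real]; exact le_abs_self x
    refine (e3 _).trans ?_
    rw [e2]
    refine (norm_sum_le _ _).trans ?_
    simp_rw [norm_prod]
    refine (sum_pairs_le (fun v => ∏ j : Fin k, ‖∑ l ∈ Icc (-((s * Y ^ ((j : ℕ) + 1) : ℕ) : ℤ))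
          ((s * Y ^ ((j : ℕ) + 1) : ℕ) : ℤ),
          Complex.exp (((θ j * l * v j : ℝ) : ℂ) * Complex.I)‖)
          (fun v => Finset.prod_nonneg fun _ _ => norm_nonneg _)).trans ?_
    refine mul_le_mul_of_nonneg_left (le_of_eq ?_) (by positivity)
    unfold Dsum box
    rw [Finset.prod_univ_sum]
  set P := ∏ j : Fin k, Dsum (s * Y ^ ((j : ℕ) + 1)) (θ j)
  calc ‖Wsum θ Y‖ ^ (4 * s ^ 2) = (‖Wsum θ Y‖ ^ (2 * s)) ^ (2 * s) := by
        rw [← pow_mul]; congr 1; ring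
    _ ≤ ((Y : ℝ) ^ (2 * s - 1) * ∑ q ∈ pairs s Y, ‖G (pdiff k q)‖) ^ (2 * s) := by gcongr
    _ = ((Y : ℝ) ^ (2 * s - 1)) ^ (2 * s) * (∑ q ∈ pairs s Y, ‖G (pdiff k q)‖) ^ (2 * s) := mul_pow _ _ _
    _ ≤ ((Y : ℝ) ^ (2 * s - 1)) ^ (2 * s) *
        (((Y : ℝ) ^ (2 * s)) ^ (2 * s - 1) * (J * (J * P))) := by
        have hJ0 : 0 ≤ J := by positivity
        refine mul_le_mul_of_nonneg_left (h2.trans ?_) (by positivity)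
        gcongr
    _ = _ := by
        rw [← pow_mul, ← pow_mul]
        have : (8 * s ^ 2 - 4 * s) = (2 * s - 1) * (2 * s) + 2 * s * (2 * s - 1) := by
          obtain ⟨m, rfl⟩ : ∃ m, s = m + 1 := ⟨s - 1, by omega⟩
          have : 2 * (m + 1) - 1 = 2 * m + 1 := by omega
          rw [this]
          have h8 : 8 * (m + 1) ^ 2 = ((2 * m + 1) * (2 * (m + 1)) + 2 * (m + 1) * (2 * m + 1)) + 4 * (m + 1) := by ring
          omega
        rw [this, pow_add]; ring

end Mills

namespace Mills
open Finset MeasureTheory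

lemma sum_Icc_symm {M : Type*} [AddCommMonoid M] (F : ℤ → M) (H : ℕ) :
    ∑ l ∈ Icc (-(H : ℤ)) H, F l = F 0 + ∑ m ∈ range H, (F (m + 1) + F (-(m + 1))) := by
  induction H with
  | zero => simp
  | succ H ih =>
    have h : Icc (-((H + 1 : ℕ) : ℤ)) ((H + 1 : ℕ) : ℤ) =
        insert ((H : ℤ) + 1) (insert (-((H : ℤ) + 1)) (Icc (-(H : ℤ)) H)) := by
      ext x; simp only [mem_insert, mem_Icc]; push_cast; omega
    rw [h, sum_insert, sum_insert, ih, sum_range_succ]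
    · abel
    · simp
    · simp only [mem_insert, mem_Icc]; omega

lemma norm_geom_le {φ : ℝ} (h0 : φ ≠ 0) (h1 : |φ| ≤ 1 / 2) (H : ℕ) :
    ‖∑ l ∈ Icc (-(H : ℤ)) H, Complex.exp (((φ * l : ℝ) : ℂ) * Complex.I)‖ ≤ 4 / |φ| := by
  have key : (Complex.exp ((φ : ℂ) * Complex.I) - 1) *
      ∑ l ∈ Icc (-(H : ℤ)) H, Complex.exp (((φ * l : ℝ) : ℂ) * Complex.I) =
      Complex.exp (((φ * (H + 1) : ℝ) : ℂ) * Complex.I) -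
      Complex.exp (((φ * (-H) : ℝ) : ℂ) * Complex.I) := by
    rw [sum_Icc_symm]
    induction H with
    | zero => simp
    | succ H ih =>
      rw [sum_range_succ, ← add_assoc, mul_add, ih]
      rw [sub_mul, mul_add (Complex.exp _), ← Complex.exp_add, ← Complex.exp_add]
      push_cast
      ring_nf
  have hz : |φ| / 2 ≤ ‖Complex.exp ((φ : ℂ) * Complex.I) - 1‖ := by
    have hn : ‖(φ : ℂ) * Complex.I‖ = |φ| := by simp
    have h2 := Complex.norm_exp_sub_one_sub_id_le (x := (φ : ℂ) * Complex.I) (by rw [hn]; linarith)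
    have h3 : ‖(φ : ℂ) * Complex.I‖ ≤ ‖Complex.exp ((φ : ℂ) * Complex.I) - 1‖ +
        ‖Complex.exp ((φ : ℂ) * Complex.I) - 1 - (φ : ℂ) * Complex.I‖ := by
      have := norm_sub_le (Complex.exp ((φ : ℂ) * Complex.I) - 1)
        (Complex.exp ((φ : ℂ) * Complex.I) - 1 - (φ : ℂ) * Complex.I)
      simpa using this
    rw [hn] at h2 h3
    nlinarith [abs_nonneg φ]
  have hφ : 0 < |φ| := abs_pos.2 h0
  have h4 := congrArg norm key
  rw [norm_mul] at h4
  have h5 : ‖Complex.exp (((φ * (H + 1) : ℝ) : ℂ) * Complex.I) -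
      Complex.exp (((φ * (-H) : ℝ) : ℂ) * Complex.I)‖ ≤ 2 := by
    refine (norm_sub_le _ _).trans ?_
    rw [Complex.norm_exp_ofReal_mul_I, Complex.norm_exp_ofReal_mul_I]; norm_num
  rw [le_div_iff₀ hφ]
  nlinarith [norm_nonneg (∑ l ∈ Icc (-(H : ℤ)) H, Complex.exp (((φ * l : ℝ) : ℂ) * Complex.I))]

lemma norm_inner_le (H : ℕ) (φ : ℝ) :
    ‖∑ l ∈ Icc (-(H : ℤ)) H, Complex.exp (((φ * l : ℝ) : ℂ) * Complex.I)‖ ≤ 2 * H + 1 := by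
  refine (norm_sum_le _ _).trans ?_
  simp only [Complex.norm_exp_ofReal_mul_I, sum_const, nsmul_eq_mul, mul_one, Int.card_Icc]
  have : ((H : ℤ) + 1 - -(H : ℤ)).toNat = 2 * H + 1 := by omega
  rw [this]; push_cast; rfl

lemma Dsum_trivial {H : ℕ} (hH : 1 ≤ H) (θ : ℝ) : Dsum H θ ≤ (3 * (H : ℝ)) ^ 2 := by
  have hH' : (1 : ℝ) ≤ H := by exact_mod_cast hH
  unfold Dsum
  calc _ ≤ ∑ μ ∈ Icc (-(H : ℤ)) H, (2 * (H : ℝ) + 1) := by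
        refine sum_le_sum fun μ _ => ?_
        refine le_trans (le_of_eq ?_) (norm_inner_le H (θ * μ))
        congr 1; refine sum_congr rfl fun l _ => ?_; congr 3; ring
    _ = (2 * (H : ℝ) + 1) ^ 2 := by
        rw [sum_const, nsmul_eq_mul, Int.card_Icc]
        have : ((H : ℤ) + 1 - -(H : ℤ)).toNat = 2 * H + 1 := by omega
        rw [this]; push_cast; ring
    _ ≤ _ := by gcongr; linarith

lemma Dsum_le {H : ℕ} (hH : 1 ≤ H) {θ : ℝ} (h0 : θ ≠ 0) (h1 : |θ| * H ≤ 1 / 2) :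
    Dsum H θ ≤ 3 * H + 8 * (1 + Real.log H) / |θ| := by
  have hH' : (1 : ℝ) ≤ H := by exact_mod_cast hH
  have hθ : 0 < |θ| := abs_pos.2 h0
  have term : ∀ m : ℤ, m ≠ 0 → |m| ≤ H →
      ‖∑ l ∈ Icc (-(H : ℤ)) H, Complex.exp (((θ * l * m : ℝ) : ℂ) * Complex.I)‖ ≤
        4 / |θ| * |(m : ℝ)|⁻¹ := by
    intro m hm hmH
    have hmR : (m : ℝ) ≠ 0 := by exact_mod_cast hm
    have h := norm_geom_le (φ := θ * m) (mul_ne_zero h0 hmR) (by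
      rw [abs_mul]
      refine le_trans (mul_le_mul_of_nonneg_left ?_ hθ.le) h1
      exact_mod_cast hmH) H
    rw [abs_mul] at h
    refine le_trans (le_of_eq ?_) (h.trans (le_of_eq ?_))
    · congr 1; refine sum_congr rfl fun l _ => ?_; congr 3; ring
    · field_simp
  unfold Dsum
  rw [sum_Icc_symm]
  have hz : ‖∑ l ∈ Icc (-(H : ℤ)) H, Complex.exp (((θ * l * (0 : ℤ) : ℝ) : ℂ) * Complex.I)‖ ≤
      3 * H := by
    refine le_trans (le_of_eq ?_) ((norm_inner_le H 0).trans (by linarith))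
    congr 1; refine sum_congr rfl fun l _ => ?_; congr 3; simp
  have hs : ∑ m ∈ range H, (‖∑ l ∈ Icc (-(H : ℤ)) H,
        Complex.exp (((θ * l * ((m : ℤ) + 1 : ℤ) : ℝ) : ℂ) * Complex.I)‖ +
      ‖∑ l ∈ Icc (-(H : ℤ)) H,
        Complex.exp (((θ * l * (-((m : ℤ) + 1) : ℤ) : ℝ) : ℂ) * Complex.I)‖) ≤
      ∑ m ∈ range H, 8 / |θ| * ((m : ℝ) + 1)⁻¹ := by
    refine sum_le_sum fun m hm => ?_
    rw [mem_range] at hm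
    have hmp : (0 : ℝ) ≤ (m : ℝ) + 1 := by positivity
    have t1 := term ((m : ℤ) + 1) (by omega) (by rw [abs_of_nonneg (by omega)]; omega)
    have t2 := term (-((m : ℤ) + 1)) (by omega) (by rw [abs_neg, abs_of_nonneg (by omega)]; omega)
    have e1 : |(((m : ℤ) + 1 : ℤ) : ℝ)| = (m : ℝ) + 1 := by push_cast; exact abs_of_nonneg hmp
    have e2 : |((-((m : ℤ) + 1) : ℤ) : ℝ)| = (m : ℝ) + 1 := by
      rw [Int.cast_neg, abs_neg, e1]
    rw [e1] at t1
    rw [e2] at t2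
    refine (add_le_add t1 t2).trans (le_of_eq ?_)
    ring
  refine (add_le_add hz hs).trans ?_
  rw [← mul_sum]
  have hh : ∑ m ∈ range H, ((m : ℝ) + 1)⁻¹ ≤ 1 + Real.log H := by
    have := harmonic_le_one_add_log H
    unfold harmonic at this
    push_cast at this
    exact this
  have : 8 / |θ| * ∑ m ∈ range H, ((m : ℝ) + 1)⁻¹ ≤ 8 / |θ| * (1 + Real.log H) := by gcongr
  refine add_le_add le_rfl (this.trans (le_of_eq ?_))
  ring

end Mills

namespace Mills
open Finset MeasureTheory Real

lemma eta_six_le {k : ℕ} (hk : 3 ≤ k) : eta k (6 * k) ≤ k * (k + 1) / 2 / 400 := by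
  have h1 : (1 - 1 / (k : ℝ)) ^ k ≤ exp (-1) :=
    Real.one_sub_div_pow_le_exp_neg (by exact_mod_cast (by omega : 1 ≤ k))
  have h0 : (0 : ℝ) ≤ 1 - 1 / k := by
    have : (1 : ℝ) / k ≤ 1 := by
      rw [div_le_one (by positivity)]; exact_mod_cast (by omega : 1 ≤ k)
    linarith
  have h2 : (1 - 1 / (k : ℝ)) ^ (6 * k) ≤ 1 / 400 := by
    rw [mul_comm, pow_mul]
    calc ((1 - 1 / (k : ℝ)) ^ k) ^ 6 ≤ (exp (-1)) ^ 6 := by gcongr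
      _ ≤ 1 / 400 := by
        rw [Real.exp_neg, inv_pow, ← one_div]
        refine one_div_le_one_div_of_le (by norm_num) ?_
        calc (400 : ℝ) ≤ 2.718 ^ 6 := by norm_num
          _ ≤ _ := by gcongr; exact (by norm_num : (2.718 : ℝ) ≤ 2.7182818283).trans Real.exp_one_gt_d9.le
  unfold eta
  calc _ ≤ (k * (k + 1) / 2 : ℝ) * (1 / 400) := by gcongr
    _ = _ := by ring

/-- Cancellation in the `J`-th factor, for `1.8 τ ≤ J ≤ 4 τ`. -/
lemma Dsum_good {τ L x θ : ℝ} {J s Y : ℕ} (hτ : 1 / 2 ≤ τ) (hL : 10 ^ 9 ≤ L)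
    (hx1 : exp L ≤ x) (hx2 : x ≤ 2 * exp L) (hθ : |θ| = exp (τ * L) / (J * x ^ J))
    (hs1 : 1 ≤ s) (hs2 : 2 * (s + 80 : ℝ) ≤ exp (60 * τ)) (hY1 : exp (2 / 5 * L) / 2 ≤ Y)
    (hY2 : Y ≤ exp (2 / 5 * L)) (hJ1 : 9 / 5 * τ ≤ J) (hJ2 : J ≤ 4 * τ) :
    Dsum (s * Y ^ J) θ ≤ (3 * ((s * Y ^ J : ℕ) : ℝ)) ^ 2 * exp (-(3 / 20) * τ * L) := by
  have hL0 : 0 < L := by linarith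
  have hJ0 : (0 : ℝ) < J := by linarith
  have hJn : 1 ≤ J := by exact_mod_cast (by exact_mod_cast hJ0 : 0 < J)
  have hJ1' : (1 : ℝ) ≤ J := by exact_mod_cast hJn
  have hsR : (1 : ℝ) ≤ s := by exact_mod_cast hs1
  have hx0 : 0 < x := (exp_pos _).trans_le hx1
  have hτL : 0 < τ * L := by positivity
  have hJL1 : 9 / 5 * τ * L ≤ J * L := by gcongr
  have hJL2 : J * L ≤ 4 * τ * L := by gcongr
  have hτbig : 10 ^ 9 * τ ≤ τ * L := by rw [mul_comm]; gcongr
  have h2e : (2 : ℝ) ≤ exp 1 := by linarith [Real.exp_one_gt_d9]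
  -- lower bound for `Y`
  have hYl : exp (2 / 5 * L - 1) ≤ Y := by
    refine le_trans ?_ hY1
    rw [Real.exp_sub]
    gcongr
  have hYJl : exp (J * (2 / 5 * L - 1)) ≤ (Y : ℝ) ^ J := by
    rw [mul_comm, Real.exp_mul, Real.rpow_natCast]; gcongr
  have hYJu : (Y : ℝ) ^ J ≤ exp (J * (2 / 5 * L)) := by
    rw [mul_comm, Real.exp_mul, Real.rpow_natCast]; gcongr
  set H := s * Y ^ J with hH
  have hHR : (H : ℝ) = s * (Y : ℝ) ^ J := by rw [hH]; push_cast; ring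
  have hHl : exp (J * (2 / 5 * L - 1)) ≤ H := by
    rw [hHR]; exact hYJl.trans (le_mul_of_one_le_left (by positivity) hsR)
  have hHpos : (0 : ℝ) < H := (exp_pos _).trans_le hHl
  have hH1 : 1 ≤ H := by exact_mod_cast (by exact_mod_cast hHpos : 0 < H)
  have hxJl : exp (J * L) ≤ x ^ J := by
    rw [mul_comm, Real.exp_mul, Real.rpow_natCast]; gcongr
  have hxJu : x ^ J ≤ exp (J * (L + 1)) := by
    rw [mul_comm, Real.exp_mul, Real.rpow_natCast, Real.exp_add]
    gcongr
    nlinarith [exp_pos L]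
  have hs60 : (s : ℝ) ≤ exp (60 * τ) / 2 := by linarith
  have hθpos : 0 < |θ| := by rw [hθ]; positivity
  have hθH : |θ| * H ≤ 1 / 2 := by
    rw [hθ, hHR]
    calc exp (τ * L) / (J * x ^ J) * (s * (Y : ℝ) ^ J)
        ≤ exp (τ * L) / (1 * exp (J * L)) * (exp (60 * τ) / 2 * exp (J * (2 / 5 * L))) := by
          gcongr
      _ = exp (τ * L - J * L + 60 * τ + J * (2 / 5 * L)) / 2 := by
          rw [Real.exp_add, Real.exp_add, Real.exp_sub]; ring
      _ ≤ 1 / 2 := by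
          gcongr
          rw [Real.exp_le_one_iff]
          linarith
  have hD := Dsum_le hH1 (abs_pos.1 hθpos) hθH
  refine hD.trans ?_
  -- the diagonal part
  have hp1 : 3 * (H : ℝ) ≤ 3 * H * (H * exp (-(3 / 20) * τ * L)) := by
    refine le_mul_of_one_le_right (by positivity) ?_
    calc (1 : ℝ) = exp 0 := Real.exp_zero.symm
      _ ≤ exp (J * (2 / 5 * L - 1) + -(3 / 20) * τ * L) := by
          rw [Real.exp_le_exp]; nlinarith
      _ = exp (J * (2 / 5 * L - 1)) * exp (-(3 / 20) * τ * L) := Real.exp_add _ _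
      _ ≤ _ := by gcongr
  have hlogH : 1 + Real.log H ≤ (s + 80) * exp (1 / 50 * (τ * L)) := by
    have e1 : Real.log H = Real.log s + Real.log ((Y : ℝ) ^ J) := by
      rw [hHR, Real.log_mul (by positivity)
        ((exp_pos _).trans_le hYJl).ne']
    have e2 : Real.log ((Y : ℝ) ^ J) ≤ J * (2 / 5 * L) :=
      (Real.log_le_iff_le_exp ((exp_pos _).trans_le hYJl)).2 hYJu
    have e3 : Real.log s ≤ s - 1 := Real.log_le_sub_one_of_pos (by linarith)
    have e4 : 1 / 50 * (τ * L) + 1 ≤ exp (1 / 50 * (τ * L)) := Real.add_one_le_exp _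
    have e5 : (J : ℝ) * (2 / 5 * L) ≤ 80 * (1 / 50 * (τ * L)) := by linarith
    have e6 : (s : ℝ) * 1 ≤ s * exp (1 / 50 * (τ * L)) := by
      gcongr; exact Real.one_le_exp (by positivity)
    linarith
  have hθinv : 1 / |θ| ≤ exp (J * (L + 2)) * exp (-(τ * L)) := by
    rw [hθ, one_div_div, Real.exp_neg, ← div_eq_mul_inv]
    gcongr
    have : (J : ℝ) ≤ exp J := by linarith [Real.add_one_le_exp (J : ℝ)]
    calc (J : ℝ) * x ^ J ≤ exp J * exp (J * (L + 1)) := by gcongr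
      _ = _ := by rw [← Real.exp_add]; congr 1; ring
  have hp2 : 8 * (1 + Real.log H) / |θ| ≤ 4 * (H * H * exp (-(3 / 20) * τ * L)) := by
    calc 8 * (1 + Real.log H) / |θ| = 8 * (1 + Real.log H) * (1 / |θ|) := by ring
      _ ≤ 8 * ((s + 80) * exp (1 / 50 * (τ * L))) * (exp (J * (L + 2)) * exp (-(τ * L))) := by
          gcongr
      _ ≤ 8 * (exp (60 * τ) / 2 * exp (1 / 50 * (τ * L))) * (exp (J * (L + 2)) * exp (-(τ * L))) := by
          gcongr; linarith
      _ = 4 * exp (60 * τ + 1 / 50 * (τ * L) + J * (L + 2) - τ * L) := by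
          rw [Real.exp_sub, Real.exp_add, Real.exp_add, Real.exp_neg]; ring
      _ ≤ 4 * exp (J * (2 / 5 * L - 1) + J * (2 / 5 * L - 1) + -(3 / 20) * τ * L) := by
          gcongr; linarith
      _ = 4 * (exp (J * (2 / 5 * L - 1)) * exp (J * (2 / 5 * L - 1)) * exp (-(3 / 20) * τ * L)) := by
          rw [Real.exp_add, Real.exp_add]
      _ ≤ _ := by gcongr
  have hfin : (0 : ℝ) ≤ H * H * exp (-(3 / 20) * τ * L) := by positivity
  have r1 : (3 * (H : ℝ)) ^ 2 * exp (-(3 / 20) * τ * L) = 9 * (H * H * exp (-(3 / 20) * τ * L)) := by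
    ring
  have r2 : 3 * (H : ℝ) * (H * exp (-(3 / 20) * τ * L)) = 3 * (H * H * exp (-(3 / 20) * τ * L)) := by
    ring
  linarith

lemma good_count_le {τ : ℝ} (hτ : 1 / 2 ≤ τ) {k : ℕ} (hk : 6 * τ ≤ k) :
    τ ≤ #{j : Fin k | 9 / 5 * τ ≤ ((j : ℕ) + 1 : ℝ) ∧ ((j : ℕ) + 1 : ℝ) ≤ 4 * τ} := by
  set a := ⌈9 / 5 * τ⌉₊ with ha
  set b := ⌊4 * τ⌋₊ with hb
  have hb1 : (b : ℝ) ≤ 4 * τ := Nat.floor_le (by linarith)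
  have hb2 : 4 * τ < b + 1 := Nat.lt_floor_add_one _
  have ha1 : 9 / 5 * τ ≤ a := Nat.le_ceil _
  have ha2 : (a : ℝ) < 9 / 5 * τ + 1 := Nat.ceil_lt_add_one (by linarith)
  have ha0 : 1 ≤ a := Nat.ceil_pos.2 (by linarith)
  have hbk : b ≤ k := by
    have : (b : ℝ) ≤ k := by linarith
    exact_mod_cast this
  have hab : a ≤ b := by
    have : (a : ℝ) < b + 1 := by linarith
    have : a < b + 1 := by exact_mod_cast this
    omega
  have hcard : b + 1 - a ≤ #{j : Fin k | 9 / 5 * τ ≤ ((j : ℕ) + 1 : ℝ) ∧ ((j : ℕ) + 1 : ℝ) ≤ 4 * τ} := by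
    rw [← Nat.card_Icc]
    refine Finset.card_le_card_of_injOn
      (fun m => if h : m - 1 < k then ⟨m - 1, h⟩ else ⟨0, by omega⟩) ?_ ?_
    · intro m hm
      rw [Finset.mem_coe, mem_Icc] at hm
      have hmk : m - 1 < k := by omega
      simp only [hmk, dif_pos, coe_filter, mem_univ, true_and, Set.mem_ofPred_eq]
      have : ((m - 1 : ℕ) : ℝ) + 1 = m := by
        rw [Nat.cast_sub (by omega)]; push_cast; ring
      rw [this]
      have h1 : (a : ℝ) ≤ m := by exact_mod_cast hm.1
      have h2 : (m : ℝ) ≤ b := by exact_mod_cast hm.2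
      constructor <;> linarith
    · intro m hm m' hm' h
      rw [Finset.mem_coe, mem_Icc] at hm hm'
      have hmk : m - 1 < k := by omega
      have hmk' : m' - 1 < k := by omega
      simp only [hmk, hmk', dif_pos, Fin.mk.injEq] at h
      omega
  have h3 : ((b + 1 - a : ℕ) : ℝ) ≤ #{j : Fin k | 9 / 5 * τ ≤ ((j : ℕ) + 1 : ℝ) ∧ ((j : ℕ) + 1 : ℝ) ≤ 4 * τ} := by
    exact_mod_cast hcard
  refine le_trans ?_ h3
  rcases le_or_gt τ 1 with h | h
  · have : (1 : ℝ) ≤ ((b + 1 - a : ℕ) : ℝ) := by exact_mod_cast (by omega : 1 ≤ b + 1 - a)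
    linarith
  · rw [Nat.cast_sub (by omega)]; push_cast; linarith

lemma prod_pow_succ (k : ℕ) (y : ℝ) : ∏ j : Fin k, (y ^ ((j : ℕ) + 1)) ^ 2 = y ^ (k * (k + 1)) := by
  rw [Fin.prod_univ_eq_prod_range (fun j => (y ^ (j + 1)) ^ 2)]
  induction k with
  | zero => simp
  | succ k ih => rw [prod_range_succ, ih, ← pow_mul, ← pow_add]; congr 1; ring

theorem Wsum_bound {τ L x : ℝ} {k Y : ℕ} (hτ : 1 / 2 ≤ τ) (hL : 10 ^ 10 * τ ^ 3 ≤ L)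
    (hx1 : exp L ≤ x) (hx2 : x ≤ 2 * exp L) (hk : k = ⌈6 * τ⌉₊) (hY1 : exp (2 / 5 * L) / 2 ≤ Y)
    (hY2 : Y ≤ exp (2 / 5 * L)) (θ : Fin k → ℝ)
    (hθ : ∀ j : Fin k, |θ j| = exp (τ * L) / (((j : ℕ) + 1 : ℕ) * x ^ ((j : ℕ) + 1))) :
    ‖Wsum θ Y‖ ≤ (Y : ℝ) ^ 2 * exp (-(L / (10 ^ 8 * τ ^ 2))) := by
  have hτ0 : 0 < τ := by linarith
  have hτ3 : (1 / 2) ^ 3 ≤ τ ^ 3 := by gcongr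
  have hL9 : 10 ^ 9 ≤ L := by linarith
  have hτ2a : (1 / 2) ^ 2 ≤ τ ^ 2 := by gcongr
  have hτ2b : τ ≤ 2 * τ ^ 2 := by nlinarith
  have hL0 : 0 < L := by linarith
  have hk6 : 6 * τ ≤ k := by rw [hk]; exact Nat.le_ceil _
  have hk8 : (k : ℝ) ≤ 8 * τ := by
    have := (Nat.ceil_lt_add_one (by linarith : 0 ≤ 6 * τ)).le
    rw [hk]; linarith
  have hk3 : 3 ≤ k := by
    have : (3 : ℝ) ≤ k := by linarith
    exact_mod_cast this
  have hkR : (3 : ℝ) ≤ k := by exact_mod_cast hk3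
  set s := k ^ 2 + k * (6 * k) with hs
  have hs7 : s = 7 * k ^ 2 := by rw [hs]; ring
  have hsR : (s : ℝ) = 7 * (k : ℝ) ^ 2 := by rw [hs7]; push_cast; ring
  have hs1 : 1 ≤ s := by rw [hs7]; nlinarith
  have hsR1 : (1 : ℝ) ≤ s := by exact_mod_cast hs1
  have hYpos : (0 : ℝ) < Y := lt_of_lt_of_le (by positivity) hY1
  have hYn : 1 ≤ Y := by exact_mod_cast (by exact_mod_cast hYpos : 0 < Y)
  have hY1R : (1 : ℝ) ≤ Y := by exact_mod_cast hYn
  have hs80 : 2 * (s + 80 : ℝ) ≤ exp (60 * τ) := by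
    have h1 := Real.quadratic_le_exp_of_nonneg (by positivity : 0 ≤ 60 * τ)
    have h2 : (k : ℝ) ^ 2 ≤ (8 * τ) ^ 2 := by gcongr
    rw [hsR]; linarith
  have hW := Wsum_pow_le (Y := Y) hs1 θ
  have hV := vino_bound hk3 s (6 * k) le_rfl Y hYn
  rw [← hs] at hV
  set K : ℝ := k * (k + 1) / 2 with hK
  set η := eta k (6 * k) with hη
  have hη0 : 0 ≤ η := eta_nonneg hk3 _
  have hη1 : η ≤ τ ^ 2 / 10 := by
    have h := eta_six_le hk3
    have h2 : (k : ℝ) * k ≤ (8 * τ) * (8 * τ) := by gcongr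
    rw [← hη] at h
    linarith
  set B : ℝ := ((s : ℝ) ^ (8 * s)) ^ (6 * k) with hB
  have hB0 : 0 ≤ B := by positivity
  have hexp : 2 * ((k : ℝ) ^ 2 + k * ((6 * k : ℕ) : ℝ)) - k * (k + 1) / 2 + η = 2 * s - K + η := by
    rw [hsR, hK]; push_cast; ring
  rw [hexp] at hV
  -- the product of the `D_j`
  have hprod : ∏ j : Fin k, Dsum (s * Y ^ ((j : ℕ) + 1)) (θ j) ≤
      (3 * (s : ℝ)) ^ (2 * k) * (Y : ℝ) ^ (k * (k + 1)) * exp (-(3 / 20) * τ ^ 2 * L) := by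
    have h1 : ∀ j : Fin k, Dsum (s * Y ^ ((j : ℕ) + 1)) (θ j) ≤
        (3 * (s : ℝ)) ^ 2 * ((Y : ℝ) ^ ((j : ℕ) + 1)) ^ 2 *
        (if 9 / 5 * τ ≤ ((j : ℕ) + 1 : ℝ) ∧ ((j : ℕ) + 1 : ℝ) ≤ 4 * τ then
          exp (-(3 / 20) * τ * L) else 1) := by
      intro j
      have e : (3 * ((s * Y ^ ((j : ℕ) + 1) : ℕ) : ℝ)) ^ 2 =
          (3 * (s : ℝ)) ^ 2 * ((Y : ℝ) ^ ((j : ℕ) + 1)) ^ 2 := by push_cast; ring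
      rw [← e]
      split_ifs with hj
      · exact Dsum_good hτ hL9 hx1 hx2 (hθ j) hs1 hs80 hY1 hY2 (by push_cast; exact hj.1)
          (by push_cast; exact hj.2)
      · rw [mul_one]
        exact Dsum_trivial (Nat.mul_pos hs1 (pow_pos hYn _)) _
    refine (prod_le_prod (fun j _ => Dsum_nonneg _ _) (fun j _ => h1 j)).trans ?_
    rw [prod_mul_distrib, prod_mul_distrib, prod_pow_succ, prod_const, card_univ, Fintype.card_fin,
      ← pow_mul, prod_ite, prod_const_one, mul_one, prod_const, ← Real.exp_nat_mul]
    refine mul_le_mul_of_nonneg_left (Real.exp_le_exp.2 ?_) (by positivity)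
    have := good_count_le hτ hk6
    have h3 : 0 ≤ 3 / 20 * τ * L := by positivity
    have := mul_le_mul_of_nonneg_right this h3
    linarith
  -- the constants
  have hconst : B ^ 2 * (3 * (s : ℝ)) ^ (2 * k) ≤ exp (1 / 50 * τ ^ 2 * L) := by
    have hsle : (s : ℝ) ≤ exp s := by linarith [Real.add_one_le_exp (s : ℝ)]
    have h3sle : 3 * (s : ℝ) ≤ exp (3 * s) := by linarith [Real.add_one_le_exp (3 * s : ℝ)]
    calc B ^ 2 * (3 * (s : ℝ)) ^ (2 * k)
        ≤ (((exp s) ^ (8 * s)) ^ (6 * k)) ^ 2 * (exp (3 * s)) ^ (2 * k) := by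
          rw [hB]; gcongr
      _ = exp (96 * k * s ^ 2 + 6 * k * s) := by
          rw [← Real.exp_nat_mul, ← Real.exp_nat_mul, ← Real.exp_nat_mul, ← Real.exp_nat_mul,
            ← Real.exp_add]
          congr 1; push_cast; ring
      _ ≤ _ := by
          rw [Real.exp_le_exp]
          have hk5 : (k : ℝ) ^ 5 ≤ (8 * τ) ^ 5 := by gcongr
          have hk35 : (k : ℝ) ^ 3 ≤ k ^ 5 := pow_le_pow_right₀ (by linarith) (by norm_num)
          have hτ2 : 10 ^ 10 * τ ^ 5 ≤ τ ^ 2 * L := by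
            calc 10 ^ 10 * τ ^ 5 = τ ^ 2 * (10 ^ 10 * τ ^ 3) := by ring
              _ ≤ _ := by gcongr
          calc 96 * (k : ℝ) * s ^ 2 + 6 * k * s = 4704 * (k : ℝ) ^ 5 + 42 * k ^ 3 := by
                rw [hsR]; ring
            _ ≤ 4746 * (8 * τ) ^ 5 := by linarith
            _ = 155516928 * τ ^ 5 := by ring
            _ ≤ _ := by linarith [pow_pos hτ0 5]
  have hYη : (Y : ℝ) ^ (2 * η) ≤ exp (2 / 25 * τ ^ 2 * L) := by
    calc (Y : ℝ) ^ (2 * η) ≤ (exp (2 / 5 * L)) ^ (2 * η) := by gcongr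
      _ = exp (2 / 5 * L * (2 * η)) := (Real.exp_mul _ _).symm
      _ ≤ _ := by
        rw [Real.exp_le_exp]
        have := mul_le_mul_of_nonneg_left hη1 hL0.le
        linarith
  have hmain : ‖Wsum θ Y‖ ^ (4 * s ^ 2) ≤ ((Y : ℝ) ^ 2) ^ (4 * s ^ 2) * exp (-(1 / 20) * τ ^ 2 * L) := by
    calc ‖Wsum θ Y‖ ^ (4 * s ^ 2) ≤ _ := hW
      _ ≤ (Y : ℝ) ^ (8 * s ^ 2 - 4 * s) * (B * (Y : ℝ) ^ (2 * s - K + η)) ^ 2 *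
          ((3 * (s : ℝ)) ^ (2 * k) * (Y : ℝ) ^ (k * (k + 1)) * exp (-(3 / 20) * τ ^ 2 * L)) := by
          gcongr
          exact prod_nonneg fun j _ => Dsum_nonneg _ _
      _ = ((Y : ℝ) ^ 2) ^ (4 * s ^ 2) * (B ^ 2 * (3 * (s : ℝ)) ^ (2 * k)) * (Y : ℝ) ^ (2 * η) *
          exp (-(3 / 20) * τ ^ 2 * L) := by
          have hY' : (Y : ℝ) ^ (8 * s ^ 2 - 4 * s) * ((Y : ℝ) ^ (2 * s - K + η)) ^ 2 *
              (Y : ℝ) ^ (k * (k + 1)) = ((Y : ℝ) ^ 2) ^ (4 * s ^ 2) * (Y : ℝ) ^ (2 * η) := by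
            rw [← pow_mul, ← Real.rpow_natCast, ← Real.rpow_natCast, ← Real.rpow_natCast,
              ← Real.rpow_natCast, ← Real.rpow_mul hYpos.le, ← Real.rpow_add hYpos,
              ← Real.rpow_add hYpos, ← Real.rpow_add hYpos]
            congr 1
            have : 4 * s ≤ 8 * s ^ 2 := by nlinarith
            push_cast [Nat.cast_sub this]
            rw [hK]; ring
          calc _ = ((Y : ℝ) ^ (8 * s ^ 2 - 4 * s) * ((Y : ℝ) ^ (2 * s - K + η)) ^ 2 *
              (Y : ℝ) ^ (k * (k + 1))) * B ^ 2 * (3 * (s : ℝ)) ^ (2 * k) *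
              exp (-(3 / 20) * τ ^ 2 * L) := by ring
            _ = _ := by rw [hY']; ring
      _ ≤ ((Y : ℝ) ^ 2) ^ (4 * s ^ 2) * exp (1 / 50 * τ ^ 2 * L) * exp (2 / 25 * τ ^ 2 * L) *
          exp (-(3 / 20) * τ ^ 2 * L) := by gcongr
      _ = _ := by
          rw [mul_assoc, mul_assoc, ← Real.exp_add, ← Real.exp_add]
          congr 2; ring
  have hle : exp (-(1 / 20) * τ ^ 2 * L) ≤ (exp (-(L / (10 ^ 8 * τ ^ 2)))) ^ (4 * s ^ 2) := by
    rw [← Real.exp_nat_mul, Real.exp_le_exp]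
    have hk4 : (k : ℝ) ^ 4 ≤ (8 * τ) ^ 4 := by gcongr
    have : ((4 * s ^ 2 : ℕ) : ℝ) = 196 * (k : ℝ) ^ 4 := by push_cast; rw [hsR]; ring
    rw [this]
    have h5 : 196 * (k : ℝ) ^ 4 * (L / (10 ^ 8 * τ ^ 2)) ≤ 196 * (8 * τ) ^ 4 * (L / (10 ^ 8 * τ ^ 2)) := by
      gcongr
    have h6 : 196 * (8 * τ) ^ 4 * (L / (10 ^ 8 * τ ^ 2)) = 802816 / 10 ^ 8 * τ ^ 2 * L := by
      field_simp; ring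
    have h7 : 0 ≤ τ ^ 2 * L := by positivity
    linarith
  have := hmain.trans (mul_le_mul_of_nonneg_left hle (by positivity))
  rw [← mul_pow] at this
  exact (pow_le_pow_iff_left₀ (norm_nonneg _) (by positivity) (by positivity)).1 this

/-! ### The sums `∑ n^{-it}` -/

lemma norm_sum_sub_shift_le {N M : ℕ} (hNM : N ≤ M) (f : ℕ → ℂ) (hf : ∀ n, ‖f n‖ ≤ 1) (m : ℕ) :
    ‖∑ n ∈ Ioc N M, f n - ∑ n ∈ Ioc N M, f (n + m)‖ ≤ 2 * m := by
  have tel : ∀ g : ℕ → ℂ, ∑ n ∈ Ioc N M, g n - ∑ n ∈ Ioc N M, g (n + 1) = g (N + 1) - g (M + 1) := by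
    intro g
    induction M, hNM using Nat.le_induction with
    | base => simp
    | succ M hM ih =>
      rw [← Finset.insert_Ioc_right_eq_Ioc_add_one hM, sum_insert (by simp), sum_insert (by simp)]
      linear_combination ih
  induction m with
  | zero => simp
  | succ m ih =>
    have h := tel (fun n => f (n + m))
    have h2 : ‖∑ n ∈ Ioc N M, f (n + m) - ∑ n ∈ Ioc N M, f (n + 1 + m)‖ ≤ 2 := by
      rw [h]
      refine (norm_sub_le _ _).trans ?_
      linarith [hf (N + 1 + m), hf (M + 1 + m)]
    have h3 : ∑ n ∈ Ioc N M, f n - ∑ n ∈ Ioc N M, f (n + (m + 1)) =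
      (∑ n ∈ Ioc N M, f n - ∑ n ∈ Ioc N M, f (n + m)) +
      (∑ n ∈ Ioc N M, f (n + m) - ∑ n ∈ Ioc N M, f (n + 1 + m)) := by
      have : ∀ n, n + (m + 1) = n + 1 + m := fun n => by omega
      simp_rw [this]; ring
    rw [h3]
    refine (norm_add_le _ _).trans ?_
    push_cast; linarith

/-- `n^{-it}`, as an exponential. -/
noncomputable def osc (t u : ℝ) : ℂ := Complex.exp (((-(t * Real.log u) : ℝ) : ℂ) * Complex.I)

lemma norm_osc (t u : ℝ) : ‖osc t u‖ = 1 := Complex.norm_exp_ofReal_mul_I _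

lemma norm_exp_sub_exp_le (a b : ℝ) :
    ‖Complex.exp ((a : ℂ) * Complex.I) - Complex.exp ((b : ℂ) * Complex.I)‖ ≤ |a - b| := by
  have : Complex.exp ((a : ℂ) * Complex.I) - Complex.exp ((b : ℂ) * Complex.I) =
      Complex.exp ((b : ℂ) * Complex.I) * (Complex.exp (Complex.I * ((a - b : ℝ) : ℂ)) - 1) := by
    rw [mul_sub, ← Complex.exp_add]; push_cast; ring_nf
  rw [this, norm_mul, Complex.norm_exp_ofReal_mul_I, one_mul]
  exact Real.norm_exp_I_mul_ofReal_sub_one_le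

/-- The Taylor phases of `t log(1 + u/x)`. -/
noncomputable def taylorPhase (t x : ℝ) (k : ℕ) : Fin k → ℝ :=
  fun j => -(t * ((-1) ^ (j : ℕ) / (((j : ℕ) + 1 : ℕ) * x ^ ((j : ℕ) + 1))))

/-- Taylor expansion of the phase reduces shifted sums of `n^{-it}` to the bilinear sum. -/
lemma norm_shift_sum_le {t x : ℝ} {k Y : ℕ} (hx : 0 < x) (hY : 2 * (Y : ℝ) ^ 2 ≤ x) :
    ‖∑ a ∈ Icc 1 Y, ∑ b ∈ Icc 1 Y, osc t (x + (a * b : ℕ))‖ ≤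
      ‖Wsum (taylorPhase t x k) Y‖ + (Y : ℝ) ^ 2 * (2 * |t| * ((Y : ℝ) ^ 2 / x) ^ (k + 1)) := by
  have hcast : Wsum (taylorPhase t x k) Y =
      ∑ a ∈ Icc 1 Y, ∑ b ∈ Icc 1 Y, chi (taylorPhase t x k) (nu k ((a * b : ℕ) : ℤ)) := by
    have key : ∀ F : ℤ → ℂ, ∑ a ∈ Icc (1 : ℤ) Y, F a = ∑ a ∈ Icc 1 Y, F (a : ℕ) := by
      intro F
      symm
      refine sum_bij (fun a _ => (a : ℤ)) ?_ ?_ ?_ ?_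
      · intro a ha; rw [mem_Icc] at *; omega
      · intro a _ b _ h; exact_mod_cast h
      · intro b hb; rw [mem_Icc] at hb
        exact ⟨b.toNat, by rw [mem_Icc]; omega, by omega⟩
      · intro a _; rfl
    unfold Wsum
    simp_rw [key]
    push_cast; rfl
  have hterm : ∀ m : ℕ, m ≤ Y ^ 2 →
      ‖osc t (x + m) - osc t x * chi (taylorPhase t x k) (nu k (m : ℤ))‖ ≤
        2 * |t| * ((Y : ℝ) ^ 2 / x) ^ (k + 1) := by
    intro m hm
    have hmR : (m : ℝ) ≤ (Y : ℝ) ^ 2 := by exact_mod_cast hm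
    set u := (m : ℝ) / x with hu
    have hu0 : 0 ≤ u := by positivity
    have huY : u ≤ (Y : ℝ) ^ 2 / x := by rw [hu]; gcongr
    have hu2 : u ≤ 1 / 2 := huY.trans (by rw [div_le_iff₀ hx]; linarith)
    have hlog : Real.log (x + m) = Real.log x + Real.log (1 + u) := by
      rw [← Real.log_mul (by positivity) (by positivity)]
      congr 1; rw [hu]; field_simp
    have hT := Real.abs_log_sub_add_sum_range_le (x := -u) (by rw [abs_neg, abs_of_nonneg hu0]; linarith) k
    rw [abs_neg, abs_of_nonneg hu0, sub_neg_eq_add] at hT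
    have hphase : ∑ j, taylorPhase t x k j * ((nu k (m : ℤ) j : ℤ) : ℝ) =
        t * ∑ i ∈ range k, (-u) ^ (i + 1) / ((i : ℝ) + 1) := by
      unfold taylorPhase nu
      rw [mul_sum, ← Fin.sum_univ_eq_sum_range (fun i => t * ((-u) ^ (i + 1) / ((i : ℝ) + 1)))]
      refine sum_congr rfl fun j _ => ?_
      rw [hu, neg_pow ((m : ℝ) / x), div_pow]
      push_cast
      field_simp
      ring
    unfold osc chi
    rw [← Complex.exp_add, ← add_mul, ← Complex.ofReal_add]
    refine (norm_exp_sub_exp_le _ _).trans ?_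
    rw [hphase, hlog]
    have e : -(t * (Real.log x + Real.log (1 + u))) -
        (-(t * Real.log x) + t * ∑ i ∈ range k, (-u) ^ (i + 1) / ((i : ℝ) + 1)) =
        -t * (∑ i ∈ range k, (-u) ^ (i + 1) / ((i : ℝ) + 1) + Real.log (1 + u)) := by ring
    rw [e, abs_mul, abs_neg]
    calc |t| * _ ≤ |t| * (u ^ (k + 1) / (1 - u)) := by gcongr
      _ ≤ |t| * (((Y : ℝ) ^ 2 / x) ^ (k + 1) / (1 / 2)) := by gcongr; linarith
      _ = _ := by ring
  have hsplit : ∑ a ∈ Icc 1 Y, ∑ b ∈ Icc 1 Y, osc t (x + (a * b : ℕ)) =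
      osc t x * Wsum (taylorPhase t x k) Y + ∑ a ∈ Icc 1 Y, ∑ b ∈ Icc 1 Y,
        (osc t (x + (a * b : ℕ)) - osc t x * chi (taylorPhase t x k) (nu k ((a * b : ℕ) : ℤ))) := by
    rw [hcast, mul_sum, ← sum_add_distrib]
    refine sum_congr rfl fun a _ => ?_
    rw [mul_sum, ← sum_add_distrib]
    refine sum_congr rfl fun b _ => ?_
    ring
  rw [hsplit]
  refine (norm_add_le _ _).trans ?_
  rw [norm_mul, norm_osc, one_mul]
  gcongr
  refine (norm_sum_le _ _).trans ?_
  calc _ ≤ ∑ a ∈ Icc 1 Y, ∑ b ∈ Icc 1 Y, (2 * |t| * ((Y : ℝ) ^ 2 / x) ^ (k + 1)) := by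
        refine sum_le_sum fun a ha => (norm_sum_le _ _).trans (sum_le_sum fun b hb => ?_)
        rw [mem_Icc] at ha hb
        exact hterm _ (by rw [sq]; exact Nat.mul_le_mul ha.2 hb.2)
    _ = _ := by simp; ring

/-- Vinogradov's estimate for `∑ n^{-it}` over a dyadic block, with `|t| = N^τ`. -/
theorem vinogradov_sum {N M : ℕ} {t τ : ℝ} (hN : 1 ≤ N) (hτ : 1 / 2 ≤ τ)
    (hL : 10 ^ 10 * τ ^ 3 ≤ Real.log N) (ht : |t| = exp (τ * Real.log N)) (hNM : N ≤ M)
    (hM : M ≤ 2 * N) :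
    ‖∑ n ∈ Ioc N M, osc t n‖ ≤ 5 * N * exp (-(Real.log N / (10 ^ 8 * τ ^ 2))) := by
  set L := Real.log N with hLdef
  have hτ0 : 0 < τ := by linarith
  have hτ3 : (1 / 2) ^ 3 ≤ τ ^ 3 := by gcongr
  have hL9 : 10 ^ 9 ≤ L := by linarith
  have hL0 : 0 < L := by linarith
  have hNe : (N : ℝ) = exp L := by rw [hLdef, Real.exp_log (by exact_mod_cast hN)]
  set k := ⌈6 * τ⌉₊ with hk
  set Y := ⌊exp (2 / 5 * L)⌋₊ with hY
  have hk6 : 6 * τ ≤ k := Nat.le_ceil _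
  have hY2 : (Y : ℝ) ≤ exp (2 / 5 * L) := Nat.floor_le (exp_pos _).le
  have hY1 : exp (2 / 5 * L) / 2 ≤ Y := by
    have h1 := (Nat.lt_floor_add_one (exp (2 / 5 * L))).le
    have h2 : 2 / 5 * L + 1 ≤ exp (2 / 5 * L) := Real.add_one_le_exp _
    rw [← hY] at h1; linarith
  have hYpos : (0 : ℝ) < Y := lt_of_lt_of_le (by positivity) hY1
  have hYsq : (Y : ℝ) ^ 2 ≤ exp (4 / 5 * L) := by
    calc (Y : ℝ) ^ 2 ≤ (exp (2 / 5 * L)) ^ 2 := by gcongr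
      _ = _ := by rw [← Real.exp_nat_mul]; congr 1; push_cast; ring
  have hYsq2 : 2 * (Y : ℝ) ^ 2 ≤ N := by
    rw [hNe]
    have h1 : (2 : ℝ) ≤ exp (1 / 5 * L) := by
      have := Real.add_one_le_exp (1 / 5 * L); linarith
    calc 2 * (Y : ℝ) ^ 2 ≤ exp (1 / 5 * L) * exp (4 / 5 * L) := by gcongr
      _ = _ := by rw [← Real.exp_add]; congr 1; ring
  set E := exp (-(L / (10 ^ 8 * τ ^ 2))) with hE
  have hEL : exp (-(1 / 5 * L)) ≤ E := by
    rw [hE, Real.exp_le_exp, neg_le_neg_iff, div_le_iff₀ (by positivity)]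
    have : (1 / 2) ^ 2 ≤ τ ^ 2 := by gcongr
    nlinarith
  -- the bound for a single `n`
  have hone : ∀ n ∈ Ioc N M, ‖∑ a ∈ Icc 1 Y, ∑ b ∈ Icc 1 Y, osc t ((n : ℝ) + (a * b : ℕ))‖ ≤
      (Y : ℝ) ^ 2 * (3 * E) := by
    intro n hn
    rw [mem_Ioc] at hn
    have hn1 : (N : ℝ) ≤ n := by exact_mod_cast hn.1.le
    have hn2 : (n : ℝ) ≤ 2 * N := by exact_mod_cast hn.2.trans hM
    have hn0 : (0 : ℝ) < n := by rw [hNe] at hn1; exact (exp_pos _).trans_le hn1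
    have h1 := norm_shift_sum_le (t := t) (x := n) (k := k) (Y := Y) hn0 (hYsq2.trans hn1)
    have h2 := Wsum_bound (x := n) (k := k) hτ hL (by rwa [← hNe]) (by rwa [← hNe]) hk hY1 hY2
      (taylorPhase t n k) (by
        intro j
        unfold taylorPhase
        rw [abs_neg, abs_mul, ht, abs_div, abs_pow, abs_neg, abs_one, one_pow, abs_of_pos
          (by positivity)]
        ring)
    have h3 : |t| * ((Y : ℝ) ^ 2 / n) ^ (k + 1) ≤ E := by
      calc |t| * ((Y : ℝ) ^ 2 / n) ^ (k + 1) ≤ exp (τ * L) * (exp (4 / 5 * L) / exp L) ^ (k + 1) := by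
            rw [ht]
            gcongr
            rwa [← hNe]
        _ = exp (τ * L - (1 / 5 * L) * (k + 1)) := by
            rw [← Real.exp_sub, ← Real.exp_nat_mul, ← Real.exp_add]; congr 1; push_cast; ring
        _ ≤ exp (-(1 / 5 * L)) := by
            rw [Real.exp_le_exp]
            have : L * (6 * τ) ≤ L * k := by gcongr
            have : 0 ≤ τ * L := by positivity
            linarith
        _ ≤ E := hEL
    calc _ ≤ _ := h1
      _ ≤ (Y : ℝ) ^ 2 * E + (Y : ℝ) ^ 2 * (2 * E) := by
          refine add_le_add h2 (mul_le_mul_of_nonneg_left ?_ (by positivity))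
          linarith
      _ = _ := by ring
  -- averaging over the shifts `ab`
  have hav : (Y : ℂ) ^ 2 * ∑ n ∈ Ioc N M, osc t n =
      ∑ a ∈ Icc 1 Y, ∑ b ∈ Icc 1 Y, (∑ n ∈ Ioc N M, osc t n -
        ∑ n ∈ Ioc N M, osc t ((n + a * b : ℕ) : ℝ)) +
      ∑ n ∈ Ioc N M, ∑ a ∈ Icc 1 Y, ∑ b ∈ Icc 1 Y, osc t ((n : ℝ) + (a * b : ℕ)) := by
    have : ∑ n ∈ Ioc N M, ∑ a ∈ Icc 1 Y, ∑ b ∈ Icc 1 Y, osc t ((n : ℝ) + (a * b : ℕ)) =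
        ∑ a ∈ Icc 1 Y, ∑ b ∈ Icc 1 Y, ∑ n ∈ Ioc N M, osc t ((n + a * b : ℕ) : ℝ) := by
      rw [sum_comm]
      refine sum_congr rfl fun a _ => ?_
      rw [sum_comm]
      refine sum_congr rfl fun b _ => sum_congr rfl fun n _ => ?_
      push_cast; rfl
    rw [this]
    simp only [sum_sub_distrib]
    simp
    ring
  have hav2 : (Y : ℝ) ^ 2 * ‖∑ n ∈ Ioc N M, osc t n‖ ≤
      (Y : ℝ) ^ 2 * (2 * (Y : ℝ) ^ 2) + N * ((Y : ℝ) ^ 2 * (3 * E)) := by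
    have h0 : (Y : ℝ) ^ 2 * ‖∑ n ∈ Ioc N M, osc t n‖ = ‖(Y : ℂ) ^ 2 * ∑ n ∈ Ioc N M, osc t n‖ := by
      simp
    rw [h0, hav]
    refine (norm_add_le _ _).trans (add_le_add ?_ ?_)
    · refine (norm_sum_le _ _).trans ?_
      calc _ ≤ ∑ a ∈ Icc 1 Y, ∑ b ∈ Icc 1 Y, 2 * (Y : ℝ) ^ 2 := by
            refine sum_le_sum fun a ha => (norm_sum_le _ _).trans (sum_le_sum fun b hb => ?_)
            rw [mem_Icc] at ha hb
            refine (norm_sum_sub_shift_le hNM (fun n => osc t n) (fun n => (norm_osc _ _).le)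
              (a * b)).trans ?_
            gcongr
            rw [sq]; exact_mod_cast Nat.mul_le_mul ha.2 hb.2
        _ = _ := by simp; ring
    · refine (norm_sum_le _ _).trans ((sum_le_sum hone).trans ?_)
      rw [sum_const, nsmul_eq_mul, Nat.card_Ioc]
      gcongr
      omega
  have hav3 : ‖∑ n ∈ Ioc N M, osc t n‖ ≤ 2 * (Y : ℝ) ^ 2 + N * (3 * E) := by
    have hp : (0 : ℝ) < (Y : ℝ) ^ 2 := by positivity
    refine le_of_mul_le_mul_left (hav2.trans (le_of_eq ?_)) hp
    ring
  have hYE : (Y : ℝ) ^ 2 ≤ N * E := by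
    calc (Y : ℝ) ^ 2 ≤ exp (4 / 5 * L) := hYsq
      _ = N * exp (-(1 / 5 * L)) := by rw [hNe, ← Real.exp_add]; congr 1; ring
      _ ≤ _ := by gcongr
  linarith

/-! ### Growth of the zeta function near `Re s = 1` -/

lemma norm_cpow_sub_le {a b : ℝ} (ha : 0 < a) (hab : a ≤ b) {s : ℂ} (hs : 0 < s.re) :
    ‖(b:ℂ)^(-s) - (a:ℂ)^(-s)‖ ≤ ‖s‖/s.re * (a^(-s.re) - b^(-s.re)) := by
  have hs0 : s ≠ 0 := by intro h; simp [h] at hs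
  have hz : (0:ℝ) ∉ Set.uIcc a b := by
    rw [Set.uIcc_of_le hab]; intro h; exact absurd h.1 (not_le.2 ha)
  have h1 : ∫ x:ℝ in a..b, (x:ℂ)^(-s-1) = ((b:ℂ)^(-s-1+1) - (a:ℂ)^(-s-1+1))/(-s-1+1) :=
    integral_cpow (Or.inr ⟨by intro h; apply hs0; linear_combination -h, hz⟩)
  have h2 : ∫ x:ℝ in a..b, x^(-s.re-1) = (b^(-s.re-1+1) - a^(-s.re-1+1))/(-s.re-1+1) :=
    integral_rpow (Or.inr ⟨by intro h; linarith, hz⟩)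
  rw [sub_add_cancel] at h1 h2
  have h3 : (b:ℂ)^(-s) - (a:ℂ)^(-s) = -s * ∫ x:ℝ in a..b, (x:ℂ)^(-s-1) := by
    rw [h1]; field_simp
  have h4 : ‖∫ x:ℝ in a..b, (x:ℂ)^(-s-1)‖ ≤ ∫ x:ℝ in a..b, x^(-s.re-1) := by
    apply intervalIntegral.norm_integral_le_of_norm_le hab
    · refine Filter.Eventually.of_forall fun x hx => ?_
      rw [Complex.norm_cpow_eq_rpow_re_of_pos (ha.trans hx.1)]
      simp
    · exact intervalIntegral.intervalIntegrable_rpow (Or.inr hz)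
  rw [h3, norm_mul, norm_neg]
  calc _ ≤ ‖s‖ * ∫ x:ℝ in a..b, x^(-s.re-1) := by gcongr
    _ = _ := by rw [h2]; field_simp; ring

/-- The Euler–Maclaurin approximant `∑_{k ≤ n} k^{-s} + n^{1-s}/(s-1)` of the zeta function. -/
noncomputable def zetaApprox (s : ℂ) (n : ℕ) : ℂ :=
  ∑ k ∈ Ioc 0 n, (k:ℂ)^(-s) + (n:ℂ)^(1-s)/(s-1)

lemma zetaApprox_step {s : ℂ} (hs : 0 < s.re) (hs1 : s ≠ 1) {n : ℕ} (hn : 1 ≤ n) :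
    ‖zetaApprox s (n+1) - zetaApprox s n‖ ≤
      ‖s‖/s.re * ((n:ℝ)^(-s.re) - ((n+1:ℕ):ℝ)^(-s.re)) := by
  have hn0 : (0:ℝ) < n := by exact_mod_cast hn
  have hle : (n:ℝ) ≤ ((n+1:ℕ):ℝ) := by push_cast; linarith
  have hz : (0:ℝ) ∉ Set.uIcc (n:ℝ) ((n+1:ℕ):ℝ) := by
    rw [Set.uIcc_of_le hle]; intro h; exact absurd h.1 (not_le.2 hn0)
  have hs1' : s - 1 ≠ 0 := sub_ne_zero.2 hs1
  have hs1'' : -s + 1 ≠ 0 := by intro h; apply hs1'; linear_combination -h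
  have h1 : ∫ x:ℝ in (n:ℝ)..((n+1:ℕ):ℝ), (x:ℂ)^(-s) = ((((n+1:ℕ):ℝ):ℂ)^(-s+1) - ((n:ℝ):ℂ)^(-s+1))/(-s+1) :=
    integral_cpow (Or.inr ⟨by intro h; apply hs1; linear_combination -h, hz⟩)
  have h2 : zetaApprox s (n+1) - zetaApprox s n =
      ∫ x:ℝ in (n:ℝ)..((n+1:ℕ):ℝ), ((((n+1:ℕ):ℝ):ℂ)^(-s) - (x:ℂ)^(-s)) := by
    rw [intervalIntegral.integral_sub (by simp) (intervalIntegral.intervalIntegrable_cpow (Or.inr hz)), h1]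
    unfold zetaApprox
    rw [Finset.sum_Ioc_succ_top (by omega)]
    simp only [intervalIntegral.integral_const]
    have : 1 - s = -s + 1 := by ring
    rw [this]
    push_cast
    rw [add_sub_cancel_left, one_smul]
    generalize ((n:ℂ)+1)^(-s+1) = A
    generalize ((n:ℂ))^(-s+1) = B
    have : -s + 1 = -(s-1) := by ring
    rw [this, div_neg]
    ring
  rw [h2]
  have := intervalIntegral.norm_integral_le_of_norm_le_const (a := (n:ℝ)) (b := ((n+1:ℕ):ℝ))
    (f := fun x:ℝ => (((n+1:ℕ):ℝ):ℂ)^(-s) - (x:ℂ)^(-s))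
    (C := ‖s‖/s.re * ((n:ℝ)^(-s.re) - ((n+1:ℕ):ℝ)^(-s.re))) ?_
  · refine this.trans_eq ?_
    push_cast; simp
  · intro x hx
    rw [Set.uIoc_of_le hle] at hx
    have hx0 := hn0.trans hx.1
    refine (norm_cpow_sub_le hx0 hx.2 hs).trans ?_
    have : x^(-s.re) ≤ (n:ℝ)^(-s.re) := Real.rpow_le_rpow_of_nonpos hn0 hx.1.le (by linarith)
    gcongr

lemma zetaApprox_sub {s : ℂ} (hs : 0 < s.re) (hs1 : s ≠ 1) {n m : ℕ} (hn : 1 ≤ n) (hnm : n ≤ m) :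
    ‖zetaApprox s m - zetaApprox s n‖ ≤ ‖s‖/s.re * ((n:ℝ)^(-s.re) - (m:ℝ)^(-s.re)) := by
  induction m, hnm using Nat.le_induction with
  | base => simp
  | succ m hm ih =>
    have := zetaApprox_step hs hs1 (hn.trans hm)
    have h3 := norm_add_le (zetaApprox s (m+1) - zetaApprox s m) (zetaApprox s m - zetaApprox s n)
    rw [sub_add_sub_cancel] at h3
    linarith

lemma zetaApprox_tendsto_of_one_lt {s : ℂ} (hs : 1 < s.re) :
    Filter.Tendsto (zetaApprox s) Filter.atTop (nhds (riemannZeta s)) := by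
  have h1 : Filter.Tendsto (fun n : ℕ => ∑ k ∈ Ioc 0 n, (k:ℂ)^(-s)) Filter.atTop (nhds (riemannZeta s)) := by
    have hsum : Summable fun n : ℕ => 1/(n:ℂ)^s := Complex.summable_one_div_nat_cpow.2 hs
    have := hsum.hasSum.tendsto_sum_nat
    rw [← zeta_eq_tsum_one_div_nat_cpow hs] at this
    have h2 := (Filter.tendsto_add_atTop_iff_nat 1).2 this
    refine h2.congr fun n => ?_
    have hs0 : s ≠ 0 := by intro h; simp [h] at hs; linarith
    rw [Finset.sum_range_eq_add_Ico _ (by omega)]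
    simp only [Nat.cast_zero, Complex.zero_cpow hs0, div_zero, zero_add, one_div, Complex.cpow_neg]
    rfl
  have h2 : Filter.Tendsto (fun n : ℕ => (n:ℂ)^(1-s)/(s-1)) Filter.atTop (nhds 0) := by
    rw [← zero_div (s-1)]
    apply Filter.Tendsto.div_const
    rw [tendsto_zero_iff_norm_tendsto_zero]
    have h3 : Filter.Tendsto (fun n : ℕ => ((n:ℝ))^(-(s.re-1))) Filter.atTop (nhds 0) :=
      (tendsto_rpow_neg_atTop (by linarith)).comp tendsto_natCast_atTop_atTop
    refine h3.congr' ?_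
    filter_upwards [Filter.eventually_gt_atTop 0] with n hn
    rw [Complex.norm_natCast_cpow_of_pos hn]
    simp
  have h3 := h1.add h2
  rw [add_zero] at h3
  exact h3

lemma zetaApprox_tendsto {s : ℂ} (hs : 0 < s.re) (hs1 : s ≠ 1) :
    Filter.Tendsto (zetaApprox s) Filter.atTop (nhds (riemannZeta s)) := by
  obtain ⟨ε, hε0, hε⟩ : ∃ ε:ℝ, 0 < ε ∧ ε < min s.re 1 := exists_between (by simp [hs])
  obtain ⟨R, hR⟩ : ∃ R:ℝ, max ‖s‖ 2 < R := exists_gt _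
  let U : Set ℂ := {z | ε < z.re} ∩ Metric.ball 0 R
  have hUo : IsOpen U := (isOpen_lt continuous_const Complex.continuous_re).inter Metric.isOpen_ball
  have hUc : Convex ℝ U := (convex_halfSpace_re_gt ε).inter (convex_ball 0 R)
  have hsU : s ∈ U := ⟨hε.trans_le (min_le_left _ _), by simpa using (le_max_left _ _).trans_lt hR⟩
  have h2U : (2:ℂ) ∈ U := ⟨by simpa using (hε.trans_le (min_le_right _ _)).trans one_lt_two,
    by simpa using (le_max_right _ _).trans_lt hR⟩
  -- multiplied by `s - 1`, the approximants are holomorphic on `U`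
  let G : ℕ → ℂ → ℂ := fun n z => (z-1) * ∑ k ∈ Ioc 0 (n+1), (k:ℂ)^(-z) + ((n+1:ℕ):ℂ)^(1-z)
  have hG : ∀ n z, z ≠ 1 → G n z = (z-1) * zetaApprox z (n+1) := by
    intro n z hz
    have : z - 1 ≠ 0 := sub_ne_zero.2 hz
    simp only [G, zetaApprox]; field_simp
  have hGd : ∀ n, Differentiable ℂ (G n) := by
    intro n
    have : ∀ k ∈ Ioc 0 (n+1), Differentiable ℂ fun z : ℂ => (k:ℂ)^(-z) := by
      intro k hk z
      have : (k:ℂ) ≠ 0 := by have := (Finset.mem_Ioc.1 hk).1; exact_mod_cast this.ne'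
      exact (differentiableAt_id.neg).const_cpow (Or.inl this)
    have h2 : Differentiable ℂ fun z : ℂ => ((n+1:ℕ):ℂ)^(1-z) := by
      intro z
      exact (differentiableAt_id.const_sub 1).const_cpow (Or.inl (by exact_mod_cast Nat.succ_ne_zero n))
    have h3 : Differentiable ℂ fun z : ℂ => ∑ k ∈ Ioc 0 (n+1), (k:ℂ)^(-z) := Differentiable.fun_sum this
    exact ((differentiable_id.sub_const 1).mul h3).add h2
  -- the step between consecutive approximants
  have hstep : ∀ n : ℕ, ∀ z ∈ U, ‖G (n+1) z - G n z‖ ≤ (R+1)*R*(((n+1:ℕ):ℝ)^(-ε-1)) := by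
    intro n z hz
    have hzr : ε < z.re := hz.1
    have hzR : ‖z‖ < R := by simpa using hz.2
    have hz0 : 0 < z.re := hε0.trans hzr
    have hzc : ∀ z ∈ U, z ≠ 1 → ‖G (n+1) z - G n z‖ ≤ (R+1)*R*(((n+1:ℕ):ℝ)^(-ε-1)) := by
      intro z hz hz1
      have hzr : ε < z.re := hz.1
      have hzR : ‖z‖ < R := by simpa using hz.2
      have hz0 : 0 < z.re := hε0.trans hzr
      rw [hG _ _ hz1, hG _ _ hz1, ← mul_sub, norm_mul]
      have h1 := zetaApprox_step hz0 hz1 (n := n+1) (by omega)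
      have hn1 : (1:ℝ) ≤ ((n+1:ℕ):ℝ) := by push_cast; linarith [Nat.cast_nonneg (α := ℝ) n]
      have h2 : ((n+1:ℕ):ℝ)^(-z.re) - ((n+1+1:ℕ):ℝ)^(-z.re) ≤ z.re * ((n+1:ℕ):ℝ)^(-ε-1) := by
        have hle : ((n+1:ℕ):ℝ) ≤ ((n+1+1:ℕ):ℝ) := by push_cast; linarith
        have hz : (0:ℝ) ∉ Set.uIcc ((n+1:ℕ):ℝ) ((n+1+1:ℕ):ℝ) := by
          rw [Set.uIcc_of_le hle]; intro h; linarith [h.1]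
        have h2 : ∫ x:ℝ in ((n+1:ℕ):ℝ)..((n+1+1:ℕ):ℝ), x^(-z.re-1) = _ :=
          integral_rpow (Or.inr ⟨by intro h; linarith, hz⟩)
        rw [sub_add_cancel] at h2
        have h4 : ∫ x:ℝ in ((n+1:ℕ):ℝ)..((n+1+1:ℕ):ℝ), x^(-z.re-1) ≤
            ∫ x:ℝ in ((n+1:ℕ):ℝ)..((n+1+1:ℕ):ℝ), ((n+1:ℕ):ℝ)^(-ε-1) := by
          apply intervalIntegral.integral_mono_on hle
          · exact intervalIntegral.intervalIntegrable_rpow (Or.inr hz)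
          · simp
          · intro x hx
            calc x^(-z.re-1) ≤ ((n+1:ℕ):ℝ)^(-z.re-1) :=
                  Real.rpow_le_rpow_of_nonpos (by linarith) hx.1 (by linarith)
              _ ≤ _ := Real.rpow_le_rpow_of_exponent_le hn1 (by linarith)
        rw [h2, intervalIntegral.integral_const] at h4
        have h5 : ((n+1+1:ℕ):ℝ) - ((n+1:ℕ):ℝ) = 1 := by push_cast; ring
        rw [h5, one_smul, div_neg, ← neg_div, neg_sub, div_le_iff₀ hz0] at h4
        linarith
      have h3 : ‖z - 1‖ ≤ R + 1 := by
        have := norm_sub_le z 1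
        rw [norm_one] at this; linarith
      have hR0 : 0 < R := (norm_nonneg z).trans_lt hzR
      have h4 : ‖zetaApprox z (n + 1 + 1) - zetaApprox z (n + 1)‖ ≤ R * ((n+1:ℕ):ℝ)^(-ε-1) := by
        refine h1.trans ?_
        calc _ ≤ ‖z‖/z.re * (z.re * ((n+1:ℕ):ℝ)^(-ε-1)) := by gcongr
          _ = ‖z‖ * ((n+1:ℕ):ℝ)^(-ε-1) := by field_simp
          _ ≤ _ := by gcongr
      rw [mul_assoc]
      gcongr
    rcases eq_or_ne z 1 with rfl | hz1
    · -- at `z = 1` by continuity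
      have hcont : Continuous fun z => ‖G (n+1) z - G n z‖ :=
        ((hGd _).continuous.sub (hGd _).continuous).norm
      refine le_of_tendsto (hcont.continuousAt (x := (1:ℂ))|>.mono_left (nhdsWithin_le_nhds (s := {1}ᶜ))) ?_
      filter_upwards [mem_nhdsWithin_of_mem_nhds (hUo.mem_nhds hz), self_mem_nhdsWithin] with w hw hw1
      exact hzc w hw hw1
    · exact hzc z hz hz1
  have hsumm : Summable fun n : ℕ => (R+1)*R*(((n+1:ℕ):ℝ)^(-ε-1)) := by
    apply Summable.mul_left
    exact (summable_nat_add_iff 1).2 (Real.summable_nat_rpow.2 (by linarith) : Summable fun n : ℕ => (n:ℝ)^(-ε-1))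
  let F : ℂ → ℂ := fun z => G 0 z + ∑' n, (G (n+1) z - G n z)
  have hF : DifferentiableOn ℂ F U :=
    (hGd 0).differentiableOn.add (Complex.differentiableOn_tsum_of_summable_norm hsumm
      (fun i => ((hGd _).sub (hGd _)).differentiableOn) hUo hstep)
  have hlim : ∀ z ∈ U, Filter.Tendsto (fun n => G n z) Filter.atTop (nhds (F z)) := by
    intro z hz
    have h1 : Summable fun n => (G (n+1) z - G n z) :=
      Summable.of_norm_bounded hsumm (fun n => hstep n z hz)
    have := (h1.hasSum.tendsto_sum_nat).const_add (G 0 z)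
    refine this.congr fun n => ?_
    rw [Finset.sum_range_sub (fun n => G n z)]; ring
  have hEq : Set.EqOn F riemannZeta₁ U := by
    refine AnalyticOnNhd.eqOn_of_preconnected_of_eventuallyEq (hF.analyticOnNhd hUo)
      (differentiable_riemannZeta₁.differentiableOn.analyticOnNhd hUo) hUc.isPreconnected h2U ?_
    filter_upwards [hUo.mem_nhds h2U, (isOpen_lt continuous_const Complex.continuous_re).mem_nhds
      (show (1:ℝ) < (2:ℂ).re by simp)] with z hz hz1
    have hz1 : 1 < z.re := hz1
    have hne : z ≠ 1 := by rintro rfl; simp at hz1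
    refine tendsto_nhds_unique (hlim z hz) ?_
    have h2 := ((Filter.tendsto_add_atTop_iff_nat 1).2 (zetaApprox_tendsto_of_one_lt hz1)).const_mul (z-1)
    have h3 : (z-1) * riemannZeta z = riemannZeta₁ z := by
      rw [riemannZeta_eq_inv_sub_mul hne, mul_inv_cancel_left₀ (sub_ne_zero.2 hne)]
    rw [h3] at h2
    exact h2.congr fun n => (hG n z hne).symm
  have h5 := (hlim s hsU).const_mul (s-1)⁻¹
  rw [hEq hsU, ← riemannZeta_eq_inv_sub_mul hs1] at h5
  refine (Filter.tendsto_add_atTop_iff_nat 1).1 (h5.congr fun n => ?_)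
  rw [hG n s hs1, inv_mul_cancel_left₀ (sub_ne_zero.2 hs1)]

theorem zeta_approx {s : ℂ} (hs : 0 < s.re) (hs1 : s ≠ 1) {n : ℕ} (hn : 1 ≤ n) :
    ‖riemannZeta s - zetaApprox s n‖ ≤ ‖s‖/s.re * (n:ℝ)^(-s.re) := by
  have h := ((zetaApprox_tendsto hs hs1).sub_const (zetaApprox s n)).norm
  refine le_of_tendsto h ?_
  filter_upwards [Filter.eventually_ge_atTop n] with m hm
  refine (zetaApprox_sub hs hs1 hn hm).trans ?_
  have : 0 ≤ (m:ℝ)^(-s.re) := by positivity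
  have h2 : 0 ≤ ‖s‖/s.re := by positivity
  exact mul_le_mul_of_nonneg_left (by linarith) h2

/-- Abel summation: a decreasing nonnegative weight multiplies the sup of the partial sums. -/
lemma norm_sum_antitone_mul_le (f : ℕ → ℝ) (g : ℕ → ℂ) {N M : ℕ} {B : ℝ}
    (hf0 : ∀ n, N ≤ n → 0 ≤ f n) (hf : ∀ n, N ≤ n → f (n+1) ≤ f n) (hB : ∀ m, N ≤ m → m ≤ M → ‖∑ n ∈ Ioc N m, g n‖ ≤ B)
    (hNM : N ≤ M) : ‖∑ n ∈ Ioc N M, (f n : ℂ) * g n‖ ≤ f N * B := by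
  have key : ∀ m, N ≤ m → m ≤ M → ‖∑ n ∈ Ioc N m, (f n : ℂ) * g n - f m * ∑ n ∈ Ioc N m, g n‖ ≤ (f N - f m) * B := by
    intro m hm
    induction m, hm using Nat.le_induction with
    | base => simp
    | succ m hm ih =>
      intro hmM
      have h1 := ih (by omega)
      have h2 := hB m hm (by omega)
      rw [Finset.sum_Ioc_succ_top hm, Finset.sum_Ioc_succ_top hm]
      have : ∑ n ∈ Ioc N m, (f n : ℂ) * g n + f (m+1) * g (m+1) - f (m+1) * (∑ n ∈ Ioc N m, g n + g (m+1))
        = (∑ n ∈ Ioc N m, (f n : ℂ) * g n - f m * ∑ n ∈ Ioc N m, g n) + ((f m - f (m+1) : ℝ):ℂ) * ∑ n ∈ Ioc N m, g n := by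
        push_cast; ring
      rw [this]
      refine (norm_add_le _ _).trans ?_
      rw [norm_mul, Complex.norm_real, Real.norm_of_nonneg (by linarith [hf m hm])]
      have := mul_le_mul_of_nonneg_left h2 (show 0 ≤ f m - f (m+1) by linarith [hf m hm])
      linarith
  have h1 := key M hNM le_rfl
  have h2 := mul_le_mul_of_nonneg_left (hB M hNM le_rfl) (hf0 M hNM)
  have h3 := norm_add_le (∑ n ∈ Ioc N M, (f n : ℂ) * g n - f M * ∑ n ∈ Ioc N M, g n) (f M * ∑ n ∈ Ioc N M, g n)
  rw [sub_add_cancel, norm_mul, Complex.norm_real, Real.norm_of_nonneg (hf0 M hNM)] at h3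
  linarith

lemma natCast_cpow_eq (σ t : ℝ) {n : ℕ} (hn : 1 ≤ n) :
    (n:ℂ)^(-((σ:ℂ) + t*Complex.I)) = (((n:ℝ)^(-σ) : ℝ) : ℂ) * osc t n := by
  have hn0 : (0:ℝ) < n := by exact_mod_cast hn
  rw [Complex.cpow_def_of_ne_zero (by exact_mod_cast hn0.ne'), Real.rpow_def_of_pos hn0, osc,
    Complex.ofReal_exp, ← Complex.exp_add, ← Complex.natCast_log]
  congr 1
  push_cast
  ring

lemma zeta_block_bound {lam σ t : ℝ} (hlam : 1000 ≤ lam) (ht : |t| = exp (lam^4))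
    (hσ : 1 - 1/(400*lam^3) ≤ σ) {k : ℕ} (hk : k * Real.log 2 ≤ 2*lam^4) :
    ‖∑ n ∈ Ioc (2^k : ℕ) (2*2^k), (n:ℂ)^(-((σ:ℂ) + t*Complex.I))‖ ≤ 5 := by
  set P : ℕ := 2^k with hP
  have hP1 : 1 ≤ P := Nat.one_le_two_pow
  have hP0 : (0:ℝ) < P := by exact_mod_cast hP1
  have hlog : Real.log P = k * Real.log 2 := by rw [hP]; push_cast; rw [Real.log_pow]
  have hσ0 : 0 ≤ σ := by
    have : 1/(400*lam^3) ≤ 1 := by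
      rw [div_le_one (by positivity)]
      have : 1 ≤ lam^3 := one_le_pow₀ (by linarith)
      linarith
    linarith
  set l := Real.log P with hl
  have hl0 : 0 ≤ l := Real.log_nonneg (by exact_mod_cast hP1)
  have hσl : (1-σ)*l ≤ l/(400*lam^3) := by
    have := mul_le_mul_of_nonneg_right (show 1 - σ ≤ 1/(400*lam^3) by linarith) hl0
    calc _ ≤ _ := this
      _ = _ := by ring
  have hPσ : (P:ℝ)^(-σ) * P = exp ((1-σ)*l) := by
    have h : (P:ℝ) = exp l := (Real.exp_log hP0).symm
    rw [Real.rpow_def_of_pos hP0, ← hl, h, ← Real.exp_add]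
    congr 1; ring
  rcases le_or_gt l (400*lam^3) with hcase | hcase
  · have h1 : ∀ n ∈ Ioc P (2*P), ‖(n:ℂ)^(-((σ:ℂ) + t*Complex.I))‖ ≤ (P:ℝ)^(-σ) := by
      intro n hn
      rw [Finset.mem_Ioc] at hn
      rw [natCast_cpow_eq σ t (by omega), norm_mul, norm_osc, mul_one, Complex.norm_real,
        Real.norm_of_nonneg (by positivity)]
      exact Real.rpow_le_rpow_of_nonpos hP0 (by exact_mod_cast hn.1.le) (by linarith)
    refine (norm_sum_le_of_le _ h1).trans ?_
    rw [Finset.sum_const, Nat.card_Ioc, nsmul_eq_mul]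
    have h2 : ((2*P - P : ℕ):ℝ) = P := by congr 1; omega
    rw [h2, mul_comm, hPσ]
    have h3 : (1-σ)*l ≤ 1 := hσl.trans (by rw [div_le_one (by positivity)]; exact hcase)
    calc _ ≤ exp 1 := Real.exp_le_exp.2 h3
      _ ≤ 5 := by have := Real.exp_one_lt_d9; linarith
  · have hl' : 0 < l := lt_trans (by positivity) hcase
    set τ := lam^4/l with hτ
    have hτ0 : 0 < τ := by positivity
    have h1 : 1/2 ≤ τ := by rw [hτ, le_div_iff₀ hl']; linarith [hlog ▸ hk]
    have hl4 : (400*lam^3)^4 ≤ l^4 := pow_le_pow_left₀ (by positivity) hcase.le 4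
    have hl2 : (400*lam^3)^2 ≤ l^2 := pow_le_pow_left₀ (by positivity) hcase.le 2
    have h2 : 10^10*τ^3 ≤ l := by
      rw [hτ, div_pow, mul_div_assoc', div_le_iff₀ (by positivity)]
      have : 0 ≤ lam^12 := by positivity
      calc 10^10*(lam^4)^3 ≤ (400*lam^3)^4 := by
            rw [mul_pow, ← pow_mul, ← pow_mul]; norm_num; linarith
        _ ≤ l^4 := hl4
        _ = _ := by ring
    have h3 : |t| = exp (τ*Real.log P) := by rw [ht, hτ, ← hl]; congr 1; field_simp
    have hV : ∀ m, P ≤ m → m ≤ 2*P → ‖∑ n ∈ Ioc P m, osc t n‖ ≤ 5*P*exp (-(l/(10^8*τ^2))) :=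
      fun m hm hm2 => vinogradov_sum hP1 h1 h2 h3 hm hm2
    have h4 := norm_sum_antitone_mul_le (fun n : ℕ => (n:ℝ)^(-σ)) (fun n : ℕ => osc t n) (N := P) (M := 2*P)
      (fun n _ => by positivity) (fun n hn => Real.rpow_le_rpow_of_nonpos (by exact_mod_cast (hP1.trans hn))
        (by push_cast; linarith) (by linarith)) hV (by omega)
    have h5 : ∑ n ∈ Ioc P (2*P), (n:ℂ)^(-((σ:ℂ) + t*Complex.I)) =
        ∑ n ∈ Ioc P (2*P), (((n:ℝ)^(-σ) : ℝ) : ℂ) * osc t n := by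
      refine Finset.sum_congr rfl fun n hn => ?_
      rw [Finset.mem_Ioc] at hn
      exact natCast_cpow_eq σ t (by omega)
    rw [h5]
    refine h4.trans ?_
    have h6 : (P:ℝ)^(-σ) * (5*P*exp (-(l/(10^8*τ^2)))) = 5 * (exp ((1-σ)*l) * exp (-(l/(10^8*τ^2)))) := by
      rw [← hPσ]; ring
    change (P:ℝ)^(-σ) * (5*P*exp (-(l/(10^8*τ^2)))) ≤ 5
    rw [h6, ← Real.exp_add]
    have h7 : (1-σ)*l + -(l/(10^8*τ^2)) ≤ 0 := by
      have : l/(400*lam^3) ≤ l/(10^8*τ^2) := by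
        apply div_le_div_of_nonneg_left hl0 (by positivity)
        rw [hτ, div_pow, mul_div_assoc', div_le_iff₀ (by positivity)]
        calc 10^8*(lam^4)^2 = 10^8 * lam^8 * 1 := by ring
          _ ≤ 10^8*lam^8 * (lam/2) := by gcongr; linarith
          _ ≤ 400*lam^3*((400*lam^3)^2) := by
            have : 0 ≤ lam^9 := by positivity
            ring_nf; linarith
          _ ≤ _ := by gcongr
      linarith
    linarith [Real.exp_le_one_iff.2 h7]

/-- The Vinogradov–Korobov type growth bound, with `log |t| = lam ^ 4`. -/
theorem zeta_growth {lam σ t : ℝ} (hlam : 1000 ≤ lam) (ht : |t| = exp (lam^4))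
    (hσ : 1 - 1/(400*lam^3) ≤ σ) (hσ3 : σ ≤ 3) :
    ‖riemannZeta ((σ:ℂ) + t*Complex.I)‖ ≤ 15*lam^4 := by
  have hl3 : (1:ℝ) ≤ lam^3 := one_le_pow₀ (by linarith)
  have hl4 : (1000:ℝ) ≤ lam^4 := hlam.trans (le_self_pow₀ (by linarith) (by norm_num))
  have h400 : 1/(400*lam^3) ≤ 1/400 := by
    apply div_le_div_of_nonneg_left (by norm_num) (by norm_num); linarith
  have hσ23 : 2/3 ≤ σ := by linarith
  set s : ℂ := (σ:ℂ) + t*Complex.I with hs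
  have hre : s.re = σ := by simp [hs]
  have him : s.im = t := by simp [hs]
  have ht0 : 1000 ≤ |t| := by rw [ht]; linarith [Real.add_one_le_exp (lam^4)]
  have hs1 : s ≠ 1 := by
    intro h
    have : s.im = 0 := by rw [h]; simp
    rw [him] at this; rw [this] at ht0; norm_num at ht0
  set K : ℕ := ⌈3/2*lam^4/Real.log 2⌉₊ with hK
  have hlog2 := Real.log_two_gt_d9
  have hlog2' := Real.log_two_lt_d9
  have hl2pos : 0 < Real.log 2 := by linarith
  have hK1 : 3/2*lam^4 ≤ K * Real.log 2 := by
    have := Nat.le_ceil (3/2*lam^4/Real.log 2)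
    rwa [div_le_iff₀ hl2pos] at this
  have hK2 : K * Real.log 2 ≤ 2*lam^4 := by
    have := (Nat.ceil_lt_add_one (a := 3/2*lam^4/Real.log 2) (by positivity)).le
    have := mul_le_mul_of_nonneg_right this hl2pos.le
    rw [add_mul, div_mul_cancel₀ _ hl2pos.ne'] at this
    rw [← hK] at this
    linarith
  have hsum : ∀ k : ℕ, k ≤ K → ‖∑ n ∈ Ioc 0 (2^k : ℕ), (n:ℂ)^(-s)‖ ≤ 1 + 5*k := by
    intro k
    induction k with
    | zero => intro _; simp [show Ioc 0 1 = ({1} : Finset ℕ) from rfl]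
    | succ k ih =>
      intro hk
      have h1 := ih (by omega)
      have h2 : (k:ℝ) * Real.log 2 ≤ 2*lam^4 := by
        refine le_trans ?_ hK2
        have : (k:ℝ) ≤ K := by exact_mod_cast (by omega : k ≤ K)
        gcongr
      have h3 := zeta_block_bound hlam ht hσ h2
      rw [pow_succ', ← Finset.sum_Ioc_consecutive _ (Nat.zero_le (2^k)) (show 2^k ≤ 2*2^k by omega)]
      refine (norm_add_le _ _).trans ?_
      push_cast
      rw [← hs] at h3
      linarith
  have hN1 : 1 ≤ 2^K := Nat.one_le_two_pow
  have hN0 : (0:ℝ) < ((2^K:ℕ):ℝ) := by exact_mod_cast hN1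
  have hlogN : Real.log ((2^K:ℕ):ℝ) = K * Real.log 2 := by push_cast; rw [Real.log_pow]
  have h1 := zeta_approx (s := s) (by rw [hre]; linarith) hs1 hN1
  have h2 := hsum K le_rfl
  have h3 : ‖((2^K:ℕ):ℂ)^(1-s)/(s-1)‖ ≤ 1 := by
    rw [norm_div, Complex.norm_natCast_cpow_of_pos (by omega)]
    have h4 : |t| ≤ ‖s-1‖ := by
      have := Complex.abs_im_le_norm (s-1)
      simpa [him] using this
    rw [div_le_one (by linarith)]
    refine le_trans ?_ h4
    rw [Real.rpow_def_of_pos hN0, hlogN, ht]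
    apply Real.exp_le_exp.2
    simp only [Complex.sub_re, Complex.one_re, hre]
    have h5 : 0 ≤ (K:ℝ) * Real.log 2 := by positivity
    calc _ ≤ (K:ℝ) * Real.log 2 * (1/400) := mul_le_mul_of_nonneg_left (by linarith) h5
      _ ≤ _ := by linarith
  have h4 : ‖s‖/s.re * ((2^K:ℕ):ℝ)^(-s.re) ≤ 4 := by
    rw [hre]
    have h5 : ((2^K:ℕ):ℝ)^(-σ) ≤ |t|⁻¹ := by
      rw [Real.rpow_def_of_pos hN0, hlogN, ht, ← Real.exp_neg]
      apply Real.exp_le_exp.2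
      have : 3/2*lam^4 * (2/3) ≤ K * Real.log 2 * σ := mul_le_mul hK1 hσ23 (by norm_num) (by positivity)
      linarith
    have h6 : ‖s‖ ≤ 2*|t| := by
      have := Complex.norm_le_abs_re_add_abs_im s
      rw [hre, him, abs_of_nonneg (by linarith : 0 ≤ σ)] at this
      linarith
    calc _ ≤ (2*|t|)/(2/3) * |t|⁻¹ := by gcongr
      _ = 3 := by have : |t| ≠ 0 := by linarith
                  field_simp
      _ ≤ 4 := by norm_num
  have h5 : ‖riemannZeta s‖ ≤ ‖riemannZeta s - zetaApprox s (2^K)‖ + (‖∑ n ∈ Ioc 0 (2^K : ℕ), (n:ℂ)^(-s)‖ +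
      ‖((2^K:ℕ):ℂ)^(1-s)/(s-1)‖) := by
    have h6 := norm_add_le (riemannZeta s - zetaApprox s (2^K)) (zetaApprox s (2^K))
    rw [sub_add_cancel] at h6
    refine h6.trans ?_
    gcongr
    exact norm_add_le _ _
  have h7 : (K:ℝ)*0.69 ≤ 2*lam^4 := by
    refine le_trans ?_ hK2
    have : 0 ≤ (K:ℝ) := by positivity
    exact mul_le_mul_of_nonneg_left (by linarith) this
  linarith

/-! ### Landau's lemma -/

/-- Logarithmic derivative of a zero-free function on a disc, by Borel–Carathéodory applied to a
holomorphic branch of its logarithm. -/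
lemma logDeriv_le_of_ne_zero {f : ℂ → ℂ} {R ρ M : ℝ} (hM : 0 < M)
    (hf : DifferentiableOn ℂ f (Metric.ball 0 R)) (hf0 : ∀ z ∈ Metric.ball (0:ℂ) R, f z ≠ 0)
    (hfM : ∀ z ∈ Metric.ball (0:ℂ) R, ‖f z‖ ≤ exp M * ‖f 0‖) (hρ : ρ < R) {z : ℂ} (hz : ‖z‖ ≤ ρ) :
    ‖logDeriv f z‖ ≤ 8*M*R/(R-ρ)^2 := by
  have hρ0 : 0 ≤ ρ := (norm_nonneg z).trans hz
  have hR : 0 < R := hρ0.trans_lt hρ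
  have h0 : (0:ℂ) ∈ Metric.ball (0:ℂ) R := by simpa using hR
  have hf' : DifferentiableOn ℂ (fun z => deriv f z / f z) (Metric.ball 0 R) :=
    (hf.deriv Metric.isOpen_ball).div hf hf0
  obtain ⟨h, hh0, hh⟩ := hf'.isExactOn_ball.with_val_at 0 0
  have hhd : DifferentiableOn ℂ h (Metric.ball 0 R) := fun z hz => (hh z hz).differentiableAt.differentiableWithinAt
  have hconst : ∀ z ∈ Metric.ball (0:ℂ) R, f z * Complex.exp (-h z) = f 0 := by
    intro z hz
    have := Metric.isOpen_ball.is_const_of_deriv_eq_zero (𝕜 := ℂ) (f := fun z => f z * Complex.exp (-h z))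
      (convex_ball (0:ℂ) R).isPreconnected (hf.mul hhd.neg.cexp) ?_ hz h0
    · simpa [hh0] using this
    · intro w hw
      have h1 := (hf.differentiableAt (Metric.isOpen_ball.mem_nhds hw)).hasDerivAt
      have h2 := (h1.mul (hh w hw).neg.cexp).deriv
      have : (fun z => f z * Complex.exp (-h z)) = f * fun z => Complex.exp (-h z) := rfl
      rw [this]
      have h3 : (fun x => Complex.exp ((-h) x)) = fun z => Complex.exp (-h z) := rfl
      rw [h3] at h2
      rw [h2]
      have := hf0 w hw
      simp only [Pi.neg_apply, Pi.zero_apply]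
      field_simp
      ring
  have hre : Set.MapsTo h (Metric.ball 0 R) {z | z.re ≤ M} := by
    intro w hw
    have h1 := hconst w hw
    have h2 : ‖f w‖ = exp (h w).re * ‖f 0‖ := by
      rw [← h1, norm_mul, Complex.norm_exp, mul_comm, mul_assoc, ← Real.exp_add]
      simp
    have h3 := hfM w hw
    rw [h2] at h3
    have := le_of_mul_le_mul_right h3 (norm_pos_iff.2 (hf0 0 h0))
    exact Real.exp_le_exp.1 this
  have hder : logDeriv f z = deriv h z := by
    have hzb : z ∈ Metric.ball (0:ℂ) R := by simpa using hz.trans_lt hρ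
    rw [(hh z hzb).deriv, logDeriv_apply]
  rw [hder]
  set r := (R-ρ)/2 with hr
  have hr0 : 0 < r := by rw [hr]; linarith
  have hsub : Metric.closedBall z r ⊆ Metric.ball 0 R := by
    intro w hw
    rw [mem_closedBall_iff_norm] at hw
    rw [mem_ball_zero_iff]
    have := norm_add_le (w - z) z
    rw [sub_add_cancel] at this
    linarith
  have hdc : DiffContOnCl ℂ h (Metric.ball z r) := by
    apply DifferentiableOn.diffContOnCl
    rw [closure_ball z hr0.ne']
    exact hhd.mono hsub
  have := Complex.norm_deriv_le_of_forall_mem_sphere_norm_le hr0 hdc (C := 2*M*R/r) ?_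
  · refine this.trans_eq ?_
    rw [hr]; have : R - ρ ≠ 0 := by linarith
    field_simp; norm_num
  · intro w hw
    have hwb := hsub (Metric.sphere_subset_closedBall hw)
    have hb := Complex.borelCaratheodory_zero hM hhd hre hR hwb hh0
    have hwn : ‖w‖ ≤ R - r := by
      rw [mem_sphere_iff_norm] at hw
      have := norm_add_le (w - z) z
      rw [sub_add_cancel] at this
      linarith
    refine hb.trans ?_
    have hw2 : ‖w‖ ≤ R := by linarith
    gcongr
    linarith

/-- The hypotheses of Landau's lemma: `f` is holomorphic on a neighbourhood `U` of the closed disc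
of radius `R` about `0`, has no zeros there in the half plane `Re z ≥ 0`, and is at most
`e^M |f 0|` on the disc. -/
structure LandauHyp (U : Set ℂ) (f : ℂ → ℂ) (R M : ℝ) : Prop where
  pos : 0 < R
  isOpen : IsOpen U
  sub : Metric.closedBall 0 R ⊆ U
  diff : DifferentiableOn ℂ f U
  ne : ∀ z ∈ Metric.closedBall (0:ℂ) R, 0 ≤ z.re → f z ≠ 0
  bound : ∀ z ∈ Metric.closedBall (0:ℂ) R, ‖f z‖ ≤ exp M * ‖f 0‖

lemma LandauHyp.nonneg {U f R M} (h : LandauHyp U f R M) : 0 ≤ M := by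
  have h0 : (0:ℂ) ∈ Metric.closedBall (0:ℂ) R := by simpa using h.pos.le
  have h1 := h.bound 0 h0
  have h2 := norm_pos_iff.2 (h.ne 0 h0 le_rfl)
  have : 1 ≤ exp M := by
    by_contra hc
    nlinarith
  exact Real.one_le_exp_iff.1 this

/-- Dividing by the Blaschke factor of a zero `ρ` lowers `M` by `log 2`, since the factor is
unimodular on the boundary circle and at most `1/2` at the centre. -/
lemma LandauHyp.divide {U f R M} (h : LandauHyp U f R M) {ρ : ℂ} (hρ : ‖ρ‖ ≤ R/2) (hfρ : f ρ = 0) :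
    ∃ g, LandauHyp U g R (M - Real.log 2) ∧
      (logDeriv f 0).re = (logDeriv g 0).re + (-ρ.re) * (1/‖ρ‖^2 - 1/R^2) := by
  have hR := h.pos
  have hRc : (R:ℂ) ≠ 0 := by exact_mod_cast hR.ne'
  have h0 : (0:ℂ) ∈ Metric.closedBall (0:ℂ) R := by simpa using hR.le
  have hρb : ρ ∈ Metric.closedBall (0:ℂ) R := by
    rw [mem_closedBall_zero_iff]; linarith
  have hρ0 : ρ ≠ 0 := by rintro rfl; exact h.ne 0 h0 le_rfl hfρ
  let q : ℂ → ℂ := fun z => ((R:ℂ)^2 - (starRingEnd ℂ) ρ * z)/R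
  have hq : ∀ z ∈ Metric.closedBall (0:ℂ) R, q z ≠ 0 := by
    intro z hz h1
    have h2 : (R:ℂ)^2 = (starRingEnd ℂ) ρ * z := by
      have := (div_eq_zero_iff.1 h1).resolve_right hRc
      linear_combination this
    have h3 : R^2 = ‖ρ‖*‖z‖ := by
      have := congrArg norm h2
      simpa [abs_of_pos hR] using this
    rw [mem_closedBall_zero_iff] at hz
    have : ‖ρ‖*‖z‖ ≤ R/2*R := mul_le_mul hρ hz (norm_nonneg _) (by linarith)
    have := pow_pos hR 2
    linarith
  have hqd : Differentiable ℂ q := by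
    apply Differentiable.div_const
    exact (differentiable_const _).sub ((differentiable_const _).mul differentiable_id)
  let d := dslope f ρ
  have hUρ : U ∈ nhds ρ := h.isOpen.mem_nhds (h.sub hρb)
  have hdd : DifferentiableOn ℂ d U := (Complex.differentiableOn_dslope hUρ).2 h.diff
  have hfd : ∀ z, f z = (z - ρ) * d z := by
    intro z
    have := sub_smul_dslope f ρ z
    rw [hfρ, sub_zero] at this
    rw [← this, smul_eq_mul]
  let g : ℂ → ℂ := fun z => d z * q z
  have hgd : DifferentiableOn ℂ g U := hdd.mul hqd.differentiableOn
  have hgne : ∀ z ∈ Metric.closedBall (0:ℂ) R, 0 ≤ z.re → g z ≠ 0 := by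
    intro z hz hzr
    refine mul_ne_zero ?_ (hq z hz)
    intro h1
    exact h.ne z hz hzr (by rw [hfd, h1, mul_zero])
  have hg0 : g 0 = f 0 * (-R/ρ) := by
    simp only [g, q, hfd 0]; field_simp; ring
  have hng0 : ‖f 0‖ * 2 ≤ ‖g 0‖ := by
    rw [hg0, norm_mul, norm_div, norm_neg, Complex.norm_real, Real.norm_of_nonneg hR.le]
    refine mul_le_mul_of_nonneg_left ?_ (norm_nonneg _)
    rw [le_div_iff₀ (norm_pos_iff.2 hρ0)]; linarith
  -- on the circle `|q z| = |z - ρ|`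
  have hsph : ∀ z ∈ Metric.sphere (0:ℂ) R, ‖q z‖ = ‖z - ρ‖ := by
    intro z hz
    rw [mem_sphere_zero_iff_norm] at hz
    have h1 : (R:ℂ)^2 = z * (starRingEnd ℂ) z := by
      rw [Complex.mul_conj, Complex.normSq_eq_norm_sq, hz]; push_cast; rfl
    have h2 : q z = z * (starRingEnd ℂ) (z - ρ) / R := by
      simp only [q]; rw [h1, map_sub]; ring
    rw [h2, norm_div, norm_mul, Complex.norm_conj, hz, Complex.norm_real, Real.norm_of_nonneg hR.le]
    field_simp
  have hgb : ∀ z ∈ Metric.closedBall (0:ℂ) R, ‖g z‖ ≤ exp M * ‖f 0‖ := by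
    intro z hz
    refine Complex.norm_le_of_forall_mem_frontier_norm_le (U := Metric.ball (0:ℂ) R) Metric.isBounded_ball ?_ ?_ ?_
    · apply DifferentiableOn.diffContOnCl
      rw [closure_ball _ hR.ne']
      exact hgd.mono h.sub
    · intro w hw
      rw [frontier_ball _ hR.ne'] at hw
      rw [show ‖g w‖ = ‖f w‖ by simp only [g]; rw [norm_mul, hsph w hw, hfd, norm_mul, mul_comm]]
      exact h.bound w (Metric.sphere_subset_closedBall hw)
    · rw [closure_ball _ hR.ne']; exact hz
  refine ⟨g, ⟨hR, h.isOpen, h.sub, hgd, hgne, ?_⟩, ?_⟩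
  · intro z hz
    refine (hgb z hz).trans ?_
    rw [Real.exp_sub, Real.exp_log (by norm_num)]
    calc exp M * ‖f 0‖ = exp M/2 * (‖f 0‖ * 2) := by ring
      _ ≤ _ := by gcongr
  · have hU0 : U ∈ nhds (0:ℂ) := h.isOpen.mem_nhds (h.sub h0)
    have hd0 : d 0 ≠ 0 := fun h1 => h.ne 0 h0 le_rfl (by rw [hfd, h1, mul_zero])
    have hdD : DifferentiableAt ℂ d 0 := hdd.differentiableAt hU0
    have e1 : logDeriv f 0 = 1/(0-ρ) + logDeriv d 0 := by
      have : f = fun z => (z - ρ) * d z := funext hfd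
      rw [this, logDeriv_mul (f := fun z => z - ρ) (g := d) 0 (by simpa using hρ0) hd0 (by fun_prop) hdD]
      congr 1
      rw [logDeriv_apply, deriv_sub_const]; simp
    have e2 : logDeriv g 0 = logDeriv d 0 + (-(starRingEnd ℂ) ρ/R^2) := by
      rw [show g = fun z => d z * q z from rfl, logDeriv_mul (f := d) (g := q) 0 hd0 (hq 0 h0) hdD (hqd 0)]
      congr 1
      have : HasDerivAt q ((0 - (starRingEnd ℂ) ρ * 1)/R) 0 := by
        apply HasDerivAt.div_const
        exact (hasDerivAt_const _ _).sub ((hasDerivAt_id _).const_mul _)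
      rw [logDeriv_apply, this.deriv]
      simp only [q]; field_simp; ring
    have e3 : logDeriv f 0 = logDeriv g 0 + (-(1/ρ) + (starRingEnd ℂ) ρ/R^2) := by
      rw [e1, e2, zero_sub, one_div_neg_eq_neg_one_div]; ring
    rw [e3, Complex.add_re]
    congr 1
    have e4 : (1/ρ).re = ρ.re/‖ρ‖^2 := by
      rw [one_div, Complex.inv_re, Complex.normSq_eq_norm_sq]
    have e5 : ((starRingEnd ℂ) ρ/(R:ℂ)^2).re = ρ.re/R^2 := by
      rw [← Complex.ofReal_pow, Complex.div_ofReal_re, Complex.conj_re]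
    rw [Complex.add_re, Complex.neg_re, e4, e5]; ring

lemma LandauHyp.re_logDeriv {U R} (n : ℕ) : ∀ {f M}, LandauHyp U f R M → M < n * Real.log 2 →
    -(16*(M+1)/R) ≤ (logDeriv f 0).re := by
  induction n with
  | zero => intro f M h hM; have := h.nonneg; simp at hM; linarith
  | succ n ih =>
    intro f M h hM
    have hR := h.pos
    have hM0 := h.nonneg
    by_cases hz : ∃ ρ, ‖ρ‖ ≤ R/2 ∧ f ρ = 0
    · obtain ⟨ρ, hρ, hfρ⟩ := hz
      obtain ⟨g, hg, he⟩ := h.divide hρ hfρ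
      have h1 := ih hg (by push_cast at hM; linarith)
      have hρre : 0 ≤ -ρ.re := by
        by_contra hc
        exact h.ne ρ (by rw [mem_closedBall_zero_iff]; linarith) (by linarith) hfρ
      have hρ0 : 0 < ‖ρ‖ := by
        rw [norm_pos_iff]; rintro rfl
        exact h.ne 0 (by simpa using hR.le) le_rfl hfρ
      have h2 : 1/R^2 ≤ 1/‖ρ‖^2 := by
        apply one_div_le_one_div_of_le (by positivity)
        gcongr; linarith
      have h3 := mul_nonneg hρre (sub_nonneg.2 h2)
      have h4 : 16*(M - Real.log 2+1)/R ≤ 16*(M+1)/R := by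
        have := (Real.log_pos one_lt_two)
        gcongr; linarith
      linarith
    · push Not at hz
      have hsub : Metric.ball (0:ℂ) (R/2) ⊆ Metric.closedBall 0 R := by
        intro z hz; rw [mem_ball_zero_iff] at hz; rw [mem_closedBall_zero_iff]; linarith
      have := logDeriv_le_of_ne_zero (f := f) (R := R/2) (ρ := 0) (M := M+1) (by linarith)
        (h.diff.mono (hsub.trans h.sub)) (fun z hzz => hz z (by rw [mem_ball_zero_iff] at hzz; exact hzz.le))
        (fun z hzz => (h.bound z (hsub hzz)).trans (by gcongr; linarith)) (by linarith) (z := 0) (by simp)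
      have h2 := (Complex.abs_re_le_norm (logDeriv f 0)).trans this
      have h3 : 8*(M+1)*(R/2)/(R/2-0)^2 = 16*(M+1)/R := by rw [sub_zero]; field_simp; norm_num
      rw [h3] at h2
      exact (abs_le.1 h2).1

/-- **Landau's lemma**, without a distinguished zero. -/
lemma LandauHyp.re_ge {U f R M} (h : LandauHyp U f R M) : -(16*(M+1)/R) ≤ (logDeriv f 0).re := by
  obtain ⟨n, hn⟩ := exists_nat_gt (M/Real.log 2)
  exact LandauHyp.re_logDeriv n h (by rwa [div_lt_iff₀ (Real.log_pos one_lt_two)] at hn)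

/-- **Landau's lemma**, keeping the contribution of one zero. -/
lemma LandauHyp.re_ge_zero {U f R M} (h : LandauHyp U f R M) {ρ : ℂ} (hρ : ‖ρ‖ ≤ R/2) (hfρ : f ρ = 0) :
    -(16*(M+1)/R) + (-ρ.re) * (1/‖ρ‖^2 - 1/R^2) ≤ (logDeriv f 0).re := by
  obtain ⟨g, hg, he⟩ := h.divide hρ hfρ
  have h1 := hg.re_ge
  have h4 : 16*(M - Real.log 2+1)/R ≤ 16*(M+1)/R := by
    have := (Real.log_pos one_lt_two)
    have := h.pos
    gcongr; linarith
  linarith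

/-! ### The zero-free region -/

open ArithmeticFunction in
lemma hasSum_vonMangoldt {σ : ℝ} (hσ : 1 < σ) (t : ℝ) :
    HasSum (fun n : ℕ => ((vonMangoldt n * (n:ℝ)^(-σ) : ℝ):ℂ) * osc t n)
      (-logDeriv riemannZeta ((σ:ℂ) + t*Complex.I)) := by
  have hre : 1 < ((σ:ℂ) + t*Complex.I).re := by simpa using hσ
  have h1 := (LSeriesSummable_vonMangoldt hre).hasSum
  have h2 := LSeries_vonMangoldt_eq_deriv_riemannZeta_div hre
  rw [LSeries] at h2
  rw [h2] at h1
  rw [logDeriv_apply, ← neg_div]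
  refine h1.congr_fun fun n => ?_
  rcases Nat.eq_zero_or_pos n with rfl | hn
  · simp
  · rw [LSeries.term_of_ne_zero hn.ne', div_eq_mul_inv, ← Complex.cpow_neg, natCast_cpow_eq σ t hn]
    push_cast; ring

lemma osc_re (t u : ℝ) : (osc t u).re = Real.cos (t * Real.log u) := by
  rw [osc, Complex.exp_ofReal_mul_I_re, Real.cos_neg]

/-- The inequality `3 + 4 cos θ + cos 2θ ≥ 0`, summed against `Λ(n) n^{-σ}`. -/
lemma vonMangoldt_comb {σ : ℝ} (hσ : 1 < σ) (t : ℝ) :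
    3 * (logDeriv riemannZeta (σ:ℂ)).re + 4 * (logDeriv riemannZeta ((σ:ℂ) + t*Complex.I)).re +
      (logDeriv riemannZeta ((σ:ℂ) + (2*t:ℝ)*Complex.I)).re ≤ 0 := by
  have h0 := Complex.hasSum_re (hasSum_vonMangoldt hσ 0)
  have h1 := Complex.hasSum_re (hasSum_vonMangoldt hσ t)
  have h2 := Complex.hasSum_re (hasSum_vonMangoldt hσ (2*t))
  have h3 := ((h0.mul_left 3).add (h1.mul_left 4)).add h2
  have h4 := h3.nonneg ?_
  · simp only [Complex.ofReal_zero, zero_mul, add_zero, Complex.neg_re] at h4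
    linarith
  · intro n
    simp only [Complex.re_ofReal_mul, osc_re]
    have h5 : 0 ≤ ArithmeticFunction.vonMangoldt n * (n:ℝ)^(-σ) :=
      mul_nonneg ArithmeticFunction.vonMangoldt_nonneg (by positivity)
    have h6 : Real.cos (2*t*Real.log n) = 2*Real.cos (t*Real.log n)^2 - 1 := by
      rw [mul_assoc, Real.cos_two_mul]
    rw [h6, zero_mul, Real.cos_zero]
    have : 0 ≤ ArithmeticFunction.vonMangoldt n * (n:ℝ)^(-σ) * (2*(1+Real.cos (t*Real.log n))^2) := by positivity
    linarith

lemma norm_logDeriv_zeta_le {σ : ℝ} (hσ : 1 < σ) (t : ℝ) :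
    ‖logDeriv riemannZeta ((σ:ℂ) + t*Complex.I)‖ ≤ -(logDeriv riemannZeta (σ:ℂ)).re := by
  have h0 := Complex.hasSum_re (hasSum_vonMangoldt hσ 0)
  have h1 := hasSum_vonMangoldt hσ t
  rw [← norm_neg]
  simp only [Complex.ofReal_zero, zero_mul, add_zero, Complex.neg_re, Complex.re_ofReal_mul, osc_re,
    Real.cos_zero, mul_one] at h0
  rw [← h1.tsum_eq]
  refine tsum_of_norm_bounded h0 fun n => ?_
  rw [norm_mul, norm_osc, mul_one, Complex.norm_real, Real.norm_of_nonneg]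
  exact mul_nonneg ArithmeticFunction.vonMangoldt_nonneg (by positivity)

lemma logDeriv_zeta_eq {s : ℂ} (hs : s ≠ 1) (hz : riemannZeta₁ s ≠ 0) :
    logDeriv riemannZeta s = logDeriv riemannZeta₁ s - (s-1)⁻¹ := by
  have hs1 : s - 1 ≠ 0 := sub_ne_zero.2 hs
  have h1 : riemannZeta =ᶠ[nhds s] fun z => (z-1)⁻¹ * riemannZeta₁ z := by
    filter_upwards [isOpen_ne.mem_nhds hs] with z hz
    exact riemannZeta_eq_inv_sub_mul hz
  rw [logDeriv_apply, h1.deriv_eq, h1.eq_of_nhds, ← logDeriv_apply,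
    logDeriv_mul (f := fun z => (z-1)⁻¹) (g := riemannZeta₁) s (inv_ne_zero hs1) hz
      ((differentiableAt_id.sub_const 1).inv hs1) (differentiable_riemannZeta₁ s)]
  have h2 : HasDerivAt (fun z : ℂ => (z-1)⁻¹) (-1/(s-1)^2) s := ((hasDerivAt_id s).sub_const 1).inv hs1
  rw [logDeriv_apply, h2.deriv]
  field_simp
  ring

lemma riemannZeta₁_eq {s : ℂ} (hs : s ≠ 1) : riemannZeta₁ s = (s-1) * riemannZeta s := by
  rw [riemannZeta_eq_inv_sub_mul hs, mul_inv_cancel_left₀ (sub_ne_zero.2 hs)]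

lemma riemannZeta₁_ne_zero {s : ℂ} (hs : 1 ≤ s.re) : riemannZeta₁ s ≠ 0 := by
  rcases eq_or_ne s 1 with rfl | h
  · simp
  · rw [riemannZeta₁_eq h]
    exact mul_ne_zero (sub_ne_zero.2 h) (riemannZeta_ne_zero_of_one_le_re hs)

lemma differentiableAt_logDeriv_zeta₁ {s : ℂ} (hz : riemannZeta₁ s ≠ 0) :
    DifferentiableAt ℂ (logDeriv riemannZeta₁) s :=
  (differentiable_riemannZeta₁.deriv s).div (differentiable_riemannZeta₁ s) hz

/-- Near the pole, `-ζ'/ζ(σ) ≤ 1/(σ-1) + C`. -/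
lemma exists_neg_logDeriv_le : ∃ C : ℝ, 0 ≤ C ∧ ∀ σ : ℝ, 1 < σ → σ ≤ 2 →
    -(logDeriv riemannZeta (σ:ℂ)).re ≤ 1/(σ-1) + C := by
  have hc : ContinuousOn (fun σ : ℝ => logDeriv riemannZeta₁ (σ:ℂ)) (Set.Icc 1 2) := by
    intro σ hσ
    have h1 : riemannZeta₁ (σ:ℂ) ≠ 0 := riemannZeta₁_ne_zero (by simpa using hσ.1)
    exact ((differentiableAt_logDeriv_zeta₁ h1).continuousAt.comp
      Complex.continuous_ofReal.continuousAt).continuousWithinAt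
  obtain ⟨C, hC⟩ := isCompact_Icc.exists_bound_of_continuousOn hc
  refine ⟨C, (norm_nonneg _).trans (hC 1 (by simp)), fun σ h1 h2 => ?_⟩
  have h3 := hC σ ⟨h1.le, h2⟩
  have hne : (σ:ℂ) ≠ 1 := by exact_mod_cast h1.ne'
  rw [logDeriv_zeta_eq hne (riemannZeta₁_ne_zero (by simpa using h1.le))]
  have h4 : (((σ:ℂ)-1)⁻¹).re = 1/(σ-1) := by
    rw [← Complex.ofReal_one, ← Complex.ofReal_sub, ← Complex.ofReal_inv, Complex.ofReal_re, one_div]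
  rw [Complex.sub_re, h4]
  have := (abs_le.1 ((Complex.abs_re_le_norm _).trans h3)).1
  linarith

lemma zeta_real_le {σ : ℝ} (hσ : 1 < σ) : ‖riemannZeta (σ:ℂ)‖ ≤ 2 + 1/(σ-1) := by
  have h := zeta_approx (s := (σ:ℂ)) (by simp; linarith) (by exact_mod_cast hσ.ne') (n := 1) le_rfl
  have h0 : 0 < σ := by linarith
  simp only [zetaApprox, Complex.norm_real, Complex.ofReal_re, Real.norm_of_nonneg h0.le, Nat.cast_one,
    Real.one_rpow, mul_one, div_self h0.ne', Complex.one_cpow, show Ioc 0 1 = ({1}:Finset ℕ) from rfl,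
    Finset.sum_singleton] at h
  have h1 := norm_add_le (riemannZeta (σ:ℂ) - (1 + 1/((σ:ℂ)-1))) (1 + 1/((σ:ℂ)-1))
  rw [sub_add_cancel] at h1
  have h2 : ‖(1 + 1/((σ:ℂ)-1))‖ = 1 + 1/(σ-1) := by
    have : (1 + 1/((σ:ℂ)-1)) = ((1 + 1/(σ-1) : ℝ):ℂ) := by push_cast; rfl
    rw [this, Complex.norm_real, Real.norm_of_nonneg]
    have : 0 < σ - 1 := by linarith
    positivity
  linarith

open ArithmeticFunction in
lemma inv_zeta_le {σ : ℝ} (hσ : 1 < σ) (t : ℝ) :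
    1 ≤ ‖riemannZeta ((σ:ℂ) + t*Complex.I)‖ * (2 + 1/(σ-1)) := by
  have hre : 1 < ((σ:ℂ) + t*Complex.I).re := by simpa using hσ
  have h1 := LSeries_zeta_mul_Lseries_moebius hre
  rw [LSeries_zeta_eq_riemannZeta hre] at h1
  have h2 : ‖LSeries (fun n => ((moebius n : ℤ):ℂ)) ((σ:ℂ) + t*Complex.I)‖ ≤ 2 + 1/(σ-1) := by
    refine le_trans ?_ (zeta_real_le hσ)
    have hs : Summable fun n : ℕ => (n:ℝ)^(-σ) := Real.summable_nat_rpow.2 (by linarith)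
    have h3 : riemannZeta (σ:ℂ) = ((∑' n : ℕ, (n:ℝ)^(-σ) : ℝ):ℂ) := by
      rw [zeta_eq_tsum_one_div_nat_cpow (by simpa using hσ), Complex.ofReal_tsum]
      refine tsum_congr fun n => ?_
      rw [Real.rpow_neg (by positivity), Complex.ofReal_inv, Complex.ofReal_cpow (by positivity), one_div]
      simp
    rw [h3, Complex.norm_real, Real.norm_of_nonneg (tsum_nonneg fun n => by positivity), LSeries]
    refine tsum_of_norm_bounded hs.hasSum fun n => ?_
    rcases Nat.eq_zero_or_pos n with rfl | hn
    · simp; positivity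
    · rw [LSeries.term_of_ne_zero hn.ne', div_eq_mul_inv, ← Complex.cpow_neg, natCast_cpow_eq σ t hn,
        norm_mul, norm_mul, norm_osc, mul_one, Complex.norm_real, Real.norm_of_nonneg (by positivity)]
      have : ‖((moebius n : ℤ):ℂ)‖ ≤ 1 := by
        rw [Complex.norm_intCast]; exact_mod_cast abs_moebius_le_one
      exact mul_le_of_le_one_left (by positivity) this
  have h4 := congrArg norm h1
  rw [norm_mul, norm_one] at h4
  calc (1:ℝ) = _ := h4.symm
    _ ≤ _ := mul_le_mul_of_nonneg_left h2 (norm_nonneg _)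

/-- The growth bound on a whole range of heights. -/
lemma zeta_growth' {ν σ t u : ℝ} (hν : 100 ≤ ν) (ht : |t| = exp (ν^8)) (hu1 : |t| - 1 ≤ |u|)
    (hu2 : |u| ≤ 2*|t| + 1) (hσ : 1 - 1/(3200*ν^6) ≤ σ) (hσ3 : σ ≤ 3) :
    ‖riemannZeta ((σ:ℂ) + u*Complex.I)‖ ≤ 240*ν^8 := by
  have hν8 : (100:ℝ)^8 ≤ ν^8 := pow_le_pow_left₀ (by norm_num) hν 8
  have ht8 : ν^8 + 1 ≤ |t| := by rw [ht]; exact Real.add_one_le_exp _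
  have hu0 : 0 < |u| := by linarith
  set L := Real.log |u| with hL
  -- crude two-sided comparison of the logarithms
  have hL1 : ν^8 - 1 ≤ L := by
    rw [hL, Real.le_log_iff_exp_le hu0, Real.exp_sub, ← ht]
    refine le_trans ?_ hu1
    rw [div_le_iff₀ (Real.exp_pos _)]
    have := Real.exp_one_gt_d9
    nlinarith
  have hL2 : L ≤ 16*ν^8 := by
    rw [hL, Real.log_le_iff_le_exp hu0]
    have : 2*|t|+1 ≤ exp (ν^8 + 2) := by
      rw [Real.exp_add, ← ht]
      have h2 : (3:ℝ) ≤ exp 2 := by linarith [Real.add_one_le_exp (2:ℝ)]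
      nlinarith
    refine hu2.trans (this.trans (Real.exp_le_exp.2 (by linarith)))
  have hL0 : 0 < L := by linarith
  set lam := L^(1/4:ℝ) with hlam
  have hlam0 : 0 < lam := Real.rpow_pos_of_pos hL0 _
  have hlam4 : lam^4 = L := by
    rw [hlam, ← Real.rpow_natCast, ← Real.rpow_mul hL0.le]; norm_num
  have hl1000 : 1000 ≤ lam := by
    by_contra hc
    push Not at hc
    have : lam^4 < 1000^4 := pow_lt_pow_left₀ hc hlam0.le (by norm_num)
    rw [hlam4] at this
    linarith
  have hl2 : lam ≤ 2*ν^2 := by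
    by_contra hc
    push Not at hc
    have : (2*ν^2)^4 < lam^4 := pow_lt_pow_left₀ hc (by positivity) (by norm_num)
    rw [hlam4] at this
    have h3 : (2*ν^2)^4 = 16*ν^8 := by ring
    linarith
  have h5 : 1 - 1/(400*lam^3) ≤ σ := by
    refine le_trans ?_ hσ
    have : 1/(3200*ν^6) ≤ 1/(400*lam^3) := by
      apply one_div_le_one_div_of_le (by positivity)
      calc 400*lam^3 ≤ 400*(2*ν^2)^3 := by gcongr
        _ = _ := by ring
    linarith
  have h6 := zeta_growth hl1000 (t := u) (by rw [hlam4, hL, Real.exp_log hu0]) h5 hσ3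
  rw [hlam4] at h6
  linarith

lemma add_mul_I_re (x y : ℝ) : ((x:ℂ) + y*Complex.I).re = x := by
  simp only [Complex.add_re, Complex.ofReal_re, Complex.re_ofReal_mul, Complex.I_re, mul_zero, add_zero]

lemma add_mul_I_im (x y : ℝ) : ((x:ℂ) + y*Complex.I).im = y := by
  simp only [Complex.add_im, Complex.ofReal_im, Complex.im_ofReal_mul, Complex.I_im, mul_one, zero_add]

lemma zeta_landauHyp {ν t u : ℝ} (hν : 100 ≤ ν) (ht : |t| = exp (ν^8)) (hu1 : |t| ≤ |u|)
    (hu2 : |u| ≤ 2*|t|) :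
    LandauHyp {z | ((1+1/ν^7 : ℝ):ℂ) + u*Complex.I + z ≠ 1}
      (fun z => riemannZeta (((1+1/ν^7 : ℝ):ℂ) + u*Complex.I + z))
      (1/(3200*ν^6)) (Real.log (720*ν^15)) := by
  have hν0 : 0 < ν := by linarith
  have ht8 : ν^8 + 1 ≤ |t| := by rw [ht]; exact Real.add_one_le_exp _
  have h8 : 0 < ν^8 := by positivity
  have hR1 : 1/(3200*ν^6) ≤ 1 := by
    rw [div_le_one (by positivity)]
    have : 1 ≤ ν^6 := one_le_pow₀ (by linarith)
    linarith
  have h7 : 1 ≤ ν^7 := one_le_pow₀ (by linarith)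
  have hκ0 : 0 < 1/ν^7 := by positivity
  have hκ1 : 1/ν^7 ≤ 1 := by rw [div_le_one (by positivity)]; exact h7
  set c : ℂ := ((1+1/ν^7 : ℝ):ℂ) + u*Complex.I with hc
  have hcre : c.re = 1 + 1/ν^7 := add_mul_I_re _ _
  have hcim : c.im = u := add_mul_I_im _ _
  have hform : ∀ z : ℂ, c + z = (((1+1/ν^7+z.re : ℝ)):ℂ) + ((u + z.im : ℝ):ℂ)*Complex.I := by
    intro z
    apply Complex.ext
    · rw [add_mul_I_re, Complex.add_re, hcre]
    · rw [add_mul_I_im, Complex.add_im, hcim]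
  have him : ∀ z ∈ Metric.closedBall (0:ℂ) (1/(3200*ν^6)), |u| - 1 ≤ |u+z.im| ∧ |u+z.im| ≤ |u| + 1 ∧ |z.re| ≤ 1/(3200*ν^6) := by
    intro z hz
    rw [mem_closedBall_zero_iff] at hz
    have h1 := (Complex.abs_im_le_norm z).trans (hz.trans hR1)
    have h2 := abs_add_le u z.im
    have h3 := abs_sub_abs_le_abs_sub u (-z.im)
    rw [abs_neg, sub_neg_eq_add] at h3
    exact ⟨by linarith, by linarith, (Complex.abs_re_le_norm z).trans hz⟩
  refine ⟨by positivity, ?_, ?_, ?_, ?_, ?_⟩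
  · exact isOpen_ne.preimage (continuous_const.add continuous_id)
  · intro z hz h1
    have h2 := (him z hz).1
    have : u + z.im = 0 := by
      have := congrArg Complex.im h1
      simpa [hcim] using this
    rw [this, abs_zero] at h2
    linarith
  · intro z hz
    exact ((differentiableAt_riemannZeta hz).comp z (by fun_prop)).differentiableWithinAt
  · intro z hz hzr
    apply riemannZeta_ne_zero_of_one_le_re
    rw [Complex.add_re, hcre]; linarith
  · intro z hz
    obtain ⟨h1, h2, h3⟩ := him z hz
    have h4 := abs_le.1 h3
    have h5 := zeta_growth' (σ := 1+1/ν^7+z.re) (u := u+z.im) hν ht (by linarith) (by linarith) (by linarith) (by linarith)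
    rw [← hform] at h5
    refine h5.trans ?_
    have h6 := inv_zeta_le (σ := 1+1/ν^7) (by linarith) u
    rw [← hc] at h6
    have h9 : 2 + 1/(1+1/ν^7-1) ≤ 3*ν^7 := by
      rw [add_sub_cancel_left, one_div_one_div]; linarith
    simp only [add_zero]
    rw [Real.exp_log (by positivity)]
    have h10 : 1 ≤ ‖riemannZeta c‖ * (3*ν^7) := h6.trans (mul_le_mul_of_nonneg_left h9 (norm_nonneg _))
    calc 240*ν^8 = 240*ν^8*1 := by ring
      _ ≤ 240*ν^8*(‖riemannZeta c‖ * (3*ν^7)) := by gcongr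
      _ = _ := by ring

lemma logDeriv_shift (c : ℂ) : logDeriv (fun z => riemannZeta (c + z)) 0 = logDeriv riemannZeta c := by
  rw [logDeriv_apply, logDeriv_apply, deriv_comp_const_add]; simp

lemma exists_log_small (C c : ℝ) (hc : 0 < c) : ∃ ν0 : ℝ, 100 ≤ ν0 ∧ ∀ ν, ν0 ≤ ν → C*(Real.log (720*ν^15) + 1) ≤ c*ν := by
  have h1 : Filter.Tendsto (fun ν : ℝ => (Real.log 720 + 15*Real.log ν + 1)/ν) Filter.atTop (nhds 0) := by
    have h2 : Filter.Tendsto (fun ν : ℝ => Real.log ν / ν) Filter.atTop (nhds 0) :=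
      Real.isLittleO_log_id_atTop.tendsto_div_nhds_zero
    have h3 : Filter.Tendsto (fun ν : ℝ => (Real.log 720 + 1) / ν) Filter.atTop (nhds 0) :=
      tendsto_const_nhds.div_atTop Filter.tendsto_id
    have h4 := h3.add (h2.const_mul 15)
    simp only [mul_zero, add_zero] at h4
    refine h4.congr fun ν => ?_
    ring
  have h5 := (h1.const_mul C)
  rw [mul_zero] at h5
  have h6 := (h5.eventually_lt_const hc).and (Filter.eventually_ge_atTop (100:ℝ))
  obtain ⟨ν0, h7⟩ := Filter.eventually_atTop.1 h6
  refine ⟨max ν0 100, le_max_right _ _, fun ν hν => ?_⟩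
  obtain ⟨h8, h9⟩ := h7 ν ((le_max_left _ _).trans hν)
  have hν : 0 < ν := by linarith
  rw [Real.log_mul (by norm_num) (by positivity), Real.log_pow]
  rw [mul_div_assoc', div_lt_iff₀ hν] at h8
  push_cast
  linarith

/-- A zero-free region wider than the classical one: with `log |t| = ν ^ 8` its width is of order
`(log |t|) ^ (-7/8)`. -/
theorem zeta_zero_free : ∃ ν0 : ℝ, 100 ≤ ν0 ∧ ∀ ν σ t : ℝ, ν0 ≤ ν → |t| = exp (ν^8) →
    1 - 1/(10*ν^7) ≤ σ → riemannZeta ((σ:ℂ) + t*Complex.I) ≠ 0 := by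
  obtain ⟨C, hC0, hC⟩ := exists_neg_logDeriv_le
  obtain ⟨ν1, hν1, hν1'⟩ := exists_log_small (5*16*3200) (1/10) (by norm_num)
  refine ⟨max ν1 (10^10 + 10*C), hν1.trans (le_max_left _ _), ?_⟩
  intro ν β t hν ht hβ hzero
  have hνν1 : ν1 ≤ ν := (le_max_left _ _).trans hν
  have hνC : 10^10 + 10*C ≤ ν := (le_max_right _ _).trans hν
  have hν100 : 100 ≤ ν := hν1.trans hνν1
  have hν0 : 0 < ν := by linarith
  have h7 : 1 ≤ ν^7 := one_le_pow₀ (by linarith)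
  have hκ0 : 0 < 1/ν^7 := by positivity
  have hκ1 : 1/ν^7 ≤ 1 := by rw [div_le_one (by positivity)]; exact h7
  have hβ1 : β < 1 := by
    by_contra hc
    exact riemannZeta_ne_zero_of_one_le_re (by simpa using hc) hzero
  set σ := 1 + 1/ν^7 with hσ
  set R := 1/(3200*ν^6) with hR
  set M := Real.log (720*ν^15) with hM
  have htpos : 0 ≤ |t| := abs_nonneg t
  have hL1 := zeta_landauHyp hν100 ht (u := t) le_rfl (by linarith)
  have hL2 := zeta_landauHyp hν100 ht (u := 2*t) (by rw [abs_mul, abs_two]; linarith) (by rw [abs_mul, abs_two])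
  rw [← hσ] at hL1 hL2
  have hρ : -(16*(M+1)/R) + (-((β-σ:ℝ):ℂ).re) * (1/‖((β-σ:ℝ):ℂ)‖^2 - 1/R^2) ≤
      (logDeriv riemannZeta ((σ:ℂ) + t*Complex.I)).re := by
    rw [← logDeriv_shift]
    apply hL1.re_ge_zero
    · rw [Complex.norm_real, Real.norm_eq_abs, abs_of_neg (by linarith)]
      have e1 : 1/(10*ν^7) = 1/10*(1/ν^7) := by ring
      have e2 : 2*(1/ν^7) ≤ 1/(3200*ν^6)/2 := by
        rw [div_div, mul_one_div, div_le_div_iff₀ (by positivity) (by positivity)]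
        have : 0 < ν^6 := by positivity
        calc 2*(3200*ν^6*2) = 12800*ν^6 := by ring
          _ ≤ ν * ν^6 := by gcongr; linarith
          _ = _ := by ring
      linarith
    · rw [← hzero]; congr 1; push_cast; ring
  have h2 := hL2.re_ge
  rw [logDeriv_shift, ← hM, ← hR] at h2
  have h3 := vonMangoldt_comb (σ := σ) (by linarith) t
  have h4 := hC σ (by linarith) (by linarith)
  have e0 : 1/(σ-1) = ν^7 := by rw [hσ, add_sub_cancel_left, one_div_one_div]
  rw [e0] at h4
  set x := σ - β with hx
  have hx0 : 0 < x := by linarith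
  have hx1 : x ≤ 11/10*(1/ν^7) := by
    have e1 : 1/(10*ν^7) = 1/10*(1/ν^7) := by ring
    linarith
  have e1 : (-((β-σ:ℝ):ℂ).re) * (1/‖((β-σ:ℝ):ℂ)‖^2 - 1/R^2) = 1/x - x/R^2 := by
    rw [Complex.ofReal_re, Complex.norm_real, Real.norm_eq_abs, sq_abs]
    have : β - σ = -x := by ring
    rw [this]; field_simp
  rw [e1] at hρ
  have e2 : 9/10*ν^7 ≤ 1/x := by
    rw [le_div_iff₀ hx0]
    calc 9/10*ν^7*x ≤ 9/10*ν^7*(11/10*(1/ν^7)) := by gcongr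
      _ = 99/100 := by field_simp; norm_num
      _ ≤ 1 := by norm_num
  have hν5 : 10^10*ν^6 ≤ ν^7 := by
    calc 10^10*ν^6 ≤ ν*ν^6 := by gcongr; linarith
      _ = ν^7 := by ring
  have e3 : x/R^2 ≤ 1/80*ν^7 := by
    calc x/R^2 ≤ 11/10*(1/ν^7)/R^2 := by gcongr
      _ = 11/10*3200^2*ν^5 := by rw [hR]; field_simp
      _ ≤ 11/10*3200^2*ν^6 := by
        have : ν^5 ≤ ν^6 := pow_le_pow_right₀ (by linarith) (by norm_num)
        gcongr
      _ ≤ _ := by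
        have : 0 ≤ ν^6 := by positivity
        linarith
  have e4 : 5*(16*(M+1)/R) ≤ 1/10*ν^7 := by
    have h5 := hν1' ν hνν1
    rw [← hM] at h5
    have := mul_le_mul_of_nonneg_right h5 (show 0 ≤ ν^6 by positivity)
    calc 5*(16*(M+1)/R) = 5*16*3200*(M+1)*ν^6 := by rw [hR]; field_simp
      _ ≤ _ := this
      _ = _ := by ring
  have e5 : 3*C ≤ 3/10*ν^7 := by
    have : ν ≤ ν^7 := le_self_pow₀ (by linarith) (by norm_num)
    linarith
  have e6 : (0:ℝ) < ν^7 := by positivity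
  linarith

lemma zeta_zero_free' : ∃ ν0 : ℝ, 100 ≤ ν0 ∧ ∀ ν σ t u : ℝ, ν0 ≤ ν → |t| = exp (ν^8) →
    |t| - 1 ≤ |u| → |u| ≤ |t| + 1 →
    1 - 1/(20*ν^7) ≤ σ → riemannZeta ((σ:ℂ) + u*Complex.I) ≠ 0 := by
  obtain ⟨ν0, h100, h⟩ := zeta_zero_free
  refine ⟨ν0 + 1, by linarith, fun ν σ t u hν ht hu1 hu2 hσ => ?_⟩
  have hν0 : 0 < ν := by linarith
  have h8 : ν0^8 + 1 ≤ ν^8 := by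
    have h1 : ν0^8 + 1^8 ≤ (ν0+1)^8 := pow_add_pow_le (by linarith) (by norm_num) (by norm_num)
    have h2 : (ν0+1)^8 ≤ ν^8 := pow_le_pow_left₀ (by linarith) hν 8
    linarith
  have hν08 : 0 < ν0^8 := by positivity
  have hlow : exp (ν0^8) ≤ |u| := by
    have h1 : exp (ν0^8 + 1) ≤ |t| := by rw [ht]; exact Real.exp_le_exp.2 h8
    rw [Real.exp_add] at h1
    have h2 : 2 ≤ exp 1 := by have := Real.add_one_le_exp 1; linarith
    have h3 : 1 ≤ exp (ν0^8) := Real.one_le_exp hν08.le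
    have h4 := mul_le_mul_of_nonneg_left h2 (Real.exp_pos (ν0^8)).le
    linarith
  have hu0 : 0 < |u| := (Real.exp_pos _).trans_le hlow
  have hlog : ν0^8 ≤ Real.log |u| := (Real.le_log_iff_exp_le hu0).2 hlow
  set w := (Real.log |u|)^(1/8:ℝ) with hw
  have hw8 : w^8 = Real.log |u| := by
    rw [hw, ← Real.rpow_natCast, ← Real.rpow_mul (by linarith)]; norm_num
  have hw0 : 0 ≤ w := Real.rpow_nonneg (by linarith) _
  have hwν : ν0 ≤ w := by
    by_contra hc
    push Not at hc
    have := pow_lt_pow_left₀ hc hw0 (n := 8) (by norm_num)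
    linarith
  have hup : w^8 ≤ 2*ν^8 := by
    rw [hw8, Real.log_le_iff_le_exp hu0]
    refine hu2.trans ?_
    have h1 : 1 ≤ exp (ν^8) := Real.one_le_exp (by positivity)
    have h2 : 2 ≤ exp (ν^8) := by have := Real.add_one_le_exp (ν^8); linarith
    rw [ht, two_mul, Real.exp_add]
    have := mul_le_mul_of_nonneg_left h2 (Real.exp_pos (ν^8)).le
    linarith
  have h7 : w^7 ≤ 2*ν^7 := by
    rcases le_total w ν with hle | hle
    · have := pow_le_pow_left₀ hw0 hle 7
      have : 0 < ν^7 := by positivity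
      linarith
    · by_contra hc
      push Not at hc
      have : 2*ν^7*ν < w^7*w := mul_lt_mul hc hle hν0 (by positivity)
      have e1 : 2*ν^7*ν = 2*ν^8 := by ring
      have e2 : w^7*w = w^8 := by ring
      linarith
  refine h w σ u hwν ?_ ?_
  · rw [hw8, Real.exp_log hu0]
  · refine le_trans ?_ hσ
    have hwp : 0 < w := by linarith
    have : 1/(20*ν^7) ≤ 1/(10*w^7) := one_div_le_one_div_of_le (by positivity) (by linarith)
    linarith

lemma logDeriv_zeta_bound : ∃ ν0 : ℝ, 100 ≤ ν0 ∧ ∀ ν σ t : ℝ, ν0 ≤ ν → |t| = exp (ν^8) →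
    1 - 1/(40*ν^7) ≤ σ → σ ≤ 2 → riemannZeta ((σ:ℂ) + t*Complex.I) ≠ 0 ∧
      ‖logDeriv riemannZeta ((σ:ℂ) + t*Complex.I)‖ ≤ ν^8 := by
  obtain ⟨ν1, h1, hz⟩ := zeta_zero_free'
  obtain ⟨ν2, h2, hl⟩ := exists_log_small 13440 1 (by norm_num)
  obtain ⟨C, hC0, hC⟩ := exists_neg_logDeriv_le
  refine ⟨max ν1 (max ν2 (2+C)), h1.trans (le_max_left _ _), fun ν σ t hν ht hσ hσ2 => ?_⟩
  have hν1 : ν1 ≤ ν := (le_max_left _ _).trans hν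
  have hν2 : ν2 ≤ ν := ((le_max_left _ _).trans (le_max_right _ _)).trans hν
  have hν3 : 2+C ≤ ν := ((le_max_right _ _).trans (le_max_right _ _)).trans hν
  have hν100 : 100 ≤ ν := h2.trans hν2
  have hν0 : 0 < ν := by linarith
  have h7 : 1 ≤ ν^7 := one_le_pow₀ (by linarith)
  set κ := 1/ν^7 with hκ
  have hκ0 : 0 < κ := by positivity
  have e20 : 1/(20*ν^7) = κ/20 := by rw [hκ]; field_simp
  have e40 : 1/(40*ν^7) = κ/40 := by rw [hκ]; field_simp
  rw [e40] at hσ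
  have hκ1 : κ ≤ 1 := by rw [hκ, div_le_one (by positivity)]; exact h7
  refine ⟨hz ν σ t t hν1 ht (by linarith) (by linarith) (by rw [e20]; linarith), ?_⟩
  rcases le_total σ (1+κ) with hle | hle
  · have hL := zeta_landauHyp hν100 ht (u := t) le_rfl (by linarith [abs_nonneg t])
    rw [← hκ] at hL
    set c : ℂ := ((1+κ:ℝ):ℂ) + t*Complex.I with hc
    have hcre : c.re = 1+κ := add_mul_I_re _ _
    have hcim : c.im = t := add_mul_I_im _ _
    have hsub : Metric.ball (0:ℂ) (21/20*κ) ⊆ Metric.closedBall 0 (1/(3200*ν^6)) := by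
      refine Metric.ball_subset_closedBall.trans (Metric.closedBall_subset_closedBall ?_)
      rw [hκ, mul_one_div, div_le_div_iff₀ (by positivity) (by positivity)]
      have h3 : 3360 ≤ ν ∨ ν < 3360 := le_or_gt _ _
      have h4 : 3360 ≤ ν := by
        have h5 := hl ν hν2
        have h6 : 0 ≤ Real.log (720*ν^15) := Real.log_nonneg (by
          have : 1 ≤ ν^15 := one_le_pow₀ (by linarith)
          linarith)
        linarith
      calc 21/20*(3200*ν^6) = 3360*ν^6 := by ring
        _ ≤ ν*ν^6 := by gcongr
        _ = _ := by ring
    have hM : 0 < Real.log (720*ν^15) := Real.log_pos (by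
      have : 1 ≤ ν^15 := one_le_pow₀ (by linarith)
      linarith)
    have key := logDeriv_le_of_ne_zero (f := fun z => riemannZeta (c+z)) (R := 21/20*κ) (ρ := 41/40*κ)
      (M := Real.log (720*ν^15)) hM (hL.diff.mono (hsub.trans hL.sub)) ?_ (fun z hz => hL.bound z (hsub hz))
      (by linarith) (z := ((σ-(1+κ):ℝ):ℂ)) (by
        rw [Complex.norm_real, Real.norm_eq_abs, abs_le]; constructor <;> linarith)
    · have e1 : logDeriv (fun z => riemannZeta (c+z)) ((σ-(1+κ):ℝ):ℂ) = logDeriv riemannZeta ((σ:ℂ) + t*Complex.I) := by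
        have : c + ((σ-(1+κ):ℝ):ℂ) = (σ:ℂ) + t*Complex.I := by rw [hc]; push_cast; ring
        rw [logDeriv_apply, logDeriv_apply, deriv_comp_const_add, this]
      rw [e1] at key
      refine key.trans ?_
      have e2 : 8*Real.log (720*ν^15)*(21/20*κ)/(21/20*κ-41/40*κ)^2 = 13440*Real.log (720*ν^15)*ν^7 := by
        have : κ = 1/ν^7 := hκ
        rw [this]; field_simp; norm_num
      rw [e2]
      have h5 := hl ν hν2
      calc 13440*Real.log (720*ν^15)*ν^7 ≤ ν*ν^7 := by gcongr; linarith
        _ = ν^8 := by ring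
    · intro z hz'
      rw [mem_ball_zero_iff] at hz'
      have h3 := abs_le.1 ((Complex.abs_re_le_norm z).trans hz'.le)
      have h4 := (Complex.abs_im_le_norm z).trans hz'.le
      have h4' : |z.im| ≤ 1 := by
        refine h4.trans ?_
        have : 100*κ ≤ 1 := by
          rw [hκ, mul_one_div, div_le_one (by positivity)]
          exact hν100.trans (le_self_pow₀ (by linarith) (by norm_num))
        linarith
      have hform : c + z = ((1+κ+z.re : ℝ):ℂ) + ((t + z.im : ℝ):ℂ)*Complex.I := by
        apply Complex.ext
        · rw [add_mul_I_re, Complex.add_re, hcre]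
        · rw [add_mul_I_im, Complex.add_im, hcim]
      rw [hform]
      have h5 := abs_add_le t z.im
      have h6 := abs_sub_abs_le_abs_sub t (-z.im)
      rw [abs_neg, sub_neg_eq_add] at h6
      exact hz ν _ t _ hν1 ht (by linarith) (by linarith) (by rw [e20]; linarith)
  · have h3 := norm_logDeriv_zeta_le (σ := σ) (by linarith) t
    have h4 := hC σ (by linarith) hσ2
    have h5 : 1/(σ-1) ≤ ν^7 := by
      have : 1/(σ-1) ≤ 1/κ := one_div_le_one_div_of_le hκ0 (by linarith)
      rwa [hκ, one_div_one_div] at this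
    have h6 : (2+C)*ν^7 ≤ ν*ν^7 := by gcongr
    have h8 : C*1 ≤ C*ν^7 := by gcongr
    have e : ν^8 = ν*ν^7 := by ring
    linarith

/-- The entire function `ζ₁(s) = (s-1) ζ(s)` has no zeros just to the left of the line `Re s = 1`,
with a Vinogradov type width, and its logarithmic derivative is small there. -/
theorem zeta₁_bound : ∃ ν0 : ℝ, 100 ≤ ν0 ∧ ∀ ν : ℝ, ν0 ≤ ν → ∀ s : ℂ, 1 - 1/(40*ν^7) ≤ s.re → s.re ≤ 2 →
    |s.im| ≤ exp (ν^8) → riemannZeta₁ s ≠ 0 ∧ ‖logDeriv riemannZeta₁ s‖ ≤ ν^9 := by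
  obtain ⟨ν1, h1, hz⟩ := logDeriv_zeta_bound
  set t0 := exp (ν1^8) with ht0
  -- a compact rectangle at bounded height
  set K : Set ℂ := (Set.Icc 1 2) ×ℂ (Set.Icc (-t0) t0) with hK
  have hKc : IsCompact K := isCompact_Icc.reProdIm isCompact_Icc
  have hU : IsOpen {s : ℂ | riemannZeta₁ s ≠ 0} := isOpen_ne.preimage differentiable_riemannZeta₁.continuous
  have hKU : K ⊆ {s : ℂ | riemannZeta₁ s ≠ 0} := fun s hs => riemannZeta₁_ne_zero hs.1.1
  obtain ⟨η, hη, hηU⟩ := hKc.exists_cthickening_subset_open hU hKU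
  have hcont : ContinuousOn (logDeriv riemannZeta₁) (Metric.cthickening η K) := fun s hs =>
    (differentiableAt_logDeriv_zeta₁ (hηU hs)).continuousAt.continuousWithinAt
  obtain ⟨C, hC⟩ := (hKc.cthickening).exists_bound_of_continuousOn hcont
  refine ⟨max ν1 (max (1/η) (max C 100)), h1.trans (le_max_left _ _), fun ν hν s hs1 hs2 hs3 => ?_⟩
  have hν1 : ν1 ≤ ν := (le_max_left _ _).trans hν
  have hν2 : 1/η ≤ ν := ((le_max_left _ _).trans (le_max_right _ _)).trans hν
  have hν3 : C ≤ ν := (((le_max_left _ _).trans (le_max_right _ _)).trans (le_max_right _ _)).trans hν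
  have hν100 : 100 ≤ ν := h1.trans hν1
  have hν0 : 0 < ν := by linarith
  rcases le_total |s.im| t0 with hle | hle
  · have hmem : s ∈ Metric.cthickening η K := by
      refine Metric.mem_cthickening_of_dist_le s (((max 1 s.re : ℝ):ℂ) + s.im*Complex.I) η K ?_ ?_
      · rw [hK, Complex.mem_reProdIm, add_mul_I_re, add_mul_I_im]
        exact ⟨⟨le_max_left _ _, max_le (by norm_num) hs2⟩, abs_le.1 hle⟩
      · have : s - (((max 1 s.re : ℝ):ℂ) + s.im*Complex.I) = ((s.re - max 1 s.re : ℝ):ℂ) := by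
          apply Complex.ext
          · rw [Complex.sub_re, add_mul_I_re, Complex.ofReal_re]
          · rw [Complex.sub_im, add_mul_I_im, Complex.ofReal_im, sub_self]
        rw [dist_eq_norm, this, Complex.norm_real, Real.norm_eq_abs]
        have h4 : 1/(40*ν^7) ≤ η := by
          rw [div_le_iff₀ hη] at hν2
          rw [div_le_iff₀ (by positivity)]
          have : ν ≤ ν^7 := le_self_pow₀ (by linarith) (by norm_num)
          have : η*ν ≤ η*ν^7 := by gcongr
          have : 0 < η*ν^7 := by positivity
          linarith
        have h5 : 0 < 1/(40*ν^7) := by positivity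
        rcases max_cases 1 s.re with ⟨h, _⟩ | ⟨h, _⟩ <;> rw [h, abs_le] <;> constructor <;> linarith
    refine ⟨hηU hmem, (hC s hmem).trans (hν3.trans (le_self_pow₀ (by linarith) (by norm_num)))⟩
  · have hpos : 0 < |s.im| := (Real.exp_pos _).trans_le hle
    set w := (Real.log |s.im|)^(1/8:ℝ) with hw
    have hν18 : 0 < ν1^8 := by positivity
    have hlog : ν1^8 ≤ Real.log |s.im| := (Real.le_log_iff_exp_le hpos).2 hle
    have hw8 : w^8 = Real.log |s.im| := by
      rw [hw, ← Real.rpow_natCast, ← Real.rpow_mul (by linarith)]; norm_num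
    have hw0 : 0 ≤ w := Real.rpow_nonneg (by linarith) _
    have hwν : ν1 ≤ w := by
      by_contra hc
      push Not at hc
      have := pow_lt_pow_left₀ hc hw0 (n := 8) (by norm_num)
      linarith
    have hwν' : w ≤ ν := by
      by_contra hc
      push Not at hc
      have := pow_lt_pow_left₀ hc hν0.le (n := 8) (by norm_num)
      rw [← Real.log_le_iff_le_exp hpos] at hs3
      linarith
    have hwp : 0 < w := by linarith
    have h7 : w^7 ≤ ν^7 := pow_le_pow_left₀ hw0 hwν' 7
    have h8 : w^8 ≤ ν^8 := pow_le_pow_left₀ hw0 hwν' 8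
    have hform : ((s.re:ℝ):ℂ) + ((s.im:ℝ):ℂ)*Complex.I = s := Complex.re_add_im s
    obtain ⟨h4, h5⟩ := hz w s.re s.im hwν (by rw [hw8, Real.exp_log hpos]) (by
      have : 1/(40*ν^7) ≤ 1/(40*w^7) := one_div_le_one_div_of_le (by positivity) (by linarith)
      linarith) hs2
    rw [hform] at h4 h5
    have him1 : 1 ≤ |s.im| := le_trans (Real.one_le_exp hν18.le) hle
    have hs1 : s ≠ 1 := by
      rintro rfl
      simp at hpos
    have hz1 : riemannZeta₁ s ≠ 0 := by
      rw [riemannZeta₁_eq hs1]; exact mul_ne_zero (sub_ne_zero.2 hs1) h4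
    refine ⟨hz1, ?_⟩
    have h6 : logDeriv riemannZeta₁ s = logDeriv riemannZeta s + (s-1)⁻¹ := by
      rw [logDeriv_zeta_eq hs1 hz1]; ring
    have h9 : ‖(s-1)⁻¹‖ ≤ 1 := by
      rw [norm_inv]
      apply inv_le_one_of_one_le₀
      have := Complex.abs_im_le_norm (s-1)
      rw [Complex.sub_im, Complex.one_im, sub_zero] at this
      linarith
    rw [h6]
    refine (norm_add_le _ _).trans ?_
    have e : ν^9 = ν*ν^8 := by ring
    have h10 : 2*ν^8 ≤ ν*ν^8 := by gcongr; linarith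
    have h11 : 1 ≤ ν^8 := one_le_pow₀ (by linarith)
    linarith

/-! ### Perron's formula with piecewise linear weights -/

/-- The vertical line `κ + iy`. -/
noncomputable def vl (κ y : ℝ) : ℂ := (κ:ℂ) + y*Complex.I

lemma vl_re (κ y : ℝ) : (vl κ y).re = κ := add_mul_I_re _ _
lemma vl_im (κ y : ℝ) : (vl κ y).im = y := add_mul_I_im _ _

lemma vl_ne_zero {κ : ℝ} (hκ : κ ≠ 0) (y : ℝ) : vl κ y ≠ 0 := by
  intro h; have := congrArg Complex.re h; rw [vl_re] at this; exact hκ this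

lemma continuous_vl (κ : ℝ) : Continuous (vl κ) := by unfold vl; fun_prop

lemma norm_vl_sq (κ y : ℝ) : ‖vl κ y‖^2 = κ^2 + y^2 := by
  rw [← Complex.normSq_eq_norm_sq, Complex.normSq_apply, vl_re, vl_im]; ring

lemma norm_exp_vl (κ y L : ℝ) : ‖Complex.exp (vl κ y * L)‖ = exp (κ*L) := by
  rw [Complex.norm_exp, Complex.mul_re, vl_re, vl_im, Complex.ofReal_re, Complex.ofReal_im, mul_zero, sub_zero]

lemma integrable_inv_sq_add_sq {κ : ℝ} (hκ : 0 < κ) :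
    Integrable (fun y : ℝ => 1/(κ^2 + y^2)) ∧ ∫ y : ℝ, 1/(κ^2+y^2) = π/κ := by
  have h : (fun y : ℝ => 1/(κ^2 + y^2)) = fun y => (κ^2)⁻¹ * (1 + (y/κ)^2)⁻¹ := by
    ext y; field_simp
  rw [h]
  constructor
  · exact (integrable_inv_one_add_sq.comp_div hκ.ne').const_mul _
  · rw [integral_const_mul, Measure.integral_comp_div (fun y => (1+y^2)⁻¹) κ, integral_univ_inv_one_add_sq,
      abs_of_pos hκ, smul_eq_mul]
    field_simp

lemma integrable_inv_vl_sq {κ : ℝ} (hκ : 0 < κ) : Integrable (fun y : ℝ => 1/(vl κ y)^2) := by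
  refine (integrable_inv_sq_add_sq hκ).1.mono' ?_ ?_
  · exact (continuous_const.div ((continuous_vl κ).pow 2)
      (fun y => pow_ne_zero 2 (vl_ne_zero hκ.ne' y))).aestronglyMeasurable
  · filter_upwards with y
    rw [norm_div, norm_one, norm_pow, norm_vl_sq]

lemma integral_id_mul_exp {r : ℂ} (hr : 0 < r.re) :
    ∫ x : ℝ in Set.Ioi 0, (x:ℂ) * Complex.exp (-(r*x)) = 1/r^2 := by
  have hr0 : r ≠ 0 := by rintro rfl; simp at hr
  have hitg : IntegrableOn (fun x : ℝ => (x:ℂ) * Complex.exp (-(r*x))) (Set.Ioi 0) := by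
    have h1 := integrableOn_rpow_mul_exp_neg_mul_rpow (p := 1) (s := 1) (b := r.re) (by norm_num) (by norm_num) hr
    refine Integrable.mono' h1 (by fun_prop) ?_
    filter_upwards [self_mem_ae_restrict measurableSet_Ioi] with x hx
    have hx : 0 < x := hx
    rw [norm_mul, Complex.norm_exp, Complex.norm_real, Real.norm_of_nonneg hx.le]
    simp
  have hd : ∀ x ∈ Set.Ici (0:ℝ), HasDerivAt (fun x : ℝ => -((x:ℂ)/r + 1/r^2) * Complex.exp (-(r*x)))
      ((x:ℂ) * Complex.exp (-(r*x))) x := by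
    intro x _
    have h1 : HasDerivAt (fun x : ℝ => (x:ℂ)) 1 x := Complex.ofRealCLM.hasDerivAt
    have h2 : HasDerivAt (fun x : ℝ => -((x:ℂ)/r + 1/r^2)) (-(1/r)) x :=
      ((h1.div_const r).add_const _).neg
    have h3 : HasDerivAt (fun x : ℝ => Complex.exp (-(r*x))) (Complex.exp (-(r*x)) * (-(r*1))) x :=
      ((h1.const_mul r).neg).cexp
    convert! h2.mul h3 using 1
    field_simp; ring
  have hlim : Filter.Tendsto (fun x : ℝ => -((x:ℂ)/r + 1/r^2) * Complex.exp (-(r*x))) Filter.atTop (nhds 0) := by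
    rw [tendsto_zero_iff_norm_tendsto_zero]
    have h1 : Filter.Tendsto (fun x : ℝ => ‖1/r‖ * (x^1 * exp (-(r.re*x))) + ‖1/r^2‖ * (x^0*exp (-(r.re*x)))) Filter.atTop (nhds 0) := by
      have e := fun n => Real.tendsto_pow_mul_exp_neg_atTop_nhds_zero n
      have e' : ∀ n : ℕ, Filter.Tendsto (fun x : ℝ => x^n * exp (-(r.re*x))) Filter.atTop (nhds 0) := by
        intro n
        have := ((e n).comp (Filter.tendsto_id.const_mul_atTop hr)).const_mul (1/r.re^n)
        rw [mul_zero] at this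
        refine this.congr fun x => ?_
        simp only [Function.comp, id, mul_pow]
        field_simp
      have h5 := ((e' 1).const_mul ‖1/r‖).add ((e' 0).const_mul ‖1/r^2‖)
      rw [mul_zero, mul_zero, add_zero] at h5
      exact h5
    refine squeeze_zero' (Filter.Eventually.of_forall fun x => norm_nonneg _) ?_ h1
    filter_upwards [Filter.eventually_ge_atTop 0] with x hx
    rw [norm_mul, Complex.norm_exp, norm_neg]
    have e1 : (-(r*x)).re = -(r.re*x) := by simp
    rw [e1]
    have h2 : ‖(x:ℂ)/r + 1/r^2‖ ≤ ‖1/r‖*x + ‖1/r^2‖ := by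
      refine (norm_add_le _ _).trans ?_
      rw [div_eq_mul_one_div, norm_mul, Complex.norm_real, Real.norm_of_nonneg hx, mul_comm]
    calc _ ≤ (‖1/r‖*x + ‖1/r^2‖) * exp (-(r.re*x)) := by gcongr
      _ = _ := by ring
  have := integral_Ioi_of_hasDerivAt_of_tendsto' hd hitg hlim
  rw [this]; simp

open FourierTransform in
/-- Perron's formula with the kernel `1/s²`. -/
lemma hinge_perron {κ : ℝ} (hκ : 0 < κ) (z : ℝ) :
    ∫ y : ℝ, Complex.exp (vl κ y * z)/(vl κ y)^2 = 2*π*(max z 0 : ℝ) := by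
  set g : ℝ → ℂ := fun x => ((max x 0 * exp (-(κ*x)) : ℝ):ℂ) with hg
  have hgc : Continuous g := by rw [hg]; fun_prop
  have hgi : Integrable g := by
    apply Integrable.ofReal
    have h1 := integrableOn_rpow_mul_exp_neg_mul_rpow (p := 1) (s := 1) (b := κ) (by norm_num) (by norm_num) hκ
    have h2 : IntegrableOn (fun x : ℝ => max x 0 * exp (-(κ*x))) (Set.Ioi 0) := by
      refine h1.congr_fun (fun x hx => ?_) measurableSet_Ioi
      have hx : 0 < x := hx
      simp [max_eq_left hx.le]
    refine (integrableOn_iff_integrable_of_support_subset ?_).1 h2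
    intro x hx
    by_contra hc
    have : x ≤ 0 := not_lt.1 hc
    exact hx (by change max x 0 * _ = 0; rw [max_eq_right this, zero_mul])
  have hF : 𝓕 g = fun ξ : ℝ => 1/(vl κ (2*π*ξ))^2 := by
    ext ξ
    rw [fourier_real_eq_integral_exp_smul, ← integral_id_mul_exp (r := vl κ (2*π*ξ)) (by rw [vl_re]; exact hκ)]
    rw [← setIntegral_eq_integral_of_forall_compl_eq_zero (s := Set.Ioi 0)]
    · refine setIntegral_congr_fun measurableSet_Ioi fun x hx => ?_
      have hx : 0 < x := hx
      simp only [hg, smul_eq_mul, max_eq_left hx.le]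
      push_cast
      rw [mul_left_comm, ← Complex.exp_add]
      congr 2
      unfold vl; push_cast; ring
    · intro x hx
      have : x ≤ 0 := not_lt.1 hx
      simp [hg, max_eq_right this]
  have hFi : Integrable (𝓕 g) := by
    rw [hF]
    exact (integrable_inv_vl_sq hκ).comp_mul_left' (by positivity)
  have h := congrFun (hgc.fourierInv_fourier_eq hgi hFi) z
  rw [fourierInv_eq', hF] at h
  have h2 : ∀ v : ℝ, Complex.exp (((2*π*(inner ℝ v z) : ℝ):ℂ)*Complex.I) • (1/(vl κ (2*π*v))^2) =
      (fun y : ℝ => Complex.exp (-(κ*z:ℝ)) * (Complex.exp (vl κ y * z)/(vl κ y)^2)) (2*π*v) := by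
    intro v
    simp only [smul_eq_mul, mul_div_assoc']
    rw [← Complex.exp_add]
    congr 2
    unfold vl
    simp only [RCLike.inner_apply, conj_trivial]
    push_cast; ring
  simp_rw [h2] at h
  rw [Measure.integral_comp_mul_left (fun y : ℝ => Complex.exp (-(κ*z:ℝ)) * (Complex.exp (vl κ y * z)/(vl κ y)^2)),
    integral_const_mul, hg, abs_of_pos (by positivity)] at h
  simp only [Complex.real_smul] at h
  push_cast at h ⊢
  have hpi : (π:ℂ) ≠ 0 := by exact_mod_cast Real.pi_ne_zero
  have he : Complex.exp (-(κ*z)) ≠ 0 := Complex.exp_ne_zero _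
  generalize (∫ y : ℝ, Complex.exp (vl κ y * z)/(vl κ y)^2) = J at h ⊢
  generalize Complex.exp (-(κ*z)) = e at h he
  have h3 : e * J = e * (2*π*((max z 0 : ℝ):ℂ)) := by
    field_simp at h
    linear_combination e*h
  exact mul_left_cancel₀ he h3

/-- The piecewise linear weight `max (L - v) 0`. -/
noncomputable def hinge (L v : ℝ) : ℝ := max (L - v) 0

lemma hinge_nonneg (L v : ℝ) : 0 ≤ hinge L v := le_max_right _ _

/-- The character `v ↦ e^{-itv}`. -/
noncomputable def ech (t v : ℝ) : ℂ := Complex.exp ((-(t*v):ℝ) * Complex.I)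

lemma norm_ech (t v : ℝ) : ‖ech t v‖ = 1 := by
  unfold ech; exact Complex.norm_exp_ofReal_mul_I _

lemma osc_eq_ech (t u : ℝ) : osc t u = ech t (Real.log u) := rfl

lemma ech_mul_exp (κ t y L v : ℝ) :
    (exp (-(κ*v)) : ℝ) * ech (t+y) v * Complex.exp (vl κ y * L) = ech t v * Complex.exp (vl κ y * ((L - v : ℝ):ℂ)) := by
  unfold ech vl
  push_cast
  rw [← Complex.exp_add, ← Complex.exp_add, ← Complex.exp_add]
  congr 1
  ring

lemma continuous_perron_ker {κ : ℝ} (hκ : 0 < κ) (L : ℝ) :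
    Continuous (fun y => Complex.exp (vl κ y * L)/(vl κ y)^2) :=
  (Continuous.cexp ((continuous_vl κ).mul continuous_const)).div ((continuous_vl κ).pow 2)
      (fun y => pow_ne_zero 2 (vl_ne_zero hκ.ne' y))

lemma norm_perron_ker (κ L y : ℝ) :
    ‖Complex.exp (vl κ y * L)/(vl κ y)^2‖ = exp (κ*L) * (1/(κ^2+y^2)) := by
  rw [norm_div, norm_exp_vl, norm_pow, norm_vl_sq, mul_one_div]

lemma continuous_ech (v : ℝ) : Continuous (fun t => ech t v) := by unfold ech; fun_prop

lemma integrable_perron_ker {κ : ℝ} (hκ : 0 < κ) (L : ℝ) :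
    Integrable (fun y => Complex.exp (vl κ y * L)/(vl κ y)^2) := by
  refine ((integrable_inv_sq_add_sq hκ).1.const_mul (exp (κ*L))).mono'
    (continuous_perron_ker hκ L).aestronglyMeasurable (Filter.Eventually.of_forall fun y => ?_)
  rw [norm_perron_ker]

open ArithmeticFunction in
/-- Hinge-weighted sums of `Λ(n) n^{-1-it}` as integrals of `-ζ'/ζ`. -/
lemma sum_perron {κ : ℝ} (hκ : 0 < κ) (t L : ℝ) :
    HasSum (fun n : ℕ => 2*π*(((vonMangoldt n / n * hinge L (Real.log n) : ℝ):ℂ) * ech t (Real.log n)))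
      (∫ y : ℝ, -logDeriv riemannZeta (((1+κ:ℝ):ℂ) + ((t+y:ℝ):ℂ)*Complex.I) * (Complex.exp (vl κ y * L)/(vl κ y)^2)) := by
  have hσ : 1 < 1+κ := by linarith
  set F : ℕ → ℝ → ℂ := fun n y => ((vonMangoldt n * (n:ℝ)^(-(1+κ)) : ℝ):ℂ) * osc (t+y) n *
    (Complex.exp (vl κ y * L)/(vl κ y)^2) with hF
  have hnorm : ∀ n y, ‖F n y‖ = vonMangoldt n * (n:ℝ)^(-(1+κ)) * (exp (κ*L) * (1/(κ^2+y^2))) := by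
    intro n y
    rw [hF]
    simp only
    rw [norm_mul, norm_perron_ker, norm_mul, norm_osc, mul_one, Complex.norm_real, Real.norm_of_nonneg]
    have := vonMangoldt_nonneg (n := n)
    positivity
  have h1 : ∀ n, Integrable (F n) := by
    intro n
    refine (((integrable_inv_sq_add_sq hκ).1.const_mul (exp (κ*L))).const_mul (vonMangoldt n * (n:ℝ)^(-(1+κ)))).mono' ?_ ?_
    · refine Continuous.aestronglyMeasurable ?_
      refine (continuous_const.mul ?_).mul (continuous_perron_ker hκ L)
      exact (continuous_ech _).comp (continuous_const.add continuous_id)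
    · exact Filter.Eventually.of_forall fun y => (hnorm n y).le
  have hS : Summable fun n : ℕ => vonMangoldt n * (n:ℝ)^(-(1+κ)) := by
    have := (hasSum_vonMangoldt hσ 0).summable.norm
    refine this.congr fun n => ?_
    rw [norm_mul, norm_osc, mul_one, Complex.norm_real, Real.norm_of_nonneg]
    have := vonMangoldt_nonneg (n := n)
    positivity
  have h2 : Summable fun n => ∫ y, ‖F n y‖ := by
    simp_rw [hnorm]
    simp_rw [integral_const_mul]
    exact hS.mul_right _
  have h3 := hasSum_integral_of_summable_integral_norm h1 h2
  have h4 : ∀ y, ∑' n, F n y = -logDeriv riemannZeta (((1+κ:ℝ):ℂ) + ((t+y:ℝ):ℂ)*Complex.I) * (Complex.exp (vl κ y * L)/(vl κ y)^2) := by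
    intro y
    exact ((hasSum_vonMangoldt hσ (t+y)).mul_right _).tsum_eq
  simp_rw [h4] at h3
  refine h3.congr_fun fun n => ?_
  rcases Nat.eq_zero_or_pos n with rfl | hn
  · simp [hF]
  have hn0 : (0:ℝ) < n := by exact_mod_cast hn
  have h5 : ∀ y, F n y = ((vonMangoldt n / n : ℝ):ℂ) * ech t (Real.log n) * (Complex.exp (vl κ y * ((L - Real.log n : ℝ):ℂ))/(vl κ y)^2) := by
    intro y
    have e1 : (n:ℝ)^(-(1+κ)) = (n:ℝ)⁻¹ * exp (-(κ*Real.log n)) := by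
      rw [neg_add, Real.rpow_add hn0, Real.rpow_neg_one, Real.rpow_def_of_pos hn0]
      congr 2; ring
    have e2 := ech_mul_exp κ t y L (Real.log n)
    rw [hF]
    simp only
    rw [e1, osc_eq_ech, mul_div_assoc', mul_div_assoc']
    congr 1
    rw [mul_assoc _ (ech t _), ← e2, div_eq_mul_inv]
    push_cast; ring
  simp_rw [h5]
  rw [integral_const_mul, hinge_perron hκ]
  unfold hinge
  push_cast; ring

lemma integral_exp_neg_Ioi {r : ℂ} (hr : 0 < r.re) :
    ∫ x : ℝ in Set.Ioi 0, Complex.exp (-(r*x)) = 1/r := by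
  have := integral_exp_mul_complex_Ioi (a := -r) (by simpa using hr) 0
  simp only [neg_mul] at this
  rw [this]; simp

lemma integral_perron {κ : ℝ} (hκ : 0 < κ) (t L : ℝ) :
    ∫ y : ℝ, 1/(vl κ (t+y)) * (Complex.exp (vl κ y * L)/(vl κ y)^2) =
      2*π*∫ v : ℝ in Set.Ioi 0, (hinge L v : ℂ) * ech t v := by
  have h1 : ∀ y, 1/(vl κ (t+y)) * (Complex.exp (vl κ y * L)/(vl κ y)^2) =
      ∫ v : ℝ in Set.Ioi 0, (exp (-(κ*v)) : ℝ) * ech (t+y) v * (Complex.exp (vl κ y * L)/(vl κ y)^2) := by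
    intro y
    rw [← integral_exp_neg_Ioi (r := vl κ (t+y)) (by rw [vl_re]; exact hκ), integral_mul_const]
    congr 2
    ext v
    unfold ech vl
    push_cast
    rw [← Complex.exp_add]; congr 1; ring
  simp_rw [h1]
  rw [integral_integral_swap]
  · rw [← integral_const_mul]
    congr 1
    ext v
    simp_rw [mul_div_assoc', ech_mul_exp, mul_div_assoc]
    rw [integral_const_mul, hinge_perron hκ]
    unfold hinge
    ring
  · have h2 : Integrable (fun v : ℝ => exp (-(κ*v))) (volume.restrict (Set.Ioi 0)) := by
      have := exp_neg_integrableOn_Ioi 0 hκ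
      simpa [IntegrableOn] using this
    have h3 := ((integrable_inv_sq_add_sq hκ).1.const_mul (exp (κ*L))).mul_prod h2
    refine h3.mono' ?_ ?_
    · refine Measurable.aestronglyMeasurable ?_
      unfold Function.uncurry ech
      have := (continuous_perron_ker hκ L).measurable
      simp only
      refine Measurable.mul (by fun_prop) (this.comp measurable_fst)
    · refine Filter.Eventually.of_forall fun p => ?_
      simp only [Function.uncurry]
      rw [norm_mul, norm_perron_ker, norm_mul, norm_ech, mul_one, Complex.norm_real, Real.norm_of_nonneg (Real.exp_pos _).le, mul_comm]

lemma inv_sq_tail (κ : ℝ) {Y : ℝ} (hκ : 0 < κ) (hY : 0 < Y) :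
    ∫ y in (Set.Ioc (-Y) Y)ᶜ, 1/(κ^2+y^2) ≤ 2/Y := by
  have hitg := (integrable_inv_sq_add_sq hκ).1
  have h1 : (Set.Ioc (-Y) Y)ᶜ = Set.Iic (-Y) ∪ Set.Ioi Y := by
    ext y; simp only [Set.mem_compl_iff, Set.mem_Ioc, not_and_or, not_lt, not_le, Set.mem_union, Set.mem_Iic, Set.mem_Ioi]
  have h2 : ∫ y in Set.Ioi Y, 1/(κ^2+y^2) ≤ 1/Y := by
    have h3 := integral_Ioi_rpow_of_lt (a := -2) (by norm_num) hY
    have h4 : -Y^((-2:ℝ)+1)/((-2:ℝ)+1) = 1/Y := by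
      have : (-2:ℝ)+1 = -1 := by norm_num
      rw [this, Real.rpow_neg_one]; ring
    rw [h4] at h3
    rw [← h3]
    refine setIntegral_mono_on hitg.integrableOn (integrableOn_Ioi_rpow_of_lt (by norm_num) hY) measurableSet_Ioi ?_
    intro y hy
    have hy : Y < y := hy
    have hy0 : 0 < y := hY.trans hy
    rw [Real.rpow_neg hy0.le, Real.rpow_two, ← one_div]
    apply one_div_le_one_div_of_le (by positivity)
    have := sq_nonneg κ
    linarith
  have h5 : ∫ y in Set.Iic (-Y), 1/(κ^2+y^2) = ∫ y in Set.Ioi Y, 1/(κ^2+y^2) := by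
    have := integral_comp_neg_Iic (-Y) (fun y => 1/(κ^2+y^2))
    simpa using this
  rw [h1, setIntegral_union (Set.disjoint_left.2 fun y hy hy' => ?_) measurableSet_Ioi hitg.integrableOn hitg.integrableOn, h5]
  · have : 2/Y = 1/Y + 1/Y := by ring
    linarith
  · have hy : y ≤ -Y := hy
    have hy' : Y < y := hy'
    linarith

/-- The difference between a hinge-weighted von Mangoldt sum and the corresponding integral. -/
noncomputable def hingeErr (L t : ℝ) : ℂ :=
  ∑' n : ℕ, ((ArithmeticFunction.vonMangoldt n / n * hinge L (Real.log n) : ℝ):ℂ) * ech t (Real.log n) -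
    ∫ v : ℝ in Set.Ioi 0, (hinge L v : ℂ) * ech t v

lemma exists_D1_bound : ∃ C : ℝ, 0 ≤ C ∧ ∀ κ u : ℝ, 0 < κ → κ ≤ 1 →
    ‖logDeriv riemannZeta₁ (1 + vl κ u)‖ ≤ 2/κ + C := by
  obtain ⟨C, hC0, hC⟩ := exists_neg_logDeriv_le
  refine ⟨C, hC0, fun κ u h0 h1 => ?_⟩
  have e1 : 1 + vl κ u = ((1+κ:ℝ):ℂ) + u*Complex.I := by unfold vl; push_cast; ring
  have hne : 1 + vl κ u ≠ 1 := by simpa using vl_ne_zero h0.ne' u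
  have hz : riemannZeta₁ (1 + vl κ u) ≠ 0 := riemannZeta₁_ne_zero (by
    rw [Complex.add_re, vl_re, Complex.one_re]; linarith)
  have e2 : logDeriv riemannZeta₁ (1 + vl κ u) = logDeriv riemannZeta (1 + vl κ u) + (vl κ u)⁻¹ := by
    rw [logDeriv_zeta_eq hne hz]; rw [add_sub_cancel_left]; ring
  have h3 := norm_logDeriv_zeta_le (σ := 1+κ) (by linarith) u
  have h4 := hC (1+κ) (by linarith) (by linarith)
  rw [add_sub_cancel_left] at h4
  rw [e2]
  refine (norm_add_le _ _).trans ?_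
  have h5 : ‖(vl κ u)⁻¹‖ ≤ 1/κ := by
    rw [norm_inv, ← one_div]
    apply one_div_le_one_div_of_le h0
    have := Complex.abs_re_le_norm (vl κ u)
    rwa [vl_re, abs_of_pos h0] at this
  rw [← e1] at h3
  have : 2/κ = 1/κ + 1/κ := by ring
  linarith

lemma continuous_D1 {κ : ℝ} (h0 : 0 < κ) (t : ℝ) : Continuous fun y => logDeriv riemannZeta₁ (1 + vl κ (t+y)) := by
  rw [continuous_iff_continuousAt]
  intro y
  have hz : riemannZeta₁ (1 + vl κ (t+y)) ≠ 0 := riemannZeta₁_ne_zero (by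
    rw [Complex.add_re, vl_re, Complex.one_re]; linarith)
  refine ContinuousAt.comp (g := logDeriv riemannZeta₁) (differentiableAt_logDeriv_zeta₁ hz).continuousAt ?_
  exact (continuous_const.add ((continuous_vl κ).comp (continuous_const.add continuous_id))).continuousAt

lemma integrable_D1_ker {κ : ℝ} (h0 : 0 < κ) (h1 : κ ≤ 1) (t L : ℝ) :
    Integrable (fun y => logDeriv riemannZeta₁ (1 + vl κ (t+y)) * (Complex.exp (vl κ y * L)/(vl κ y)^2)) := by
  obtain ⟨C, hC0, hC⟩ := exists_D1_bound
  exact (integrable_perron_ker h0 L).bdd_mul (continuous_D1 h0 t).aestronglyMeasurable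
    (Filter.Eventually.of_forall fun y => hC κ (t+y) h0 h1)

lemma hingeErr_eq {κ : ℝ} (h0 : 0 < κ) (h1 : κ ≤ 1) (t L : ℝ) :
    2*π*hingeErr L t = -∫ y : ℝ, logDeriv riemannZeta₁ (1 + vl κ (t+y)) * (Complex.exp (vl κ y * L)/(vl κ y)^2) := by
  have hs := (sum_perron h0 t L).tsum_eq
  rw [tsum_mul_left] at hs
  have hi := integral_perron h0 t L
  unfold hingeErr
  rw [mul_sub, hs, ← hi, ← integral_sub, ← integral_neg]
  · congr 1
    ext y
    have hne : 1 + vl κ (t+y) ≠ 1 := by simpa using vl_ne_zero h0.ne' (t+y)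
    have hz : riemannZeta₁ (1 + vl κ (t+y)) ≠ 0 := riemannZeta₁_ne_zero (by
      rw [Complex.add_re, vl_re, Complex.one_re]; linarith)
    have e1 : ((1+κ:ℝ):ℂ) + ((t+y:ℝ):ℂ)*Complex.I = 1 + vl κ (t+y) := by unfold vl; push_cast; ring
    rw [e1, logDeriv_zeta_eq hne hz, add_sub_cancel_left]
    ring
  · have h2 : (fun y => -logDeriv riemannZeta (((1+κ:ℝ):ℂ) + ((t+y:ℝ):ℂ)*Complex.I) * (Complex.exp (vl κ y * L)/(vl κ y)^2)) =
        fun y => (1/(vl κ (t+y)) - logDeriv riemannZeta₁ (1 + vl κ (t+y))) * (Complex.exp (vl κ y * L)/(vl κ y)^2) := by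
      ext y
      have hne : 1 + vl κ (t+y) ≠ 1 := by simpa using vl_ne_zero h0.ne' (t+y)
      have hz : riemannZeta₁ (1 + vl κ (t+y)) ≠ 0 := riemannZeta₁_ne_zero (by
        rw [Complex.add_re, vl_re, Complex.one_re]; linarith)
      have e1 : ((1+κ:ℝ):ℂ) + ((t+y:ℝ):ℂ)*Complex.I = 1 + vl κ (t+y) := by unfold vl; push_cast; ring
      rw [e1, logDeriv_zeta_eq hne hz, add_sub_cancel_left]
      ring
    rw [h2]
    simp_rw [sub_mul]
    refine Integrable.sub ?_ (integrable_D1_ker h0 h1 t L)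
    refine (integrable_perron_ker h0 L).bdd_mul (c := 1/κ) ?_ (Filter.Eventually.of_forall fun y => ?_)
    · exact (continuous_const.div ((continuous_vl κ).comp (continuous_const.add continuous_id)) (fun y => vl_ne_zero h0.ne' _)).aestronglyMeasurable
    · rw [norm_div, norm_one]
      apply one_div_le_one_div_of_le h0
      have := Complex.abs_re_le_norm (vl κ (t+y))
      rwa [vl_re, abs_of_pos h0] at this
  · refine (integrable_perron_ker h0 L).bdd_mul (c := 1/κ) ?_ (Filter.Eventually.of_forall fun y => ?_)
    · exact (continuous_const.div ((continuous_vl κ).comp (continuous_const.add continuous_id)) (fun y => vl_ne_zero h0.ne' _)).aestronglyMeasurable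
    · rw [norm_div, norm_one]
      apply one_div_le_one_div_of_le h0
      have := Complex.abs_re_le_norm (vl κ (t+y))
      rwa [vl_re, abs_of_pos h0] at this

/-- `∑ cᵢ e^{Lᵢ s}`; divided by `s²` this is entire when `∑ cᵢ = ∑ cᵢ Lᵢ = 0`. -/
noncomputable def hexp {ι : Type} [Fintype ι] (c L : ι → ℝ) (s : ℂ) : ℂ := ∑ i, (c i:ℂ) * Complex.exp (s * L i)

lemma hexp_bound {ι : Type} [Fintype ι] (c L : ι → ℝ) (s : ℂ) {B : ℝ} (hB : ∀ i, s.re * L i ≤ B) :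
    ‖hexp c L s‖ ≤ (∑ i, |c i|) * exp B := by
  unfold hexp
  refine (norm_sum_le _ _).trans ?_
  rw [Finset.sum_mul]
  refine Finset.sum_le_sum fun i _ => ?_
  rw [norm_mul, Complex.norm_real, Real.norm_eq_abs, Complex.norm_exp]
  gcongr
  rw [Complex.re_mul_ofReal]
  exact hB i

lemma exists_hexp_div {ι : Type} [Fintype ι] (c L : ι → ℝ) (h0 : ∑ i, c i = 0) (h1 : ∑ i, c i * L i = 0) :
    ∃ Q : ℂ → ℂ, Differentiable ℂ Q ∧ ∀ s, s ≠ 0 → Q s = hexp c L s / s^2 := by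
  have hd : Differentiable ℂ (hexp c L) := by unfold hexp; fun_prop
  have hz : hexp c L 0 = 0 := by
    unfold hexp
    simp only [zero_mul, Complex.exp_zero, mul_one]
    exact_mod_cast h0
  have hz' : deriv (hexp c L) 0 = 0 := by
    have : HasDerivAt (hexp c L) (∑ i, (c i:ℂ) * (Complex.exp (0 * L i) * (1 * L i))) 0 := by
      unfold hexp
      refine HasDerivAt.fun_sum fun i _ => ?_
      exact (((hasDerivAt_id (0:ℂ)).mul_const (L i:ℂ)).cexp).const_mul _
    rw [this.deriv]
    simp only [zero_mul, Complex.exp_zero, one_mul]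
    exact_mod_cast h1
  have d1 : ∀ f : ℂ → ℂ, Differentiable ℂ f → Differentiable ℂ (dslope f 0) := by
    intro f hf
    rw [← differentiableOn_univ]
    exact (Complex.differentiableOn_dslope Filter.univ_mem).2 hf.differentiableOn
  refine ⟨dslope (dslope (hexp c L) 0) 0, d1 _ (d1 _ hd), fun s hs => ?_⟩
  rw [dslope_of_ne _ hs, slope_def_field, dslope_same, hz', dslope_of_ne _ hs, slope_def_field, hz, sub_zero, sub_zero, sub_zero]
  field_simp

/-! ### Shifting the contour -/

lemma hingeErr_comb_eq {ι : Type} [Fintype ι] (c L : ι → ℝ) {κ : ℝ} (h0 : 0 < κ) (h1 : κ ≤ 1) (t : ℝ) :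
    Integrable (fun y => logDeriv riemannZeta₁ (1 + vl κ (t+y)) * (hexp c L (vl κ y)/(vl κ y)^2)) ∧
    2*π*∑ i, (c i:ℂ) * hingeErr (L i) t = -∫ y : ℝ, logDeriv riemannZeta₁ (1 + vl κ (t+y)) * (hexp c L (vl κ y)/(vl κ y)^2) := by
  have e : (fun y => logDeriv riemannZeta₁ (1 + vl κ (t+y)) * (hexp c L (vl κ y)/(vl κ y)^2)) =
      fun y => ∑ i, (c i:ℂ) * (logDeriv riemannZeta₁ (1 + vl κ (t+y)) * (Complex.exp (vl κ y * L i)/(vl κ y)^2)) := by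
    ext y
    unfold hexp
    rw [Finset.sum_div, Finset.mul_sum]
    refine Finset.sum_congr rfl fun i _ => ?_
    ring
  have hi : ∀ i ∈ (Finset.univ : Finset ι), Integrable fun y => (c i:ℂ) * (logDeriv riemannZeta₁ (1 + vl κ (t+y)) * (Complex.exp (vl κ y * L i)/(vl κ y)^2)) :=
    fun i _ => (integrable_D1_ker h0 h1 t (L i)).const_mul _
  rw [e]
  refine ⟨integrable_finset_sum _ hi, ?_⟩
  rw [integral_finset_sum _ hi, Finset.mul_sum, ← Finset.sum_neg_distrib]
  refine Finset.sum_congr rfl fun i _ => ?_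
  rw [integral_const_mul, ← mul_neg, ← hingeErr_eq h0 h1]
  ring

lemma exp_absorb (a b C : ℝ) (k : ℕ) (hab : b < a) : ∃ ν0 : ℝ, ∀ ν, ν0 ≤ ν → C*ν^k*exp (-(a*ν)) ≤ exp (-(b*ν)) := by
  have h1 := Real.tendsto_pow_mul_exp_neg_atTop_nhds_zero k
  have h2 := ((h1.comp (Filter.tendsto_id.const_mul_atTop (sub_pos.2 hab))).const_mul (C/(a-b)^k))
  rw [mul_zero] at h2
  have h3 := h2.eventually_le_const (show (0:ℝ) < 1 by norm_num)
  obtain ⟨ν0, h⟩ := Filter.eventually_atTop.1 h3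
  refine ⟨ν0, fun ν hν => ?_⟩
  have h4 := h ν hν
  simp only [Function.comp, id, mul_pow] at h4
  have hne : (a-b)^k ≠ 0 := pow_ne_zero _ (sub_pos.2 hab).ne'
  have h5 : C/(a-b)^k*((a-b)^k*ν^k*exp (-((a-b)*ν))) = C*ν^k*exp (-((a-b)*ν)) := by field_simp
  rw [h5] at h4
  have h6 : exp (-(a*ν)) = exp (-((a-b)*ν)) * exp (-(b*ν)) := by rw [← Real.exp_add]; congr 1; ring
  rw [h6, ← mul_assoc]
  exact mul_le_of_le_one_left (Real.exp_pos _).le h4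

set_option maxHeartbeats 800000 in
/-- The contour is moved to `Re s = -η` for `|Im s| ≤ Y`. The double pole of the kernel is absent because
of the two linear conditions on `c`. -/
lemma shift_bound {ι : Type} [Fintype ι] (c L : ι → ℝ) (hc0 : ∑ i, c i = 0) (hc1 : ∑ i, c i * L i = 0)
    {κ η Y D D' lo t : ℝ} (h0 : 0 < κ) (h1 : κ ≤ 1) (hη : 0 < η) (hη1 : η ≤ 1) (hY : 0 < Y) (hlo : 0 ≤ lo)
    (hL1 : ∀ i, lo ≤ L i) (hL2 : ∀ i, κ * L i ≤ 1) (hD0 : 0 ≤ D) (hD0' : 0 ≤ D')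
    (hD' : ∀ u, ‖logDeriv riemannZeta₁ (1 + vl κ u)‖ ≤ D')
    (hD : ∀ x y, -η ≤ x → x ≤ κ → |y| ≤ Y →
      riemannZeta₁ (1 + vl x (t+y)) ≠ 0 ∧ ‖logDeriv riemannZeta₁ (1 + vl x (t+y))‖ ≤ D) :
    ‖2*π*∑ i, (c i:ℂ) * hingeErr (L i) t‖ ≤ (∑ i, |c i|) *
      (D*exp (-(η*lo))*(π/η) + 2*(D*3/Y^2*2) + D'*3*(2/Y)) := by
  set S := ∑ i, |c i| with hS
  have hS0 : 0 ≤ S := Finset.sum_nonneg fun i _ => abs_nonneg _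
  have he3 : exp 1 ≤ 3 := Real.exp_one_lt_three.le
  obtain ⟨Q, hQd, hQ⟩ := exists_hexp_div c L hc0 hc1
  obtain ⟨hitg, heq⟩ := hingeErr_comb_eq c L h0 h1 t
  rw [heq, norm_neg]
  set G : ℂ → ℂ := fun s => logDeriv riemannZeta₁ (1 + (t*Complex.I + s)) * Q s with hG
  have hGvl : ∀ x y : ℝ, G (vl x y) = logDeriv riemannZeta₁ (1 + vl x (t+y)) * Q (vl x y) := by
    intro x y
    have : (t:ℂ)*Complex.I + vl x y = vl x (t+y) := by unfold vl; push_cast; ring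
    rw [hG]; simp only; rw [this]
  have hfun : (fun y => logDeriv riemannZeta₁ (1 + vl κ (t+y)) * (hexp c L (vl κ y)/(vl κ y)^2)) = fun y => G (vl κ y) := by
    ext y
    rw [hGvl, hQ _ (vl_ne_zero h0.ne' y)]
  rw [hfun] at hitg ⊢
  have hQb : ∀ x y B : ℝ, (∀ i, x * L i ≤ B) → vl x y ≠ 0 → ‖Q (vl x y)‖ ≤ S*exp B*(1/(x^2+y^2)) := by
    intro x y B hB hne
    rw [hQ _ hne, norm_div, norm_pow, norm_vl_sq, ← mul_one_div]
    have := hexp_bound c L (vl x y) (B := B) (by simpa [vl_re] using hB)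
    gcongr
  -- the rectangle
  have hrect := Complex.integral_boundary_rect_eq_zero_of_differentiableOn G (vl (-η) (-Y)) (vl κ Y) (by
    intro s hs
    rw [Complex.mem_reProdIm, vl_re, vl_re, vl_im, vl_im, Set.uIcc_of_le (by linarith), Set.uIcc_of_le (by linarith)] at hs
    have hs' : s = vl s.re s.im := by unfold vl; exact (Complex.re_add_im s).symm
    have h2 := (hD s.re s.im hs.1.1 hs.1.2 (abs_le.2 hs.2)).1
    have e1 : 1 + ((t:ℂ)*Complex.I + s) = 1 + vl s.re (t+s.im) := by
      conv_lhs => rw [hs']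
      unfold vl; push_cast; ring
    refine DifferentiableAt.differentiableWithinAt (DifferentiableAt.mul ?_ (hQd s))
    have := differentiableAt_logDeriv_zeta₁ h2
    rw [← e1] at this
    exact this.comp s (by fun_prop))
  rw [vl_re, vl_re, vl_im, vl_im] at hrect
  have hform : ∀ x y : ℝ, (x:ℂ) + (y:ℂ)*Complex.I = vl x y := fun x y => rfl
  simp only [hform] at hrect
  -- horizontal sides
  have hhor : ∀ y : ℝ, |y| = Y → ‖∫ x in (-η)..κ, G (vl x y)‖ ≤ S*(D*3/Y^2)*2 := by
    intro y hy
    have hb := intervalIntegral.norm_integral_le_of_norm_le_const (a := -η) (b := κ) (f := fun x : ℝ => G (vl x y)) (C := S*(D*3/Y^2)) (by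
      intro x hx
      rw [Set.uIoc_of_le (by linarith)] at hx
      have hyne : y ≠ 0 := by rintro rfl; simp at hy; linarith
      have hne : vl x y ≠ 0 := by
        intro h; have := congrArg Complex.im h; rw [vl_im] at this; exact hyne this
      rw [hGvl, norm_mul]
      have h2 := (hD x y hx.1.le hx.2 hy.le).2
      have h3 := hQb x y 1 (fun i => by
        refine le_trans ?_ (hL2 i)
        exact mul_le_mul_of_nonneg_right hx.2 (hlo.trans (hL1 i))) hne
      have hy2 : y^2 = Y^2 := by rw [← sq_abs, hy]
      have h4 : 1/(x^2+y^2) ≤ 1/Y^2 := by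
        apply one_div_le_one_div_of_le (by positivity)
        rw [hy2]; have := sq_nonneg x; linarith
      calc _ ≤ D * (S*exp 1*(1/(x^2+y^2))) := by gcongr
        _ ≤ D * (S*3*(1/Y^2)) := by gcongr
        _ = _ := by ring)
    refine hb.trans ?_
    gcongr
    rw [abs_of_pos (by linarith)]; linarith
  -- left side
  have hleft : ‖∫ y in (-Y)..Y, G (vl (-η) y)‖ ≤ S*(D*exp (-(η*lo))*(π/η)) := by
    have hi2 := (integrable_inv_sq_add_sq hη)
    have h3 : ‖∫ y in (-Y)..Y, G (vl (-η) y)‖ ≤ ∫ y in (-Y)..Y, D*(S*exp (-(η*lo)))*(1/(η^2+y^2)) := by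
      refine intervalIntegral.norm_integral_le_of_norm_le (by linarith) ?_ (hi2.1.const_mul _).intervalIntegrable
      refine Filter.Eventually.of_forall fun y hy => ?_
      have hy' : |y| ≤ Y := abs_le.2 ⟨hy.1.le, hy.2⟩
      rw [hGvl, norm_mul]
      have h2 := (hD (-η) y le_rfl (by linarith) hy').2
      have h3 := hQb (-η) y (-(η*lo)) (fun i => by
        have := mul_le_mul_of_nonneg_left (hL1 i) hη.le
        linarith) (vl_ne_zero (by linarith) y)
      rw [neg_sq] at h3
      calc _ ≤ D * (S*exp (-(η*lo))*(1/(η^2+y^2))) := by gcongr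
        _ = _ := by ring
    refine h3.trans ?_
    rw [intervalIntegral.integral_of_le (by linarith)]
    have h4 : ∫ y in Set.Ioc (-Y) Y, D*(S*exp (-(η*lo)))*(1/(η^2+y^2)) ≤ ∫ y, D*(S*exp (-(η*lo)))*(1/(η^2+y^2)) :=
      setIntegral_le_integral (hi2.1.const_mul _) (Filter.Eventually.of_forall fun y => by positivity)
    refine h4.trans ?_
    rw [integral_const_mul, hi2.2]
    apply le_of_eq; ring
  -- tail
  have htail : ‖∫ y in (Set.Ioc (-Y) Y)ᶜ, G (vl κ y)‖ ≤ S*(D'*3*(2/Y)) := by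
    have hi2 := (integrable_inv_sq_add_sq h0).1
    have h3 : ‖∫ y in (Set.Ioc (-Y) Y)ᶜ, G (vl κ y)‖ ≤ ∫ y in (Set.Ioc (-Y) Y)ᶜ, D'*(S*3)*(1/(κ^2+y^2)) := by
      refine norm_integral_le_of_norm_le (hi2.const_mul _).integrableOn (Filter.Eventually.of_forall fun y => ?_)
      rw [hGvl, norm_mul]
      have h2 := hD' (t+y)
      have h3 := hQb κ y 1 hL2 (vl_ne_zero h0.ne' y)
      calc _ ≤ D' * (S*exp 1*(1/(κ^2+y^2))) := by gcongr
        _ ≤ D' * (S*3*(1/(κ^2+y^2))) := by gcongr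
        _ = _ := by ring
    refine h3.trans ?_
    rw [integral_const_mul]
    have := inv_sq_tail κ h0 hY
    calc D'*(S*3)*∫ y in (Set.Ioc (-Y) Y)ᶜ, 1/(κ^2+y^2) ≤ D'*(S*3)*(2/Y) := by gcongr
      _ = _ := by ring
  have hsplit := integral_add_compl (s := Set.Ioc (-Y) Y) measurableSet_Ioc hitg
  rw [← intervalIntegral.integral_of_le (by linarith : -Y ≤ Y)] at hsplit
  rw [← hsplit]
  have hm := hhor (-Y) (by rw [abs_neg, abs_of_pos hY])
  have hp := hhor Y (abs_of_pos hY)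
  generalize (∫ x in (-η)..κ, G (vl x (-Y))) = a1 at hm hrect
  generalize (∫ x in (-η)..κ, G (vl x Y)) = a2 at hp hrect
  generalize (∫ y in (-Y)..Y, G (vl (-η) y)) = a3 at hleft hrect
  generalize (∫ y in (Set.Ioc (-Y) Y)ᶜ, G (vl κ y)) = a4 at htail ⊢
  generalize (∫ y in (-Y)..Y, G (vl κ y)) = a5 at hrect ⊢
  have hI : a5 = a3 + Complex.I*a1 - Complex.I*a2 := by
    simp only [smul_eq_mul] at hrect
    have hI2 := Complex.I_mul_I
    linear_combination (-Complex.I)*hrect - (a3-a5)*hI2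
  have n1 : ‖Complex.I*a1‖ = ‖a1‖ := by rw [norm_mul, Complex.norm_I, one_mul]
  have n2 : ‖Complex.I*a2‖ = ‖a2‖ := by rw [norm_mul, Complex.norm_I, one_mul]
  rw [hI]
  have t1 := norm_add_le (a3 + Complex.I*a1 - Complex.I*a2) a4
  have t2 := norm_sub_le (a3 + Complex.I*a1) (Complex.I*a2)
  have t3 := norm_add_le a3 (Complex.I*a1)
  rw [n2] at t2
  rw [n1] at t3
  have e : S*(D*exp (-(η*lo))*(π/η) + 2*(D*3/Y^2*2) + D'*3*(2/Y)) = S*(D*exp (-(η*lo))*(π/η)) + S*(D*3/Y^2)*2 + S*(D*3/Y^2)*2 + S*(D'*3*(2/Y)) := by ring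
  rw [e]
  linarith

/-- Hinge combinations of the von Mangoldt function, twisted by `n^{-it}`, are very close to the
corresponding integrals, uniformly for `|t|` up to a power of the length. -/
theorem hinge_bound : ∃ ν0 : ℝ, 100 ≤ ν0 ∧ ∀ ν : ℝ, ν0 ≤ ν → ∀ (ι : Type) [Fintype ι] (c L : ι → ℝ) (t : ℝ),
    ∑ i, c i = 0 → ∑ i, c i * L i = 0 → (∀ i, ν^8/1000 ≤ L i) → (∀ i, L i ≤ ν^8) → |t| ≤ exp (ν^8)/2 →
    ‖∑ i, (c i:ℂ) * hingeErr (L i) t‖ ≤ (∑ i, |c i|) * exp (-(1/50000*ν)) := by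
  obtain ⟨ν1, hν1, hz⟩ := zeta₁_bound
  obtain ⟨C, hC0, hC⟩ := exists_D1_bound
  obtain ⟨ν2, hν2⟩ := exp_absorb (1/40000) (1/50000) (300+12*C) 16 (by norm_num)
  refine ⟨max ν1 ν2, hν1.trans (le_max_left _ _), fun ν hν ι _ c L t hc0 hc1 hL1 hL2 ht => ?_⟩
  have hνν1 := (le_max_left _ _).trans hν
  have h100 : 100 ≤ ν := hν1.trans hνν1
  have hν0 : 0 < ν := by linarith
  have h8 : 1 ≤ ν^8 := one_le_pow₀ (by linarith)
  have h7 : 1 ≤ ν^7 := one_le_pow₀ (by linarith)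
  have hκ0 : 0 < 1/ν^8 := by positivity
  have hκ1 : 1/ν^8 ≤ 1 := by rw [div_le_one (by positivity)]; exact h8
  have hη0 : 0 < 1/(40*ν^7) := by positivity
  have hη1 : 1/(40*ν^7) ≤ 1 := by rw [div_le_one (by positivity)]; linarith
  have hY : 0 < exp (ν^8)/2 := by positivity
  have key := shift_bound c L hc0 hc1 (κ := 1/ν^8) (η := 1/(40*ν^7)) (Y := exp (ν^8)/2) (D := ν^9)
    (D' := 2*ν^8+C) (lo := ν^8/1000) (t := t) hκ0 hκ1 hη0 hη1 hY (by positivity) hL1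
    (fun i => by rw [one_div_mul_eq_div, div_le_one (by positivity)]; exact hL2 i) (by positivity) (by positivity)
    (fun u => by
      have := hC (1/ν^8) u hκ0 hκ1
      rwa [show 2/(1/ν^8) = 2*ν^8 by field_simp] at this)
    (fun x y hx1 hx2 hy => by
      refine hz ν hνν1 _ ?_ ?_ ?_
      · rw [Complex.add_re, vl_re, Complex.one_re]; linarith
      · rw [Complex.add_re, vl_re, Complex.one_re]; linarith
      · rw [Complex.add_im, vl_im, Complex.one_im, zero_add]
        have := abs_add_le t y
        linarith)
  rw [norm_mul] at key
  have hpi : ‖(2*π:ℂ)‖ = 2*π := by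
    rw [← Complex.ofReal_ofNat, ← Complex.ofReal_mul, Complex.norm_real, Real.norm_of_nonneg (by positivity)]
  rw [hpi] at key
  set S := ∑ i, |c i|
  have hS0 : 0 ≤ S := Finset.sum_nonneg fun i _ => abs_nonneg _
  set T := ‖∑ i, (c i:ℂ) * hingeErr (L i) t‖
  have hT0 : 0 ≤ T := norm_nonneg _
  have hTle : T ≤ 2*π*T := by
    have := Real.pi_gt_three
    have : 1*T ≤ 2*π*T := by gcongr; linarith
    linarith
  refine hTle.trans (key.trans ?_)
  refine mul_le_mul_of_nonneg_left ?_ hS0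
  have hE1 : exp (-(1/(40*ν^7)*(ν^8/1000))) = exp (-(1/40000*ν)) := by congr 1; field_simp; norm_num
  rw [hE1]
  set E := exp (-(1/40000*ν)) with hE
  have hE0 : 0 < E := Real.exp_pos _
  have hEY : 1 ≤ E*exp (ν^8) := by
    rw [hE, ← Real.exp_add]
    apply Real.one_le_exp
    have : ν ≤ ν^8 := le_self_pow₀ (by linarith) (by norm_num)
    linarith
  have hYge : 1 ≤ exp (ν^8) := Real.one_le_exp (by positivity)
  have hinvY : 1/(exp (ν^8)/2) ≤ 2*E := by
    rw [div_le_iff₀ hY]; linarith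
  have hinvY2 : 1/(exp (ν^8)/2)^2 ≤ 4*E := by
    rw [div_le_iff₀ (by positivity)]
    have : 1 ≤ E*exp (ν^8)*exp (ν^8) := by
      have := mul_le_mul hEY hYge (by norm_num) (by positivity)
      linarith
    calc (1:ℝ) ≤ _ := this
      _ = _ := by ring
  have a1 : ν^9*E*(π/(1/(40*ν^7))) ≤ 160*ν^16*E := by
    have : ν^9*E*(π/(1/(40*ν^7))) = 40*π*ν^16*E := by field_simp
    rw [this]
    have := Real.pi_le_four
    gcongr; linarith
  have a2 : 2*(ν^9*3/(exp (ν^8)/2)^2*2) ≤ 48*ν^9*E := by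
    calc 2*(ν^9*3/(exp (ν^8)/2)^2*2) = 12*ν^9*(1/(exp (ν^8)/2)^2) := by ring
      _ ≤ 12*ν^9*(4*E) := by gcongr
      _ = _ := by ring
  have a3 : (2*ν^8+C)*3*(2/(exp (ν^8)/2)) ≤ (24*ν^8+12*C)*E := by
    calc (2*ν^8+C)*3*(2/(exp (ν^8)/2)) = (2*ν^8+C)*6*(1/(exp (ν^8)/2)) := by ring
      _ ≤ (2*ν^8+C)*6*(2*E) := by gcongr
      _ = _ := by ring
  have h16 : 1 ≤ ν^16 := one_le_pow₀ (by linarith)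
  have b1 : ν^9 ≤ ν^16 := pow_le_pow_right₀ (by linarith) (by norm_num)
  have b2 : ν^8 ≤ ν^16 := pow_le_pow_right₀ (by linarith) (by norm_num)
  have b3 : C*1 ≤ C*ν^16 := by gcongr
  have hfin := hν2 ν ((le_max_right _ _).trans hν)
  have b4 : (160*ν^16 + 48*ν^9 + (24*ν^8+12*C))*E ≤ (300+12*C)*ν^16*E := by
    apply mul_le_mul_of_nonneg_right _ hE0.le
    linarith
  linarith

/-! ### Plancherel and the tent kernel -/

open scoped FourierTransform in
/-- Plancherel's identity for a continuous integrable function with integrable transform. -/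
lemma plancherel {F : ℝ → ℂ} (hc : Continuous F) (hF : Integrable F) (hF' : Integrable (𝓕 F)) :
    ∫ w, ‖𝓕 F w‖^2 = ∫ u, ‖F u‖^2 := by
  have h := VectorFourier.integral_sesq_fourierIntegral_eq_neg_flip (μ := volume) (ν := volume) (e := Real.fourierChar)
    (L := innerₗ ℝ) (f := F) (g := 𝓕 F) (innerSL ℂ) Real.continuous_fourierChar continuous_inner hF hF'
  have h2 := hc.fourierInv_fourier_eq hF hF'
  have h3 : ∀ x, VectorFourier.fourierIntegral Real.fourierChar volume (-(innerₗ ℝ).flip) (𝓕 F) x = F x := by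
    intro x
    rw [← congrFun h2 x, Real.fourierInv_eq, VectorFourier.fourierIntegral]
    simp
  simp_rw [h3] at h
  have h4 : ∫ w, inner ℂ (𝓕 F w) (𝓕 F w) = ∫ u, inner ℂ (F u) (F u) := h
  simp_rw [inner_self_eq_norm_sq_to_K] at h4
  apply Complex.ofReal_injective
  rw [← integral_complex_ofReal, ← integral_complex_ofReal]
  simpa using h4

lemma ech_add (t a b : ℝ) : ech t (a+b) = ech t a * ech t b := by
  unfold ech; rw [← Complex.exp_add]; congr 1; push_cast; ring

lemma continuous_ech' (t : ℝ) : Continuous (fun v => ech t v) := by unfold ech; fun_prop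

lemma norm_one_sub_ech (t v : ℝ) : ‖1 - ech t v‖ ≤ |t*v| := by
  have := Real.norm_exp_I_mul_ofReal_sub_one_le (x := -(t*v))
  rw [norm_sub_rev]
  unfold ech
  rw [mul_comm]
  simpa [abs_mul] using this

lemma continuous_hinge (L : ℝ) : Continuous (hinge L) := by unfold hinge; fun_prop

lemma hinge_integral {L ξ : ℝ} (hL : 0 ≤ L) (hξ : ξ ≠ 0) :
    ∫ v : ℝ in Set.Ioi 0, (hinge L v : ℂ) * ech ξ v =
      L/(Complex.I*ξ) - 1/(Complex.I*ξ)^2 + ech ξ L/(Complex.I*ξ)^2 := by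
  have hs : Complex.I*(ξ:ℂ) ≠ 0 := mul_ne_zero Complex.I_ne_zero (by exact_mod_cast hξ)
  set s : ℂ := Complex.I*(ξ:ℂ) with hsdef
  have hech : ∀ v : ℝ, ech ξ v = Complex.exp (-(s*v)) := by
    intro v; unfold ech; congr 1; rw [hsdef]; push_cast; ring
  have h1 : ∫ v : ℝ in Set.Ioi 0, (hinge L v : ℂ) * ech ξ v = ∫ v in (0:ℝ)..L, ((L:ℂ)-v)*Complex.exp (-(s*v)) := by
    rw [intervalIntegral.integral_of_le hL]
    rw [← Set.Ioc_union_Ioi_eq_Ioi hL, setIntegral_union (Set.Ioc_disjoint_Ioi le_rfl) measurableSet_Ioi]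
    · rw [setIntegral_eq_zero_of_forall_eq_zero (t := Set.Ioi L), add_zero]
      · refine setIntegral_congr_fun measurableSet_Ioc fun v hv => ?_
        simp only [hinge, hech]
        rw [max_eq_left (by linarith [hv.2])]; push_cast; rfl
      · intro v hv
        have : L < v := hv
        simp only [hinge]
        rw [max_eq_right (by linarith)]; simp
    · exact ((Complex.continuous_ofReal.comp (continuous_hinge L)).mul (continuous_ech' ξ)).integrableOn_Ioc
    · refine (integrableOn_zero (ε' := ℂ)).congr_fun (fun v hv => ?_) measurableSet_Ioi
      have : L < v := hv
      simp only [hinge]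
      rw [max_eq_right (by linarith)]; simp
  rw [h1, intervalIntegral.integral_eq_sub_of_hasDerivAt (f := fun v : ℝ => -((L:ℂ)-v)*Complex.exp (-(s*v))/s + Complex.exp (-(s*v))/s^2)]
  · rw [hech]; simp only [Complex.ofReal_zero, mul_zero, neg_zero, Complex.exp_zero]; ring
  · intro v _
    have e1 : HasDerivAt (fun v : ℝ => (v:ℂ)) 1 v := Complex.ofRealCLM.hasDerivAt
    have e2 : HasDerivAt (fun v : ℝ => Complex.exp (-(s*v))) (Complex.exp (-(s*v))*(-(s*1))) v :=
      ((e1.const_mul s).neg).cexp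
    have e3 := (((e1.const_sub (L:ℂ)).neg.mul e2).div_const s).add (e2.div_const (s^2))
    convert! e3 using 1
    simp only [Pi.neg_apply]
    field_simp
    ring
  · exact (by fun_prop : Continuous fun v : ℝ => ((L:ℂ)-v)*Complex.exp (-(s*v))).intervalIntegrable _ _

lemma hinge_comb_integral {ι : Type} [Fintype ι] (c L : ι → ℝ) {ξ : ℝ} (hc0 : ∑ i, c i = 0) (hc1 : ∑ i, c i * L i = 0)
    (hL : ∀ i, 0 ≤ L i) (hξ : ξ ≠ 0) :
    ‖∑ i, (c i:ℂ) * ∫ v : ℝ in Set.Ioi 0, (hinge (L i) v : ℂ) * ech ξ v‖ ≤ (∑ i, |c i|)/ξ^2 := by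
  have h : ∑ i, (c i:ℂ) * ∫ v : ℝ in Set.Ioi 0, (hinge (L i) v : ℂ) * ech ξ v =
      (∑ i, (c i:ℂ)*ech ξ (L i))/(Complex.I*ξ)^2 := by
    have e0 : (∑ i, (c i:ℂ)) = 0 := by exact_mod_cast hc0
    have e1 : (∑ i, (c i:ℂ)*(L i:ℂ)) = 0 := by exact_mod_cast hc1
    have : ∀ i, (c i:ℂ) * ∫ v : ℝ in Set.Ioi 0, (hinge (L i) v : ℂ) * ech ξ v =
        ((c i:ℂ)*L i)*(1/(Complex.I*ξ)) - (c i:ℂ)*(1/(Complex.I*ξ)^2) + ((c i:ℂ)*ech ξ (L i))*(1/(Complex.I*ξ)^2) := by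
      intro i; rw [hinge_integral (hL i) hξ]; ring
    rw [Finset.sum_congr rfl fun i _ => this i, Finset.sum_add_distrib, Finset.sum_sub_distrib,
      ← Finset.sum_mul, ← Finset.sum_mul, ← Finset.sum_mul, e0, e1]
    ring
  rw [h, norm_div, norm_pow, norm_mul, Complex.norm_I, one_mul, Complex.norm_real, Real.norm_eq_abs, sq_abs]
  gcongr
  refine (norm_sum_le _ _).trans (Finset.sum_le_sum fun i _ => ?_)
  rw [norm_mul, norm_ech, mul_one, Complex.norm_real, Real.norm_eq_abs]

/-- The tent kernel of half-width `d` and total mass `1`. -/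
noncomputable def tent (d z : ℝ) : ℝ := max (1 - |z|/d) 0 / d

lemma tent_nonneg {d : ℝ} (hd : 0 < d) (z : ℝ) : 0 ≤ tent d z := div_nonneg (le_max_right _ _) hd.le

lemma tent_le {d : ℝ} (hd : 0 < d) (z : ℝ) : tent d z ≤ 1/d := by
  unfold tent
  gcongr
  exact max_le (by have : 0 ≤ |z|/d := by positivity
                   linarith) zero_le_one

lemma tent_eq_zero {d : ℝ} (hd : 0 < d) {z : ℝ} (hz : d ≤ |z|) : tent d z = 0 := by
  unfold tent
  rw [max_eq_right, zero_div]
  have : 1 ≤ |z|/d := (one_le_div hd).2 hz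
  linarith

lemma continuous_tent (d : ℝ) : Continuous (tent d) := by unfold tent; fun_prop

lemma tent_lip {d : ℝ} (hd : 0 < d) (z z' : ℝ) : |tent d z - tent d z'| ≤ |z - z'|/d^2 := by
  unfold tent
  rw [← sub_div, abs_div, abs_of_pos hd]
  have h1 : |max (1 - |z|/d) 0 - max (1 - |z'|/d) 0| ≤ |(1 - |z|/d) - (1 - |z'|/d)| := abs_max_sub_max_le_abs _ _ _
  have h2 : |(1 - |z|/d) - (1 - |z'|/d)| ≤ |z - z'|/d := by
    have : (1 - |z|/d) - (1 - |z'|/d) = (|z'| - |z|)/d := by ring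
    rw [this, abs_div, abs_of_pos hd]
    refine div_le_div_of_nonneg_right ?_ hd.le
    rw [abs_sub_comm z]
    exact abs_abs_sub_abs_le _ _
  calc _ ≤ |z - z'|/d/d := by gcongr; exact h1.trans h2
    _ = _ := by rw [div_div, pow_two]

lemma tent_neg (d z : ℝ) : tent d (-z) = tent d z := by unfold tent; rw [abs_neg]

lemma tent_eq_hinge {d : ℝ} (hd : 0 < d) (u v : ℝ) :
    tent d (u - v) = 1/d^2 * hinge (u+d) v + (-2/d^2) * hinge u v + 1/d^2 * hinge (u-d) v := by
  unfold tent hinge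
  have hd' := hd.ne'
  rcases le_total (u - v) 0 with h | h
  · rw [abs_of_nonpos h, max_eq_right h, max_eq_right (a := u - d - v) (by linarith)]
    rcases le_total (u + d - v) 0 with h1 | h1
    · rw [max_eq_right h1, max_eq_right]
      · simp
      · rw [sub_nonpos, one_le_div hd]; linarith
    · rw [max_eq_left h1, max_eq_left]
      · field_simp; ring
      · rw [sub_nonneg, div_le_one hd]; linarith
  · rw [abs_of_nonneg h, max_eq_left h, max_eq_left (a := u + d - v) (by linarith)]
    rcases le_total (u - d - v) 0 with h1 | h1
    · rw [max_eq_right h1, max_eq_left]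
      · field_simp; ring
      · rw [sub_nonneg, div_le_one hd]; linarith
    · rw [max_eq_left h1, max_eq_right]
      · field_simp; ring
      · rw [sub_nonpos, one_le_div hd]; linarith

lemma hasCompactSupport_tent {d : ℝ} (hd : 0 < d) : HasCompactSupport (tent d) :=
  HasCompactSupport.intro (isCompact_Icc (a := -d) (b := d)) fun z hz => tent_eq_zero hd (by
    by_contra h
    push Not at h
    exact hz ⟨(abs_lt.1 h).1.le, (abs_lt.1 h).2.le⟩)

lemma integrable_tent {d : ℝ} (hd : 0 < d) : Integrable (tent d) :=
  (continuous_tent d).integrable_of_hasCompactSupport (hasCompactSupport_tent hd)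

lemma integral_tent {d : ℝ} (hd : 0 < d) : ∫ z, tent d z = 1 := by
  have h1 : ∫ z, tent d z = ∫ z in Set.Ioc (-d) d, tent d z := by
    rw [setIntegral_eq_integral_of_forall_compl_eq_zero]
    intro z hz
    refine tent_eq_zero hd ?_
    by_contra h
    push Not at h
    exact hz ⟨(abs_lt.1 h).1, (abs_lt.1 h).2.le⟩
  have hi : ∀ a b, IntervalIntegrable (tent d) volume a b := fun a b => (continuous_tent d).intervalIntegrable a b
  rw [h1, ← intervalIntegral.integral_of_le (by linarith), ← intervalIntegral.integral_add_adjacent_intervals (hi (-d) 0) (hi 0 d)]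
  have h2 : ∫ z in (-d)..0, tent d z = ∫ z in (0:ℝ)..d, tent d z := by
    rw [← neg_zero, ← intervalIntegral.integral_comp_neg]
    simp [tent_neg]
  have h3 : ∫ z in (0:ℝ)..d, tent d z = ∫ z in (0:ℝ)..d, (1/d - z * (1/d^2)) := by
    refine intervalIntegral.integral_congr fun z hz => ?_
    rw [Set.uIcc_of_le hd.le] at hz
    simp only [tent]
    rw [abs_of_nonneg hz.1, max_eq_left]
    · field_simp
    · rw [sub_nonneg, div_le_one hd]; exact hz.2
  rw [h2, h3, intervalIntegral.integral_sub (by simp) (by apply Continuous.intervalIntegrable; fun_prop), intervalIntegral.integral_mul_const, integral_id]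
  simp
  field_simp
  norm_num

/-- The Fourier transform of the tent kernel, in angular frequency. -/
noncomputable def tentHat (d ξ : ℝ) : ℂ := ∫ z, (tent d z : ℂ) * ech ξ z

lemma integrable_tent_ech {d : ℝ} (hd : 0 < d) (ξ : ℝ) : Integrable fun z => (tent d z : ℂ) * ech ξ z := by
  have h : HasCompactSupport fun z => (tent d z : ℂ) * ech ξ z :=
    ((hasCompactSupport_tent hd).comp_left (g := fun x : ℝ => (x:ℂ)) (by simp)).mul_right
  exact ((Complex.continuous_ofReal.comp (continuous_tent d)).mul (continuous_ech' ξ)).integrable_of_hasCompactSupport h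

lemma norm_tentHat_le_one {d : ℝ} (hd : 0 < d) (ξ : ℝ) : ‖tentHat d ξ‖ ≤ 1 := by
  refine (norm_integral_le_integral_norm _).trans ?_
  rw [← integral_tent hd]
  refine le_of_eq (integral_congr_ae (Filter.Eventually.of_forall fun z => ?_))
  simp [norm_ech, abs_of_nonneg (tent_nonneg hd z)]

lemma norm_one_sub_tentHat {d : ℝ} (hd : 0 < d) (ξ : ℝ) : ‖1 - tentHat d ξ‖ ≤ d*|ξ| := by
  have h1 : (1:ℂ) = ∫ z, (tent d z : ℂ) := by
    rw [integral_complex_ofReal, integral_tent hd]; simp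
  have hI : Integrable fun z => (tent d z : ℂ) := (integrable_tent hd).ofReal
  unfold tentHat
  rw [h1, ← integral_sub hI (integrable_tent_ech hd ξ)]
  refine (norm_integral_le_integral_norm _).trans ?_
  have h2 : d*|ξ| = ∫ z, tent d z * (d*|ξ|) := by rw [integral_mul_const, integral_tent hd, one_mul]
  rw [h2]
  refine integral_mono (hI.sub (integrable_tent_ech hd ξ)).norm ((integrable_tent hd).mul_const _) fun z => ?_
  have h3 : (tent d z:ℂ) - tent d z * ech ξ z = tent d z * (1 - ech ξ z) := by ring
  simp only []
  rw [h3, norm_mul, Complex.norm_real, Real.norm_eq_abs, abs_of_nonneg (tent_nonneg hd z)]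
  rcases le_or_gt d |z| with h | h
  · rw [tent_eq_zero hd h]; simp
  · refine mul_le_mul_of_nonneg_left ((norm_one_sub_ech ξ z).trans ?_) (tent_nonneg hd z)
    rw [abs_mul, mul_comm]; gcongr

lemma norm_tentHat_le {d ξ : ℝ} (hd : 0 < d) (hξ : ξ ≠ 0) : ‖tentHat d ξ‖ ≤ 4/(d*ξ)^2 := by
  have h1 : tentHat d ξ = ech ξ (-d) * ∫ v : ℝ in Set.Ioi 0, (tent d (d - v) : ℂ) * ech ξ v := by
    unfold tentHat
    rw [← integral_sub_right_eq_self _ d, ← integral_const_mul, setIntegral_eq_integral_of_forall_compl_eq_zero]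
    · congr 1
      ext v
      rw [← neg_sub d v, tent_neg, neg_sub, show v - d = -d + v by ring, ech_add]; ring
    · intro v hv
      have hv : v ≤ 0 := by simpa using hv
      rw [tent_eq_zero hd]
      · simp
      · rw [abs_of_nonneg (by linarith)]; linarith
  let c : Fin 3 → ℝ := ![1/d^2, -2/d^2, 1/d^2]
  let L : Fin 3 → ℝ := ![2*d, d, 0]
  have hi : ∀ M, 0 ≤ M → Integrable (fun v : ℝ => (hinge M v : ℂ) * ech ξ v) (volume.restrict (Set.Ioi 0)) := by
    intro M hM
    have : IntegrableOn (fun v : ℝ => (hinge M v : ℂ) * ech ξ v) (Set.Ioc 0 M ∪ Set.Ioi M) := by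
      refine IntegrableOn.union ((Complex.continuous_ofReal.comp (continuous_hinge M)).mul (continuous_ech' ξ)).integrableOn_Ioc ?_
      refine (integrableOn_zero (ε' := ℂ)).congr_fun (fun v hv => ?_) measurableSet_Ioi
      have : M < v := hv
      simp only [hinge]
      rw [max_eq_right (by linarith)]; simp
    rwa [Set.Ioc_union_Ioi_eq_Ioi hM] at this
  have h2 : ∫ v : ℝ in Set.Ioi 0, (tent d (d - v) : ℂ) * ech ξ v =
      ∑ i, (c i:ℂ) * ∫ v : ℝ in Set.Ioi 0, (hinge (L i) v : ℂ) * ech ξ v := by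
    simp only [← integral_const_mul]
    rw [← integral_finsetSum]
    · congr 1
      ext v
      rw [tent_eq_hinge hd]
      simp only [Fin.sum_univ_three, c, L, Matrix.cons_val_zero, Matrix.cons_val_one, Matrix.cons_val]
      rw [show d + d = 2*d by ring, sub_self]
      push_cast; ring
    · intro i _
      refine (hi _ ?_).const_mul _
      fin_cases i <;> simp [L] <;> positivity
  have h3 := hinge_comb_integral c L (ξ := ξ) (by simp [c, Fin.sum_univ_three]; ring)
    (by simp [c, L, Fin.sum_univ_three]; ring) (by intro i; fin_cases i <;> simp [L] <;> positivity) hξ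
  rw [h1, h2, norm_mul, norm_ech, one_mul]
  refine h3.trans (le_of_eq ?_)
  have hd2 : |d^2| = d^2 := abs_of_nonneg (by positivity)
  simp [c, Fin.sum_univ_three, abs_div, abs_inv]
  rw [mul_pow]
  field_simp
  norm_num

/-! ### Mean squares of bilinear sums -/

/-- A finite Dirichlet-type sum with frequencies `lam i`. -/
noncomputable def dsum {ι : Type} (s : Finset ι) (c lam : ι → ℝ) (ξ : ℝ) : ℂ := ∑ i ∈ s, (c i : ℂ) * ech ξ (lam i)

lemma norm_dsum_le {ι : Type} (s : Finset ι) (c lam : ι → ℝ) (ξ : ℝ) : ‖dsum s c lam ξ‖ ≤ ∑ i ∈ s, |c i| := by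
  refine (norm_sum_le _ _).trans (Finset.sum_le_sum fun i _ => ?_)
  rw [norm_mul, norm_ech, mul_one, Complex.norm_real, Real.norm_eq_abs]

lemma norm_tentHat_le_inv {d : ℝ} (hd : 0 < d) (ξ : ℝ) : ‖tentHat d ξ‖ ≤ (2+8/d^2)*(1+ξ^2)⁻¹ := by
  rw [← div_eq_mul_inv, le_div_iff₀ (by positivity)]
  rcases le_or_gt (ξ^2) 1 with h | h
  · have h1 := norm_tentHat_le_one hd ξ
    have h2 : 0 ≤ 8/d^2 := by positivity
    have h3 : ‖tentHat d ξ‖*(1+ξ^2) ≤ 1*2 := by gcongr; linarith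
    linarith
  · have h0 : ξ ≠ 0 := by rintro rfl; norm_num at h
    have h1 := norm_tentHat_le hd h0
    have h3 : ‖tentHat d ξ‖*(1+ξ^2) ≤ 4/(d*ξ)^2*(2*ξ^2) := by gcongr; linarith
    have h5 : 4/(d*ξ)^2*(2*ξ^2) = 8/d^2 := by field_simp; norm_num
    linarith

open scoped FourierTransform in
lemma plancherel_sum {ι : Type} (s : Finset ι) (c lam : ι → ℝ) {d D : ℝ} (hd : 0 < d) (hD : 0 < D) (β : ℝ) :
    Integrable (fun w : ℝ => ‖dsum s c lam (2*π*w)‖^2 * ‖tentHat d (2*π*w) - β*tentHat D (2*π*w)‖^2) ∧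
    ∫ u : ℝ, (∑ i ∈ s, c i * (tent d (u - lam i) - β * tent D (u - lam i)))^2 =
      ∫ w : ℝ, ‖dsum s c lam (2*π*w)‖^2 * ‖tentHat d (2*π*w) - β*tentHat D (2*π*w)‖^2 := by
  have hWi : Integrable (fun z => tent d z - β * tent D z) := (integrable_tent hd).sub ((integrable_tent hD).const_mul β)
  set F : ℝ → ℂ := fun u => ((∑ i ∈ s, c i * (tent d (u - lam i) - β * tent D (u - lam i)) : ℝ) : ℂ) with hF
  have hFc : Continuous F := by
    have h1 := continuous_tent d
    have h2 := continuous_tent D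
    simp only [hF]
    fun_prop
  have hFi : Integrable F := by
    refine Integrable.ofReal ?_
    refine integrable_finsetSum _ fun i _ => ?_
    exact (hWi.comp_sub_right (lam i)).const_mul (c i)
  have hFF : ∀ w, 𝓕 F w = dsum s c lam (2*π*w) * (tentHat d (2*π*w) - β*tentHat D (2*π*w)) := by
    intro w
    rw [Real.fourier_real_eq_integral_exp_smul]
    have e1 : ∀ v : ℝ, Complex.exp (↑(-2 * π * v * w) * Complex.I) • F v =
        ∑ i ∈ s, (c i:ℂ) * ech (2*π*w) (lam i) *
          ((fun z : ℝ => (tent d z : ℂ) * ech (2*π*w) z - β*((tent D z : ℂ) * ech (2*π*w) z)) (v - lam i)) := by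
      intro v
      have e2 : Complex.exp (↑(-2 * π * v * w) * Complex.I) = ech (2*π*w) v := by
        unfold ech; congr 3; ring
      rw [e2, smul_eq_mul, hF]
      push_cast
      rw [Finset.mul_sum]
      refine Finset.sum_congr rfl fun i _ => ?_
      have e3 : ech (2*π*w) v = ech (2*π*w) (lam i) * ech (2*π*w) (v - lam i) := by rw [← ech_add]; congr 1; ring
      rw [e3]; ring
    have hI : Integrable (fun z : ℝ => (tent d z : ℂ) * ech (2*π*w) z - β*((tent D z : ℂ) * ech (2*π*w) z)) :=
      (integrable_tent_ech hd _).sub ((integrable_tent_ech hD _).const_mul _)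
    simp_rw [e1]
    rw [integral_finsetSum _ fun i _ => (hI.comp_sub_right (lam i)).const_mul _]
    unfold dsum
    rw [Finset.sum_mul]
    refine Finset.sum_congr rfl fun i _ => ?_
    rw [integral_const_mul, integral_sub_right_eq_self (fun z : ℝ => (tent d z : ℂ) * ech (2*π*w) z - β*((tent D z : ℂ) * ech (2*π*w) z)),
      integral_sub (integrable_tent_ech hd _) ((integrable_tent_ech hD _).const_mul _), integral_const_mul]
    rfl
  have hcont : Continuous (𝓕 F) := VectorFourier.fourierIntegral_continuous Real.continuous_fourierChar
    (L := innerₗ ℝ) continuous_inner hFi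
  set M : ℝ := (∑ i ∈ s, |c i|) * ((2+8/d^2)+|β| * (2+8/D^2)) with hM
  have hM0 : 0 ≤ M := mul_nonneg (Finset.sum_nonneg fun i _ => abs_nonneg _) (by positivity)
  have hb : ∀ w, ‖𝓕 F w‖ ≤ M*(1+(2*π*w)^2)⁻¹ := by
    intro w
    rw [hFF, norm_mul, hM, mul_assoc (∑ i ∈ s, |c i|)]
    have h1 := norm_tentHat_le_inv hd (2*π*w)
    have h2 := norm_tentHat_le_inv hD (2*π*w)
    refine mul_le_mul (norm_dsum_le s c lam _) ?_ (norm_nonneg _) (Finset.sum_nonneg fun i _ => abs_nonneg _)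
    refine (norm_sub_le _ _).trans ?_
    rw [norm_mul, Complex.norm_real, Real.norm_eq_abs, add_mul, mul_assoc |β|]
    gcongr
  have hinv : Integrable fun w : ℝ => M*(1+(2*π*w)^2)⁻¹ :=
    (integrable_inv_one_add_sq.comp_mul_left' (R := 2*π) (by positivity)).const_mul M
  have hF' : Integrable (𝓕 F) := hinv.mono' hcont.aestronglyMeasurable (Filter.Eventually.of_forall hb)
  have hsq : ∀ w, ‖𝓕 F w‖^2 = ‖dsum s c lam (2*π*w)‖^2 * ‖tentHat d (2*π*w) - β*tentHat D (2*π*w)‖^2 := by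
    intro w; rw [hFF, norm_mul, mul_pow]
  have hle : ∀ w, ‖𝓕 F w‖ ≤ M := by
    intro w
    refine (hb w).trans ?_
    have : (1+(2*π*w)^2)⁻¹ ≤ 1 := inv_le_one_of_one_le₀ (by nlinarith [sq_nonneg (2*π*w)])
    nlinarith
  refine ⟨?_, ?_⟩
  · simp_rw [← hsq]
    refine (hF'.norm.const_mul M).mono' (by fun_prop) (Filter.Eventually.of_forall fun w => ?_)
    rw [Real.norm_eq_abs, abs_of_nonneg (by positivity), pow_two]
    exact mul_le_mul_of_nonneg_right (hle w) (norm_nonneg _)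
  · simp_rw [← hsq]
    rw [plancherel hFc hFi hF']
    congr 1
    ext u
    rw [hF, Complex.norm_real, Real.norm_eq_abs, sq_abs]

/-- Mean square of a bilinear sum: the middle frequency range is controlled by `η`, the low range by the
closeness of both kernels' transforms to `1`, the high range by their decay. -/
lemma typeII_bound {sA sB : Finset ℕ} (a b : ℕ → ℝ) {δ Δ T Y η QA QB G : ℝ} (hδ : 0 < δ) (hδΔ : δ ≤ Δ) (hT : 1 ≤ T)
    (hY : 1 ≤ Y) (hQA : ∑ m ∈ sA, |a m/m| ≤ QA) (hQB : ∑ n ∈ sB, |b n/n| ≤ QB)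
    (hη : ∀ ξ, T ≤ |ξ| → |ξ| ≤ Y → ‖dsum sB (fun n => b n/n) (fun n => Real.log n) ξ‖ ≤ η)
    (hG : ∀ d, δ ≤ d → d ≤ Δ → ∫ u : ℝ, (∑ m ∈ sA, a m/m * tent d (u - Real.log m))^2 ≤ G) :
    ∫ u : ℝ, (∑ m ∈ sA, ∑ n ∈ sB, a m/m * (b n/n) * (tent δ (u - (Real.log m + Real.log n)) - tent Δ (u - (Real.log m + Real.log n))))^2 ≤
      (QA*QB)^2*(8*Δ^2*T^4 + 128/(δ^4*Y^2)) + 4*η^2*G := by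
  have hΔ : 0 < Δ := hδ.trans_le hδΔ
  set A : ℝ → ℂ := dsum sA (fun n => a n/n) (fun n => Real.log n) with hA
  set B : ℝ → ℂ := dsum sB (fun n => b n/n) (fun n => Real.log n) with hB
  have hp := plancherel_sum (sA ×ˢ sB) (fun p => a p.1/p.1 * (b p.2/p.2)) (fun p => Real.log p.1 + Real.log p.2) hδ hΔ 1
  have hAB : ∀ ξ, dsum (sA ×ˢ sB) (fun p => a p.1/p.1 * (b p.2/p.2)) (fun p => Real.log p.1 + Real.log p.2) ξ = A ξ * B ξ := by
    intro ξ
    rw [hA, hB]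
    unfold dsum
    rw [Finset.sum_mul_sum, Finset.sum_product]
    refine Finset.sum_congr rfl fun m _ => Finset.sum_congr rfl fun n _ => ?_
    rw [ech_add]; push_cast; ring
  have hlhs : ∀ u : ℝ, ∑ m ∈ sA, ∑ n ∈ sB, a m/m * (b n/n) * (tent δ (u - (Real.log m + Real.log n)) - tent Δ (u - (Real.log m + Real.log n))) =
     ∑ p ∈ sA ×ˢ sB, a p.1/p.1 * (b p.2/p.2) * (tent δ (u - (Real.log p.1 + Real.log p.2)) - 1*tent Δ (u - (Real.log p.1 + Real.log p.2))) := by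
    intro u; rw [Finset.sum_product]; simp only [one_mul]
  simp_rw [hlhs]
  rw [hp.2]
  simp_rw [hAB]
  have hG' : ∀ d, δ ≤ d → d ≤ Δ → Integrable (fun w : ℝ => ‖A (2*π*w)‖^2*‖tentHat d (2*π*w)‖^2) ∧
      ∫ w : ℝ, ‖A (2*π*w)‖^2*‖tentHat d (2*π*w)‖^2 ≤ G := by
    intro d h1 h2
    have hd : 0 < d := hδ.trans_le h1
    have hq := plancherel_sum sA (fun n => a n/n) (fun n => Real.log n) hd hd 0
    simp only [Complex.ofReal_zero, zero_mul, sub_zero, ← hA] at hq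
    exact ⟨hq.1, hq.2 ▸ hG d h1 h2⟩
  obtain ⟨i1, g1⟩ := hG' δ le_rfl hδΔ
  obtain ⟨i2, g2⟩ := hG' Δ hδΔ le_rfl
  have hinv : Integrable fun w : ℝ => (1+(2*π*w)^2)⁻¹ :=
    (integrable_inv_one_add_sq.comp_mul_left' (R := 2*π) (by positivity))
  have hinv1 : ∫ w : ℝ, (1+(2*π*w)^2)⁻¹ ≤ 1 := by
    rw [Measure.integral_comp_mul_left (fun x : ℝ => (1+x^2)⁻¹), integral_univ_inv_one_add_sq, abs_of_pos (by positivity), smul_eq_mul]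
    have := Real.pi_pos
    field_simp
    norm_num
  set R : ℝ := (QA*QB)^2*(8*Δ^2*T^4 + 128/(δ^4*Y^2)) with hR
  have hpt : ∀ w : ℝ, ‖A (2*π*w) * B (2*π*w)‖^2 * ‖tentHat δ (2*π*w) - (1:ℝ)*tentHat Δ (2*π*w)‖^2 ≤
      R * (1+(2*π*w)^2)⁻¹ + 2*η^2*(‖A (2*π*w)‖^2*‖tentHat δ (2*π*w)‖^2 + ‖A (2*π*w)‖^2*‖tentHat Δ (2*π*w)‖^2) := by
    intro w
    generalize 2*π*w = ξ
    have hAle : ‖A ξ‖ ≤ QA := (norm_dsum_le _ _ _ ξ).trans hQA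
    have hBle : ‖B ξ‖ ≤ QB := (norm_dsum_le _ _ _ ξ).trans hQB
    have hQA0 := (norm_nonneg _).trans hAle
    have hABle : ‖A ξ * B ξ‖^2 ≤ (QA*QB)^2 := by rw [norm_mul]; gcongr
    have hx0 : 0 ≤ 2*η^2*(‖A ξ‖^2*‖tentHat δ ξ‖^2 + ‖A ξ‖^2*‖tentHat Δ ξ‖^2) := by positivity
    have hx1 : 0 < 1 + ξ^2 := by positivity
    rw [Complex.ofReal_one, one_mul]
    have hξ2 : ξ^2 = |ξ|^2 := (sq_abs ξ).symm
    rcases le_or_gt |ξ| T with h1 | h1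
    · have e1 : ‖tentHat δ ξ - tentHat Δ ξ‖ ≤ 2*Δ*T := by
        have q1 := norm_one_sub_tentHat hδ ξ
        have q2 := norm_one_sub_tentHat hΔ ξ
        have q3 : tentHat δ ξ - tentHat Δ ξ = (1 - tentHat Δ ξ) - (1 - tentHat δ ξ) := by ring
        rw [q3]
        refine (norm_sub_le _ _).trans ((add_le_add q2 q1).trans ?_)
        have q4 : δ*|ξ| ≤ Δ*|ξ| := by gcongr
        have q5 : Δ*|ξ| ≤ Δ*T := by gcongr
        linarith
      have e2 : ‖tentHat δ ξ - tentHat Δ ξ‖^2 ≤ 8*Δ^2*T^4*(1+ξ^2)⁻¹ := by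
        rw [← div_eq_mul_inv, le_div_iff₀ hx1]
        calc _ ≤ (2*Δ*T)^2*(2*T^2) := by
              gcongr
              have : ξ^2 ≤ T^2 := by rw [hξ2]; gcongr
              nlinarith
          _ = _ := by ring
      calc _ ≤ (QA*QB)^2*(8*Δ^2*T^4*(1+ξ^2)⁻¹) := by gcongr
        _ ≤ R*(1+ξ^2)⁻¹ := by
            rw [hR, mul_assoc ((QA*QB)^2)]
            gcongr
            exact le_add_of_nonneg_right (by positivity)
        _ ≤ _ := by linarith
    · rcases le_or_gt |ξ| Y with h2 | h2
      · have e1 : ‖B ξ‖ ≤ η := hη ξ h1.le h2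
        have e2 : ‖tentHat δ ξ - tentHat Δ ξ‖^2 ≤ 2*(‖tentHat δ ξ‖^2+‖tentHat Δ ξ‖^2) := by
          have q := norm_sub_le (tentHat δ ξ) (tentHat Δ ξ)
          have q2 := pow_le_pow_left₀ (norm_nonneg _) q 2
          nlinarith [sq_nonneg (‖tentHat δ ξ‖-‖tentHat Δ ξ‖)]
        have e3 : ‖A ξ * B ξ‖^2 ≤ ‖A ξ‖^2*η^2 := by rw [norm_mul, mul_pow]; gcongr
        have e4 : 0 ≤ R*(1+ξ^2)⁻¹ := by positivity
        calc _ ≤ (‖A ξ‖^2*η^2)*(2*(‖tentHat δ ξ‖^2+‖tentHat Δ ξ‖^2)) := by gcongr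
          _ = 2*η^2*(‖A ξ‖^2*‖tentHat δ ξ‖^2 + ‖A ξ‖^2*‖tentHat Δ ξ‖^2) := by ring
          _ ≤ _ := by linarith
      · have hpos : 0 < |ξ| := by linarith
        have hξ0 : ξ ≠ 0 := abs_pos.1 hpos
        have e1 : ‖tentHat δ ξ - tentHat Δ ξ‖ ≤ 8/(δ*ξ)^2 := by
          have q1 := norm_tentHat_le hδ hξ0
          have q2 := norm_tentHat_le hΔ hξ0
          have q3 : 4/(Δ*ξ)^2 ≤ 4/(δ*ξ)^2 := by rw [mul_pow, mul_pow]; gcongr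
          refine (norm_sub_le _ _).trans ((add_le_add q1 (q2.trans q3)).trans (le_of_eq ?_))
          ring
        have e2 : ‖tentHat δ ξ - tentHat Δ ξ‖^2 ≤ 128/(δ^4*Y^2)*(1+ξ^2)⁻¹ := by
          rw [← div_eq_mul_inv, le_div_iff₀ hx1]
          have q1 : Y^2 ≤ ξ^2 := by rw [hξ2]; gcongr
          have q2 : 0 < ξ^2 := by positivity
          calc _ ≤ (8/(δ*ξ)^2)^2*(2*ξ^2) := by
                gcongr
                nlinarith
            _ = 128/(δ^4*ξ^2) := by field_simp; norm_num
            _ ≤ _ := by gcongr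
        calc _ ≤ (QA*QB)^2*(128/(δ^4*Y^2)*(1+ξ^2)⁻¹) := by gcongr
          _ ≤ R*(1+ξ^2)⁻¹ := by
              rw [hR, mul_assoc ((QA*QB)^2)]
              gcongr
              exact le_add_of_nonneg_left (by positivity)
          _ ≤ _ := by linarith
  have hi12 := (i1.add i2).const_mul (2*η^2)
  refine (integral_mono_of_nonneg (Filter.Eventually.of_forall fun w => by positivity) ((hinv.const_mul R).add hi12)
    (Filter.Eventually.of_forall hpt)).trans ?_
  simp only [Pi.add_apply] at hi12 ⊢
  rw [integral_add (hinv.const_mul R) hi12, integral_const_mul, integral_const_mul, integral_add i1 i2]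
  have h1 : R * ∫ w : ℝ, (1+(2*π*w)^2)⁻¹ ≤ R*1 := by gcongr
  have h2 : 2*η^2*((∫ w : ℝ, ‖A (2*π*w)‖^2*‖tentHat δ (2*π*w)‖^2) + ∫ w : ℝ, ‖A (2*π*w)‖^2*‖tentHat Δ (2*π*w)‖^2) ≤ 2*η^2*(G+G) := by gcongr
  linarith

/-! ### Divisor and mean square bounds -/

lemma count_log (s : Finset ℕ) {v r : ℝ} (hr0 : 0 ≤ r) (hr : r ≤ 1) (h : ∀ m ∈ s, m ≠ 0 ∧ |Real.log m - v| ≤ r) :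
    (s.card:ℝ) ≤ 4*r*exp v + 1 := by
  have hsub : s ⊆ Finset.Icc ⌈exp (v-r)⌉₊ ⌊exp (v+r)⌋₊ := by
    intro m hm
    obtain ⟨h0, h1⟩ := h m hm
    have hm0 : (0:ℝ) < m := by exact_mod_cast Nat.pos_of_ne_zero h0
    rw [abs_le] at h1
    rw [Finset.mem_Icc]
    constructor
    · rw [Nat.ceil_le, ← Real.le_log_iff_exp_le hm0]; linarith
    · rw [Nat.le_floor_iff (exp_pos _).le, ← Real.log_le_iff_le_exp hm0]; linarith
  have h1 := Finset.card_le_card hsub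
  rw [Nat.card_Icc] at h1
  have hE : exp (v+r) - exp (v-r) ≤ 4*r*exp v := by
    rw [Real.exp_add, sub_eq_add_neg v r, Real.exp_add]
    have e1 := Real.add_one_le_exp (-r)
    have e2 := (abs_le.1 (Real.abs_exp_sub_one_sub_id_le (x := r) (by rw [abs_of_nonneg hr0]; exact hr))).2
    have e3 : exp r - exp (-r) ≤ 4*r := by nlinarith
    nlinarith [exp_pos v]
  have hf := Nat.floor_le (exp_pos (v+r)).le
  have hc := Nat.le_ceil (exp (v-r))
  have h2 : (s.card:ℝ) ≤ ((⌊exp (v+r)⌋₊ + 1 - ⌈exp (v-r)⌉₊ : ℕ):ℝ) := by exact_mod_cast h1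
  rcases le_total ⌈exp (v-r)⌉₊ (⌊exp (v+r)⌋₊ + 1) with h3 | h3
  · rw [Nat.cast_sub h3] at h2
    push_cast at h2
    linarith
  · rw [Nat.sub_eq_zero_of_le h3] at h2
    have : 0 ≤ 4*r*exp v := by positivity
    push_cast at h2
    linarith

lemma sum_divisors_sq_le (M : ℕ) :
    ∑ m ∈ Finset.Icc 1 M, ((m.divisors.card:ℝ)^2)/m ≤ (∑ n ∈ Finset.Icc 1 M, 1/(n:ℝ))^4 := by
  classical
  set I := Finset.Icc 1 M
  let T : Finset (Σ _ : ℕ, ℕ × ℕ) := I.sigma fun m => m.divisors ×ˢ m.divisors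
  let φ : (Σ _ : ℕ, ℕ × ℕ) → (ℕ × ℕ) × (ℕ × ℕ) := fun x =>
    ((Nat.gcd x.2.1 x.2.2, x.2.1 / Nat.gcd x.2.1 x.2.2), (x.2.2 / Nat.gcd x.2.1 x.2.2, x.1 / Nat.lcm x.2.1 x.2.2))
  let f : (ℕ × ℕ) × (ℕ × ℕ) → ℝ := fun y => (1/(y.1.1:ℝ)*(1/(y.1.2:ℝ)))*((1/(y.2.1:ℝ))*(1/(y.2.2:ℝ)))
  have key : ∀ x ∈ T, (φ x).1.1 * (φ x).1.2 = x.2.1 ∧ (φ x).1.1 * (φ x).2.1 = x.2.2 ∧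
      (φ x).1.1*(φ x).1.2*((φ x).2.1*(φ x).2.2) = x.1 ∧ x.1 ∈ I := by
    rintro ⟨m, a, b⟩ hx
    simp only [T, Finset.mem_sigma, Finset.mem_product, Nat.mem_divisors] at hx
    obtain ⟨hm, ⟨ha, hm0⟩, hb, _⟩ := hx
    simp only [φ]
    have e1 : a.gcd b * (a / a.gcd b) = a := Nat.mul_div_cancel' (Nat.gcd_dvd_left a b)
    have e2 : a.gcd b * (b / a.gcd b) = b := Nat.mul_div_cancel' (Nat.gcd_dvd_right a b)
    refine ⟨e1, e2, ?_, hm⟩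
    have e3 : a.lcm b * (m / a.lcm b) = m := Nat.mul_div_cancel' (Nat.lcm_dvd ha hb)
    have e4 : a * (b / a.gcd b) = a.lcm b := by rw [Nat.lcm, Nat.mul_div_assoc _ (Nat.gcd_dvd_right a b)]
    rw [e1, ← mul_assoc, e4, e3]
  have hinj : Set.InjOn φ T := by
    intro x hx y hy hxy
    obtain ⟨a1, a2, a3, _⟩ := key x hx
    obtain ⟨b1, b2, b3, _⟩ := key y hy
    rw [hxy] at a1 a2 a3
    obtain ⟨m, a, b⟩ := x
    obtain ⟨m', a', b'⟩ := y
    simp only at a1 a2 a3 b1 b2 b3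
    rw [b1] at a1; rw [b2] at a2; rw [b3] at a3
    subst a1 a2 a3; rfl
  have hL : ∑ m ∈ I, ((m.divisors.card:ℝ)^2)/m = ∑ x ∈ T, f (φ x) := by
    rw [Finset.sum_sigma]
    refine Finset.sum_congr rfl fun m hm => ?_
    rw [Finset.sum_congr rfl (g := fun _ => 1/(m:ℝ))]
    · rw [Finset.sum_const, Finset.card_product, nsmul_eq_mul]; push_cast; ring
    · intro p hp
      obtain ⟨_, _, h3, _⟩ := key ⟨m, p⟩ (Finset.mem_sigma.2 ⟨hm, hp⟩)
      have h4 : ((φ ⟨m, p⟩).1.1:ℝ)*(φ ⟨m, p⟩).1.2*((φ ⟨m, p⟩).2.1*(φ ⟨m, p⟩).2.2) = m := by exact_mod_cast h3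
      simp only [f]
      rw [← h4]
      simp only [one_div, mul_inv]
  have hmaps : ∀ x ∈ T, φ x ∈ (I ×ˢ I) ×ˢ (I ×ˢ I) := by
    intro x hx
    obtain ⟨_, _, h3, h4⟩ := key x hx
    rw [← h3] at h4
    simp only [I, Finset.mem_Icc] at h4
    have hne : (φ x).1.1*(φ x).1.2*((φ x).2.1*(φ x).2.2) ≠ 0 := by omega
    simp only [mul_ne_zero_iff] at hne
    obtain ⟨⟨n1, n2⟩, n3, n4⟩ := hne
    have hd : ∀ k, k ≠ 0 → k ∣ (φ x).1.1*(φ x).1.2*((φ x).2.1*(φ x).2.2) → k ∈ I := by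
      intro k hk hdvd
      exact Finset.mem_Icc.2 ⟨Nat.one_le_iff_ne_zero.2 hk, (Nat.le_of_dvd (by omega) hdvd).trans h4.2⟩
    simp only [Finset.mem_product]
    refine ⟨⟨hd _ n1 ?_, hd _ n2 ?_⟩, hd _ n3 ?_, hd _ n4 ?_⟩
    · exact (Dvd.intro _ rfl).trans (Dvd.intro _ rfl)
    · exact (Dvd.intro_left _ rfl).trans (Dvd.intro _ rfl)
    · exact (Dvd.intro _ rfl).trans (Dvd.intro_left _ rfl)
    · exact (Dvd.intro_left _ rfl).trans (Dvd.intro_left _ rfl)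
  rw [hL, ← Finset.sum_image hinj]
  calc _ ≤ ∑ y ∈ (I ×ˢ I) ×ˢ (I ×ˢ I), f y := by
        refine Finset.sum_le_sum_of_subset_of_nonneg ?_ fun y _ _ => by simp only [f]; positivity
        intro y hy
        obtain ⟨x, hx, rfl⟩ := Finset.mem_image.1 hy
        exact hmaps x hx
    _ = _ := by
        rw [Finset.sum_product]
        simp only [f, Finset.sum_product, ← Finset.mul_sum, ← Finset.sum_mul]
        ring

lemma sum_inv_Icc_le (M : ℕ) : ∑ n ∈ Finset.Icc 1 M, 1/(n:ℝ) ≤ 1 + Real.log M := by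
  have h := harmonic_le_one_add_log M
  rw [harmonic_eq_sum_Icc] at h
  push_cast at h
  simpa using h

/-- A large sieve type inequality: at logarithmic scale `d ≥ 1/m` only `O(dm)` integers interact with `m`. -/
lemma tent_meanSq {sA : Finset ℕ} (a : ℕ → ℝ) {d : ℝ} (hd : 0 < d) (hd1 : d ≤ 1) (hA : ∀ m ∈ sA, 1/d ≤ (m:ℝ)) :
    ∫ u : ℝ, (∑ m ∈ sA, a m/m * tent d (u - Real.log m))^2 ≤ 21 * ∑ m ∈ sA, (a m)^2/m := by
  have hpos : ∀ m ∈ sA, (0:ℝ) < m := fun m hm => lt_of_lt_of_le (by positivity) (hA m hm)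
  have hcount : ∀ u : ℝ, ∑ m ∈ sA, tent d (u - Real.log m)/m ≤ 21 := by
    intro u
    set s' := sA.filter (fun m : ℕ => |Real.log (m:ℝ) - u| < d) with hs'
    have e1 : ∑ m ∈ sA, tent d (u - Real.log m)/m = ∑ m ∈ s', tent d (u - Real.log m)/m := by
      rw [hs', Finset.sum_filter]
      refine Finset.sum_congr rfl fun m _ => ?_
      split_ifs with h
      · rfl
      · rw [tent_eq_zero hd, zero_div]
        rw [abs_sub_comm]; exact not_lt.1 h
    have e2 : (s'.card:ℝ) ≤ 4*d*exp u + 1 := by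
      refine count_log s' hd.le hd1 fun m hm => ?_
      rw [hs', Finset.mem_filter] at hm
      refine ⟨?_, hm.2.le⟩
      have := hpos m hm.1
      intro h; rw [h] at this; simp at this
    have hexp3 : exp d ≤ 3 := (exp_le_exp.2 hd1).trans (exp_one_lt_d9.le.trans (by norm_num))
    rw [e1]
    rcases s'.eq_empty_or_nonempty with h0 | ⟨m0, hm0⟩
    · rw [h0]; simp
    have e3 : 1 ≤ d*(3*exp u) := by
      rw [hs', Finset.mem_filter] at hm0
      have q1 := hA m0 hm0.1
      have q2 : (m0:ℝ) ≤ exp (u+d) := by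
        rw [← Real.log_le_iff_le_exp (hpos m0 hm0.1)]
        linarith [(abs_lt.1 hm0.2).2]
      rw [Real.exp_add] at q2
      rw [div_le_iff₀ hd] at q1
      nlinarith [exp_pos u, mul_le_mul_of_nonneg_left hexp3 (exp_pos u).le]
    have e4 : ∀ m ∈ s', tent d (u - Real.log m)/m ≤ 3*exp (-u)/d := by
      intro m hm
      rw [hs', Finset.mem_filter] at hm
      have hm0 := hpos m hm.1
      have q1 := tent_le hd (u - Real.log m)
      have q2 : exp (u-d) ≤ m := by
        rw [← Real.le_log_iff_exp_le hm0]; linarith [(abs_lt.1 hm.2).1]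
      have q3 : 1/(m:ℝ) ≤ 3*exp (-u) := by
        calc 1/(m:ℝ) ≤ 1/exp (u-d) := one_div_le_one_div_of_le (exp_pos _) q2
          _ = exp d * exp (-u) := by rw [one_div, ← Real.exp_neg, ← Real.exp_add]; congr 1; ring
          _ ≤ _ := by gcongr
      calc _ = tent d (u - Real.log m)*(1/m) := by ring
        _ ≤ (1/d)*(3*exp (-u)) := by gcongr
        _ = _ := by ring
    refine (Finset.sum_le_card_nsmul _ _ _ e4).trans ?_
    rw [nsmul_eq_mul]
    have e5 : (s'.card:ℝ) ≤ 7*d*exp u := by linarith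
    calc _ ≤ (7*d*exp u)*(3*exp (-u)/d) := by gcongr
      _ = 21*(exp u*exp (-u)) := by field_simp; norm_num
      _ = 21 := by rw [← Real.exp_add]; simp
      _ ≤ 21 := le_rfl
  have hitg : ∀ m : ℕ, Integrable fun u : ℝ => (a m)^2/m * tent d (u - Real.log m) := fun m =>
    ((integrable_tent hd).comp_sub_right _).const_mul _
  have hI : ∫ u : ℝ, 21 * ∑ m ∈ sA, (a m)^2/m * tent d (u - Real.log m) = 21 * ∑ m ∈ sA, (a m)^2/m := by
    rw [integral_const_mul, integral_finsetSum _ fun m _ => hitg m]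
    congr 1
    refine Finset.sum_congr rfl fun m _ => ?_
    rw [integral_const_mul, integral_sub_right_eq_self, integral_tent hd, mul_one]
  rw [← hI]
  refine integral_mono_of_nonneg (Filter.Eventually.of_forall fun u => sq_nonneg _)
    ((integrable_finsetSum _ fun m _ => hitg m).const_mul _) (Filter.Eventually.of_forall fun u => ?_)
  have hcs := Finset.sum_sq_le_sum_mul_sum_of_sq_le_mul sA (r := fun m => a m/m * tent d (u - Real.log m))
    (f := fun m => (a m)^2/m * tent d (u - Real.log m)) (g := fun m => tent d (u - Real.log m)/m)
    (fun m hm => by have := hpos m hm; have := tent_nonneg hd (u - Real.log m); positivity)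
    (fun m hm => by have := hpos m hm; have := tent_nonneg hd (u - Real.log m); positivity)
    (fun m hm => le_of_eq (by have := hpos m hm; field_simp))
  refine hcs.trans ?_
  rw [mul_comm]
  refine mul_le_mul_of_nonneg_right (hcount u) (Finset.sum_nonneg fun m hm => ?_)
  have := hpos m hm; have := tent_nonneg hd (u - Real.log m); positivity

/-! ### Type I sums -/

lemma log_succ_sub_bounds {k : ℕ} (hk : 1 ≤ k) :
    1/(k:ℝ) - 1/(k:ℝ)^2 ≤ Real.log ((k+1:ℕ):ℝ) - Real.log k ∧ Real.log ((k+1:ℕ):ℝ) - Real.log k ≤ 1/k := by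
  have hk0 : (0:ℝ) < k := by exact_mod_cast hk
  have hk1 : (0:ℝ) < ((k+1:ℕ):ℝ) := by positivity
  rw [← Real.log_div hk1.ne' hk0.ne']
  have e1 := Real.log_le_sub_one_of_pos (div_pos hk1 hk0)
  have e2 := Real.one_sub_inv_le_log_of_pos (div_pos hk1 hk0)
  constructor
  · refine le_trans ?_ e2
    rw [inv_div]
    push_cast
    have : 1 - (k:ℝ)/(k+1) = 1/(k+1) := by field_simp; ring
    rw [this, div_sub_div _ _ hk0.ne' (by positivity), div_le_div_iff₀ (by positivity) (by positivity)]
    nlinarith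
  · refine e1.trans (le_of_eq ?_)
    push_cast
    field_simp
    ring

/-- Euler–Maclaurin to first order for a Lipschitz weight supported on `|log k - v| < d`. -/
lemma sum_log_approx (G : ℝ → ℝ) {v d g0 g1 : ℝ} (hd : 0 < d) (hd1 : d ≤ 1/2) (hv : 1 ≤ v) (hdv : 4 ≤ d*exp v)
    (hg : ∀ z, |G z| ≤ g0) (hL : ∀ z z', |G z - G z'| ≤ g1*|z - z'|) (hsupp : ∀ z, d ≤ |z - v| → G z = 0)
    {M : ℕ} (hM : v + d ≤ Real.log M) :
    |∑ k ∈ Finset.Icc 1 M, G (Real.log k)/k - ∫ z, G z| ≤ 81*d*exp (-v)*(g0+g1) := by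
  have hg0 : 0 ≤ g0 := (abs_nonneg _).trans (hg 0)
  have hg1 : 0 ≤ g1 := by have := (abs_nonneg _).trans (hL 1 0); simpa using this
  have hGc : Continuous G := by
    have : LipschitzWith ⟨g1, hg1⟩ G := LipschitzWith.of_dist_le_mul fun x y => by
      rw [Real.dist_eq, Real.dist_eq]; exact hL x y
    exact this.continuous
  have hii : ∀ a b, IntervalIntegrable G volume a b := fun a b => hGc.intervalIntegrable a b
  have hlM : Real.log M ≤ Real.log ((M+1:ℕ):ℝ) := by
    rcases Nat.eq_zero_or_pos M with h | h
    · subst h; simp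
    · exact Real.log_le_log (by exact_mod_cast h) (by push_cast; linarith)
  have hitg : ∫ z, G z = ∑ k ∈ Finset.Icc 1 M, ∫ z in Real.log k..Real.log ((k+1:ℕ):ℝ), G z := by
    have h1 : Finset.Icc 1 M = Finset.Ico 1 (M+1) := by ext; simp
    rw [h1, intervalIntegral.sum_integral_adjacent_intervals_Ico (a := fun k : ℕ => Real.log k) (by omega) (fun k _ => hii _ _)]
    simp only [Nat.cast_one, Real.log_one]
    rw [intervalIntegral.integral_of_le (by linarith), setIntegral_eq_integral_of_forall_compl_eq_zero]
    intro z hz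
    refine hsupp z ?_
    by_contra h
    push Not at h
    rw [abs_lt] at h
    exact hz ⟨by linarith, by linarith⟩
  rw [hitg, ← Finset.sum_sub_distrib]
  set s' := (Finset.Icc 1 M).filter (fun k : ℕ => |Real.log (k:ℝ) - v| ≤ 2*d) with hs'
  have hexpv : 8 ≤ exp v := by nlinarith [exp_pos v]
  have hzero : ∀ k ∈ Finset.Icc 1 M, k ∉ s' → G (Real.log k)/k - ∫ z in Real.log k..Real.log ((k+1:ℕ):ℝ), G z = 0 := by
    intro k hk hks
    have hk1 : 1 ≤ k := (Finset.mem_Icc.1 hk).1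
    have hk0 : (0:ℝ) < k := by exact_mod_cast hk1
    have hks' : 2*d < |Real.log (k:ℝ) - v| := by
      by_contra h
      exact hks (Finset.mem_filter.2 ⟨hk, not_lt.1 h⟩)
    have hb := log_succ_sub_bounds hk1
    have hle : Real.log k ≤ Real.log ((k+1:ℕ):ℝ) := Real.log_le_log hk0 (by push_cast; linarith)
    have hfar : ∀ z ∈ Set.Icc (Real.log k) (Real.log ((k+1:ℕ):ℝ)), G z = 0 := by
      intro z hz
      refine hsupp z ?_
      by_contra h
      push Not at h
      rw [abs_lt] at h
      -- if `z` is in the support then `k` is of size `exp v`, so `1/k ≤ d`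
      have e1 : exp (v-d) ≤ ((k+1:ℕ):ℝ) := by
        rw [← Real.le_log_iff_exp_le (by positivity)]; linarith [hz.2]
      have e2 : exp v/2 ≤ exp (v-d) := by
        rw [sub_eq_add_neg, Real.exp_add]
        have := Real.add_one_le_exp (-d)
        nlinarith [exp_pos v]
      push_cast at e1
      have e3 : exp v/4 ≤ k := by linarith
      have e4 : 1/(k:ℝ) ≤ d := by
        rw [div_le_iff₀ hk0]
        nlinarith
      rw [lt_abs] at hks'
      rcases hks' with q | q
      · linarith [hz.1]
      · linarith [hz.2, hb.2]
    have h1 : G (Real.log k) = 0 := hfar _ ⟨le_rfl, hle⟩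
    have h2 : ∫ z in Real.log k..Real.log ((k+1:ℕ):ℝ), G z = 0 := by
      rw [intervalIntegral.integral_congr (g := fun _ => (0:ℝ))]
      · simp
      · intro z hz
        rw [Set.uIcc_of_le hle] at hz
        exact hfar z hz
    rw [h1, h2]; simp
  rw [← Finset.sum_subset (Finset.filter_subset _ _ : s' ⊆ Finset.Icc 1 M) hzero]
  have hterm : ∀ k ∈ s', |G (Real.log k)/k - ∫ z in Real.log k..Real.log ((k+1:ℕ):ℝ), G z| ≤ 9*exp (-v)^2*(g0+g1) := by
    intro k hk
    rw [hs', Finset.mem_filter] at hk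
    have hk1 : 1 ≤ k := (Finset.mem_Icc.1 hk.1).1
    have hk0 : (0:ℝ) < k := by exact_mod_cast hk1
    have hb := log_succ_sub_bounds hk1
    have hle : Real.log k ≤ Real.log ((k+1:ℕ):ℝ) := Real.log_le_log hk0 (by push_cast; linarith)
    set l := Real.log k with hl
    set l' := Real.log ((k+1:ℕ):ℝ) with hl'
    have e1 : G l/k - ∫ z in l..l', G z = G l*(1/k - (l'-l)) + ∫ z in l..l', (G l - G z) := by
      rw [intervalIntegral.integral_sub (by simp) (hii _ _)]
      simp; ring
    have e2 : |∫ z in l..l', (G l - G z)| ≤ (g1*(1/k))*|l'-l| := by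
      have := intervalIntegral.norm_integral_le_of_norm_le_const (a := l) (b := l') (f := fun z => G l - G z) (C := g1*(1/k)) (by
        intro z hz
        rw [Set.uIoc_of_le hle] at hz
        rw [Real.norm_eq_abs]
        refine (hL _ _).trans ?_
        have : |l - z| ≤ 1/k := by rw [abs_le]; constructor <;> linarith [hz.1, hz.2, hb.2]
        gcongr)
      simpa [Real.norm_eq_abs] using this
    have e3 : |l'-l| ≤ 1/k := by rw [abs_of_nonneg (by linarith)]; exact hb.2
    have e4 : |1/(k:ℝ) - (l'-l)| ≤ 1/(k:ℝ)^2 := by rw [abs_of_nonneg (by linarith [hb.2])]; linarith [hb.1]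
    have e5 : 1/(k:ℝ) ≤ 3*exp (-v) := by
      have q2 : exp (v-2*d) ≤ k := by
        rw [← Real.le_log_iff_exp_le hk0]; linarith [(abs_le.1 hk.2).1]
      have hexp3 : exp (2*d) ≤ 3 := (exp_le_exp.2 (by linarith)).trans (exp_one_lt_d9.le.trans (by norm_num))
      calc 1/(k:ℝ) ≤ 1/exp (v-2*d) := one_div_le_one_div_of_le (exp_pos _) q2
          _ = exp (2*d) * exp (-v) := by rw [one_div, ← Real.exp_neg, ← Real.exp_add]; congr 1; ring
          _ ≤ _ := by gcongr
    rw [e1]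
    calc _ ≤ |G l*(1/k - (l'-l))| + |∫ z in l..l', (G l - G z)| := abs_add_le _ _
      _ ≤ g0*(1/(k:ℝ)^2) + (g1*(1/k))*(1/k) := by
          rw [abs_mul]
          have := hg l
          refine add_le_add (by gcongr) (e2.trans (by gcongr))
      _ = (1/(k:ℝ))^2*(g0+g1) := by ring
      _ ≤ (3*exp (-v))^2*(g0+g1) := by gcongr
      _ = _ := by ring
  have hcard : (s'.card:ℝ) ≤ 9*d*exp v := by
    have := count_log s' (v := v) (r := 2*d) (by linarith) (by linarith) fun k hk => by
      rw [hs', Finset.mem_filter] at hk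
      exact ⟨Nat.one_le_iff_ne_zero.1 (Finset.mem_Icc.1 hk.1).1, hk.2⟩
    linarith
  refine (Finset.abs_sum_le_sum_abs _ _).trans ((Finset.sum_le_card_nsmul _ _ _ hterm).trans ?_)
  rw [nsmul_eq_mul]
  calc _ ≤ (9*d*exp v)*(9*exp (-v)^2*(g0+g1)) := by gcongr
    _ = 81*d*(exp v*exp (-v))*exp (-v)*(g0+g1) := by ring
    _ = _ := by rw [← Real.exp_add]; simp

lemma typeI_sum (h : ℝ → ℝ) (hh : ∀ z z', |h z - h z'| ≤ |z - z'|) {v d Q : ℝ} (hQ1 : 1 ≤ Q) (hd : 0 < d) (hd1 : d ≤ 1/2)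
    (hv : 1 ≤ v) (hdv : 4 ≤ d*exp v) (hQ : ∀ z, |z - v| ≤ d → |h z| ≤ Q) {M : ℕ} (hM : v + d ≤ Real.log M) :
    |∑ k ∈ Finset.Icc 1 M, h (Real.log k) * tent d (v - Real.log k)/k - ∫ z, h z * tent d (v - z)| ≤ 243*Q*exp (-v)/d := by
  have hz : ∀ z, d ≤ |z - v| → tent d (v - z) = 0 := fun z hz => tent_eq_zero hd (by rwa [abs_sub_comm])
  have hmain := sum_log_approx (fun z => h z * tent d (v - z)) (g0 := Q/d) (g1 := 2*Q/d^2) hd hd1 hv hdv ?_ ?_ ?_ hM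
  · refine hmain.trans ?_
    have e1 : Q/d + 2*Q/d^2 ≤ 3*Q/d^2 := by
      have : Q/d ≤ Q/d^2 := by
        refine div_le_div_of_nonneg_left (by linarith) (by positivity) ?_
        nlinarith
      calc _ ≤ Q/d^2+2*Q/d^2 := by gcongr
        _ = _ := by ring
    calc _ ≤ 81*d*exp (-v)*(3*Q/d^2) := by gcongr
      _ = _ := by field_simp; norm_num
  · intro z
    rcases le_or_gt d |z - v| with q | q
    · rw [hz z q]; simp; positivity
    · rw [abs_mul, abs_of_nonneg (tent_nonneg hd _)]
      have := hQ z q.le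
      have := tent_le hd (v - z)
      calc _ ≤ Q*(1/d) := by gcongr; exact tent_nonneg hd _
        _ = _ := by ring
  · have key : ∀ z z', |z - v| < d → |h z * tent d (v - z) - h z' * tent d (v - z')| ≤ 2*Q/d^2*|z - z'| := by
      intro z z' q
      have e1 : h z * tent d (v - z) - h z' * tent d (v - z') = h z*(tent d (v - z) - tent d (v - z')) + (h z - h z')*tent d (v - z') := by ring
      rw [e1]
      refine (abs_add_le _ _).trans ?_
      rw [abs_mul, abs_mul, abs_of_nonneg (tent_nonneg hd (v - z'))]
      have a1 := hQ z q.le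
      have a2 := tent_lip hd (v - z) (v - z')
      have a3 : |v - z - (v - z')| = |z - z'| := by rw [abs_sub_comm z]; congr 1; ring
      rw [a3] at a2
      have a4 := hh z z'
      have a5 := tent_le hd (v - z')
      have a6 : 1/d ≤ Q/d^2 := by
        refine (div_le_div_of_nonneg_left zero_le_one (by positivity) (show d^2 ≤ d by nlinarith)).trans ?_
        gcongr
      calc _ ≤ Q*(|z - z'|/d^2) + |z - z'| * (Q/d^2) := by
            refine add_le_add (by gcongr) ?_
            exact mul_le_mul a4 (a5.trans a6) (tent_nonneg hd _) (abs_nonneg _)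
        _ = _ := by ring
    intro z z'
    rcases lt_or_ge |z - v| d with q | q
    · exact key z z' q
    rcases lt_or_ge |z' - v| d with q' | q'
    · rw [abs_sub_comm (h z * _), abs_sub_comm z z']; exact key z' z q'
    simp only [hz z q, hz z' q', mul_zero, sub_zero, abs_zero]
    positivity
  · intro z q
    simp only [hz z q, mul_zero]

lemma integral_tent_sub {d : ℝ} (hd : 0 < d) (v : ℝ) : ∫ z, (1:ℝ) * tent d (v - z) = 1 := by
  simp only [one_mul]
  rw [integral_sub_left_eq_self (tent d), integral_tent hd]

lemma integral_id_tent_sub {d : ℝ} (hd : 0 < d) (v : ℝ) : ∫ z, z * tent d (v - z) = v := by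
  have h1 : ∫ z, z * tent d (v - z) = ∫ y, (v - y) * tent d y := by
    rw [← integral_sub_left_eq_self (fun y => (v - y) * tent d y) volume v]
    simp
  have hc : Integrable fun y => y * tent d y :=
    (continuous_id.mul (continuous_tent d)).integrable_of_hasCompactSupport (hasCompactSupport_tent hd).mul_left
  have h2 : ∫ y, y * tent d y = 0 := by
    have := integral_neg_eq_self (fun y => y * tent d y) volume
    simp only [tent_neg, neg_mul, integral_neg] at this
    linarith
  rw [h1]
  simp only [sub_mul]
  rw [integral_sub ((integrable_tent hd).const_mul v) hc, h2, integral_const_mul, integral_tent hd]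
  simp

end Mills

namespace Mills
open Finset MeasureTheory Real ArithmeticFunction

/-! ### Vaughan's identity -/

lemma conv_sum (p q : ArithmeticFunction ℝ) (M : ℕ) (φ : ℕ → ℝ) (hφ : ∀ N, M < N → φ N = 0) :
    ∑ N ∈ Finset.Icc 1 M, (p*q) N * φ N = ∑ m ∈ Finset.Icc 1 M, ∑ n ∈ Finset.Icc 1 M, p m * q n * φ (m*n) := by
  classical
  have h1 : ∀ N ∈ Finset.Icc 1 M, (p*q) N * φ N =
      ∑ x ∈ (Finset.Icc 1 M ×ˢ Finset.Icc 1 M).filter (fun x => x.1*x.2 = N), p x.1 * q x.2 * φ (x.1*x.2) := by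
    intro N hN
    rw [Finset.mem_Icc] at hN
    rw [ArithmeticFunction.mul_apply, Finset.sum_mul]
    have h2 : N.divisorsAntidiagonal = (Finset.Icc 1 M ×ˢ Finset.Icc 1 M).filter (fun x => x.1*x.2 = N) := by
      ext ⟨a, b⟩
      simp only [Nat.mem_divisorsAntidiagonal, Finset.mem_filter, Finset.mem_product, Finset.mem_Icc]
      constructor
      · rintro ⟨h, h0⟩
        have ha : a ≠ 0 := by rintro rfl; simp at h; omega
        have hb : b ≠ 0 := by rintro rfl; simp at h; omega
        refine ⟨⟨⟨by omega, ?_⟩, ⟨by omega, ?_⟩⟩, h⟩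
        · have := Nat.le_of_dvd (by omega) (Dvd.intro _ h); omega
        · have := Nat.le_of_dvd (by omega) (Dvd.intro_left _ h); omega
      · rintro ⟨_, h⟩
        exact ⟨h, by omega⟩
    rw [h2]
    refine Finset.sum_congr rfl fun x hx => ?_
    rw [(Finset.mem_filter.1 hx).2]
  rw [Finset.sum_congr rfl h1, ← Finset.sum_product']
  rw [← Finset.sum_filter_add_sum_filter_not (Finset.Icc 1 M ×ˢ Finset.Icc 1 M) (fun x => x.1*x.2 ≤ M)]
  rw [Finset.sum_eq_zero (s := (Finset.Icc 1 M ×ˢ Finset.Icc 1 M).filter (fun x => ¬ x.1*x.2 ≤ M)), add_zero]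
  · rw [← Finset.sum_fiberwise_of_maps_to (s := (Finset.Icc 1 M ×ˢ Finset.Icc 1 M).filter (fun x => x.1*x.2 ≤ M)) (t := Finset.Icc 1 M)
      (g := fun x : ℕ × ℕ => x.1*x.2) (by
      intro x hx
      simp only [Finset.mem_filter, Finset.mem_product, Finset.mem_Icc] at hx ⊢
      exact ⟨Nat.one_le_iff_ne_zero.2 (mul_ne_zero (by omega) (by omega)), hx.2⟩)]
    refine Finset.sum_congr rfl fun N hN => ?_
    rw [Finset.filter_filter]
    refine Finset.sum_congr ?_ fun _ _ => rfl
    ext x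
    simp only [Finset.mem_filter, Finset.mem_Icc] at hN ⊢
    constructor
    · rintro ⟨h, h'⟩; exact ⟨h, by omega, h'⟩
    · rintro ⟨h, _, h'⟩; exact ⟨h, h'⟩
  · intro x hx
    rw [Finset.mem_filter] at hx
    rw [hφ _ (not_le.1 hx.2), mul_zero]

/-- Vaughan's identity, in convolution form. -/
lemma vaughan_identity (g f : ArithmeticFunction ℝ) :
    (vonMangoldt : ArithmeticFunction ℝ) = f + g * ArithmeticFunction.log - g * f * ↑zeta + (((moebius : ArithmeticFunction ℝ) - g) * ↑zeta) * (vonMangoldt - f) := by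
  have h1 : (moebius : ArithmeticFunction ℝ) * (zeta : ArithmeticFunction ℝ) = 1 := coe_moebius_mul_coe_zeta
  have h2 := vonMangoldt_mul_zeta
  linear_combination (-1:ArithmeticFunction ℝ) * (vonMangoldt - f) * h1 + g * h2

lemma vaughan_sum (g f : ArithmeticFunction ℝ) (M : ℕ) (φ : ℕ → ℝ) (hφ : ∀ N, M < N → φ N = 0) :
    ∑ N ∈ Finset.Icc 1 M, vonMangoldt N * φ N = ∑ N ∈ Finset.Icc 1 M, f N * φ N +
      ∑ m ∈ Finset.Icc 1 M, ∑ n ∈ Finset.Icc 1 M, g m * Real.log n * φ (m*n) -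
      ∑ m ∈ Finset.Icc 1 M, ∑ n ∈ Finset.Icc 1 M, (g*f) m * 1 * φ (m*n) +
      ∑ m ∈ Finset.Icc 1 M, ∑ n ∈ Finset.Icc 1 M,
        (((moebius : ArithmeticFunction ℝ) - g) * ↑zeta) m * (vonMangoldt n - f n) * φ (m*n) := by
  have h1 := conv_sum g ArithmeticFunction.log M φ hφ
  have h2 := conv_sum (g*f) zeta M φ hφ
  have h3 := conv_sum (((moebius : ArithmeticFunction ℝ) - g) * ↑zeta) (vonMangoldt - f) M φ hφ
  have e2 : ∑ m ∈ Finset.Icc 1 M, ∑ n ∈ Finset.Icc 1 M, (g*f) m * (zeta : ArithmeticFunction ℝ) n * φ (m*n) =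
      ∑ m ∈ Finset.Icc 1 M, ∑ n ∈ Finset.Icc 1 M, (g*f) m * 1 * φ (m*n) := by
    refine Finset.sum_congr rfl fun m _ => Finset.sum_congr rfl fun n hn => ?_
    have : n ≠ 0 := Nat.one_le_iff_ne_zero.1 (Finset.mem_Icc.1 hn).1
    simp [natCoe_apply, zeta_apply, this]
  have e1 : ∀ n : ℕ, (ArithmeticFunction.log : ArithmeticFunction ℝ) n = Real.log n := fun n => ArithmeticFunction.log_apply
  have e3 : ∀ n : ℕ, (vonMangoldt - f) n = vonMangoldt n - f n := fun n => rfl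
  simp only [e1] at h1
  simp only [e3] at h3
  rw [← h1, ← e2, ← h2, ← h3, ← Finset.sum_add_distrib, ← Finset.sum_sub_distrib, ← Finset.sum_add_distrib]
  refine Finset.sum_congr rfl fun N _ => ?_
  have h4 : (vonMangoldt : ArithmeticFunction ℝ) N = _ := congrArg (fun F : ArithmeticFunction ℝ => F N) (vaughan_identity g f)
  rw [h4]
  have h5 : (f + g * ArithmeticFunction.log - g * f * ↑zeta + (((moebius : ArithmeticFunction ℝ) - g) * ↑zeta) * (vonMangoldt - f)) N =
      f N + (g * ArithmeticFunction.log) N - (g * f * ↑zeta) N + ((((moebius : ArithmeticFunction ℝ) - g) * ↑zeta) * (vonMangoldt - f)) N := rfl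
  simp only [h5]
  ring

lemma typeI_total (p : ℕ → ℝ) (h : ℝ → ℝ) (I : ℝ → ℝ) (hh : ∀ z z', |h z - h z'| ≤ |z - z'|) {u δ Δ Q P Lm : ℝ}
    (hI : ∀ d, 0 < d → ∀ v, ∫ z, h z * tent d (v - z) = I v)
    (hQ1 : 1 ≤ Q) (hδ : 0 < δ) (hδΔ : δ ≤ Δ) (hΔ : Δ ≤ 1/2) (hL1 : 1 ≤ Lm) (hp : ∀ l : ℕ, Lm < (l:ℝ) → p l = 0) (hP : ∀ l : ℕ, (l:ℝ) ≤ Lm → |p l| ≤ P)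
    (hLu : Real.log Lm + 1 ≤ u) (hLδ : 4*Lm ≤ δ*exp u) (hQ : ∀ z, 0 ≤ z → z ≤ u + 1 → |h z| ≤ Q)
    {M : ℕ} (hM : u + Δ ≤ Real.log M) :
    |∑ l ∈ Finset.Icc 1 M, ∑ k ∈ Finset.Icc 1 M, p l * h (Real.log k) *
      ((tent δ (u - Real.log ((l*k:ℕ):ℝ)) - tent Δ (u - Real.log ((l*k:ℕ):ℝ)))/((l*k:ℕ):ℝ))| ≤ P*Lm*(486*Q*exp (-u)/δ) := by
  have hΔ0 : 0 < Δ := hδ.trans_le hδΔ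
  have hP0 : 0 ≤ P := (abs_nonneg _).trans (hP 0 (by simp; linarith))
  have hterm : ∀ l ∈ Finset.Icc 1 M, |∑ k ∈ Finset.Icc 1 M, p l * h (Real.log k) *
      ((tent δ (u - Real.log ((l*k:ℕ):ℝ)) - tent Δ (u - Real.log ((l*k:ℕ):ℝ)))/((l*k:ℕ):ℝ))| ≤ if (l:ℝ) ≤ Lm then P*(486*Q*exp (-u)/δ) else 0 := by
    intro l hl
    split_ifs with hlL
    · have hl0 : (0:ℝ) < l := by exact_mod_cast (Finset.mem_Icc.1 hl).1
      have hl1 : (1:ℝ) ≤ l := by exact_mod_cast (Finset.mem_Icc.1 hl).1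
      set v := u - Real.log l with hv
      have hll : Real.log l ≤ Real.log Lm := Real.log_le_log hl0 hlL
      have hl00 : 0 ≤ Real.log l := Real.log_nonneg hl1
      have hexp : exp (-v) = l*exp (-u) := by
        rw [hv, show -(u - Real.log l) = Real.log l + -u by ring, Real.exp_add, Real.exp_log hl0]
      have hexp' : exp v = exp u/l := by rw [hv, Real.exp_sub, Real.exp_log hl0]
      have h4 : 4 ≤ δ*exp v := by
        rw [hexp', ← mul_div_assoc, le_div_iff₀ hl0]; linarith
      have key : ∀ d, δ ≤ d → d ≤ Δ →
          |∑ k ∈ Finset.Icc 1 M, h (Real.log k) * tent d (v - Real.log k)/k - I v| ≤ 243*Q*exp (-v)/δ := by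
        intro d hd1 hd2
        have hd : 0 < d := hδ.trans_le hd1
        have := typeI_sum h hh (v := v) (d := d) (Q := Q) hQ1 hd (hd2.trans hΔ) (by linarith)
          (h4.trans (by gcongr)) (fun z hz => hQ z (by linarith [(abs_le.1 hz).1]) (by linarith [(abs_le.1 hz).2])) (M := M) (by linarith)
        rw [hI d hd v] at this
        refine this.trans ?_
        gcongr
      have e1 := key δ le_rfl hδΔ
      have e2 := key Δ hδΔ le_rfl
      have e3 : ∑ k ∈ Finset.Icc 1 M, p l * h (Real.log k) *
          ((tent δ (u - Real.log ((l*k:ℕ):ℝ)) - tent Δ (u - Real.log ((l*k:ℕ):ℝ)))/((l*k:ℕ):ℝ)) =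
          p l/l * (∑ k ∈ Finset.Icc 1 M, h (Real.log k) * tent δ (v - Real.log k)/k - ∑ k ∈ Finset.Icc 1 M, h (Real.log k) * tent Δ (v - Real.log k)/k) := by
        rw [← Finset.sum_sub_distrib, Finset.mul_sum]
        refine Finset.sum_congr rfl fun k hk => ?_
        have hk0 : (0:ℝ) < k := by exact_mod_cast (Finset.mem_Icc.1 hk).1
        have : u - Real.log ((l*k:ℕ):ℝ) = v - Real.log k := by
          push_cast; rw [Real.log_mul hl0.ne' hk0.ne', hv]; ring
        rw [this]
        push_cast
        field_simp
      rw [e3, abs_mul, abs_div, abs_of_pos hl0]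
      have e4 : |∑ k ∈ Finset.Icc 1 M, h (Real.log k) * tent δ (v - Real.log k)/k - ∑ k ∈ Finset.Icc 1 M, h (Real.log k) * tent Δ (v - Real.log k)/k| ≤ 486*Q*(l*exp (-u))/δ := by
        rw [← hexp]
        have := abs_sub_le (∑ k ∈ Finset.Icc 1 M, h (Real.log k) * tent δ (v - Real.log k)/k) (I v) (∑ k ∈ Finset.Icc 1 M, h (Real.log k) * tent Δ (v - Real.log k)/k)
        rw [abs_sub_comm (I v)] at this
        refine this.trans ((add_le_add e1 e2).trans (le_of_eq ?_))
        ring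
      calc _ ≤ P/l*(486*Q*(l*exp (-u))/δ) := by gcongr; exact hP l hlL
        _ = _ := by field_simp
    · rw [hp l (not_le.1 hlL)]; simp
  refine (Finset.abs_sum_le_sum_abs _ _).trans ((Finset.sum_le_sum hterm).trans ?_)
  rw [← Finset.sum_filter, Finset.sum_const, nsmul_eq_mul]
  have hc : (((Finset.Icc 1 M).filter (fun l : ℕ => (l:ℝ) ≤ Lm)).card:ℝ) ≤ Lm := by
    have hsub : (Finset.Icc 1 M).filter (fun l : ℕ => (l:ℝ) ≤ Lm) ⊆ Finset.Icc 1 ⌊Lm⌋₊ := by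
      intro l hl
      rw [Finset.mem_filter, Finset.mem_Icc] at hl
      exact Finset.mem_Icc.2 ⟨hl.1.1, Nat.le_floor hl.2⟩
    have := Finset.card_le_card hsub
    rw [Nat.card_Icc, Nat.add_sub_cancel] at this
    exact (show (_:ℝ) ≤ (⌊Lm⌋₊:ℝ) by exact_mod_cast this).trans (Nat.floor_le (by linarith))
  have hx : 0 ≤ P*(486*Q*exp (-u)/δ) := by positivity
  calc _ ≤ Lm*(P*(486*Q*exp (-u)/δ)) := by gcongr
    _ = _ := by ring

lemma dsum_hinge {ι : Type} [Fintype ι] (c L : ι → ℝ) (ξ : ℝ) {M : ℕ} (hM : ∀ i, L i ≤ Real.log M) :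
    dsum (Finset.Icc 1 M) (fun n => vonMangoldt n * (∑ i, c i * hinge (L i) (Real.log n)) / n) (fun n => Real.log n) ξ =
      ∑ i, (c i:ℂ) * hingeErr (L i) ξ + ∑ i, (c i:ℂ) * ∫ v : ℝ in Set.Ioi 0, (hinge (L i) v : ℂ) * ech ξ v := by
  rw [← Finset.sum_add_distrib]
  have h1 : ∀ i, (c i:ℂ) * hingeErr (L i) ξ + (c i:ℂ) * ∫ v : ℝ in Set.Ioi 0, (hinge (L i) v : ℂ) * ech ξ v =
      ∑ n ∈ Finset.Icc 1 M, (c i:ℂ) * (((vonMangoldt n / n * hinge (L i) (Real.log n) : ℝ):ℂ) * ech ξ (Real.log n)) := by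
    intro i
    rw [← mul_add, ← Finset.mul_sum]
    congr 1
    unfold hingeErr
    rw [sub_add_cancel]
    refine tsum_eq_sum fun n hn => ?_
    rcases Nat.eq_zero_or_pos n with h0 | h0
    · subst h0; simp
    · have hMn : M < n := by
        by_contra h
        exact hn (Finset.mem_Icc.2 ⟨h0, not_lt.1 h⟩)
      have hz : hinge (L i) (Real.log n) = 0 := by
        unfold hinge
        rw [max_eq_right]
        have hle : Real.log M ≤ Real.log n := by
          rcases Nat.eq_zero_or_pos M with hM0 | hM0
          · subst hM0; simp; exact Real.log_nonneg (by exact_mod_cast h0)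
          · exact Real.log_le_log (by exact_mod_cast hM0) (by exact_mod_cast hMn.le)
        linarith [hM i]
      rw [hz]; simp
  rw [Finset.sum_congr rfl fun i _ => h1 i, Finset.sum_comm]
  unfold dsum
  refine Finset.sum_congr rfl fun n _ => ?_
  push_cast
  rw [mul_comm, mul_div_right_comm, Finset.mul_sum, Finset.mul_sum]
  refine Finset.sum_congr rfl fun i _ => ?_
  ring

/-- Continuous cut-off in the logarithmic variable: `1` up to `ℓ/8`, `0` beyond `ℓ/4`, linear between. -/
noncomputable def cut (ℓ v : ℝ) : ℝ := 8/ℓ*hinge (ℓ/4) v - 8/ℓ*hinge (ℓ/8) v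

/-- The Möbius function restricted to `n ≤ exp (3ℓ/2)`. -/
noncomputable def muCut (ℓ : ℝ) : ArithmeticFunction ℝ :=
  ⟨fun n => if (n:ℝ) ≤ exp (3/2*ℓ) then ((moebius n : ℤ) : ℝ) else 0, by simp⟩

/-- The von Mangoldt function weighted by `cut`. -/
noncomputable def lamCut (ℓ : ℝ) : ArithmeticFunction ℝ :=
  ⟨fun n => vonMangoldt n * cut ℓ (Real.log n), by simp⟩

/-- The long factor `(μ - μ_{≤U}) * 1` of the bilinear part of Vaughan's identity. -/
noncomputable def longA (ℓ : ℝ) : ArithmeticFunction ℝ :=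
  ((moebius : ArithmeticFunction ℝ) - muCut ℓ) * ↑zeta

/-- Coefficients of the trapezoid `(hinge 5ℓ - hinge 4ℓ)/ℓ - cut`. -/
noncomputable def trapC (ℓ : ℝ) : Fin 4 → ℝ := ![1/ℓ, -(1/ℓ), -(8/ℓ), 8/ℓ]
/-- Nodes of the trapezoid `(hinge 5ℓ - hinge 4ℓ)/ℓ - cut`. -/
noncomputable def trapL (ℓ : ℝ) : Fin 4 → ℝ := ![5*ℓ, 4*ℓ, ℓ/4, ℓ/8]

/-- The smooth factor of the bilinear part: von Mangoldt weighted by a trapezoid in `log n`. -/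
noncomputable def longB (ℓ : ℝ) (n : ℕ) : ℝ := vonMangoldt n * ∑ i, trapC ℓ i * hinge (trapL ℓ i) (Real.log n)

/-- Support of `longA` below `M`. -/
noncomputable def suppA (ℓ : ℝ) (M : ℕ) : Finset ℕ := (Finset.Icc 1 M).filter (fun m : ℕ => exp (3/2*ℓ) < (m:ℝ))

/-- The bilinear part of Vaughan's identity, smoothed at scale `δ` minus scale `Δ`. -/
noncomputable def bilin (ℓ : ℝ) (M : ℕ) (δ Δ u : ℝ) : ℝ :=
  ∑ m ∈ suppA ℓ M, ∑ n ∈ Finset.Icc 1 M, longA ℓ m / m * (longB ℓ n / n) *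
    (tent δ (u - (Real.log m + Real.log n)) - tent Δ (u - (Real.log m + Real.log n)))

/-- The von Mangoldt function averaged against a tent of width `d` around `u` in the logarithmic variable. -/
noncomputable def psiAvg (M : ℕ) (d u : ℝ) : ℝ := ∑ N ∈ Finset.Icc 1 M, vonMangoldt N / N * tent d (u - Real.log N)

lemma cut_eq_zero {ℓ v : ℝ} (hℓ : 0 < ℓ) (hv : ℓ/4 ≤ v) : cut ℓ v = 0 := by
  unfold cut hinge
  rw [max_eq_right (by linarith), max_eq_right (by linarith)]; simp

lemma cut_mem {ℓ v : ℝ} (hℓ : 0 < ℓ) : 0 ≤ cut ℓ v ∧ cut ℓ v ≤ 1 := by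
  have h : cut ℓ v = (hinge (ℓ/4) v - hinge (ℓ/8) v)/(ℓ/8) := by unfold cut; field_simp
  rw [h, div_le_one (by positivity)]
  unfold hinge
  constructor
  · apply div_nonneg _ (by positivity)
    rw [sub_nonneg]
    exact max_le_max (by linarith) le_rfl
  · rcases le_total (ℓ/4 - v) 0 with h | h
    · rw [max_eq_right h, max_eq_right (by linarith)]; linarith
    · rw [max_eq_left h]; linarith [le_max_left (ℓ/8 - v) 0]

lemma muCut_apply (ℓ : ℝ) (n : ℕ) : muCut ℓ n = if (n:ℝ) ≤ exp (3/2*ℓ) then ((moebius n : ℤ) : ℝ) else 0 := rfl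
lemma lamCut_apply (ℓ : ℝ) (n : ℕ) : lamCut ℓ n = vonMangoldt n * cut ℓ (Real.log n) := rfl

lemma abs_moebius_real_le (n : ℕ) : |((moebius n : ℤ) : ℝ)| ≤ 1 := by
  have := abs_moebius_le_one (n := n)
  exact_mod_cast this

lemma abs_muCut_le (ℓ : ℝ) (n : ℕ) : |muCut ℓ n| ≤ 1 := by
  rw [muCut_apply]
  split_ifs
  · exact abs_moebius_real_le n
  · simp

lemma mul_cut_zero {ℓ : ℝ} (hℓ : 0 < ℓ) (l : ℕ) (hl : exp (7/4*ℓ) < (l:ℝ)) : (muCut ℓ * lamCut ℓ) l = 0 := by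
  rw [ArithmeticFunction.mul_apply]
  refine Finset.sum_eq_zero fun x hx => ?_
  obtain ⟨hx1, hx2⟩ := Nat.mem_divisorsAntidiagonal.1 hx
  rw [muCut_apply, lamCut_apply]
  split_ifs with h
  · have hb : (0:ℝ) < x.2 := by
      rcases Nat.eq_zero_or_pos x.2 with h0 | h0
      · rw [h0] at hx1; omega
      · exact_mod_cast h0
    rw [cut_eq_zero hℓ, mul_zero, mul_zero]
    by_contra hc
    push Not at hc
    have h3 : (x.2:ℝ) < exp (ℓ/4) := by rwa [← Real.log_lt_iff_lt_exp hb]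
    have h4 : (l:ℝ) = x.1*x.2 := by rw [← hx1]; push_cast; rfl
    have h5 : (x.1:ℝ)*x.2 ≤ exp (3/2*ℓ)*exp (ℓ/4) := by gcongr
    rw [← Real.exp_add, show 3/2*ℓ + ℓ/4 = 7/4*ℓ by ring] at h5
    linarith
  · simp

lemma abs_mul_cut_le {ℓ : ℝ} (hℓ : 0 < ℓ) (l : ℕ) : |(muCut ℓ * lamCut ℓ) l| ≤ Real.log l := by
  rw [ArithmeticFunction.mul_apply]
  refine (Finset.abs_sum_le_sum_abs _ _).trans ?_
  rw [← vonMangoldt_sum (n := l), ← Nat.sum_divisorsAntidiagonal' (f := fun _ b => vonMangoldt b)]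
  refine Finset.sum_le_sum fun x _ => ?_
  rw [abs_mul, lamCut_apply, abs_mul, abs_of_nonneg (vonMangoldt_nonneg), abs_of_nonneg (cut_mem hℓ).1]
  have h1 := abs_muCut_le ℓ x.1
  have h2 := (cut_mem hℓ (v := Real.log x.2)).2
  have h3 := (cut_mem hℓ (v := Real.log x.2)).1
  have h4 : 0 ≤ vonMangoldt x.2 := vonMangoldt_nonneg
  calc _ ≤ 1*(vonMangoldt x.2*1) := by gcongr
    _ = _ := by ring

lemma sub_muCut (ℓ : ℝ) (n : ℕ) : ((moebius : ArithmeticFunction ℝ) - muCut ℓ) n = if (n:ℝ) ≤ exp (3/2*ℓ) then 0 else ((moebius n : ℤ) : ℝ) := by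
  have : ((moebius : ArithmeticFunction ℝ) - muCut ℓ) n = ((moebius n : ℤ):ℝ) - muCut ℓ n := rfl
  rw [this, muCut_apply]
  split_ifs <;> simp

lemma longA_zero (ℓ : ℝ) (m : ℕ) (hm : (m:ℝ) ≤ exp (3/2*ℓ)) : longA ℓ m = 0 := by
  unfold longA
  rw [ArithmeticFunction.mul_apply]
  refine Finset.sum_eq_zero fun x hx => ?_
  obtain ⟨hx1, hx2⟩ := Nat.mem_divisorsAntidiagonal.1 hx
  rw [sub_muCut, if_pos, zero_mul]
  refine le_trans ?_ hm
  exact_mod_cast Nat.le_of_dvd (Nat.pos_of_ne_zero hx2) (Dvd.intro _ hx1)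

lemma abs_longA_le (ℓ : ℝ) (m : ℕ) : |longA ℓ m| ≤ m.divisors.card := by
  unfold longA
  rw [ArithmeticFunction.mul_apply]
  refine (Finset.abs_sum_le_sum_abs _ _).trans ?_
  have : (m.divisors.card:ℝ) = ∑ x ∈ m.divisorsAntidiagonal, 1 := by
    rw [Nat.sum_divisorsAntidiagonal (f := fun _ _ => (1:ℝ))]; simp
  rw [this]
  refine Finset.sum_le_sum fun x _ => ?_
  rw [abs_mul, sub_muCut]
  have h1 : |if (x.1:ℝ) ≤ exp (3/2*ℓ) then (0:ℝ) else ((moebius x.1 : ℤ) : ℝ)| ≤ 1 := by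
    split_ifs
    · simp
    · exact abs_moebius_real_le _
  have h2 : |(zeta : ArithmeticFunction ℝ) x.2| ≤ 1 := by
    rw [natCoe_apply, zeta_apply]
    split_ifs <;> simp
  calc _ ≤ (1:ℝ)*1 := by gcongr
    _ = 1 := by ring

lemma longB_eq {ℓ : ℝ} (hℓ : 0 < ℓ) (n : ℕ) (hn : Real.log n ≤ 4*ℓ) : longB ℓ n = vonMangoldt n - lamCut ℓ n := by
  unfold longB
  rw [lamCut_apply, Fin.sum_univ_four]
  simp only [trapC, trapL, Matrix.cons_val]
  have h1 : hinge (5*ℓ) (Real.log n) = 5*ℓ - Real.log n := max_eq_left (by linarith)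
  have h2 : hinge (4*ℓ) (Real.log n) = 4*ℓ - Real.log n := max_eq_left (by linarith)
  rw [h1, h2]
  unfold cut
  field_simp
  ring

/-- Up to the negligible type I terms, the difference of the two averages of `Λ` is the bilinear part. -/
lemma vaughan_point {ℓ u Δ : ℝ} {M : ℕ} (hℓ : 100 ≤ ℓ) (hu : 3*ℓ ≤ u) (hu3 : u ≤ 3*ℓ+3) (hΔ : exp (-ℓ)/4 ≤ Δ) (hΔ1 : Δ ≤ 1/2)
    (hM : 5*ℓ ≤ Real.log M) :
    |psiAvg M (exp (-ℓ)/4) u - psiAvg M Δ u - bilin ℓ M (exp (-ℓ)/4) Δ u| ≤ 12000*ℓ*exp (-(ℓ/4)) := by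
  have hℓ0 : 0 < ℓ := by linarith
  set δ := exp (-ℓ)/4 with hδ
  have hδ0 : 0 < δ := by positivity
  have hΔ0 : 0 < Δ := hδ0.trans_le hΔ
  set φ : ℕ → ℝ := fun N => (tent δ (u - Real.log (N:ℝ)) - tent Δ (u - Real.log (N:ℝ)))/(N:ℝ) with hφ
  have htz : ∀ z : ℝ, 1/2 ≤ |u - z| → tent δ (u - z) - tent Δ (u - z) = 0 := by
    intro z hz
    rw [tent_eq_zero hδ0 (by linarith), tent_eq_zero hΔ0 (by linarith), sub_zero]
  have hMpos : 0 < M := by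
    rcases Nat.eq_zero_or_pos M with h | h
    · subst h; simp at hM; linarith
    · exact h
  have hφM : ∀ N, M < N → φ N = 0 := by
    intro N hN
    have : Real.log M ≤ Real.log N := Real.log_le_log (by exact_mod_cast hMpos) (by exact_mod_cast hN.le)
    rw [hφ]
    simp only
    rw [htz _ (by rw [abs_sub_comm]; exact le_trans (by linarith) (le_abs_self _)), zero_div]
  have hV := vaughan_sum (muCut ℓ) (lamCut ℓ) M φ hφM
  have e0 : ∑ N ∈ Finset.Icc 1 M, vonMangoldt N * φ N = psiAvg M δ u - psiAvg M Δ u := by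
    unfold psiAvg
    rw [← Finset.sum_sub_distrib]
    refine Finset.sum_congr rfl fun N _ => ?_
    rw [hφ]; ring
  have e1 : ∑ N ∈ Finset.Icc 1 M, lamCut ℓ N * φ N = 0 := by
    refine Finset.sum_eq_zero fun N _ => ?_
    rcases le_total (ℓ/4) (Real.log N) with h | h
    · rw [lamCut_apply, cut_eq_zero hℓ0 h]; simp
    · rw [hφ]; simp only
      rw [htz _ (le_trans (by linarith) (le_abs_self _))]; simp
  have e2 : ∑ m ∈ Finset.Icc 1 M, ∑ n ∈ Finset.Icc 1 M, longA ℓ m * (vonMangoldt n - lamCut ℓ n) * φ (m*n) = bilin ℓ M δ Δ u := by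
    unfold bilin suppA
    rw [Finset.sum_filter]
    refine Finset.sum_congr rfl fun m hm => ?_
    have hm0 : (0:ℝ) < m := by exact_mod_cast (Finset.mem_Icc.1 hm).1
    have hm1 : (1:ℝ) ≤ m := by exact_mod_cast (Finset.mem_Icc.1 hm).1
    split_ifs with hmU
    · refine Finset.sum_congr rfl fun n hn => ?_
      have hn0 : (0:ℝ) < n := by exact_mod_cast (Finset.mem_Icc.1 hn).1
      have hlog : Real.log ((m*n:ℕ):ℝ) = Real.log m + Real.log n := by
        push_cast; rw [Real.log_mul hm0.ne' hn0.ne']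
      rw [hφ]
      simp only
      rw [hlog]
      rcases le_total (Real.log n) (4*ℓ) with h | h
      · rw [longB_eq hℓ0 n h]
        push_cast
        field_simp
      · rw [htz _ (by rw [abs_sub_comm]; exact le_trans (by linarith [Real.log_nonneg hm1]) (le_abs_self _))]
        simp
    · rw [longA_zero ℓ m (not_lt.1 hmU)]; simp
  have hexpu : exp (-u) ≤ exp (-(3*ℓ)) := exp_le_exp.2 (by linarith)
  have hdiv : exp (-(3*ℓ))/δ = 4*exp (-(2*ℓ)) := by
    rw [hδ, show -(2*ℓ) = -(3*ℓ) - -ℓ by ring, Real.exp_sub]; field_simp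
  have hdu : exp (2*ℓ)/4 ≤ δ*exp u := by
    calc exp (2*ℓ)/4 = δ*exp (3*ℓ) := by rw [hδ, show 2*ℓ = -ℓ+3*ℓ by ring, Real.exp_add]; ring
      _ ≤ _ := by gcongr
  have h16 : 16 ≤ exp (ℓ/4) := by
    have := Real.add_one_le_exp (ℓ/4); linarith
  have i1 := typeI_total (fun m => muCut ℓ m) (fun z => z) (fun v => v) (fun z z' => le_rfl) (u := u) (δ := δ) (Δ := Δ)
    (Q := u+1) (P := 1) (Lm := exp (3/2*ℓ)) (fun d hd v => integral_id_tent_sub hd v) (by linarith) hδ0 hΔ hΔ1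
    (Real.one_le_exp (by linarith)) (fun l hl => by simp only [muCut_apply]; rw [if_neg (not_le.2 hl)]) (fun l _ => abs_muCut_le ℓ l)
    (by rw [Real.log_exp]; linarith) (by
      refine le_trans ?_ hdu
      rw [show 2*ℓ = 3/2*ℓ + ℓ/4 + ℓ/4 by ring, Real.exp_add, Real.exp_add]
      nlinarith [exp_pos (3/2*ℓ), mul_le_mul h16 h16 (by norm_num) (exp_pos _).le])
    (fun z hz hz' => by rw [abs_of_nonneg hz]; exact hz') (M := M) (by linarith)
  have i2 := typeI_total (fun m => (muCut ℓ * lamCut ℓ) m) (fun _ => 1) (fun _ => 1) (fun z z' => by simp) (u := u) (δ := δ) (Δ := Δ)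
    (Q := 1) (P := 2*ℓ) (Lm := exp (7/4*ℓ)) (fun d hd v => integral_tent_sub hd v) le_rfl hδ0 hΔ hΔ1
    (Real.one_le_exp (by linarith)) (fun l hl => mul_cut_zero hℓ0 l hl) (fun l hl => (abs_mul_cut_le hℓ0 l).trans (by
      rcases Nat.eq_zero_or_pos l with h | h
      · subst h; simp; linarith
      · have := Real.log_le_log (by exact_mod_cast h) hl
        rw [Real.log_exp] at this; linarith))
    (by rw [Real.log_exp]; linarith) (by
      refine le_trans ?_ hdu
      rw [show 2*ℓ = 7/4*ℓ + ℓ/4 by ring, Real.exp_add]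
      nlinarith [exp_pos (7/4*ℓ), mul_le_mul_of_nonneg_left h16 (exp_pos (7/4*ℓ)).le])
    (fun z hz hz' => by simp) (M := M) (by linarith)
  have hlong : (((moebius : ArithmeticFunction ℝ) - muCut ℓ) * ↑zeta) = longA ℓ := rfl
  rw [hlong, e0, e1, e2] at hV
  have b1 : 1*exp (3/2*ℓ)*(486*(u+1)*exp (-u)/δ) ≤ 8000*ℓ*exp (-(ℓ/4)) := by
    calc _ ≤ 1*exp (3/2*ℓ)*(486*(4*ℓ)*exp (-(3*ℓ))/δ) := by gcongr; linarith
      _ = 486*(4*ℓ)*exp (3/2*ℓ)*(exp (-(3*ℓ))/δ) := by ring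
      _ = 7776*ℓ*(exp (3/2*ℓ)*exp (-(2*ℓ))) := by rw [hdiv]; ring
      _ = 7776*ℓ*exp (3/2*ℓ + -(2*ℓ)) := by rw [Real.exp_add]
      _ ≤ 8000*ℓ*exp (-(ℓ/4)) := by gcongr <;> linarith
  have b2 : 2*ℓ*exp (7/4*ℓ)*(486*1*exp (-u)/δ) ≤ 4000*ℓ*exp (-(ℓ/4)) := by
    calc _ ≤ 2*ℓ*exp (7/4*ℓ)*(486*1*exp (-(3*ℓ))/δ) := by gcongr
      _ = 972*ℓ*exp (7/4*ℓ)*(exp (-(3*ℓ))/δ) := by ring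
      _ = 3888*ℓ*(exp (7/4*ℓ)*exp (-(2*ℓ))) := by rw [hdiv]; ring
      _ = 3888*ℓ*exp (7/4*ℓ + -(2*ℓ)) := by rw [Real.exp_add]
      _ ≤ 4000*ℓ*exp (-(ℓ/4)) := by gcongr <;> linarith
  have j1 := i1.trans b1
  have j2 := i2.trans b2
  rw [hV]
  refine le_trans (le_of_eq ?_) ((abs_sub _ _).trans ((add_le_add j1 j2).trans (by linarith)))
  congr 1
  rw [hφ]
  ring

/-! ### Primes between almost all consecutive cubes -/

lemma trapC_sum {ℓ : ℝ} (hℓ : 0 < ℓ) : ∑ i, trapC ℓ i = 0 ∧ ∑ i, trapC ℓ i * trapL ℓ i = 0 ∧ ∑ i, |trapC ℓ i| = 18/ℓ := by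
  simp only [Fin.sum_univ_four, trapC, trapL, Matrix.cons_val]
  have h1 : 0 < 1/ℓ := by positivity
  have h8 : 0 < 8/ℓ := by positivity
  refine ⟨by ring, by field_simp; ring, ?_⟩
  rw [abs_neg, abs_neg, abs_of_pos h1, abs_of_pos h8]
  ring

lemma abs_longB_le {ℓ : ℝ} (hℓ : 0 < ℓ) {n : ℕ} (hn : 1 ≤ n) : |longB ℓ n| ≤ 12*Real.log n := by
  have hlog : 0 ≤ Real.log n := Real.log_nonneg (by exact_mod_cast hn)
  have hh : ∀ L, 0 ≤ L → |hinge L (Real.log n)| ≤ L := by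
    intro L hL
    rw [abs_of_nonneg (hinge_nonneg _ _)]
    exact max_le (by linarith) hL
  unfold longB
  rw [abs_mul, abs_of_nonneg vonMangoldt_nonneg, mul_comm]
  have h2 : |∑ i, trapC ℓ i * hinge (trapL ℓ i) (Real.log n)| ≤ 12 := by
    refine (Finset.abs_sum_le_sum_abs _ _).trans ?_
    have : ∀ i, |trapC ℓ i * hinge (trapL ℓ i) (Real.log n)| ≤ |trapC ℓ i| * trapL ℓ i := by
      intro i
      rw [abs_mul]
      refine mul_le_mul_of_nonneg_left (hh _ ?_) (abs_nonneg _)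
      fin_cases i <;> simp [trapL] <;> positivity
    refine (Finset.sum_le_sum fun i _ => this i).trans (le_of_eq ?_)
    simp only [Fin.sum_univ_four, trapC, trapL, Matrix.cons_val]
    have h1 : 0 < 1/ℓ := by positivity
    have h8 : 0 < 8/ℓ := by positivity
    rw [abs_neg, abs_neg, abs_of_pos h1, abs_of_pos h8]
    field_simp
    norm_num
  have h3 : (vonMangoldt n : ℝ) ≤ Real.log n := vonMangoldt_le_log
  have h4 : (0:ℝ) ≤ vonMangoldt n := vonMangoldt_nonneg
  gcongr

/-- The bilinear part of Vaughan's identity is small in mean square, by `typeII_bound` with the bound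
`hinge_bound` for the Dirichlet polynomial of `longB`. -/
lemma bilin_meanSq : ∃ ν0 : ℝ, 100 ≤ ν0 ∧ ∀ ν, ν0 ≤ ν → ∀ M : ℕ, 5*(ν^8/8) ≤ Real.log M → Real.log M ≤ 6*(ν^8/8) →
    ∫ u, (bilin (ν^8/8) M (exp (-(ν^8/8))/4) (exp (-(4*(ν/1000000)))) u)^2 ≤ exp (-(1/1000000*ν)) := by
  obtain ⟨ν1, hν1, hH⟩ := hinge_bound
  obtain ⟨ν2, hA⟩ := exp_absorb (4/1000000) (1/1000000) 200000 96 (by norm_num)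
  refine ⟨max ν1 ν2, hν1.trans (le_max_left _ _), fun ν hν M hM5 hM6 => ?_⟩
  have hνν : 100 ≤ ν := hν1.trans ((le_max_left _ _).trans hν)
  have hν0 : 0 < ν := by linarith
  have hν8 : 100*ν ≤ ν^8 := by
    have : 100 ≤ ν^7 := hνν.trans (le_self_pow₀ (by linarith) (by norm_num))
    nlinarith
  set ℓ := ν^8/8 with hℓ
  have hℓ1 : 100 ≤ ℓ := by linarith
  have hℓ0 : 0 < ℓ := by linarith
  set τ := ν/1000000 with hτ
  have hτ0 : 0 < τ := by positivity
  have hτν : τ ≤ ν := by linarith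
  have hlogM0 : 0 ≤ Real.log M := by linarith
  have hlog7 : 1 + Real.log M ≤ ν^8 := by linarith
  have hGsum : ∑ m ∈ suppA ℓ M, (longA ℓ m)^2/m ≤ ν^32 := by
    have h1 : ∑ m ∈ suppA ℓ M, (longA ℓ m)^2/m ≤ ∑ m ∈ Finset.Icc 1 M, (m.divisors.card:ℝ)^2/m := by
      refine (Finset.sum_le_sum_of_subset_of_nonneg (Finset.filter_subset _ _) (fun m _ _ => by positivity)).trans (Finset.sum_le_sum fun m _ => ?_)
      have := abs_longA_le ℓ m
      rw [← sq_abs (longA ℓ m)]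
      gcongr
    refine h1.trans ((sum_divisors_sq_le M).trans ?_)
    have h2 := (sum_inv_Icc_le M).trans hlog7
    have h3 : 0 ≤ ∑ n ∈ Finset.Icc 1 M, 1/(n:ℝ) := Finset.sum_nonneg fun n _ => by positivity
    calc _ ≤ (ν^8)^4 := by gcongr
      _ = _ := by ring
  have hQA : ∑ m ∈ suppA ℓ M, |longA ℓ m/m| ≤ ν^32 := by
    have h1 : ∑ m ∈ suppA ℓ M, |longA ℓ m/m| ≤ ∑ m ∈ Finset.Icc 1 M, (m.divisors.card:ℝ)^2/m := by
      refine (Finset.sum_le_sum_of_subset_of_nonneg (Finset.filter_subset _ _) (fun m _ _ => by positivity)).trans (Finset.sum_le_sum fun m hm => ?_)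
      have h := abs_longA_le ℓ m
      have hc : (1:ℝ) ≤ m.divisors.card := by
        have : 0 < m.divisors.card := Finset.card_pos.2 (Nat.nonempty_divisors.2 (by have := (Finset.mem_Icc.1 hm).1; omega))
        exact_mod_cast this
      rw [abs_div, Nat.abs_cast]
      gcongr
      nlinarith
    refine h1.trans ((sum_divisors_sq_le M).trans ?_)
    have h2 := (sum_inv_Icc_le M).trans hlog7
    have h3 : 0 ≤ ∑ n ∈ Finset.Icc 1 M, 1/(n:ℝ) := Finset.sum_nonneg fun n _ => by positivity
    calc _ ≤ (ν^8)^4 := by gcongr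
      _ = _ := by ring
  have hQB : ∑ n ∈ Finset.Icc 1 M, |longB ℓ n/n| ≤ 12*ν^16 := by
    have h1 : ∀ n ∈ Finset.Icc 1 M, |longB ℓ n/n| ≤ 12*ν^8*(1/(n:ℝ)) := by
      intro n hn
      obtain ⟨hn1, hn2⟩ := Finset.mem_Icc.1 hn
      have hlogn : Real.log n ≤ Real.log M := Real.log_le_log (by exact_mod_cast hn1) (by exact_mod_cast hn2)
      rw [abs_div, Nat.abs_cast, div_eq_mul_one_div]
      gcongr
      exact (abs_longB_le hℓ0 hn1).trans (by linarith)
    refine (Finset.sum_le_sum h1).trans ?_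
    rw [← Finset.mul_sum]
    calc _ ≤ 12*ν^8*ν^8 := by gcongr; exact (sum_inv_Icc_le M).trans hlog7
      _ = _ := by ring
  obtain ⟨tc1, tc2, tc3⟩ := trapC_sum hℓ0
  have hL1 : ∀ i, ℓ/8 ≤ trapL ℓ i := by intro i; fin_cases i <;> simp [trapL] <;> linarith
  have hL2 : ∀ i, trapL ℓ i ≤ 5*ℓ := by intro i; fin_cases i <;> simp [trapL] <;> linarith
  have h18 : 18/ℓ ≤ 18 := by rw [div_le_iff₀ hℓ0]; linarith
  have hη : ∀ ξ : ℝ, exp τ ≤ |ξ| → |ξ| ≤ exp (ν^8)/2 →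
      ‖dsum (Finset.Icc 1 M) (fun n => longB ℓ n/n) (fun n => Real.log n) ξ‖ ≤ 36*exp (-(2*τ)) := by
    intro ξ h1 h2
    have e := dsum_hinge (trapC ℓ) (trapL ℓ) ξ (M := M) (fun i => (hL2 i).trans hM5)
    have e' : dsum (Finset.Icc 1 M) (fun n => longB ℓ n/n) (fun n => Real.log n) ξ = _ := e
    have a1 := hH ν ((le_max_left _ _).trans hν) (Fin 4) (trapC ℓ) (trapL ℓ) ξ tc1 tc2 (fun i => by linarith [hL1 i]) (fun i => by linarith [hL2 i]) h2
    have hξ0 : ξ ≠ 0 := by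
      rintro rfl
      simp at h1
      linarith [exp_pos τ]
    have a2 := hinge_comb_integral (trapC ℓ) (trapL ℓ) tc1 tc2 (fun i => by linarith [hL1 i]) hξ0
    rw [e']
    refine (norm_add_le _ _).trans ((add_le_add a1 a2).trans ?_)
    rw [tc3]
    have b1 : exp (-(1/50000*ν)) ≤ exp (-(2*τ)) := exp_le_exp.2 (by linarith)
    have b2 : 18/ℓ/ξ^2 ≤ 18*exp (-(2*τ)) := by
      have : exp (2*τ) ≤ ξ^2 := by
        rw [← sq_abs, show 2*τ = τ+τ by ring, Real.exp_add, ← sq]; gcongr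
      rw [Real.exp_neg, ← div_eq_mul_inv]
      gcongr
    have b3 : 18/ℓ*exp (-(1/50000*ν)) ≤ 18*exp (-(2*τ)) := by gcongr
    linarith
  have hT1 : 1 ≤ exp τ := Real.one_le_exp hτ0.le
  have hY1 : 1 ≤ exp (ν^8)/2 := by have := Real.add_one_le_exp (ν^8); linarith
  have hΔ1 : exp (-(4*τ)) ≤ 1 := Real.exp_le_one_iff.2 (by linarith)
  have hδΔ : exp (-ℓ)/4 ≤ exp (-(4*τ)) := by
    have : exp (-ℓ) ≤ exp (-(4*τ)) := exp_le_exp.2 (by linarith)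
    linarith [exp_pos (-ℓ)]
  have key := typeII_bound (sA := suppA ℓ M) (sB := Finset.Icc 1 M) (fun m => longA ℓ m) (fun n => longB ℓ n) (δ := exp (-ℓ)/4) (Δ := exp (-(4*τ)))
    (T := exp τ) (Y := exp (ν^8)/2) (η := 36*exp (-(2*τ))) (QA := ν^32) (QB := 12*ν^16) (G := 21*ν^32) (by positivity) hδΔ hT1 hY1 hQA hQB hη
    (fun d hd1 hd2 => by
      have hd0 : 0 < d := lt_of_lt_of_le (by positivity) hd1
      refine (tent_meanSq (fun m => longA ℓ m) hd0 (hd2.trans hΔ1) ?_).trans (by linarith)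
      intro m hm
      have hm' := (Finset.mem_filter.1 hm).2
      have h5 : 1/d ≤ 4*exp ℓ := by
        rw [div_le_iff₀ hd0]
        have : 4*exp ℓ*(exp (-ℓ)/4) = 1 := by rw [Real.exp_neg]; field_simp
        rw [← this]; gcongr
      have h6 : 4*exp ℓ ≤ exp (3/2*ℓ) := by
        rw [show 3/2*ℓ = ℓ/2 + ℓ by ring, Real.exp_add]
        have := Real.add_one_le_exp (ℓ/2)
        gcongr; linarith
      linarith)
  refine le_trans key ?_
  have k1 : 8*exp (-(4*τ))^2*exp τ^4 = 8*exp (-(4*τ)) := by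
    rw [← Real.exp_nat_mul, ← Real.exp_nat_mul, mul_assoc, ← Real.exp_add]
    congr 2; push_cast; ring
  have k2 : 128/((exp (-ℓ)/4)^4*(exp (ν^8)/2)^2) ≤ exp (-(4*τ)) := by
    have hν8e : ν^8 = 8*ℓ := by rw [hℓ]; ring
    have : 128/((exp (-ℓ)/4)^4*(exp (ν^8)/2)^2) = 131072*exp (-(12*ℓ)) := by
      rw [hν8e, div_pow, div_pow, ← Real.exp_nat_mul, ← Real.exp_nat_mul]
      rw [show -(12*ℓ) = -(((4:ℕ):ℝ)*(-ℓ) + ((2:ℕ):ℝ)*(8*ℓ)) by push_cast; ring, Real.exp_neg, Real.exp_add]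
      field_simp
      norm_num
    rw [this]
    have h7 : (131072:ℝ) ≤ exp (7*ℓ) := by
      have h := Real.add_one_le_exp ℓ
      have : (101:ℝ)^7 ≤ (exp ℓ)^7 := by gcongr; linarith
      rw [← Real.exp_nat_mul] at this
      push_cast at this
      refine le_trans (by norm_num) this
    calc _ ≤ exp (7*ℓ)*exp (-(12*ℓ)) := by gcongr
      _ = exp (7*ℓ + -(12*ℓ)) := by rw [Real.exp_add]
      _ ≤ _ := exp_le_exp.2 (by linarith)
  have k3 : (36*exp (-(2*τ)))^2 = 1296*exp (-(4*τ)) := by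
    rw [mul_pow, ← Real.exp_nat_mul]; norm_num; ring
  rw [k1, k3]
  have hν32 : ν^32 ≤ ν^96 := pow_le_pow_right₀ (by linarith) (by norm_num)
  have hE := exp_pos (-(4*τ))
  have hA' := hA ν ((le_max_right _ _).trans hν)
  rw [show 4/1000000*ν = 4*τ by rw [hτ]; ring] at hA'
  calc _ ≤ (ν^32*(12*ν^16))^2*(8*exp (-(4*τ)) + exp (-(4*τ))) + 4*(1296*exp (-(4*τ)))*(21*ν^96) := by gcongr
    _ = 110160*ν^96*exp (-(4*τ)) := by ring
    _ ≤ 200000*ν^96*exp (-(4*τ)) := by gcongr; norm_num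
    _ ≤ _ := hA'

/-- The prime number theorem at the coarse scale: a tent is a combination of three hinges. -/
lemma psiAvg_ge : ∃ ν0 : ℝ, 100 ≤ ν0 ∧ ∀ ν, ν0 ≤ ν → ∀ M : ℕ, 5*(ν^8/8) ≤ Real.log M → ∀ u, 3*(ν^8/8) ≤ u → u ≤ 3*(ν^8/8)+3 →
    1/2 ≤ psiAvg M (exp (-(4*(ν/1000000)))) u := by
  obtain ⟨ν1, hν1, hH⟩ := hinge_bound
  obtain ⟨ν2, hA⟩ := exp_absorb (12/1000000) (6/1000000) 8 0 (by norm_num)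
  refine ⟨max ν1 ν2, hν1.trans (le_max_left _ _), fun ν hν M hM5 u hu hu3 => ?_⟩
  have hνν : 100 ≤ ν := hν1.trans ((le_max_left _ _).trans hν)
  have hν0 : 0 < ν := by linarith
  have hν8 : 100*ν ≤ ν^8 := by
    have : 100 ≤ ν^7 := hνν.trans (le_self_pow₀ (by linarith) (by norm_num))
    nlinarith
  set τ := ν/1000000 with hτ
  have hτ0 : 0 < τ := by positivity
  set Δ := exp (-(4*τ)) with hΔ
  have hΔ0 : 0 < Δ := exp_pos _
  have hΔ1 : Δ ≤ 1 := Real.exp_le_one_iff.2 (by linarith)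
  set c : Fin 3 → ℝ := ![1/Δ^2, -2/Δ^2, 1/Δ^2] with hc
  set L : Fin 3 → ℝ := ![u+Δ, u, u-Δ] with hL
  have hc1 : ∑ i, c i = 0 := by
    simp only [hc, Fin.sum_univ_three, Matrix.cons_val]; ring
  have hc2 : ∑ i, c i * L i = 0 := by
    simp only [hc, hL, Fin.sum_univ_three, Matrix.cons_val]; ring
  have hc3 : ∑ i, |c i| = 4/Δ^2 := by
    simp only [hc, Fin.sum_univ_three, Matrix.cons_val]
    rw [abs_of_pos (by positivity : 0 < 1/Δ^2), abs_of_neg (by rw [neg_div, neg_lt_zero]; positivity)]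
    ring
  have hLlo : ∀ i, u - 1 ≤ L i := by intro i; fin_cases i <;> simp [hL] <;> linarith
  have hLhi : ∀ i, L i ≤ u + 1 := by intro i; fin_cases i <;> simp [hL] <;> linarith
  have a1 := hH ν ((le_max_left _ _).trans hν) (Fin 3) c L 0 hc1 hc2 (fun i => by linarith [hLlo i]) (fun i => by linarith [hLhi i]) (by simp; positivity)
  have e := dsum_hinge c L 0 (M := M) (fun i => by linarith [hLhi i])
  have e1 : dsum (Finset.Icc 1 M) (fun n => vonMangoldt n * (∑ i, c i * hinge (L i) (Real.log n)) / n) (fun n => Real.log n) 0 = (psiAvg M Δ u : ℂ) := by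
    unfold dsum psiAvg
    push_cast
    refine Finset.sum_congr rfl fun n _ => ?_
    rw [tent_eq_hinge hΔ0]
    simp only [hc, hL, Fin.sum_univ_three, Matrix.cons_val, ech]
    push_cast
    simp
    ring
  have e2 : ∀ i, ∫ v : ℝ in Set.Ioi 0, (hinge (L i) v : ℂ) * ech 0 v = (((L i)^2/2:ℝ):ℂ) := by
    intro i
    have hLi : 0 ≤ L i := by linarith [hLlo i]
    have h1 : ∀ v : ℝ, (hinge (L i) v : ℂ) * ech 0 v = ((hinge (L i) v : ℝ):ℂ) := fun v => by simp [ech]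
    simp only [h1]
    rw [integral_complex_ofReal]
    congr 1
    have h2 : ∫ v : ℝ in Set.Ioi 0, hinge (L i) v = ∫ v : ℝ in Set.Ioc 0 (L i), hinge (L i) v := by
      refine (setIntegral_eq_of_subset_of_forall_diff_eq_zero measurableSet_Ioi (fun v hv => hv.1) ?_)
      intro v hv
      have hv1 : L i < v := by
        by_contra h
        exact hv.2 ⟨hv.1, not_lt.1 h⟩
      exact max_eq_right (by linarith)
    have h3 : ∫ v : ℝ in Set.Ioc 0 (L i), hinge (L i) v = ∫ v : ℝ in Set.Ioc 0 (L i), (L i - v) :=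
      setIntegral_congr_fun measurableSet_Ioc fun v hv => max_eq_left (by linarith [hv.2])
    rw [h2, h3, ← intervalIntegral.integral_of_le hLi, intervalIntegral.integral_sub (by simp) (by simp)]
    simp
    ring
  have e3 : ∑ i, (c i:ℂ) * ∫ v : ℝ in Set.Ioi 0, (hinge (L i) v : ℂ) * ech 0 v = 1 := by
    simp only [e2]
    simp only [hc, hL, Fin.sum_univ_three, Matrix.cons_val]
    have : 1/Δ^2*((u+Δ)^2/2) + -2/Δ^2*(u^2/2) + 1/Δ^2*((u-Δ)^2/2) = 1 := by field_simp; ring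
    exact_mod_cast this
  rw [e1, e3] at e
  rw [hc3] at a1
  have e4 : ‖((psiAvg M Δ u - 1 : ℝ):ℂ)‖ ≤ 4/Δ^2*exp (-(1/50000*ν)) := by
    push_cast
    rw [e, add_sub_cancel_right]
    exact a1
  rw [Complex.norm_real, Real.norm_eq_abs] at e4
  have e5 : 4/Δ^2*exp (-(1/50000*ν)) ≤ 1/2 := by
    have h1 := hA ν ((le_max_right _ _).trans hν)
    have h2 : exp (-(6/1000000*ν)) ≤ 1 := Real.exp_le_one_iff.2 (by linarith)
    have h3 : 4/Δ^2*exp (-(1/50000*ν)) = 4*exp (-(12/1000000*ν)) := by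
      rw [show -(12/1000000*ν) = -(1/50000*ν) - 2*(-(4*τ)) by rw [hτ]; ring, Real.exp_sub, two_mul, Real.exp_add, ← sq, ← hΔ]
      ring
    rw [h3]
    linarith
  linarith [(abs_le.1 (e4.trans e5)).1]

/-- The primes between consecutive cubes `n^3` and `(n+1)^3`. -/
def kids (n : ℕ) : Finset ℕ := (Finset.Ico (n^3) ((n+1)^3)).filter Nat.Prime

/-- `n` is sparse when the interval `[n^3, (n+1)^3)` holds fewer primes than the expected order. -/
def Sparse (n : ℕ) : Prop := 100*Real.log ((n+1:ℕ):ℝ)*(kids n).card < (n:ℝ)^2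

lemma log_small : ∃ n0 : ℕ, 1 ≤ n0 ∧ ∀ n : ℕ, n0 ≤ n → 576*Real.log ((n+1:ℕ):ℝ) ≤ √(n:ℝ) := by
  have h := (isLittleO_log_rpow_atTop (r := 1/2) (by norm_num)).def (c := 1/1152) (by norm_num)
  obtain ⟨x0, hx0⟩ := Filter.eventually_atTop.1 h
  refine ⟨max 1 ⌈x0⌉₊, le_max_left _ _, fun n hn => ?_⟩
  have hn1 : 1 ≤ n := (le_max_left _ _).trans hn
  have hn1' : (1:ℝ) ≤ n := by exact_mod_cast hn1
  have hx : x0 ≤ ((n+1:ℕ):ℝ) := by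
    have : (⌈x0⌉₊:ℝ) ≤ n := by exact_mod_cast (le_max_right _ _).trans hn
    push_cast; linarith [Nat.le_ceil x0]
  have h1 := hx0 _ hx
  rw [Real.norm_of_nonneg (Real.log_nonneg (by push_cast; linarith)), Real.norm_of_nonneg (by positivity), ← Real.sqrt_eq_rpow] at h1
  have h2 : √((n+1:ℕ):ℝ) ≤ 2*√(n:ℝ) := by
    rw [show (2:ℝ) = √4 by rw [show (4:ℝ) = 2^2 by norm_num, Real.sqrt_sq (by norm_num)], ← Real.sqrt_mul (by norm_num)]
    apply Real.sqrt_le_sqrt; push_cast; linarith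
  linarith

/-- The prime powers between `n^3` and `(n+1)^3` that are not primes are negligible, so the total mass of `Λ` there is controlled by the number of primes. -/
lemma sum_lambda_le {n : ℕ} (hn : 1 ≤ n) :
    ∑ N ∈ Finset.Ico (n^3) ((n+1)^3), (vonMangoldt N : ℝ) ≤ 3*Real.log ((n+1:ℕ):ℝ)*(kids n).card +
      18*n*√(n:ℝ)*Real.log ((n+1:ℕ):ℝ) := by
  have hn1 : (1:ℝ) ≤ n := by exact_mod_cast hn
  have hlog3 : Real.log (((n+1)^3:ℕ):ℝ) = 3*Real.log ((n+1:ℕ):ℝ) := by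
    push_cast; rw [Real.log_pow]; norm_num
  rw [← Finset.sum_filter_add_sum_filter_not _ Nat.Prime]
  refine add_le_add ?_ ?_
  · rw [mul_comm, ← nsmul_eq_mul]
    refine Finset.sum_le_card_nsmul _ _ _ fun N hN => ?_
    obtain ⟨h1, h2⟩ := Finset.mem_filter.1 hN
    rw [← hlog3]
    exact vonMangoldt_le_log.trans (Real.log_le_log (by exact_mod_cast h2.pos) (by exact_mod_cast (Finset.mem_Ico.1 h1).2.le))
  · have h1 := Chebyshev.psi_sub_theta_eq_sum_not_prime (((n+1)^3:ℕ):ℝ)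
    rw [Nat.floor_natCast] at h1
    have h2 := Chebyshev.abs_psi_sub_theta_le_sqrt_mul_log (x := (((n+1)^3:ℕ):ℝ)) (by exact_mod_cast Nat.one_le_pow _ _ (by omega))
    rw [h1, hlog3] at h2
    have h3 : √(((n+1)^3:ℕ):ℝ) ≤ 3*n*√n := by
      rw [show 3*(n:ℝ)*√n = √(9*n^3) by
        rw [show 9*(n:ℝ)^3 = (3*n)^2*n by ring, Real.sqrt_mul (by positivity), Real.sqrt_sq (by positivity)]]
      apply Real.sqrt_le_sqrt
      push_cast
      calc ((n:ℝ)+1)^3 ≤ (2*(n:ℝ))^3 := by gcongr; linarith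
        _ ≤ 9*(n:ℝ)^3 := by nlinarith [pow_pos (show (0:ℝ) < n by linarith) 3]
    calc _ ≤ ∑ N ∈ (Finset.Ioc 0 ((n+1)^3)).filter (fun N => ¬ N.Prime), (vonMangoldt N : ℝ) := by
          refine Finset.sum_le_sum_of_subset_of_nonneg (fun N hN => ?_) (fun _ _ _ => vonMangoldt_nonneg)
          simp only [Finset.mem_filter, Finset.mem_Ico, Finset.mem_Ioc] at hN ⊢
          have := Nat.one_le_pow 3 n hn
          exact ⟨⟨by omega, by omega⟩, hN.2⟩
      _ ≤ 2*√(((n+1)^3:ℕ):ℝ)*(3*Real.log ((n+1:ℕ):ℝ)) := (le_abs_self _).trans h2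
      _ ≤ 2*(3*n*√n)*(3*Real.log ((n+1:ℕ):ℝ)) := by gcongr
      _ = _ := by ring

/-- If `n` is sparse, the fine-scale average of `Λ` is small at all `u` whose tent lies inside
`[3 log n, 3 log (n+1)]`. -/
lemma psiAvg_le_of_sparse {n : ℕ} (hn : 1 ≤ n) (hsm : 576*Real.log ((n+1:ℕ):ℝ) ≤ √(n:ℝ)) (hs : Sparse n) {ℓ u : ℝ} (M : ℕ)
    (hX : exp ℓ ≤ n) (hu1 : 3*Real.log n + exp (-ℓ)/4 ≤ u) (hu2 : u ≤ 3*Real.log ((n+1:ℕ):ℝ) - exp (-ℓ)/4) :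
    psiAvg M (exp (-ℓ)/4) u ≤ 1/4 := by
  set δ := exp (-ℓ)/4 with hδ
  have hδ0 : 0 < δ := by positivity
  have hδ1 : 1/δ = 4*exp ℓ := by rw [hδ, Real.exp_neg]; field_simp
  have hn1 : (1:ℝ) ≤ n := by exact_mod_cast hn
  have hn0 : (0:ℝ) < n := by linarith
  have hlog3 : ∀ k : ℕ, Real.log ((k^3:ℕ):ℝ) = 3*Real.log (k:ℝ) := by
    intro k; push_cast; rw [Real.log_pow]; norm_num
  have h1 : psiAvg M δ u ≤ ∑ N ∈ Finset.Ico (n^3) ((n+1)^3), vonMangoldt N * (4/(n:ℝ)^2) := by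
    have hz : ∀ N ∈ Finset.Icc 1 M, N ∉ Finset.Ico (n^3) ((n+1)^3) → vonMangoldt N / N * tent δ (u - Real.log N) = 0 := by
      intro N hN hN2
      rw [tent_eq_zero hδ0, mul_zero]
      have hN0 : (0:ℝ) < N := by exact_mod_cast (Finset.mem_Icc.1 hN).1
      rw [Finset.mem_Ico, not_and_or, not_le, not_lt] at hN2
      rcases hN2 with h | h
      · have : Real.log N ≤ Real.log ((n^3:ℕ):ℝ) := Real.log_le_log hN0 (by exact_mod_cast h.le)
        rw [hlog3] at this
        exact le_trans (by linarith) (le_abs_self _)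
      · have : Real.log (((n+1)^3:ℕ):ℝ) ≤ Real.log N := Real.log_le_log (by positivity) (by exact_mod_cast h)
        rw [hlog3] at this
        rw [abs_sub_comm]
        exact le_trans (by linarith) (le_abs_self _)
    unfold psiAvg
    rw [← Finset.sum_filter_of_ne (p := fun N => N ∈ Finset.Ico (n^3) ((n+1)^3)) (fun N hN h => by by_contra h'; exact h (hz N hN h'))]
    refine (Finset.sum_le_sum (g := fun N => vonMangoldt N * (4/(n:ℝ)^2)) fun N hN => ?_).trans
      (Finset.sum_le_sum_of_subset_of_nonneg (fun N hN => (Finset.mem_filter.1 hN).2) (fun N _ _ => mul_nonneg vonMangoldt_nonneg (by positivity)))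
    have hN1 := (Finset.mem_Ico.1 (Finset.mem_filter.1 hN).2).1
    have hN2 : (n:ℝ)^3 ≤ N := by exact_mod_cast hN1
    have hN0 : (0:ℝ) < N := lt_of_lt_of_le (by positivity) hN2
    have ht := tent_le hδ0 (u - Real.log N)
    rw [hδ1] at ht
    calc vonMangoldt N / N * tent δ (u - Real.log N) ≤ vonMangoldt N / (n:ℝ)^3 * (4*n) := by
          have := tent_nonneg hδ0 (u - Real.log N)
          gcongr
          linarith
      _ = _ := by field_simp
  rw [← Finset.sum_mul] at h1
  refine h1.trans ?_
  have h2 := sum_lambda_le hn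
  unfold Sparse at hs
  have h3 : 18*n*√(n:ℝ)*Real.log ((n+1:ℕ):ℝ) ≤ (n:ℝ)^2/32 := by
    have : √(n:ℝ)*√n = n := Real.mul_self_sqrt hn0.le
    calc _ = 18*n*√(n:ℝ)/576*(576*Real.log ((n+1:ℕ):ℝ)) := by ring
      _ ≤ 18*n*√(n:ℝ)/576*√n := by gcongr
      _ = 18*n*(√(n:ℝ)*√n)/576 := by ring
      _ = _ := by rw [this]; ring
  have h4 : ∑ N ∈ Finset.Ico (n^3) ((n+1)^3), (vonMangoldt N : ℝ) ≤ (n:ℝ)^2/16 := by linarith [pow_pos hn0 2]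
  calc _ ≤ (n:ℝ)^2/16*(4/(n:ℝ)^2) := by gcongr
    _ = _ := by field_simp; norm_num

lemma integrable_bilin_sq (ℓ : ℝ) (M : ℕ) {δ Δ : ℝ} (hδ : 0 < δ) (hΔ : 0 < Δ) : Integrable fun u => (bilin ℓ M δ Δ u)^2 := by
  have hc : Continuous fun u => (bilin ℓ M δ Δ u)^2 := by
    unfold bilin
    have := continuous_tent
    fun_prop
  refine hc.integrable_of_hasCompactSupport (HasCompactSupport.intro (isCompact_Icc (a := -(2*Real.log M+δ+Δ)) (b := 2*Real.log M+δ+Δ)) fun u hu => ?_)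
  have hb : bilin ℓ M δ Δ u = 0 := by
    unfold bilin
    refine Finset.sum_eq_zero fun m hm => Finset.sum_eq_zero fun n hn => ?_
    have hlog : ∀ k ∈ Finset.Icc 1 M, 0 ≤ Real.log (k:ℝ) ∧ Real.log (k:ℝ) ≤ Real.log M := by
      intro k hk
      obtain ⟨h1, h2⟩ := Finset.mem_Icc.1 hk
      exact ⟨Real.log_nonneg (by exact_mod_cast h1), Real.log_le_log (by exact_mod_cast h1) (by exact_mod_cast h2)⟩
    obtain ⟨a1, a2⟩ := hlog m (Finset.mem_filter.1 hm).1
    obtain ⟨b1, b2⟩ := hlog n hn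
    have hbig : δ + Δ ≤ |u - (Real.log m + Real.log n)| := by
      by_contra h
      push Not at h
      rw [abs_lt] at h
      exact hu ⟨by linarith, by linarith⟩
    rw [tent_eq_zero hδ (by linarith), tent_eq_zero hΔ (by linarith)]; simp
  rw [hb]; simp

/-- **Primes in almost all short intervals**: the proportion of sparse `n` near `exp (ν^8/8)` is exponentially small in `ν`. -/
lemma sparse_count : ∃ ν0 : ℝ, 100 ≤ ν0 ∧ ∀ ν, ν0 ≤ ν → ∀ F : Finset ℕ,
    (∀ n ∈ F, exp (ν^8/8) ≤ (n:ℝ) ∧ (n:ℝ) ≤ 2*exp (ν^8/8) ∧ Sparse n) → (F.card:ℝ) ≤ 128*exp (ν^8/8)*exp (-(1/1000000*ν)) := by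
  obtain ⟨ν1, hν1, hB⟩ := bilin_meanSq
  obtain ⟨ν2, hν2, hP⟩ := psiAvg_ge
  obtain ⟨n0, hn0, hsm⟩ := log_small
  refine ⟨max (max ν1 ν2) (max n0 1000000), hν1.trans ((le_max_left _ _).trans (le_max_left _ _)), fun ν hν F hF => ?_⟩
  have hνa : ν1 ≤ ν := (le_max_left _ _).trans ((le_max_left _ _).trans hν)
  have hνb : ν2 ≤ ν := (le_max_right _ _).trans ((le_max_left _ _).trans hν)
  have hνc : (n0:ℝ) ≤ ν := (le_max_left _ _).trans ((le_max_right _ _).trans hν)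
  have hνd : (1000000:ℝ) ≤ ν := (le_max_right _ _).trans ((le_max_right _ _).trans hν)
  have hν8 : 1000000*ν ≤ ν^8 := by
    have : 1000000 ≤ ν^7 := hνd.trans (le_self_pow₀ (by linarith) (by norm_num))
    nlinarith
  have hB' := hB ν hνa
  have hP' := hP ν hνb
  set ℓ := ν^8/8 with hℓ
  set X := exp ℓ with hX
  have hX1 : 100*ν ≤ X := by have := Real.add_one_le_exp ℓ; linarith
  have hX0 : 0 < X := exp_pos _
  obtain ⟨M, hM5, hM6⟩ : ∃ M : ℕ, 5*ℓ ≤ Real.log M ∧ Real.log M ≤ 6*ℓ := by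
    refine ⟨⌈exp (5*ℓ)⌉₊, ?_, ?_⟩
    · rw [Real.le_log_iff_exp_le (by positivity)]; exact Nat.le_ceil _
    · rw [Real.log_le_iff_le_exp (by positivity)]
      have h1 := Nat.ceil_lt_add_one (exp_pos (5*ℓ)).le
      have h2 : exp (6*ℓ) = X*exp (5*ℓ) := by rw [hX, ← Real.exp_add]; ring_nf
      have h3 : 1 ≤ exp (5*ℓ) := Real.one_le_exp (by linarith)
      rw [h2]
      nlinarith
  set δ := exp (-ℓ)/4 with hδ
  have hδX : δ = 1/(4*X) := by rw [hδ, Real.exp_neg, hX]; field_simp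
  have hδ0 : 0 < δ := by positivity
  set Δ := exp (-(4*(ν/1000000))) with hΔ
  have hΔ0 : 0 < Δ := exp_pos _
  have hΔ1 : Δ ≤ 1/2 := by
    have h1 : Δ ≤ exp (-1) := exp_le_exp.2 (by linarith)
    linarith [Real.exp_neg_one_lt_half]
  have hδΔ : δ ≤ Δ := by
    have : exp (-ℓ) ≤ Δ := exp_le_exp.2 (by linarith)
    linarith [exp_pos (-ℓ)]
  have hsmall : 12000*ℓ*exp (-(ℓ/4)) ≤ 1/8 := by
    have h1 := Real.pow_div_factorial_le_exp (ℓ/4) (by linarith) 2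
    have h2 : exp (ℓ/4)*exp (-(ℓ/4)) = 1 := by rw [← Real.exp_add]; simp
    have h3 : 96000*ℓ ≤ exp (ℓ/4) := by
      refine le_trans ?_ h1
      norm_num
      nlinarith
    nlinarith [exp_pos (-(ℓ/4))]
  set J : ℕ → Set ℝ := fun n => Set.Ioo (3*Real.log (n:ℝ) + δ) (3*Real.log ((n+1:ℕ):ℝ) - δ) with hJ
  have hsub : (⋃ n ∈ F, J n) ⊆ {u | 1/64 ≤ (bilin ℓ M δ Δ u)^2} := by
    intro u hu
    simp only [Set.mem_iUnion] at hu
    obtain ⟨n, hnF, hu1, hu2⟩ := hu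
    obtain ⟨h1, h2, h3⟩ := hF n hnF
    have hnpos : (0:ℝ) < n := hX0.trans_le h1
    have hn1 : 1 ≤ n := by exact_mod_cast hnpos
    have hnn0 : n0 ≤ n := by
      have : (n0:ℝ) ≤ n := by linarith
      exact_mod_cast this
    have hlo : ℓ ≤ Real.log n := by rwa [Real.le_log_iff_exp_le hnpos]
    have hhi : Real.log ((n+1:ℕ):ℝ) ≤ ℓ+1 := by
      rw [Real.log_le_iff_le_exp (by positivity), Real.exp_add, ← hX]
      push_cast
      have := Real.exp_one_gt_d9
      nlinarith
    have k1 := psiAvg_le_of_sparse hn1 (hsm n hnn0) h3 M h1 hu1.le hu2.le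
    have k2 := hP' M hM5 u (by linarith) (by linarith)
    have k3 := vaughan_point (M := M) (u := u) (ℓ := ℓ) (Δ := Δ) (by linarith) (by linarith) (by linarith) hδΔ hΔ1 hM5
    have k4 : bilin ℓ M δ Δ u ≤ -(1/8) := by
      have := (abs_le.1 (k3.trans hsmall)).1
      have := (abs_le.1 (k3.trans hsmall)).2
      linarith
    show 1/64 ≤ (bilin ℓ M δ Δ u)^2
    nlinarith
  have hdisj : Set.PairwiseDisjoint (F : Set ℕ) J := by
    intro a ha b hb hab
    have aux : ∀ a b : ℕ, a ∈ F → b ∈ F → a < b → Disjoint (J a) (J b) := by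
      intro a b ha hb hab
      rw [Set.disjoint_left]
      rintro x ⟨_, hx1⟩ ⟨hx2, _⟩
      have : Real.log ((a+1:ℕ):ℝ) ≤ Real.log (b:ℝ) := Real.log_le_log (by positivity) (by exact_mod_cast hab)
      linarith
    rcases lt_or_gt_of_ne hab with h | h
    · exact aux a b ha hb h
    · exact (aux b a hb ha h).symm
  have hmeas : volume.real (⋃ n ∈ F, J n) = ∑ n ∈ F, volume.real (J n) :=
    measureReal_biUnion_finset hdisj (fun n _ => measurableSet_Ioo) (fun n _ => by simp [hJ])
  have hlen : ∀ n ∈ F, 1/(2*X) ≤ volume.real (J n) := by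
    intro n hnF
    obtain ⟨h1, h2, h3⟩ := hF n hnF
    have hnpos : (0:ℝ) < n := hX0.trans_le h1
    have hn1 : (0:ℝ) < ((n+1:ℕ):ℝ) := by positivity
    have h4 := Real.one_sub_inv_le_log_of_pos (div_pos hn1 hnpos)
    rw [Real.log_div hn1.ne' hnpos.ne', inv_div] at h4
    have h5 : 1 - (n:ℝ)/((n+1:ℕ):ℝ) = 1/((n+1:ℕ):ℝ) := by push_cast; field_simp; ring
    have h6 : 1/(3*X) ≤ 1/((n+1:ℕ):ℝ) := by
      apply one_div_le_one_div_of_le hn1; push_cast; linarith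
    rw [hJ]
    simp only
    rw [Real.volume_real_Ioo_of_le (by
      have : 1/(3*X)*3 = 1/X := by field_simp
      have : 1/(4*X)*4 = 1/X := by field_simp
      have : 0 < 1/X := by positivity
      linarith)]
    have e1 : 1/(3*X)*3 = 1/X := by field_simp
    have e2 : 1/(4*X)*4 = 1/X := by field_simp
    have e3 : 1/(2*X)*2 = 1/X := by field_simp
    linarith
  have hMk := mul_meas_ge_le_integral_of_nonneg (μ := volume) (f := fun u => (bilin ℓ M δ Δ u)^2) (Filter.Eventually.of_forall fun u => sq_nonneg _)
    (integrable_bilin_sq ℓ M hδ0 hΔ0) (1/64)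
  have hInt := hB' M hM5 hM6
  have hfin : volume {u | 1/64 ≤ (bilin ℓ M δ Δ u)^2} ≠ ⊤ :=
    ((integrable_bilin_sq ℓ M hδ0 hΔ0).measure_ge_lt_top (by norm_num)).ne
  have hmono := measureReal_mono hsub hfin
  rw [hmeas] at hmono
  have hsum : F.card*(1/(2*X)) ≤ ∑ n ∈ F, volume.real (J n) := by
    rw [← nsmul_eq_mul]
    exact Finset.card_nsmul_le_sum _ _ _ hlen
  have hfinal : F.card*(1/(2*X)) ≤ 64*exp (-(1/1000000*ν)) := by linarith
  rw [mul_one_div, div_le_iff₀ (by positivity)] at hfinal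
  linarith

end Mills

namespace Mills
open Finset MeasureTheory Real

/-! ### Good integers -/

open Classical in
/-- `Bad j n`: within `j` generations the tree of primes between consecutive cubes grown from `n` degenerates,
either because `n` itself is sparse or because more than half of its children are `Bad` one level down. -/
def Bad : ℕ → ℕ → Prop
  | 0, n => Sparse n
  | j+1, n => Sparse n ∨ (kids n).card < 2*((kids n).filter (Bad j)).card

/-- The bound for the number of `j`-bad integers at one dyadic scale, with a constant independent of `j`. -/
def BadBound (ν0 : ℝ) (j : ℕ) : Prop := ∀ ν, ν0 ≤ ν → ∀ F : Finset ℕ,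
  (∀ n ∈ F, exp (ν^8/8) ≤ (n:ℝ) ∧ (n:ℝ) ≤ 2*exp (ν^8/8) ∧ Bad j n) → (F.card:ℝ) ≤ exp (ν^8/8)*(2*exp (-(1/2000000*ν)))

lemma BadBound.block {ν0 : ℝ} {j : ℕ} (h : BadBound ν0 j) {ν Z : ℝ} (hν1 : 1 ≤ ν) (hν : ν0 ≤ ν) (hZ : exp (3*(ν^8/8)) ≤ Z) (F : Finset ℕ)
    (hF : ∀ n ∈ F, Z ≤ (n:ℝ) ∧ (n:ℝ) ≤ 2*Z ∧ Bad j n) : (F.card:ℝ) ≤ Z*(2*exp (-(11/20000000*ν))) := by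
  have hZ0 : 0 < Z := (exp_pos _).trans_le hZ
  have hl : 3*(ν^8/8) ≤ Real.log Z := by rwa [Real.le_log_iff_exp_le hZ0]
  have hν8 : 0 < ν^8 := by positivity
  set μ := (8*Real.log Z)^((1:ℝ)/8) with hμ
  have hμ8 : μ^8 = 8*Real.log Z := by
    rw [hμ, ← Real.rpow_natCast, ← Real.rpow_mul (by linarith)]; norm_num
  have hμ0 : 0 ≤ μ := Real.rpow_nonneg (by linarith) _
  have hμν : 11/10*ν ≤ μ := by
    by_contra hc
    push Not at hc
    have : μ^8 < (11/10*ν)^8 := pow_lt_pow_left₀ hc hμ0 (by norm_num)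
    rw [hμ8, mul_pow] at this
    norm_num at this
    linarith
  have hexp : exp (μ^8/8) = Z := by
    rw [hμ8, mul_div_cancel_left₀ _ (by norm_num), Real.exp_log hZ0]
  have := h μ (by linarith) F (by rw [hexp]; exact hF)
  rw [hexp] at this
  have hle : exp (-(1/2000000*μ)) ≤ exp (-(11/20000000*ν)) := exp_le_exp.2 (by linarith)
  refine this.trans ?_
  gcongr

/-- Induction on `j` with a bound uniform in `j`: each `n` that is bad because of its children accounts
for a large number of bad primes near `n ^ 3`, where the density of bad integers is much smaller. -/
lemma bad_bound : ∃ ν0 : ℝ, 100 ≤ ν0 ∧ ∀ j, BadBound ν0 j := by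
  classical
  obtain ⟨ν1, hν1, hS⟩ := sparse_count
  obtain ⟨ν2, hA⟩ := exp_absorb (1/1000000) (1/2000000) 128 0 (by norm_num)
  obtain ⟨ν3, hC⟩ := exp_absorb (11/20000000) (1/2000000) 6000 8 (by norm_num)
  refine ⟨max ν1 (max ν2 ν3), hν1.trans (le_max_left _ _), fun j => ?_⟩
  have hsp : ∀ ν, max ν1 (max ν2 ν3) ≤ ν → ∀ F : Finset ℕ,
      (∀ n ∈ F, exp (ν^8/8) ≤ (n:ℝ) ∧ (n:ℝ) ≤ 2*exp (ν^8/8) ∧ Sparse n) → (F.card:ℝ) ≤ exp (ν^8/8)*exp (-(1/2000000*ν)) := by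
    intro ν hν F hF
    have h1 := hS ν ((le_max_left _ _).trans hν) F hF
    have h2 := hA ν ((le_max_left _ _).trans ((le_max_right _ _).trans hν))
    rw [pow_zero, mul_one] at h2
    calc _ ≤ _ := h1
      _ = exp (ν^8/8)*(128*exp (-(1/1000000*ν))) := by ring
      _ ≤ _ := by gcongr
  induction j with
  | zero =>
    intro ν hν F hF
    refine (hsp ν hν F hF).trans ?_
    have := exp_pos (-(1/2000000*ν))
    gcongr
    linarith
  | succ j ih =>
    intro ν hν F hF
    have hνν : 100 ≤ ν := hν1.trans ((le_max_left _ _).trans hν)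
    have hν8 : 100*ν ≤ ν^8 := by
      have : 100 ≤ ν^7 := hνν.trans (le_self_pow₀ (by linarith) (by norm_num))
      nlinarith
    set ℓ := ν^8/8 with hℓ
    set X := exp ℓ with hX
    have hX0 : 0 < X := exp_pos _
    have hX1 : 100 ≤ X := by have := Real.add_one_le_exp ℓ; linarith
    have c1 := hsp ν hν (F.filter Sparse) (fun n hn => by
      obtain ⟨h1, h2⟩ := Finset.mem_filter.1 hn
      exact ⟨(hF n h1).1, (hF n h1).2.1, h2⟩)
    set F2 := F.filter (fun n => ¬ Sparse n) with hF2
    set bk : ℕ → Finset ℕ := fun n => (kids n).filter (Bad j) with hbk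
    have hF2' : ∀ n ∈ F2, X ≤ (n:ℝ) ∧ (n:ℝ) ≤ 2*X ∧ X^2 ≤ 200*ν^8*(bk n).card := by
      intro n hn
      obtain ⟨h1, h2⟩ := Finset.mem_filter.1 hn
      obtain ⟨a1, a2, a3⟩ := hF n h1
      refine ⟨a1, a2, ?_⟩
      have a4 : (kids n).card < 2*(bk n).card := a3.resolve_left h2
      have a5 : ((kids n).card:ℝ) ≤ 2*(bk n).card := by exact_mod_cast a4.le
      have a6 : Real.log ((n+1:ℕ):ℝ) ≤ ν^8 := by
        rw [Real.log_le_iff_le_exp (by positivity)]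
        have : exp (ℓ + ℓ) ≤ exp (ν^8) := exp_le_exp.2 (by linarith)
        rw [Real.exp_add, ← hX] at this
        push_cast
        nlinarith
      unfold Sparse at h2
      rw [not_lt] at h2
      calc X^2 ≤ (n:ℝ)^2 := by gcongr
        _ ≤ _ := h2
        _ ≤ 100*ν^8*(2*(bk n).card) := by gcongr
        _ = _ := by ring
    have hdisj : (F2 : Set ℕ).PairwiseDisjoint bk := by
      have aux : ∀ a b : ℕ, a < b → Disjoint (bk a) (bk b) := by
        intro a b hab
        rw [Finset.disjoint_left]
        intro m hm1 hm2
        simp only [hbk, kids, Finset.mem_filter, Finset.mem_Ico] at hm1 hm2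
        have : (a+1)^3 ≤ b^3 := Nat.pow_le_pow_left hab 3
        omega
      intro a _ b _ hab
      rcases lt_or_gt_of_ne hab with h | h
      · exact aux a b h
      · exact (aux b a h).symm
    set H := F2.biUnion bk with hH
    have hHc : H.card = ∑ n ∈ F2, (bk n).card := Finset.card_biUnion hdisj
    have hHm : ∀ m ∈ H, X^3 ≤ (m:ℝ) ∧ (m:ℝ) ≤ 16*X^3 ∧ Bad j m := by
      intro m hm
      obtain ⟨n, hn, hm'⟩ := Finset.mem_biUnion.1 hm
      simp only [hbk, kids, Finset.mem_filter, Finset.mem_Ico] at hm'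
      obtain ⟨a1, a2, _⟩ := hF2' n hn
      have b1 : (n:ℝ)^3 ≤ m := by exact_mod_cast hm'.1.1.1
      have b2 : (m:ℝ) ≤ ((n:ℝ)+1)^3 := by exact_mod_cast hm'.1.1.2.le
      refine ⟨le_trans (by gcongr) b1, b2.trans ?_, hm'.2⟩
      calc ((n:ℝ)+1)^3 ≤ (5/2*X)^3 := by gcongr; linarith
        _ = 125/8*X^3 := by ring
        _ ≤ _ := by nlinarith [pow_pos hX0 3]
    have hblk : ∀ i : ℕ, ((H.filter (fun m : ℕ => 2^i*X^3 ≤ (m:ℝ) ∧ (m:ℝ) ≤ 2*(2^i*X^3))).card:ℝ) ≤ 2^i*X^3*(2*exp (-(11/20000000*ν))) := by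
      intro i
      refine ih.block (by linarith) hν ?_ _ fun m hm => ?_
      · have : exp (3*ℓ) = X^3 := by rw [hX, ← Real.exp_nat_mul]; norm_num
        rw [← hℓ, this]
        exact le_mul_of_one_le_left (by positivity) (one_le_pow₀ (by norm_num))
      · obtain ⟨h1, h2⟩ := Finset.mem_filter.1 hm
        exact ⟨h2.1, h2.2, (hHm m h1).2.2⟩
    have hcov : H ⊆ (Finset.range 4).biUnion (fun i => H.filter (fun m : ℕ => 2^i*X^3 ≤ (m:ℝ) ∧ (m:ℝ) ≤ 2*(2^i*X^3))) := by
      intro m hm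
      obtain ⟨a1, a2, _⟩ := hHm m hm
      simp only [Finset.mem_biUnion, Finset.mem_filter, Finset.mem_range]
      rcases le_total (m:ℝ) (2*X^3) with h1 | h1
      · exact ⟨0, by norm_num, hm, by linarith, by linarith⟩
      rcases le_total (m:ℝ) (4*X^3) with h2 | h2
      · exact ⟨1, by norm_num, hm, by linarith, by linarith⟩
      rcases le_total (m:ℝ) (8*X^3) with h3 | h3
      · exact ⟨2, by norm_num, hm, by linarith, by linarith⟩
      · exact ⟨3, by norm_num, hm, by linarith, by linarith⟩
    have hHcard : (H.card:ℝ) ≤ 30*X^3*exp (-(11/20000000*ν)) := by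
      have h1 := (Finset.card_le_card hcov).trans Finset.card_biUnion_le
      have h2 : (H.card:ℝ) ≤ ∑ i ∈ Finset.range 4, ((H.filter (fun m : ℕ => 2^i*X^3 ≤ (m:ℝ) ∧ (m:ℝ) ≤ 2*(2^i*X^3))).card:ℝ) := by exact_mod_cast h1
      refine h2.trans ((Finset.sum_le_sum fun i _ => hblk i).trans (le_of_eq ?_))
      simp only [Finset.sum_range_succ, Finset.sum_range_zero]
      ring
    have hF2c : (F2.card:ℝ) ≤ X*exp (-(1/2000000*ν)) := by
      have h1 : F2.card*X^2 ≤ 200*ν^8*H.card := by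
        rw [hHc, ← nsmul_eq_mul]
        push_cast
        rw [Finset.mul_sum]
        exact Finset.card_nsmul_le_sum _ _ _ fun n hn => (hF2' n hn).2.2
      have h2 := hC ν ((le_max_right _ _).trans ((le_max_right _ _).trans hν))
      have h3 : F2.card*X^2 ≤ X*exp (-(1/2000000*ν))*X^2 := by
        calc _ ≤ _ := h1
          _ ≤ 200*ν^8*(30*X^3*exp (-(11/20000000*ν))) := by gcongr
          _ = X^3*(6000*ν^8*exp (-(11/20000000*ν))) := by ring
          _ ≤ X^3*exp (-(1/2000000*ν)) := by gcongr
          _ = _ := by ring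
      exact le_of_mul_le_mul_right h3 (by positivity)
    have hcard : F.card = (F.filter Sparse).card + F2.card := (Finset.card_filter_add_card_filter_not _).symm
    rw [hcard]
    push_cast
    linarith

lemma bad_mono (j n : ℕ) (h : Bad j n) : Bad (j+1) n := by
  classical
  induction j generalizing n with
  | zero => exact Or.inl h
  | succ j ih =>
    rcases h with h | h
    · exact Or.inl h
    · refine Or.inr (h.trans_le ?_)
      gcongr with m hm
      exact ih m

/-- `n` is good when it is not bad at any depth. -/
def Good (n : ℕ) : Prop := ∀ j, ¬ Bad j n

/-- Half of the children of a good `n` are good: badness increases with the depth, so finitely many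
children that are not good are all bad at one common depth. -/
lemma good_kids [DecidablePred Good] {n : ℕ} (hn : Good n) : (n:ℝ)^2 ≤ 200*Real.log ((n+1:ℕ):ℝ)*((kids n).filter Good).card := by
  classical
  have hmono : ∀ m, Monotone fun j => Bad j m := fun m => monotone_nat_of_le_succ fun j => bad_mono j m
  obtain ⟨J, hJ⟩ : ∃ J, ∀ m ∈ kids n, ¬ Good m → Bad J m := by
    have : ∀ m, ∃ j, ¬ Good m → Bad j m := by
      intro m
      by_cases h : Good m
      · exact ⟨0, fun h' => absurd h h'⟩
      · unfold Good at h
        push Not at h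
        obtain ⟨j, hj⟩ := h
        exact ⟨j, fun _ => hj⟩
    choose f hf using this
    exact ⟨(kids n).sup f, fun m hm hg => hmono m (Finset.le_sup hm) (hf m hg)⟩
  have h1 := hn (J+1)
  have h2 : ¬ (Sparse n ∨ (kids n).card < 2*((kids n).filter (Bad J)).card) := h1
  rw [not_or, not_lt] at h2
  obtain ⟨h3, h4⟩ := h2
  have h5 : (kids n).card ≤ ((kids n).filter Good).card + ((kids n).filter (Bad J)).card := by
    rw [← Finset.card_filter_add_card_filter_not (s := kids n) Good]
    gcongr with m hm
    exact hJ m hm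
  have h6 : (kids n).card ≤ 2*((kids n).filter Good).card := by omega
  unfold Sparse at h3
  rw [not_lt] at h3
  have h7 : ((kids n).card:ℝ) ≤ 2*((kids n).filter Good).card := by exact_mod_cast h6
  calc _ ≤ _ := h3
    _ ≤ 100*Real.log ((n+1:ℕ):ℝ)*(2*((kids n).filter Good).card) := by gcongr
    _ = _ := by ring

lemma exists_good (N : ℕ) : ∃ n, N ≤ n ∧ Good n := by
  classical
  obtain ⟨ν0, hν0, hB⟩ := bad_bound
  obtain ⟨ν1, hA⟩ := exp_absorb (1/2000000) (1/4000000) 4 0 (by norm_num)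
  set ν := max (max ν0 ν1) N with hν
  have hνν : 100 ≤ ν := hν0.trans ((le_max_left _ _).trans (le_max_left _ _))
  have hν8 : 100*ν ≤ ν^8 := by
    have : 100 ≤ ν^7 := hνν.trans (le_self_pow₀ (by linarith) (by norm_num))
    nlinarith
  set X := exp (ν^8/8) with hX
  have hXν : 1 + ν ≤ X := by have := Real.add_one_le_exp (ν^8/8); linarith
  set F := Finset.Icc ⌈X⌉₊ ⌊2*X⌋₊ with hF
  have hmem : ∀ n ∈ F, X ≤ (n:ℝ) ∧ (n:ℝ) ≤ 2*X := by
    intro n hn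
    obtain ⟨h1, h2⟩ := Finset.mem_Icc.1 hn
    exact ⟨Nat.ceil_le.1 h1, (Nat.le_floor_iff (by linarith)).1 h2⟩
  have hcardF : X - 1 ≤ (F.card:ℝ) := by
    rw [hF, Nat.card_Icc]
    have h1 := Nat.ceil_lt_add_one (show 0 ≤ X by linarith)
    have h2 := Nat.lt_floor_add_one (2*X)
    have h3 : ⌈X⌉₊ ≤ ⌊2*X⌋₊ + 1 := by
      have : (⌈X⌉₊:ℝ) ≤ (⌊2*X⌋₊+1:ℕ) := by push_cast; linarith
      exact_mod_cast this
    rw [Nat.cast_sub h3]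
    push_cast
    linarith
  by_contra hcon
  push Not at hcon
  have hall : ∀ n ∈ F, ∃ j, Bad j n := by
    intro n hn
    have h := hcon n (by
      have : (N:ℝ) ≤ n := (le_max_right _ _).trans ((show ν ≤ n by linarith [(hmem n hn).1]))
      exact_mod_cast this)
    unfold Good at h
    push Not at h
    exact h
  choose! f hf using hall
  have hmono : ∀ m, Monotone fun j => Bad j m := fun m => monotone_nat_of_le_succ fun j => bad_mono j m
  have h1 := hB (F.sup f) ν ((le_max_left _ _).trans (le_max_left _ _)) F fun n hn =>
    ⟨(hmem n hn).1, (hmem n hn).2, hmono n (Finset.le_sup hn) (hf n hn)⟩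
  have h2 := hA ν ((le_max_right _ _).trans (le_max_left _ _))
  have h3 : exp (-(1/4000000*ν)) ≤ 1 := Real.exp_le_one_iff.2 (by linarith)
  rw [pow_zero, mul_one] at h2
  rw [← hX] at h1
  nlinarith

/-! ### Coding a tree of primes by the unit interval -/

/-- Mills' construction: the intervals `[P k, P k + 1)` pulled back by `A ↦ A ^ 3 ^ k` are nested, and the
right end points decrease strictly. -/
theorem exists_real_of_nested (P : ℕ → ℕ) (h1 : ∀ k, 1 ≤ P k) (h2 : ∀ k, P k ^ 3 ≤ P (k + 1))
    (h3 : ∀ k, P (k + 1) + 1 < (P k + 1) ^ 3) :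
    ∃ A : ℝ, 0 < A ∧ ∀ k, (P k : ℝ) ≤ A ^ (3 ^ k) ∧ A ^ (3 ^ k) < (P k : ℝ) + 1 := by
  -- the two monotone sequences of `3 ^ k`-th roots
  set a : ℕ → ℝ := fun k => (P k : ℝ) ^ ((((3 : ℕ) ^ k : ℕ) : ℝ)⁻¹) with ha
  set b : ℕ → ℝ := fun k => ((P k : ℝ) + 1) ^ ((((3 : ℕ) ^ k : ℕ) : ℝ)⁻¹) with hb
  have hN : ∀ k : ℕ, (3 : ℕ) ^ k ≠ 0 := fun k => by positivity
  have a0 : ∀ k, 0 ≤ a k := fun k => by positivity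
  have b0 : ∀ k, 0 ≤ b k := fun k => by positivity
  have apow : ∀ k, a k ^ (3 ^ k) = (P k : ℝ) := fun k =>
    Real.rpow_inv_natCast_pow (by positivity) (hN k)
  have bpow : ∀ k, b k ^ (3 ^ k) = (P k : ℝ) + 1 := fun k =>
    Real.rpow_inv_natCast_pow (by positivity) (hN k)
  have amono : Monotone a := by
    refine monotone_nat_of_le_succ fun k => ?_
    refine (pow_le_pow_iff_left₀ (a0 k) (a0 (k + 1)) (hN (k + 1))).1 ?_
    rw [apow, pow_succ, pow_mul, apow]
    exact_mod_cast h2 k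
  have banti : StrictAnti b := by
    refine strictAnti_nat_of_succ_lt fun k => ?_
    refine (pow_lt_pow_iff_left₀ (b0 (k + 1)) (b0 k) (hN (k + 1))).1 ?_
    rw [bpow, pow_succ, pow_mul, bpow]
    exact_mod_cast h3 k
  have hab : ∀ k, a k ≤ b k := fun k => by
    refine (pow_le_pow_iff_left₀ (a0 k) (b0 k) (hN k)).1 ?_
    rw [apow, bpow]; linarith
  have hab' : ∀ i j, a i ≤ b j := fun i j =>
    ((amono (le_max_left i j)).trans (hab _)).trans (banti.antitone (le_max_right i j))
  have bdd : BddAbove (Set.range a) := ⟨b 0, by rintro _ ⟨i, rfl⟩; exact hab' i 0⟩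
  have hAa : ∀ k, a k ≤ ⨆ i, a i := fun k => le_ciSup bdd k
  have hAb : ∀ k, (⨆ i, a i) < b k := fun k =>
    (ciSup_le fun i => hab' i (k + 1)).trans_lt (banti (Nat.lt_succ_self k))
  have ha0 : 0 < a 0 := by
    have : (0 : ℝ) < P 0 := by exact_mod_cast h1 0
    exact Real.rpow_pos_of_pos this _
  have hA : 0 < ⨆ i, a i := ha0.trans_le (hAa 0)
  refine ⟨⨆ i, a i, hA, fun k => ⟨?_, ?_⟩⟩
  · rw [← apow k]; exact pow_le_pow_left₀ (a0 k) (hAa k) _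
  · rw [← bpow k]; exact pow_lt_pow_left₀ (hAb k) hA.le (hN k)

/-- If the inverse of `G` is `s`-Hölder, then `G` maps `[0, 1)` to a set of dimension at least `s`. -/
theorem dimH_of_antiHolder {G : ℝ → ℝ} {C s : ℝ} (hC : 0 ≤ C) (hs : 0 < s)
    (h : ∀ y ∈ Set.Ico (0 : ℝ) 1, ∀ y' ∈ Set.Ico (0 : ℝ) 1,
      |y - y'| ≤ C * |G y - G y'| ^ s) :
    ENNReal.ofReal s ≤ dimH (G '' Set.Ico (0 : ℝ) 1) := by
  have hinj : Set.InjOn G (Set.Ico (0 : ℝ) 1) := by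
    intro y hy y' hy' he
    have := h y hy y' hy'
    rw [he, sub_self, abs_zero, Real.zero_rpow hs.ne', mul_zero] at this
    exact sub_eq_zero.1 (abs_nonpos_iff.1 this)
  set f := Function.invFunOn G (Set.Ico (0 : ℝ) 1) with hf
  have hleft : ∀ y ∈ Set.Ico (0 : ℝ) 1, f (G y) = y := fun y hy =>
    hinj.leftInvOn_invFunOn hy
  have hH : HolderOnWith C.toNNReal s.toNNReal f (G '' Set.Ico (0 : ℝ) 1) := by
    rintro _ ⟨y, hy, rfl⟩ _ ⟨y', hy', rfl⟩
    rw [hleft y hy, hleft y' hy', edist_dist, edist_dist, Real.dist_eq, Real.dist_eq,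
      Real.coe_toNNReal s hs.le, ENNReal.ofReal_rpow_of_nonneg (abs_nonneg _) hs.le]
    change _ ≤ ENNReal.ofReal C * _
    rw [← ENNReal.ofReal_mul hC]
    exact ENNReal.ofReal_le_ofReal (h y hy y' hy')
  have himg : f '' (G '' Set.Ico (0 : ℝ) 1) = Set.Ico (0 : ℝ) 1 := by
    rw [Set.image_image]
    ext z; constructor
    · rintro ⟨y, hy, rfl⟩; change f (G y) ∈ _; rw [hleft y hy]; exact hy
    · intro hz; exact ⟨z, hz, hleft z hz⟩
  have hdim : dimH (Set.Ico (0 : ℝ) 1) = 1 := by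
    refine Real.dimH_of_mem_nhds (x := 1 / 2) (Ico_mem_nhds (by norm_num) (by norm_num)) |>.trans ?_
    simp
  have key := hH.dimH_image_le (Real.toNNReal_pos.2 hs)
  rw [himg, hdim] at key
  have hne : ENNReal.ofReal s ≠ 0 := by simpa using hs
  change (1 : ENNReal) ≤ _ / ENNReal.ofReal s at key
  rw [ENNReal.le_div_iff_mul_le (Or.inl hne) (Or.inl ENNReal.ofReal_ne_top), one_mul] at key
  exact key

/-- One step of the coding of points of `[0, 1)` by paths: a pair (vertex `p`, remaining
coordinate `y`) moves to the child of `p` whose index is the leading digit of `y` in base `c p`. -/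
noncomputable def codeStep (c : ℕ → ℕ) (ch : ℕ → ℕ → ℕ) (x : ℕ × ℝ) : ℕ × ℝ :=
  (ch x.1 ⌊(c x.1 : ℝ) * x.2⌋₊, Int.fract ((c x.1 : ℝ) * x.2))

/-- The path (with remaining coordinates) from the root `p₀` that codes `y`. -/
noncomputable def code (c : ℕ → ℕ) (ch : ℕ → ℕ → ℕ) (p₀ : ℕ) (y : ℝ) : ℕ → ℕ × ℝ
  | 0 => (p₀, y)
  | k + 1 => codeStep c ch (code c ch p₀ y k)

/-- The properties of a rooted tree of primes with cubic growth that make the set of Mills-type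
limits along its branches large: `c p` is the number of children of `p` and
`ch p 0 < ch p 1 < ⋯` are the children. -/
structure PrimeTree (ε : ℝ) (Node : ℕ → Prop) (c : ℕ → ℕ) (ch : ℕ → ℕ → ℕ) : Prop where
  prime : ∀ p, Node p → p.Prime
  three_le : ∀ p, Node p → 3 ≤ p
  large : ∀ p, Node p → 1 ≤ ε * Real.log p
  two_le : ∀ p, Node p → 2 ≤ c p
  many : ∀ p, Node p → ((p : ℝ) + 1) ^ (2 * (1 - ε)) ≤ c p
  node : ∀ p, Node p → ∀ i < c p, Node (ch p i)
  lower : ∀ p, Node p → ∀ i < c p, p ^ 3 ≤ ch p i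
  upper : ∀ p, Node p → ∀ i < c p, ch p i + 1 < (p + 1) ^ 3
  gap : ∀ p, Node p → ∀ i j, i ≤ j → j < c p → ch p i + 2 * (j - i) ≤ ch p j

section
variable {ε : ℝ} {Node : ℕ → Prop} {c : ℕ → ℕ} {ch : ℕ → ℕ → ℕ} {p₀ : ℕ}

theorem code_node (T : PrimeTree ε Node c ch) (h0 : Node p₀) {y : ℝ}
    (hy : y ∈ Set.Ico (0 : ℝ) 1) (k : ℕ) :
    Node (code c ch p₀ y k).1 ∧ (code c ch p₀ y k).2 ∈ Set.Ico (0 : ℝ) 1 ∧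
      ⌊(c (code c ch p₀ y k).1 : ℝ) * (code c ch p₀ y k).2⌋₊ < c (code c ch p₀ y k).1 := by
  have aux : ∀ p : ℕ, Node p → ∀ z ∈ Set.Ico (0 : ℝ) 1, ⌊(c p : ℝ) * z⌋₊ < c p := by
    intro p hp z hz
    have hc : (0 : ℝ) < c p := by exact_mod_cast (zero_lt_two.trans_le (T.two_le p hp))
    rw [Nat.floor_lt (mul_nonneg hc.le hz.1)]
    have := mul_lt_mul_of_pos_left hz.2 hc
    simpa using this
  induction k with
  | zero => exact ⟨h0, hy, aux _ h0 _ hy⟩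
  | succ k ih =>
    obtain ⟨i1, i2, i3⟩ := ih
    have n1 : Node (code c ch p₀ y (k + 1)).1 := T.node _ i1 _ i3
    have n2 : (code c ch p₀ y (k + 1)).2 ∈ Set.Ico (0 : ℝ) 1 :=
      ⟨Int.fract_nonneg _, Int.fract_lt_one _⟩
    exact ⟨n1, n2, aux _ n1 _ n2⟩

theorem code_cube_le (T : PrimeTree ε Node c ch) (h0 : Node p₀) {y : ℝ}
    (hy : y ∈ Set.Ico (0 : ℝ) 1) (k : ℕ) :
    (code c ch p₀ y k).1 ^ 3 ≤ (code c ch p₀ y (k + 1)).1 ∧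
      (code c ch p₀ y (k + 1)).1 + 1 < ((code c ch p₀ y k).1 + 1) ^ 3 := by
  obtain ⟨i1, i2, i3⟩ := code_node T h0 hy k
  exact ⟨T.lower _ i1 _ i3, T.upper _ i1 _ i3⟩

theorem code_root_pow (T : PrimeTree ε Node c ch) (h0 : Node p₀) {y : ℝ}
    (hy : y ∈ Set.Ico (0 : ℝ) 1) (k : ℕ) : p₀ ^ (3 ^ k) ≤ (code c ch p₀ y k).1 := by
  induction k with
  | zero => simp [code]
  | succ k ih =>
    rw [pow_succ 3 k, pow_mul]
    exact (Nat.pow_le_pow_left ih 3).trans (code_cube_le T h0 hy k).1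

/-- The number of vertices in a generation, counted along a branch, is nearly
`(p_k + 1) ^ 3 / (p_0 + 1)`. -/
theorem code_prod (T : PrimeTree ε Node c ch) (hε : ε < 1) (h0 : Node p₀) {y : ℝ}
    (hy : y ∈ Set.Ico (0 : ℝ) 1) (k : ℕ) :
    (((code c ch p₀ y k).1 : ℝ) + 1) ^ (3 * (1 - ε)) ≤
      ((p₀ : ℝ) + 1) ^ (1 - ε) * ∏ i ∈ range (k + 1), (c (code c ch p₀ y i).1 : ℝ) := by
  induction k with
  | zero =>
    have h := T.many _ h0
    have hp : (0 : ℝ) < (p₀ : ℝ) + 1 := by positivity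
    have : 3 * (1 - ε) = (1 - ε) + 2 * (1 - ε) := by ring
    simp only [zero_add, prod_range_one, code]
    rw [this, Real.rpow_add hp]
    exact mul_le_mul_of_nonneg_left h (by positivity)
  | succ k ih =>
    obtain ⟨i1, -, -⟩ := code_node T h0 hy (k + 1)
    have h := T.many _ i1
    have hu := (code_cube_le T h0 hy k).2.le
    set P := (code c ch p₀ y (k + 1)).1
    set R := (code c ch p₀ y k).1
    have hp : (0 : ℝ) < (P : ℝ) + 1 := by positivity
    have hr : (0 : ℝ) ≤ (R : ℝ) + 1 := by positivity
    have hu' : (P : ℝ) + 1 ≤ ((R : ℝ) + 1) ^ 3 := by exact_mod_cast hu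
    have e : 3 * (1 - ε) = (1 - ε) + 2 * (1 - ε) := by ring
    have h1 : ((P : ℝ) + 1) ^ (1 - ε) ≤ ((R : ℝ) + 1) ^ (3 * (1 - ε)) := by
      calc ((P : ℝ) + 1) ^ (1 - ε) ≤ (((R : ℝ) + 1) ^ 3) ^ (1 - ε) :=
            Real.rpow_le_rpow hp.le hu' (by linarith)
        _ = ((R : ℝ) + 1) ^ (3 * (1 - ε)) := by
            rw [← Real.rpow_natCast, ← Real.rpow_mul hr]; norm_num
    rw [prod_range_succ, ← mul_assoc, e, Real.rpow_add hp]
    exact mul_le_mul (h1.trans ih) h (by positivity) (by positivity)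

/-- As long as two paths agree, the coding is affine with slope the product of the branching
numbers. -/
theorem code_affine (T : PrimeTree ε Node c ch) (h0 : Node p₀) {y y' : ℝ}
    (hy : y ∈ Set.Ico (0 : ℝ) 1) (hy' : y' ∈ Set.Ico (0 : ℝ) 1) (k : ℕ)
    (h : ∀ i ≤ k, (code c ch p₀ y i).1 = (code c ch p₀ y' i).1) :
    (y - y') * ∏ i ∈ range k, (c (code c ch p₀ y i).1 : ℝ) =
      (code c ch p₀ y k).2 - (code c ch p₀ y' k).2 := by
  induction k with
  | zero => simp [code]
  | succ k ih =>
    have ih' := ih fun i hi => h i (by omega)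
    have e1 := h k (by omega)
    have e2 := h (k + 1) le_rfl
    obtain ⟨i1, i2, i3⟩ := code_node T h0 hy k
    obtain ⟨j1, j2, j3⟩ := code_node T h0 hy' k
    rw [prod_range_succ, ← mul_assoc, ih']
    simp only [code, codeStep] at e2 ⊢
    rw [← e1] at e2 j3 ⊢
    set p := (code c ch p₀ y k).1
    set u := (code c ch p₀ y k).2
    set v := (code c ch p₀ y' k).2
    have hu : 0 ≤ (c p : ℝ) * u := mul_nonneg (by positivity) i2.1
    have hv : 0 ≤ (c p : ℝ) * v := mul_nonneg (by positivity) j2.1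
    have hfl : ⌊(c p : ℝ) * u⌋₊ = ⌊(c p : ℝ) * v⌋₊ := by
      rcases le_total ⌊(c p : ℝ) * u⌋₊ ⌊(c p : ℝ) * v⌋₊ with hl | hl
      · have := T.gap p i1 _ _ hl j3; omega
      · have := T.gap p i1 _ _ hl i3; omega
    rw [Int.fract, Int.fract, ← natCast_floor_eq_intCast_floor hu,
      ← natCast_floor_eq_intCast_floor hv, hfl]
    ring

theorem code_prod_ge (T : PrimeTree ε Node c ch) (h0 : Node p₀) {y : ℝ}
    (hy : y ∈ Set.Ico (0 : ℝ) 1) (k : ℕ) :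
    (2 : ℝ) ^ k ≤ ∏ i ∈ range k, (c (code c ch p₀ y i).1 : ℝ) := by
  induction k with
  | zero => simp
  | succ k ih =>
    rw [prod_range_succ, pow_succ]
    have : (2 : ℝ) ≤ c (code c ch p₀ y k).1 := by
      exact_mod_cast T.two_le _ (code_node T h0 hy k).1
    exact mul_le_mul ih this (by norm_num) (by positivity)

/-- Distinct points have paths that separate; at the first separation the distance of the points
is controlled by the distance `D` of the separating primes. -/
theorem code_separate (T : PrimeTree ε Node c ch) (h0 : Node p₀) {y y' : ℝ}
    (hy : y ∈ Set.Ico (0 : ℝ) 1) (hy' : y' ∈ Set.Ico (0 : ℝ) 1) (hne : y ≠ y') :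
    ∃ m, (code c ch p₀ y m).1 = (code c ch p₀ y' m).1 ∧
      (2 : ℝ) ≤ |((code c ch p₀ y (m + 1)).1 : ℝ) - (code c ch p₀ y' (m + 1)).1| ∧
      |y - y'| * ∏ i ∈ range (m + 1), (c (code c ch p₀ y i).1 : ℝ) ≤
        |((code c ch p₀ y (m + 1)).1 : ℝ) - (code c ch p₀ y' (m + 1)).1| := by
  have hex : ∃ k, (code c ch p₀ y k).1 ≠ (code c ch p₀ y' k).1 := by
    by_contra hcon
    push Not at hcon
    have hpos : 0 < |y - y'| := abs_pos.2 (sub_ne_zero.2 hne)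
    obtain ⟨k, hk⟩ := pow_unbounded_of_one_lt (1 / |y - y'|) (one_lt_two : (1 : ℝ) < 2)
    have h1 := code_affine T h0 hy hy' k fun i _ => hcon i
    have h2 := code_prod_ge T h0 hy k
    obtain ⟨-, i2, -⟩ := code_node T h0 hy k
    obtain ⟨-, j2, -⟩ := code_node T h0 hy' k
    have h3 : |(code c ch p₀ y k).2 - (code c ch p₀ y' k).2| < 1 := by
      rw [abs_lt]; constructor <;> linarith [i2.1, i2.2, j2.1, j2.2]
    rw [← h1, abs_mul, abs_of_nonneg (a := ∏ i ∈ range k, _) (by positivity)] at h3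
    have h4 : |y - y'| * (1 / |y - y'|) < 1 :=
      lt_of_lt_of_le (mul_lt_mul_of_pos_left hk hpos) (mul_le_mul_of_nonneg_left h2 hpos.le)
        |>.trans h3
    rw [mul_one_div_cancel hpos.ne'] at h4
    exact lt_irrefl _ h4
  classical
  obtain ⟨k, hk, hmin⟩ : ∃ k, (code c ch p₀ y k).1 ≠ (code c ch p₀ y' k).1 ∧
      ∀ i < k, (code c ch p₀ y i).1 = (code c ch p₀ y' i).1 :=
    ⟨Nat.find hex, Nat.find_spec hex, fun i hi => not_not.1 (Nat.find_min hex hi)⟩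
  obtain _ | m := k
  · exact absurd rfl hk
  have e1 := hmin m (by omega)
  have h1 := code_affine T h0 hy hy' m fun i hi => hmin i (by omega)
  obtain ⟨i1, i2, i3⟩ := code_node T h0 hy m
  obtain ⟨j1, j2, j3⟩ := code_node T h0 hy' m
  refine ⟨m, e1, ?_⟩
  rw [prod_range_succ, ← mul_assoc, ← abs_of_nonneg (a := ∏ i ∈ range m, _) (by positivity),
    ← abs_mul, h1]
  simp only [code, codeStep] at hk ⊢
  rw [← e1] at hk j3 ⊢
  set p := (code c ch p₀ y m).1
  set u := (code c ch p₀ y m).2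
  set v := (code c ch p₀ y' m).2
  have hu : 0 ≤ (c p : ℝ) * u := mul_nonneg (by positivity) i2.1
  have hv : 0 ≤ (c p : ℝ) * v := mul_nonneg (by positivity) j2.1
  have fu := Nat.floor_le hu
  have fv := Nat.floor_le hv
  have fu' := Nat.lt_floor_add_one ((c p : ℝ) * u)
  have fv' := Nat.lt_floor_add_one ((c p : ℝ) * v)
  rw [← abs_of_nonneg (a := (c p : ℝ)) (by positivity), ← abs_mul, sub_mul,
    mul_comm u, mul_comm v, abs_of_nonneg (a := (c p : ℝ)) (by positivity)]
  set i := ⌊(c p : ℝ) * u⌋₊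
  set j := ⌊(c p : ℝ) * v⌋₊
  have hij : i ≠ j := fun h => hk (by rw [h])
  rcases lt_or_gt_of_ne hij with hl | hl
  · have g := T.gap p i1 _ _ hl.le j3
    have g' : ch p i + 2 * j ≤ ch p j + 2 * i := by omega
    rify at g'
    have hd : (i : ℝ) + 1 ≤ j := by exact_mod_cast hl
    rw [abs_sub_comm (ch p i : ℝ), abs_of_nonneg (a := (ch p j : ℝ) - ch p i) (by linarith), abs_le]
    exact ⟨by linarith, by constructor <;> linarith⟩
  · have g := T.gap p i1 _ _ hl.le i3
    have g' : ch p j + 2 * i ≤ ch p i + 2 * j := by omega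
    rify at g'
    have hd : (j : ℝ) + 1 ≤ i := by exact_mod_cast hl
    rw [abs_of_nonneg (a := (ch p i : ℝ) - ch p j) (by linarith), abs_le]
    exact ⟨by linarith, by constructor <;> linarith⟩

end

/-! ### Hausdorff dimension of the limit set -/

section
variable {ε : ℝ} {Node : ℕ → Prop} {c : ℕ → ℕ} {ch : ℕ → ℕ → ℕ} {p₀ : ℕ}

/-- If `A ^ N` and `A' ^ N` have integer parts `P + D` and `P` with `2 ≤ D`, then `D` is bounded by
`|A - A'|` times the Lipschitz constant of the `N`-th power. -/
theorem gap_le_of_floor {A A' P P' Q : ℝ} {N : ℕ} (hA' : 0 < A') (hAA : 1 ≤ A)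
    (h1 : P ≤ A ^ N) (h2 : A ^ N < P + 1) (h3 : A' ^ N < P' + 1) (hQ : P + 1 ≤ Q)
    (hD : 2 ≤ P - P') : P - P' ≤ 2 * N * Q * |A - A'| := by
  have hlt : A' ^ N < A ^ N := by linarith
  have hle : A' ≤ A := (lt_of_pow_lt_pow_left₀ N (by linarith) hlt).le
  have hpow : A ^ N - A' ^ N ≤ N * A ^ N * (A - A') := by
    have hmv := (Commute.all A A').mul_geom_sum₂ N
    rw [← hmv, mul_comm]
    refine mul_le_mul_of_nonneg_right ?_ (by linarith)
    calc ∑ i ∈ range N, A ^ i * A' ^ (N - 1 - i) ≤ ∑ i ∈ range N, A ^ N := by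
          refine sum_le_sum fun i hi => ?_
          have hi' : i < N := mem_range.1 hi
          calc A ^ i * A' ^ (N - 1 - i) ≤ A ^ i * A ^ (N - 1 - i) := by gcongr
            _ = A ^ (i + (N - 1 - i)) := by rw [pow_add]
            _ ≤ A ^ N := pow_le_pow_right₀ hAA (by omega)
      _ = N * A ^ N := by simp
  have hstep : (N : ℝ) * A ^ N * (A - A') ≤ N * Q * (A - A') := by
    have : A ^ N ≤ Q := by linarith
    have h0 : 0 ≤ A - A' := by linarith
    gcongr
  rw [abs_of_nonneg (by linarith : 0 ≤ A - A')]
  nlinarith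

/-- Interpolation `D = D ^ s * D ^ (1 - s)` between the two bounds for `D`; the loss `M` is absorbed
by the slack `ε` in the exponent of `r`. -/
theorem rpow_estimate {s ε r D x M : ℝ} (hs0 : 0 < s) (hs1 : s < 1) (hε : ε = (1 - s) / 6)
    (hr : 1 ≤ r) (hD : 0 < D) (hx : 0 ≤ x) (hM : 1 ≤ M) (hMr : M ≤ r ^ ε)
    (h1 : D ≤ 6 * M * r ^ 3 * x) (h2 : D ≤ 3 * r ^ 2) :
    D ≤ 18 * r ^ (3 * (1 - ε)) * x ^ s := by
  have hr0 : 0 < r := by linarith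
  have a1 : D ^ s ≤ (6 * M) * (r ^ (3 * s)) * x ^ s := by
    calc D ^ s ≤ (6 * M * r ^ 3 * x) ^ s := Real.rpow_le_rpow hD.le h1 hs0.le
      _ = (6 * M) ^ s * (r ^ (3 * s)) * x ^ s := by
          rw [Real.mul_rpow (by positivity) hx, Real.mul_rpow (by positivity) (by positivity),
            ← Real.rpow_natCast r 3, ← Real.rpow_mul hr0.le]
          norm_num
      _ ≤ (6 * M) * (r ^ (3 * s)) * x ^ s := by
          have : (6 * M) ^ s ≤ 6 * M := by
            conv_rhs => rw [← Real.rpow_one (6 * M)]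
            exact Real.rpow_le_rpow_of_exponent_le (by linarith) hs1.le
          gcongr
  have a2 : D ^ (1 - s) ≤ 3 * r ^ (2 * (1 - s)) := by
    calc D ^ (1 - s) ≤ (3 * r ^ 2) ^ (1 - s) := Real.rpow_le_rpow hD.le h2 (by linarith)
      _ = 3 ^ (1 - s) * r ^ (2 * (1 - s)) := by
          rw [Real.mul_rpow (by positivity) (by positivity),
            ← Real.rpow_natCast r 2, ← Real.rpow_mul hr0.le]
          norm_num
      _ ≤ 3 * r ^ (2 * (1 - s)) := by
          have : (3 : ℝ) ^ (1 - s) ≤ 3 := by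
            conv_rhs => rw [← Real.rpow_one (3 : ℝ)]
            exact Real.rpow_le_rpow_of_exponent_le (by norm_num) (by linarith)
          gcongr
  have hsplit : D = D ^ s * D ^ (1 - s) := by
    rw [← Real.rpow_add hD]; norm_num
  calc D = D ^ s * D ^ (1 - s) := hsplit
    _ ≤ ((6 * M) * (r ^ (3 * s)) * x ^ s) * (3 * r ^ (2 * (1 - s))) := by gcongr
    _ = 18 * (M * (r ^ (3 * s) * r ^ (2 * (1 - s)))) * x ^ s := by ring
    _ ≤ 18 * (r ^ ε * (r ^ (3 * s) * r ^ (2 * (1 - s)))) * x ^ s := by gcongr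
    _ = 18 * r ^ (ε + (3 * s + 2 * (1 - s))) * x ^ s := by
        rw [Real.rpow_add hr0 ε, Real.rpow_add hr0 (3 * s)]
    _ ≤ 18 * r ^ (3 * (1 - ε)) * x ^ s := by
        have : r ^ (ε + (3 * s + 2 * (1 - s))) ≤ r ^ (3 * (1 - ε)) :=
          Real.rpow_le_rpow_of_exponent_le hr (by rw [hε]; linarith)
        gcongr

theorem three_pow_le (T : PrimeTree ε Node c ch) (hε : 0 ≤ ε) (h0 : Node p₀) {y : ℝ}
    (hy : y ∈ Set.Ico (0 : ℝ) 1) (m : ℕ) :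
    (3 : ℝ) ^ m ≤ (((code c ch p₀ y m).1 : ℝ) + 1) ^ ε := by
  have hp : (3 : ℝ) ≤ p₀ := by exact_mod_cast T.three_le _ h0
  have h1 : (p₀ : ℝ) ^ (3 ^ m) ≤ ((code c ch p₀ y m).1 : ℝ) + 1 := by
    have : (p₀ : ℝ) ^ (3 ^ m) ≤ ((code c ch p₀ y m).1 : ℝ) := by
      exact_mod_cast code_root_pow T h0 hy m
    linarith
  have hl := T.large _ h0
  calc (3 : ℝ) ^ m ≤ Real.exp ((3 : ℝ) ^ m) := by linarith [Real.add_one_le_exp ((3 : ℝ) ^ m)]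
    _ ≤ Real.exp (Real.log p₀ * ((3 : ℝ) ^ m * ε)) := by
        apply Real.exp_le_exp.2
        have : (0 : ℝ) < 3 ^ m := by positivity
        nlinarith
    _ = ((p₀ : ℝ) ^ (3 ^ m)) ^ ε := by
        rw [← Real.rpow_natCast (p₀ : ℝ) (3 ^ m), ← Real.rpow_mul (by linarith), Real.rpow_def_of_pos (by linarith)]
        push_cast
        rfl
    _ ≤ _ := Real.rpow_le_rpow (by positivity) h1 hε

/-- The limits along the branches of a `PrimeTree` form a set of dimension at least `s`. -/
theorem tree_dimH (T : PrimeTree ε Node c ch) {s : ℝ} (hs0 : 0 < s) (hs1 : s < 1)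
    (hε : ε = (1 - s) / 6) (h0 : Node p₀) :
    ENNReal.ofReal s ≤ dimH {A : ℝ | 1 < A ∧ ∀ k ≥ 1, Nat.Prime ⌊A ^ ((3 : ℝ) ^ k)⌋₊} := by
  have hε0 : 0 ≤ ε := by rw [hε]; linarith
  have hε1 : ε < 1 := by rw [hε]; linarith
  have hex : ∀ y : ℝ, ∃ A : ℝ, y ∈ Set.Ico (0 : ℝ) 1 → 0 < A ∧
      ∀ k, ((code c ch p₀ y k).1 : ℝ) ≤ A ^ (3 ^ k) ∧
        A ^ (3 ^ k) < ((code c ch p₀ y k).1 : ℝ) + 1 := by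
    intro y
    by_cases hy : y ∈ Set.Ico (0 : ℝ) 1
    · obtain ⟨A, hA⟩ := exists_real_of_nested (fun k => (code c ch p₀ y k).1)
        (fun k => by have := T.three_le _ (code_node T h0 hy k).1; omega)
        (fun k => (code_cube_le T h0 hy k).1) (fun k => (code_cube_le T h0 hy k).2)
      exact ⟨A, fun _ => hA⟩
    · exact ⟨0, fun h => absurd h hy⟩
  choose G hG using hex
  have hG1 : ∀ y ∈ Set.Ico (0 : ℝ) 1, 1 < G y := by
    intro y hy
    have h1 := ((hG y hy).2 0).1
    have h2 : (3 : ℝ) ≤ p₀ := by exact_mod_cast T.three_le _ h0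
    simp only [code, pow_zero, pow_one] at h1
    linarith
  have hsub : G '' Set.Ico (0 : ℝ) 1 ⊆
      {A : ℝ | 1 < A ∧ ∀ k ≥ 1, Nat.Prime ⌊A ^ ((3 : ℝ) ^ k)⌋₊} := by
    rintro _ ⟨y, hy, rfl⟩
    refine ⟨hG1 y hy, fun k _ => ?_⟩
    obtain ⟨h1, h2⟩ := (hG y hy).2 k
    have e : G y ^ ((3 : ℝ) ^ k) = G y ^ (3 ^ k) := by
      rw [← Real.rpow_natCast (G y) (3 ^ k)]; push_cast; rfl
    have : ⌊G y ^ ((3 : ℝ) ^ k)⌋₊ = (code c ch p₀ y k).1 := by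
      rw [e, Nat.floor_eq_iff (by linarith [(Nat.cast_nonneg (code c ch p₀ y k).1 : (0 : ℝ) ≤ _)])]
      exact ⟨h1, h2⟩
    rw [this]
    exact T.prime _ (code_node T h0 hy k).1
  refine le_trans (dimH_of_antiHolder (C := 18 * ((p₀ : ℝ) + 1) ^ (1 - ε)) (by positivity) hs0
    ?_) (dimH_mono hsub)
  intro y hy y' hy'
  rcases eq_or_ne y y' with rfl | hne
  · simp only [sub_self, abs_zero]; positivity
  obtain ⟨m, e1, hD2, hDy⟩ := code_separate T h0 hy hy' hne
  obtain ⟨-, u1⟩ := code_cube_le T h0 hy m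
  obtain ⟨-, u2⟩ := code_cube_le T h0 hy' m
  have l1 := (code_cube_le T h0 hy m).1
  have l2 := (code_cube_le T h0 hy' m).1
  have hprod := code_prod T hε1 h0 hy m
  have h3m := three_pow_le T hε0 h0 hy m
  obtain ⟨g1, g2⟩ := (hG y hy).2 (m + 1)
  obtain ⟨g1', g2'⟩ := (hG y' hy').2 (m + 1)
  have p1 := hG1 y hy
  have p1' := hG1 y' hy'
  rw [← e1] at u2 l2
  set P := (code c ch p₀ y (m + 1)).1
  set P' := (code c ch p₀ y' (m + 1)).1
  set q := (code c ch p₀ y m).1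
  set W := ∏ i ∈ range (m + 1), (c (code c ch p₀ y i).1 : ℝ)
  set x := |G y - G y'| with hx
  have u1' : (P : ℝ) + 1 ≤ ((q : ℝ) + 1) ^ 3 := by exact_mod_cast u1.le
  have u2' : (P' : ℝ) + 1 ≤ ((q : ℝ) + 1) ^ 3 := by exact_mod_cast u2.le
  have l1' : (q : ℝ) ^ 3 ≤ P := by exact_mod_cast l1
  have l2' : (q : ℝ) ^ 3 ≤ P' := by exact_mod_cast l2
  have q0 : (0 : ℝ) ≤ q := Nat.cast_nonneg q
  have hDx : |(P : ℝ) - P'| ≤ 6 * 3 ^ m * ((q : ℝ) + 1) ^ 3 * x := by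
    have hN : (((3 : ℕ) ^ (m + 1) : ℕ) : ℝ) = 3 * 3 ^ m := by push_cast; ring
    rcases le_total P' P with hl | hl
    · have hl' : (P' : ℝ) ≤ P := by exact_mod_cast hl
      rw [abs_of_nonneg (by linarith)] at hD2 ⊢
      have := gap_le_of_floor (by linarith) p1.le g1 g2 g2' u1' hD2
      rw [hN] at this
      rw [hx]; linarith
    · have hl' : (P : ℝ) ≤ P' := by exact_mod_cast hl
      rw [abs_sub_comm, abs_of_nonneg (by linarith)] at hD2 ⊢
      have := gap_le_of_floor (by linarith) p1'.le g1' g2' g2 u2' hD2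
      rw [hN, abs_sub_comm] at this
      rw [hx]; linarith
  have hDq : |(P : ℝ) - P'| ≤ 3 * ((q : ℝ) + 1) ^ 2 := by
    rw [abs_le]; constructor <;> nlinarith
  have hest := rpow_estimate hs0 hs1 hε (by linarith : (1 : ℝ) ≤ (q : ℝ) + 1)
    (by linarith : 0 < |(P : ℝ) - P'|) (abs_nonneg (G y - G y')) (one_le_pow₀ (by norm_num))
    h3m hDx hDq
  have hr : 0 < ((q : ℝ) + 1) ^ (3 * (1 - ε)) := by positivity
  have hP0 : 0 < ((p₀ : ℝ) + 1) ^ (1 - ε) := by positivity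
  refine le_of_mul_le_mul_right ?_ hr
  calc |y - y'| * ((q : ℝ) + 1) ^ (3 * (1 - ε))
      ≤ |y - y'| * (((p₀ : ℝ) + 1) ^ (1 - ε) * W) := by gcongr
    _ = ((p₀ : ℝ) + 1) ^ (1 - ε) * (|y - y'| * W) := by ring
    _ ≤ ((p₀ : ℝ) + 1) ^ (1 - ε) * (18 * ((q : ℝ) + 1) ^ (3 * (1 - ε)) * x ^ s) :=
        mul_le_mul_of_nonneg_left (hDy.trans hest) hP0.le
    _ = 18 * ((p₀ : ℝ) + 1) ^ (1 - ε) * x ^ s * ((q : ℝ) + 1) ^ (3 * (1 - ε)) := by ring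

end

/-- The logarithm lost in the number of children is absorbed by the exponent `2 * (1 - ε)`. -/
theorem many_kids {ε : ℝ} (hε : 0 < ε) (hε1 : ε < 1) : ∃ N : ℕ, ∀ n : ℕ, N ≤ n →
    200 * Real.log ((n + 1 : ℕ) : ℝ) * ((n : ℝ) + 1) ^ (2 * (1 - ε)) ≤ (n : ℝ) ^ 2 := by
  have h := (isLittleO_log_rpow_atTop (by linarith : 0 < 2 * ε)).bound
    (by norm_num : (0 : ℝ) < 1 / 800)
  have ht : Filter.Tendsto (fun n : ℕ => ((n + 1 : ℕ) : ℝ)) Filter.atTop Filter.atTop :=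
    tendsto_natCast_atTop_atTop.comp (Filter.tendsto_add_atTop_nat 1)
  obtain ⟨N, hN⟩ := Filter.eventually_atTop.1 (ht.eventually h)
  refine ⟨max N 1, fun n hn => ?_⟩
  have h1 := hN n (le_of_max_le_left hn)
  have hn1 : (1 : ℝ) ≤ n := by exact_mod_cast le_of_max_le_right hn
  have hcast : ((n + 1 : ℕ) : ℝ) = (n : ℝ) + 1 := by push_cast; rfl
  rw [hcast] at h1 ⊢
  have hp : (0 : ℝ) < (n : ℝ) + 1 := by linarith
  rw [Real.norm_of_nonneg (Real.log_nonneg (by linarith)), Real.norm_of_nonneg (by positivity)]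
    at h1
  calc 200 * Real.log ((n : ℝ) + 1) * ((n : ℝ) + 1) ^ (2 * (1 - ε))
      ≤ 200 * (1 / 800 * ((n : ℝ) + 1) ^ (2 * ε)) * ((n : ℝ) + 1) ^ (2 * (1 - ε)) := by gcongr
    _ = 1 / 4 * (((n : ℝ) + 1) ^ (2 * ε) * ((n : ℝ) + 1) ^ (2 * (1 - ε))) := by ring
    _ = 1 / 4 * ((n : ℝ) + 1) ^ 2 := by
        rw [← Real.rpow_add hp, ← Real.rpow_natCast]; congr 2; push_cast; ring
    _ ≤ (n : ℝ) ^ 2 := by nlinarith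

/-- `(n + 1) ^ 3 - 1` is divisible by `n`, hence not prime. -/
theorem kids_upper {n m : ℕ} (hn : 3 ≤ n) (hm : m ∈ kids n) :
    m.Prime ∧ n ^ 3 ≤ m ∧ m + 1 < (n + 1) ^ 3 := by
  simp only [kids, mem_filter, mem_Ico] at hm
  obtain ⟨⟨h1, h2⟩, hp⟩ := hm
  refine ⟨hp, h1, lt_of_le_of_ne h2 fun he => ?_⟩
  have hm' : m = n * (n ^ 2 + 3 * n + 3) := by
    have : (n + 1) ^ 3 = n * (n ^ 2 + 3 * n + 3) + 1 := by ring
    omega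
  rw [hm'] at hp
  exact Nat.not_prime_mul (by omega) (by nlinarith) hp

theorem exists_tree {ε : ℝ} (hε : 0 < ε) (hε1 : ε < 1 / 2) :
    ∃ (Node : ℕ → Prop) (c : ℕ → ℕ) (ch : ℕ → ℕ → ℕ) (p₀ : ℕ),
      PrimeTree ε Node c ch ∧ Node p₀ := by
  classical
  obtain ⟨N1, hN1⟩ := many_kids hε (by linarith)
  have ht : Filter.Tendsto (fun n : ℕ => ε * Real.log (n : ℝ)) Filter.atTop Filter.atTop :=
    (Real.tendsto_log_atTop.comp tendsto_natCast_atTop_atTop).const_mul_atTop hε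
  obtain ⟨N2, hN2⟩ := Filter.eventually_atTop.1 (ht.eventually_ge_atTop 1)
  set N0 := max 3 (max N1 N2) with hN0
  have b3 : 3 ≤ N0 := le_max_left _ _
  have b1 : N1 ≤ N0 := (le_max_left _ _).trans (le_max_right _ _)
  have b2 : N2 ≤ N0 := (le_max_right _ _).trans (le_max_right _ _)
  set K : ℕ → Finset ℕ := fun n => (kids n).filter Good with hK
  have hcard : ∀ n, N0 ≤ n → Good n → ((n : ℝ) + 1) ^ (2 * (1 - ε)) ≤ ((K n).card : ℝ) := by
    intro n hn hg
    have h1 := (hN1 n (b1.trans hn)).trans (good_kids hg)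
    have hn3 : (3 : ℝ) ≤ n := by exact_mod_cast b3.trans hn
    have hl : 0 < 200 * Real.log ((n + 1 : ℕ) : ℝ) := by
      have : 0 < Real.log ((n + 1 : ℕ) : ℝ) := Real.log_pos (by push_cast; linarith)
      positivity
    exact le_of_mul_le_mul_left h1 hl
  have htwo : ∀ n, N0 ≤ n → Good n → 2 ≤ (K n).card := by
    intro n hn hg
    have h1 := hcard n hn hg
    have hn3 : (3 : ℝ) ≤ n := by exact_mod_cast b3.trans hn
    have h2 : ((n : ℝ) + 1) ^ (1 : ℝ) ≤ ((n : ℝ) + 1) ^ (2 * (1 - ε)) :=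
      Real.rpow_le_rpow_of_exponent_le (by linarith) (by linarith)
    rw [Real.rpow_one] at h2
    have : (2 : ℝ) ≤ (K n).card := by linarith
    exact_mod_cast this
  have hKmem : ∀ n, N0 ≤ n → ∀ m ∈ K n,
      (m.Prime ∧ N0 ≤ m ∧ Good m) ∧ n ^ 3 ≤ m ∧ m + 1 < (n + 1) ^ 3 := by
    intro n hn m hm
    obtain ⟨hm1, hm2⟩ := mem_filter.1 hm
    obtain ⟨h1, h2, h3⟩ := kids_upper (b3.trans hn) hm1
    exact ⟨⟨h1, hn.trans ((Nat.le_self_pow (by norm_num) n).trans h2), hm2⟩, h2, h3⟩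
  -- `ch n i` is the `i`-th element of `K n` in increasing order
  set ch : ℕ → ℕ → ℕ := fun n i => if h : i < (K n).card then
    (K n).orderEmbOfFin rfl ⟨i, h⟩ else 0 with hch
  have hchmem : ∀ n i, i < (K n).card → ch n i ∈ K n := by
    intro n i hi
    simp only [hch, dif_pos hi]
    exact Finset.orderEmbOfFin_mem _ _ _
  have hchlt : ∀ n i j, i < j → j < (K n).card → ch n i < ch n j := by
    intro n i j hij hj
    simp only [hch, dif_pos hj, dif_pos (hij.trans hj)]
    exact (OrderEmbedding.lt_iff_lt _).2 hij
  obtain ⟨n, hn, hg⟩ := exists_good N0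
  obtain ⟨p₀, hp₀⟩ : (K n).Nonempty := Finset.card_pos.1 (by have := htwo n hn hg; omega)
  refine ⟨fun p => p.Prime ∧ N0 ≤ p ∧ Good p, fun p => (K p).card, ch, p₀, ?_,
    (hKmem n hn p₀ hp₀).1⟩
  exact
    { prime := fun p hp => hp.1
      three_le := fun p hp => b3.trans hp.2.1
      large := fun p hp => hN2 p (b2.trans hp.2.1)
      two_le := fun p hp => htwo p hp.2.1 hp.2.2
      many := fun p hp => hcard p hp.2.1 hp.2.2
      node := fun p hp i hi => (hKmem p hp.2.1 _ (hchmem p i hi)).1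
      lower := fun p hp i hi => (hKmem p hp.2.1 _ (hchmem p i hi)).2.1
      upper := fun p hp i hi => (hKmem p hp.2.1 _ (hchmem p i hi)).2.2
      gap := by
        intro p hp i j hij
        induction j, hij using Nat.le_induction with
        | base => intro _; simp
        | succ j hij ih =>
          intro hj
          have h1 := ih (by omega)
          have hjm := (hKmem p hp.2.1 _ (hchmem p j (by omega))).1
          have hjm' := (hKmem p hp.2.1 _ (hchmem p (j + 1) hj)).1
          have hlt := hchlt p j (j + 1) (by omega) hj
          -- consecutive odd primes differ by at least two
          have o1 : ch p j % 2 = 1 := hjm.1.eq_two_or_odd.resolve_left (by omega)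
          have o2 : ch p (j + 1) % 2 = 1 := hjm'.1.eq_two_or_odd.resolve_left (by omega)
          omega }

theorem mills_dimH {s : ℝ} (hs0 : 0 < s) (hs1 : s < 1) :
    ENNReal.ofReal s ≤ dimH {A : ℝ | 1 < A ∧ ∀ k ≥ 1, Nat.Prime ⌊A ^ ((3 : ℝ) ^ k)⌋₊} := by
  obtain ⟨Node, c, ch, p₀, T, h0⟩ :=
    exists_tree (ε := (1 - s) / 6) (by linarith) (by linarith)
  exact tree_dimH T hs0 hs1 rfl h0

end Mills

open Real Set

/-- For every `0 < δ < 1` there exists `n₀ ∈ ℕ` such that for every prime `p ≥ n₀`,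
`dimH {A > 1 : ⌊A^{3^k}⌋ prime for all k ≥ 1} ≥ (1 - δ/2)/(1 + δ + 3/(p log p))`. -/
theorem hausdorff_dim_lower_bound_mills_type_set
    (δ : ℝ) (hδ0 : 0 < δ) (hδ1 : δ < 1) :
    ∃ n₀ : ℕ, ∀ p : ℕ, p.Prime → n₀ ≤ p →
      ENNReal.ofReal ((1 - δ / 2) / (1 + δ + 3 / ((p : ℝ) * Real.log p))) ≤
        dimH {A : ℝ | 1 < A ∧ ∀ k ≥ 1, Nat.Prime ⌊A ^ ((3 : ℝ) ^ k)⌋₊} := by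
  refine ⟨0, fun p hp _ => ?_⟩
  have hp1 : (1 : ℝ) < p := by exact_mod_cast hp.one_lt
  have hpos : 0 < 3 / ((p : ℝ) * Real.log p) := by
    have := Real.log_pos hp1
    positivity
  refine Mills.mills_dimH (div_pos (by linarith) (by linarith)) ?_
  rw [div_lt_one (by linarith)]
  linarith
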